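/- Let 0<c₁<⋯<c_m be non-integer reals. For every p∈(1,∞), r>2, and λ>1 there is a constant C depending only on c₁,…,c_m, m, p, r, λ (but not on D or its cardinality) such that for every finite λ-lacunary set D⊆ℕ and every f∈ℓ^p(ℤ^m), ‖ V^r(Ã_N f)_{N∈D} ‖_{ℓ^p(ℤ^m)} ≤ C ‖f‖_{ℓ^p(ℤ^m)}, where Ã_N f(x) = (1/N) ∑_{n=1}^{N} 1_{n>N/2} f(x−(⌊n^{c₁}⌋,…,⌊n^{c_m}⌋)). -/

import Mathlib

/-!
Write `A_N` for convolution with the upper-half average and compare it with `½ P_N`, where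
`P_s = ∏ i, κ_i ^ ⌊s ^ (2 c_i)⌋` is a product of powers of the lazy random walk kernels
`κ_i = ¼ (X_i + 2 + X_i⁻¹)`; both live on the anisotropic box of sides `N ^ c_i`. Pointwise (`vvar_le`), the
`r`-variation of `A_N f` is dominated by the `r`-variation of `P_N f` plus the square function
`(∑_{N ∈ D} |(A_N - ½ P_N) f|²)^{1/2}`, and each is bounded on `ℓ^p`.

*Variation of `P_N`.* Since `κ_i` is the average of random translations by a fair coin toss composed with their
reflections, Rota's dilation (`rota`) writes `P_N f` as an average of martingales on a finite product of coins.
Lépingle's inequality (`lepingle`) for such martingales follows from Doob's inequality and a square function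
bound for the increments between the times at which the path moves by a fixed fraction of its running maximum,
summed over dyadic fractions. The result is `varPP`.

*Square function.* By Khintchine's inequality (`khintchine`) it suffices to bound signed sums
`∑ ε_N (A_N - ½ P_N)` uniformly (`signed`). Telescoping in the smoothing scale (`av_decomp`),
`A_N - ½ P_N = (A_N - ½) P_N + ∑_j A_N (P_{N / 2^{j+1}} - P_{N / 2^j})`.
For the `j`-th piece:

* the multiplier of the signed sum is `O(2 ^ (-ω j))`, with a fixed `ω > 0` (`four_fine`, `four_sum`). This
  rests on the decay of `∑ e(ξ · (⌊n ^ c_1⌋, …, ⌊n ^ c_m⌋))` as a negative power of `N ^ c_i |ξ_i|` (`Sf_decay`).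
  The integer parts are removed by Fejér approximation (`Sf_smooth`, `count_bad`). For the smooth phase
  `∑ θ_i n ^ c_i` a Vandermonde argument (`ff_lower`) shows that at each point one of the derivatives is large,
  because the `c_i` are distinct and not integers, and the `k`-th derivative test (`claim_all`) applies;
* the Hörmander constant adapted to boxes of sides `2 ^ (k c_i)` is `O(2 ^ (β j))`, with `β > 0` as small as
  desired (`horm_sum`).

The Calderón–Zygmund theorem for these boxes (`cz`) interpolates the two, and the bounds are summable in `j`
once `β` is small compared with `ω` (`signed_core`).

Everything is done for finitely supported functions, realised as the group algebra of `ℤ^m`, in which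
convolution is multiplication; general `f` follows by truncation and monotone limits of finite sums.
-/

open MeasureTheory Filter Finset
open scoped ENNReal NNReal

noncomputable section

/-- The upper-half discrete averages
`Ã_N f (x) = (1/N) ∑_{n=1}^{N} 1_{n > N/2} f(x − (⌊n^{c₁}⌋, …, ⌊n^{c_m}⌋))`. -/
def Atil (m : ℕ) (c : Fin m → ℝ) (N : ℕ) (f : (Fin m → ℤ) → ℂ)
    (x : Fin m → ℤ) : ℂ :=
  (N : ℂ)⁻¹ * ∑ n ∈ Finset.Icc 1 N,
    if N < 2 * n then f (x - fun i => ⌊(n : ℝ) ^ c i⌋) else 0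

/-- The `r`-variation norm of a sequence `a` along an index set `D ⊆ ℕ`:
`V^r(a_N)_{N∈D} = sup_{N∈D} |a_N| +
  sup_{J} sup_{N₀<⋯<N_J, N_j∈D} (∑_{j<J} |a_{N_{j+1}} − a_{N_j}|^r)^{1/r}`. -/
def Vvar {E : Type*} [NormedAddCommGroup E] (r : ℝ) (a : ℕ → E) (D : Set ℕ) :
    ℝ≥0∞ :=
  (⨆ N ∈ D, (‖a N‖₊ : ℝ≥0∞)) +
    ⨆ (J : ℕ) (u : Fin (J + 1) → ℕ) (_ : StrictMono u) (_ : ∀ j, u j ∈ D),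
      (∑ j : Fin J, (‖a (u j.succ) - a (u j.castSucc)‖₊ : ℝ≥0∞) ^ r) ^ r⁻¹

/-- The `ℓ^p(ℤ^m)` norm of a complex-valued function. -/
def lpZ (m : ℕ) (p : ℝ) (f : (Fin m → ℤ) → ℂ) : ℝ≥0∞ :=
  (∑' x : Fin m → ℤ, (‖f x‖₊ : ℝ≥0∞) ^ p) ^ p⁻¹

/-- The `ℓ^p(ℤ^m)` norm of an `ℝ≥0∞`-valued function. -/
def lpZE (m : ℕ) (p : ℝ) (g : (Fin m → ℤ) → ℝ≥0∞) : ℝ≥0∞ :=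
  (∑' x : Fin m → ℤ, g x ^ p) ^ p⁻¹

/-! ### The additive character and van der Corput differencing -/

namespace FV

/-- The additive character `e(x) = exp(2πix)`. -/
def ee (x : ℝ) : ℂ := Complex.exp (Complex.I * ((2 * Real.pi * x : ℝ) : ℂ))

lemma norm_ee (x : ℝ) : ‖ee x‖ = 1 := by
  rw [ee, mul_comm]; exact Complex.norm_exp_ofReal_mul_I _

lemma ee_add (x y : ℝ) : ee (x + y) = ee x * ee y := by
  rw [ee, ee, ee, ← Complex.exp_add]; congr 1; push_cast; ring

lemma ee_zero : ee 0 = 1 := by simp [ee]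

lemma ee_neg (x : ℝ) : ee (-x) = (starRingEnd ℂ) (ee x) := by
  rw [ee, ee, ← Complex.exp_conj]; congr 1
  rw [map_mul, Complex.conj_I, Complex.conj_ofReal]; push_cast; ring

lemma ee_ne_zero (x : ℝ) : ee x ≠ 0 := Complex.exp_ne_zero _

lemma ee_sub (x y : ℝ) : ee (x - y) = ee x * (starRingEnd ℂ) (ee y) := by
  rw [sub_eq_add_neg, ee_add, ee_neg]

lemma ee_int (n : ℤ) : ee n = 1 := by
  rw [ee, Complex.exp_eq_one_iff]; exact ⟨n, by push_cast; ring⟩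

lemma norm_ee_sub_one (x : ℝ) : ‖ee x - 1‖ = 2 * |Real.sin (Real.pi * x)| := by
  rw [ee, Complex.norm_exp_I_mul_ofReal_sub_one, Real.norm_eq_abs, abs_mul, abs_two]
  congr 3; ring

lemma norm_ee_sub_one_le (x : ℝ) : ‖ee x - 1‖ ≤ 2 * Real.pi * |x| := by
  rw [norm_ee_sub_one]
  have : |Real.sin (Real.pi * x)| ≤ |Real.pi * x| := Real.abs_sin_le_abs
  rw [abs_mul, abs_of_pos Real.pi_pos] at this
  linarith

lemma norm_ee_sub_ee_le (x y : ℝ) : ‖ee x - ee y‖ ≤ 2 * Real.pi * |x - y| := by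
  have h : ee x - ee y = ee y * (ee (x - y) - 1) := by
    have : ee x = ee y * ee (x - y) := by rw [← ee_add]; congr 1; ring
    rw [this]; ring
  rw [h, norm_mul, norm_ee, one_mul]; exact norm_ee_sub_one_le _

lemma le_norm_ee_sub_one {x : ℝ} (hx : |x| ≤ 1 / 2) : 4 * |x| ≤ ‖ee x - 1‖ := by
  rw [norm_ee_sub_one]
  have h1 : |Real.pi * x| ≤ Real.pi / 2 := by
    rw [abs_mul, abs_of_pos Real.pi_pos]; nlinarith [Real.pi_pos]
  have := Real.mul_abs_le_abs_sin h1
  rw [abs_mul, abs_of_pos Real.pi_pos] at this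
  have h2 : 2 / Real.pi * (Real.pi * |x|) = 2 * |x| := by field_simp
  linarith

/-- Each difference `d = |h - k|` is attained by at most `2 H` pairs in `[0, H)²`. -/
lemma sum_sub_counts (B : ℕ → ℝ) (hB : ∀ d, 0 ≤ B d) (H : ℕ) :
    ∑ h ∈ range H, ∑ h' ∈ range H, B (Int.natAbs ((h : ℤ) - h')) ≤
      2 * H * ∑ d ∈ range H, B d := by
  have key : ∀ h ∈ range H, ∑ h' ∈ range H, B (Int.natAbs ((h : ℤ) - h')) ≤
      2 * ∑ d ∈ range H, B d := by
    intro h hh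
    rw [mem_range] at hh
    rw [← Finset.sum_filter_add_sum_filter_not (range H) (fun h' => h' ≤ h), two_mul]
    refine add_le_add ?_ ?_
    · refine (Finset.sum_image (f := B) (g := fun h' => h - h') (s := (range H).filter (· ≤ h))
        ?_).symm.le.trans' (le_of_eq ?_) |>.trans
        (Finset.sum_le_sum_of_subset_of_nonneg ?_ fun _ _ _ => hB _)
      · intro x hx y hy hxy
        simp only [coe_filter, mem_range, Set.mem_ofPred_eq] at hx hy hxy; omega
      · apply Finset.sum_congr rfl
        intro x hx
        simp only [mem_filter, mem_range] at hx
        congr 1; omega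
      · intro x hx
        simp only [mem_image, mem_filter, mem_range] at hx ⊢
        obtain ⟨y, hy, rfl⟩ := hx; omega
    · refine (Finset.sum_image (f := B) (g := fun h' => h' - h)
        (s := (range H).filter (¬ · ≤ h)) ?_).symm.le.trans' (le_of_eq ?_) |>.trans
        (Finset.sum_le_sum_of_subset_of_nonneg ?_ fun _ _ _ => hB _)
      · intro x hx y hy hxy
        simp only [coe_filter, mem_range, Set.mem_ofPred_eq] at hx hy hxy; omega
      · apply Finset.sum_congr rfl
        intro x hx
        simp only [mem_filter, mem_range] at hx
        congr 1; omega
      · intro x hx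
        simp only [mem_image, mem_filter, mem_range] at hx ⊢
        obtain ⟨y, hy, rfl⟩ := hx; omega
  refine (Finset.sum_le_sum key).trans (le_of_eq ?_)
  simp; ring

/-- Van der Corput's inequality. -/
lemma vdc (z : ℤ → ℂ) (a b : ℤ) (hab : a ≤ b) (H : ℕ) (hH : 1 ≤ H) (B : ℕ → ℝ)
    (hB : ∀ d, 0 ≤ B d)
    (hzB : ∀ d < H, ‖∑ n ∈ Ioc a (b - d), z (n + d) * (starRingEnd ℂ) (z n)‖ ≤ B d) :
    H * ‖∑ n ∈ Ioc a b, z n‖ ^ 2 ≤ 2 * ((b - a : ℤ) + H) * ∑ d ∈ range H, B d := by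
  classical
  set Z : ℤ → ℂ := fun n => if n ∈ Ioc a b then z n else 0 with hZ
  set J := Ioc a (b + H) with hJ
  set S := ∑ n ∈ Ioc a b, z n with hS
  have shift : ∀ (F : ℤ → ℂ) (h : ℕ), h < H → (∀ n, n ∉ Ioc a b → F n = 0) →
      ∑ n ∈ J, F (n - h) = ∑ n ∈ Ioc a b, F n := by
    intro F h hh hF
    have h1 : ∑ n ∈ J, F (n - h) = ∑ n ∈ Ioc (a - h) (b + H - h), F n := by
      refine Finset.sum_nbij' (fun n => n - h) (fun n => n + h) ?_ ?_ ?_ ?_ ?_ <;>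
        simp [hJ] <;> intros <;> omega
    rw [h1]
    symm
    refine Finset.sum_subset ?_ fun x _ hx => hF x hx
    intro x; simp only [mem_Ioc]; omega
  have h2 : (H : ℂ) * S = ∑ n ∈ J, ∑ h ∈ range H, Z (n - h) := by
    rw [Finset.sum_comm]
    rw [Finset.sum_congr rfl (g := fun _ => S)]
    · simp
    · intro h hh
      rw [shift Z h (mem_range.1 hh) (fun n hn => if_neg hn)]
      exact Finset.sum_congr rfl fun n hn => if_pos hn
  have h3 : ‖(H : ℂ) * S‖ ^ 2 ≤ ((b - a : ℤ) + H) * ∑ n ∈ J, ‖∑ h ∈ range H, Z (n - h)‖ ^ 2 := by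
    rw [h2]
    calc _ ≤ (∑ n ∈ J, ‖∑ h ∈ range H, Z (n - h)‖) ^ 2 := by
          gcongr; exact norm_sum_le _ _
      _ ≤ (J.card : ℝ) * ∑ n ∈ J, ‖∑ h ∈ range H, Z (n - h)‖ ^ 2 := sq_sum_le_card_mul_sum_sq
      _ = _ := by
          congr 1
          have : ((J.card : ℤ) : ℝ) = ((b + H - a : ℤ) : ℝ) := by
            rw [hJ, Int.card_Ioc, Int.toNat_of_nonneg (by omega)]
          push_cast at this ⊢; linarith
  have pair : ∀ h < H, ∀ h' < H,
      ‖∑ n ∈ J, Z (n - h) * (starRingEnd ℂ) (Z (n - h'))‖ ≤ B (Int.natAbs ((h : ℤ) - h')) := by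
    have main : ∀ h < H, ∀ h' < H, h ≤ h' →
        ‖∑ n ∈ J, Z (n - h) * (starRingEnd ℂ) (Z (n - h'))‖ ≤ B (h' - h) := by
      intro h hh h' hh' hle
      obtain ⟨d, rfl⟩ := Nat.exists_eq_add_of_le hle
      have e1 : ∑ n ∈ J, Z (n - h) * (starRingEnd ℂ) (Z (n - (h + d : ℕ))) =
          ∑ n ∈ Ioc a b, Z (n + d) * (starRingEnd ℂ) (Z n) := by
        rw [← shift (fun n => Z (n + d) * (starRingEnd ℂ) (Z n)) (h + d) hh'
          (fun n hn => by simp only [hZ, if_neg hn, map_zero, mul_zero])]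
        refine Finset.sum_congr rfl fun n _ => ?_
        congr 2; push_cast; ring
      have e2 : ∑ n ∈ Ioc a b, Z (n + d) * (starRingEnd ℂ) (Z n) =
          ∑ n ∈ Ioc a (b - d), z (n + d) * (starRingEnd ℂ) (z n) := by
        have hsub : Ioc a (b - d) ⊆ Ioc a b := by intro x; simp only [mem_Ioc]; omega
        rw [← Finset.sum_subset hsub]
        · refine Finset.sum_congr rfl fun n hn => ?_
          have i1 : n ∈ Ioc a b := hsub hn
          have i2 : n + d ∈ Ioc a b := by simp only [mem_Ioc] at hn ⊢; omega
          simp only [hZ, if_pos i1, if_pos i2]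
        · intro n hn hn'
          have i2 : n + d ∉ Ioc a b := by simp only [mem_Ioc] at hn hn' ⊢; omega
          simp only [hZ, if_neg i2, zero_mul]
      rw [e1, e2]
      simpa using hzB d (by omega)
    intro h hh h' hh'
    rcases le_total h h' with hle | hle
    · have := main h hh h' hh' hle
      rwa [show Int.natAbs ((h : ℤ) - h') = h' - h by omega]
    · have := main h' hh' h hh hle
      rw [show Int.natAbs ((h : ℤ) - h') = h - h' by omega]
      rw [← RCLike.norm_conj, map_sum]
      simpa [mul_comm] using this
  have h4 : ∑ n ∈ J, ‖∑ h ∈ range H, Z (n - h)‖ ^ 2 ≤ 2 * H * ∑ d ∈ range H, B d := by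
    have e : ((∑ n ∈ J, ‖∑ h ∈ range H, Z (n - h)‖ ^ 2 : ℝ) : ℂ) =
        ∑ h ∈ range H, ∑ h' ∈ range H, ∑ n ∈ J, Z (n - h) * (starRingEnd ℂ) (Z (n - h')) := by
      push_cast
      rw [Finset.sum_congr rfl (g := fun n : ℤ => ∑ h ∈ range H, ∑ h' ∈ range H,
        Z (n - h) * (starRingEnd ℂ) (Z (n - h')))]
      · rw [Finset.sum_comm]
        refine Finset.sum_congr rfl fun h _ => ?_
        rw [Finset.sum_comm]
      · intro n _
        rw [← Complex.mul_conj', map_sum, Finset.sum_mul_sum]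
    have e' : (∑ n ∈ J, ‖∑ h ∈ range H, Z (n - h)‖ ^ 2 : ℝ) =
        ‖((∑ n ∈ J, ‖∑ h ∈ range H, Z (n - h)‖ ^ 2 : ℝ) : ℂ)‖ := by
      rw [Complex.norm_real, Real.norm_of_nonneg (by positivity)]
    rw [e', e]
    refine le_trans ?_ (sum_sub_counts B hB H)
    refine (norm_sum_le _ _).trans (Finset.sum_le_sum fun h hh => ?_)
    refine (norm_sum_le _ _).trans (Finset.sum_le_sum fun h' hh' => ?_)
    exact pair h (mem_range.1 hh) h' (mem_range.1 hh')
  have hHpos : (0 : ℝ) < H := by exact_mod_cast hH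
  have hba : (0 : ℝ) ≤ ((b - a : ℤ) : ℝ) := by exact_mod_cast (by omega : 0 ≤ b - a)
  have h5 : ‖(H : ℂ) * S‖ ^ 2 ≤ ((b - a : ℤ) + H) * (2 * H * ∑ d ∈ range H, B d) :=
    h3.trans (mul_le_mul_of_nonneg_left h4 (by positivity))
  rw [norm_mul, Complex.norm_natCast, mul_pow] at h5
  have : (H : ℝ) * (H * ‖S‖ ^ 2) ≤ H * (2 * ((b - a : ℤ) + H) * ∑ d ∈ range H, B d) := by
    nlinarith [h5]
  exact le_of_mul_le_mul_left this hHpos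

end FV

/-! ### The first derivative test -/

namespace FV

/-- Summation by parts: if `z n = (z (n+1) - z n) u n` with `u` bounded and slowly varying, then the sum of
`z` is essentially a boundary term. -/
lemma abel_bound (z u : ℕ → ℂ) (L : ℕ) (U E : ℝ) (hU : 0 ≤ U) (hz : ∀ n ≤ L, ‖z n‖ ≤ 1)
    (hzu : ∀ n < L, z n = (z (n + 1) - z n) * u n) (hu : ∀ n < L, ‖u n‖ ≤ U)
    (hE : ∀ n, n + 1 < L → ‖u (n + 1) - u n‖ ≤ E) (hE0 : 0 ≤ E) :
    ‖∑ n ∈ range L, z n‖ ≤ 2 * U + L * E := by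
  rcases L with _ | L
  · simpa using hU
  have key : ∀ l ≤ L, ‖∑ n ∈ range (l + 1), z n - z (l + 1) * u l‖ ≤ U + l * E := by
    intro l
    induction l with
    | zero =>
      intro _
      have h0 := hzu 0 (by omega)
      have : ∑ n ∈ range (0 + 1), z n - z (0 + 1) * u 0 = - (z 0 * u 0) := by
        rw [Finset.sum_range_one]; linear_combination h0
      rw [this, norm_neg, norm_mul]
      have h1 := hz 0 (by omega)
      have h2 := hu 0 (by omega)
      calc _ ≤ 1 * U := mul_le_mul h1 h2 (norm_nonneg _) zero_le_one
        _ = _ := by simp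
    | succ l ih =>
      intro hl
      have h0 := hzu (l + 1) (by omega)
      have : ∑ n ∈ range (l + 1 + 1), z n - z (l + 1 + 1) * u (l + 1) =
          (∑ n ∈ range (l + 1), z n - z (l + 1) * u l) - z (l + 1) * (u (l + 1) - u l) := by
        rw [Finset.sum_range_succ]; linear_combination h0
      rw [this]
      refine (norm_sub_le _ _).trans ?_
      have h1 : ‖z (l + 1) * (u (l + 1) - u l)‖ ≤ 1 * E := by
        rw [norm_mul]
        exact mul_le_mul (hz _ (by omega)) (hE _ (by omega)) (norm_nonneg _) zero_le_one
      have := ih (by omega)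
      push_cast; linarith
  have h1 := key L le_rfl
  have h2 : ‖z (L + 1) * u L‖ ≤ 1 * U := by
    rw [norm_mul]; exact mul_le_mul (hz _ le_rfl) (hu _ (by omega)) (norm_nonneg _) zero_le_one
  have h3 : ∑ n ∈ range (L + 1), z n = (∑ n ∈ range (L + 1), z n - z (L + 1) * u L)
    + z (L + 1) * u L := by ring
  rw [h3]
  refine (norm_add_le _ _).trans ?_
  push_cast; nlinarith

/-- First derivative test for exponential sums, in difference form. -/
lemma first_test (g : ℕ → ℝ) (L : ℕ) (lam ε : ℝ) (hlam : 0 < lam) (hε : 0 ≤ ε)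
    (h1 : ∀ n < L, lam ≤ |g (n + 1) - g n|) (h2 : ∀ n < L, |g (n + 1) - g n| ≤ 1 / 2)
    (h3 : ∀ n, n + 1 < L → |(g (n + 2) - g (n + 1)) - (g (n + 1) - g n)| ≤ ε) :
    ‖∑ n ∈ range L, ee (g n)‖ ≤ 2 * (1 / (4 * lam)) + L * (2 * Real.pi * ε / (16 * lam ^ 2)) := by
  set w : ℕ → ℂ := fun n => ee (g (n + 1) - g n) - 1 with hw
  have hwl : ∀ n < L, 4 * lam ≤ ‖w n‖ := fun n hn =>
    (mul_le_mul_of_nonneg_left (h1 n hn) (by norm_num)).trans (le_norm_ee_sub_one (h2 n hn))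
  have hw0 : ∀ n < L, w n ≠ 0 := fun n hn => by
    have := hwl n hn
    rw [← norm_pos_iff]; linarith
  refine abel_bound (fun n => ee (g n)) (fun n => (w n)⁻¹) L _ _ (by positivity)
    (fun n _ => (norm_ee _).le) ?_ ?_ ?_ (by positivity)
  · intro n hn
    have : ee (g (n + 1)) - ee (g n) = ee (g n) * w n := by
      simp only [hw]
      have : ee (g (n + 1)) = ee (g n) * ee (g (n + 1) - g n) := by
        rw [← ee_add]; congr 1; ring
      rw [this]; ring
    rw [this, mul_assoc, mul_inv_cancel₀ (hw0 n hn), mul_one]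
  · intro n hn
    rw [norm_inv, one_div]
    exact inv_anti₀ (by positivity) (hwl n hn)
  · intro n hn
    rw [inv_sub_inv (hw0 _ hn) (hw0 n (by omega)), norm_div, norm_mul]
    have e : ‖w n - w (n + 1)‖ ≤ 2 * Real.pi * ε := by
      simp only [hw, sub_sub_sub_cancel_right]
      refine (norm_ee_sub_ee_le _ _).trans ?_
      rw [abs_sub_comm]
      exact mul_le_mul_of_nonneg_left (h3 n hn) (by positivity)
    have := hwl _ hn
    have := hwl n (by omega)
    refine div_le_div₀ (by positivity) e (by positivity) ?_
    nlinarith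

/-- Derivative control of a phase: `Φ j` is the `j`-th derivative of `Φ 0` on `[a, b]`, of size
at most `C₀ M N^{-j}` for `1 ≤ j ≤ k + 1`, and the `k`-th one is of size at least
`M N^{-k} / C₀`. -/
def Ctrl (C₀ : ℝ) (k : ℕ) (N M a b : ℝ) (Φ : ℕ → ℝ → ℝ) : Prop :=
  (∀ j, ∀ x ∈ Set.Icc a b, HasDerivAt (Φ j) (Φ (j + 1) x) x) ∧
  (∀ j, 1 ≤ j → j ≤ k + 1 → ∀ x ∈ Set.Icc a b, |Φ j x| ≤ C₀ * M / N ^ j) ∧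
  (∀ x ∈ Set.Icc a b, M / C₀ / N ^ k ≤ |Φ k x|)

lemma mvt {Φ : ℕ → ℝ → ℝ} {a b : ℝ}
    (hd : ∀ j, ∀ x ∈ Set.Icc a b, HasDerivAt (Φ j) (Φ (j + 1) x) x) (j : ℕ) {x h : ℝ}
    (hh : 0 < h) (hx : x ∈ Set.Icc a b) (hxh : x + h ∈ Set.Icc a b) :
    ∃ y ∈ Set.Icc a b, Φ j (x + h) - Φ j x = h * Φ (j + 1) y := by
  have hsub : Set.Icc x (x + h) ⊆ Set.Icc a b := Set.Icc_subset_Icc hx.1 hxh.2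
  obtain ⟨y, hy, hy'⟩ := exists_hasDerivAt_eq_slope (Φ j) (Φ (j + 1)) (by linarith : x < x + h)
    (fun t ht => (hd j t (hsub ht)).continuousAt.continuousWithinAt)
    (fun t ht => hd j t (hsub (Set.Ioo_subset_Icc_self ht)))
  refine ⟨y, hsub (Set.Ioo_subset_Icc_self hy), ?_⟩
  rw [hy', add_sub_cancel_left]; field_simp

/-- Differencing a controlled phase by `h` lowers the order by one and replaces `M` by `M h / N`. -/
lemma Ctrl.shift {C₀ : ℝ} {k : ℕ} {N M a b : ℝ} {Φ : ℕ → ℝ → ℝ} (hN : 0 < N)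
    (hΦ : Ctrl C₀ (k + 1) N M a b Φ) {h : ℝ} (hh : 0 < h) :
    Ctrl C₀ k N (M * h / N) a (b - h) (fun j x => Φ j (x + h) - Φ j x) := by
  obtain ⟨h1, h2, h3⟩ := hΦ
  have mem1 : ∀ x ∈ Set.Icc a (b - h), x ∈ Set.Icc a b := fun x hx => ⟨hx.1, by linarith [hx.2]⟩
  have mem2 : ∀ x ∈ Set.Icc a (b - h), x + h ∈ Set.Icc a b :=
    fun x hx => ⟨by linarith [hx.1], by linarith [hx.2]⟩
  refine ⟨fun j x hx => ?_, fun j hj hjk x hx => ?_, fun x hx => ?_⟩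
  · exact ((h1 j _ (mem2 x hx)).comp_add_const x h).sub (h1 j x (mem1 x hx))
  · obtain ⟨y, hy, hy'⟩ := mvt h1 j hh (mem1 x hx) (mem2 x hx)
    simp only [hy', abs_mul, abs_of_pos hh]
    have := h2 (j + 1) (by omega) (by omega) y hy
    calc h * |Φ (j + 1) y| ≤ h * (C₀ * M / N ^ (j + 1)) := by gcongr
      _ = _ := by rw [pow_succ]; field_simp
  · obtain ⟨y, hy, hy'⟩ := mvt h1 k hh (mem1 x hx) (mem2 x hx)
    simp only [hy', abs_mul, abs_of_pos hh]
    have := h3 y hy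
    calc _ = h * (M / C₀ / N ^ (k + 1)) := by rw [pow_succ]; field_simp
      _ ≤ _ := by gcongr

lemma sum_Ioc_floor (F : ℤ → ℂ) (a b : ℤ) (hab : a ≤ b) :
    ∑ n ∈ Ioc a b, F n = ∑ n ∈ range (b - a).toNat, F (a + 1 + n) := by
  refine Finset.sum_nbij' (fun n => (n - a - 1).toNat) (fun n => a + 1 + n) ?_ ?_ ?_ ?_ ?_
  · intro x hx; simp only [mem_Ioc, mem_range] at *; omega
  · intro x hx; simp only [mem_Ioc, mem_range] at *; omega
  · intro x hx; simp only [mem_Ioc, mem_range] at *; omega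
  · intro x hx; simp only [mem_range] at *; omega
  · intro x hx; simp only [mem_Ioc] at *; congr 1; omega

lemma triv_bound (g : ℤ → ℝ) (a b N : ℝ) (hN : 1 ≤ N) (hab : a ≤ b) (hb : b - a ≤ N) :
    ‖∑ n ∈ Ioc ⌊a⌋ ⌊b⌋, ee (g n)‖ ≤ 2 * N := by
  refine (norm_sum_le _ _).trans ?_
  simp only [norm_ee, sum_const, nsmul_eq_mul, mul_one, Int.card_Ioc]
  have h1 : ⌊a⌋ ≤ ⌊b⌋ := Int.floor_le_floor hab
  have h2 : (((⌊b⌋ - ⌊a⌋).toNat : ℤ) : ℝ) = ((⌊b⌋ - ⌊a⌋ : ℤ) : ℝ) := by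
    rw [Int.toNat_of_nonneg (by omega)]
  push_cast at h2
  have := Int.floor_le b
  have := Int.lt_floor_add_one a
  have h3 : (((⌊b⌋ - ⌊a⌋).toNat : ℕ) : ℝ) = ⌊b⌋ - ⌊a⌋ := by exact_mod_cast h2
  rw [h3]; linarith

/-- The `k`-th derivative test, with a power gain in `M`. -/
def Claim (k : ℕ) : Prop := ∀ C₀ : ℝ, 1 ≤ C₀ → ∃ C δ : ℝ, 0 < C ∧ 0 < δ ∧ δ ≤ 1 / 2 ∧
  ∀ (N M a b : ℝ) (Φ : ℕ → ℝ → ℝ), 1 ≤ N → 0 < M → M ^ 2 ≤ N ^ k → a ≤ b → b - a ≤ N →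
    Ctrl C₀ k N M a b Φ → ‖∑ n ∈ Ioc ⌊a⌋ ⌊b⌋, ee (Φ 0 n)‖ ≤ C * N * M ^ (-δ)

/-- The case `k = 1` is `first_test`, whose bound `1/2` on the increments holds because `M ^ 2 ≤ N`. -/
lemma claim_one : Claim 1 := by
  intro C₀ hC₀
  refine ⟨2 * (2 * C₀) + (C₀ + 2 * C₀ ^ 3 + 1), 1 / 2, by positivity, by norm_num, le_rfl, ?_⟩
  intro N M a b Φ hN hM hMN hab hb hΦ
  have hN0 : 0 < N := by linarith
  have htriv := triv_bound (fun n => Φ 0 n) a b N hN hab hb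
  have hMp : 0 < M ^ (-(1 / 2 : ℝ)) := Real.rpow_pos_of_pos hM _
  have hC1 : 0 ≤ C₀ + 2 * C₀ ^ 3 + 1 := by positivity
  by_cases hsm : M < 2 * C₀
  · -- `M` bounded: the trivial bound suffices
    refine htriv.trans ?_
    have h1 : (2 * C₀) ^ (-(1 / 2 : ℝ)) ≤ M ^ (-(1 / 2 : ℝ)) :=
      Real.rpow_le_rpow_of_nonpos hM hsm.le (by norm_num)
    have h2 : (2 * C₀) ^ (-(1 : ℝ)) ≤ (2 * C₀) ^ (-(1 / 2 : ℝ)) :=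
      Real.rpow_le_rpow_of_exponent_le (by linarith) (by norm_num)
    rw [Real.rpow_neg_one] at h2
    have h3 : 1 ≤ (2 * C₀) * M ^ (-(1 / 2 : ℝ)) := by
      calc 1 = (2 * C₀) * (2 * C₀)⁻¹ := by field_simp
        _ ≤ _ := by gcongr; linarith
    nlinarith [mul_nonneg hC1 (mul_pos hN0 hMp).le]
  push Not at hsm
  obtain ⟨h1, h2, h3⟩ := hΦ
  have hfl : ⌊a⌋ ≤ ⌊b⌋ := Int.floor_le_floor hab
  have hCM : C₀ * M / N ≤ 1 / 2 := by
    rw [div_le_iff₀ hN0]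
    simp only [pow_one] at hMN
    nlinarith
  rw [sum_Ioc_floor _ _ _ hfl]
  rcases Nat.eq_zero_or_pos (⌊b⌋ - ⌊a⌋).toNat with hL | hL
  · rw [hL]; simp only [range_zero, sum_empty, norm_zero]; positivity
  obtain ⟨L, hL'⟩ : ∃ L, (⌊b⌋ - ⌊a⌋).toNat = L + 1 := ⟨_, (Nat.succ_pred_eq_of_pos hL).symm⟩
  have hmem : ∀ n : ℕ, n ≤ L → (((⌊a⌋ + 1 + n : ℤ) : ℤ) : ℝ) ∈ Set.Icc a b := by
    intro n hn
    have : ⌊a⌋ + 1 + n ≤ ⌊b⌋ := by omega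
    have h4 : ((⌊a⌋ + 1 + n : ℤ) : ℝ) ≤ (⌊b⌋ : ℝ) := by exact_mod_cast this
    have := Int.floor_le b
    have := Int.lt_floor_add_one a
    refine ⟨?_, by linarith⟩
    push_cast; nlinarith [(Nat.cast_nonneg n : (0 : ℝ) ≤ n)]
  have hLN : (L : ℝ) ≤ N := by
    have m1 := (hmem L le_rfl).2
    have := Int.lt_floor_add_one a
    push_cast at m1; linarith
  rw [hL', Finset.sum_range_succ]
  set g : ℕ → ℝ := fun n => Φ 0 ((⌊a⌋ + 1 + n : ℤ) : ℝ) with hg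
  have cast1 : ∀ n : ℕ, ((⌊a⌋ + 1 + (n + 1 : ℕ) : ℤ) : ℝ) = ((⌊a⌋ + 1 + n : ℤ) : ℝ) + 1 := by
    intro n; push_cast; ring
  have b1 : ∀ n < L, ∃ y ∈ Set.Icc a b, g (n + 1) - g n = Φ 1 y := by
    intro n hn
    have hm := hmem (n + 1) hn
    rw [cast1] at hm
    obtain ⟨y, hy, hy'⟩ := mvt h1 0 one_pos (hmem n hn.le) hm
    refine ⟨y, hy, ?_⟩
    simp only [hg, cast1, hy']; simp
  have hft := first_test g L (M / C₀ / N) (C₀ * M / N ^ 2) (by positivity) (by positivity)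
    (fun n hn => by
      obtain ⟨y, hy, hy'⟩ := b1 n hn
      rw [hy']; simpa using h3 y hy)
    (fun n hn => by
      obtain ⟨y, hy, hy'⟩ := b1 n hn
      rw [hy']; refine le_trans ?_ hCM
      simpa using h2 1 le_rfl (by norm_num) y hy)
    (fun n hn => by
      have m2 := hmem (n + 2) hn
      have m1 := hmem (n + 1) (by omega)
      have m0 := hmem n (by omega)
      rw [show n + 2 = (n + 1) + 1 by ring, cast1] at m2
      rw [cast1] at m2 m1
      set x := ((⌊a⌋ + 1 + n : ℤ) : ℝ) with hx
      -- apply the mean value theorem to the difference, then once more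
      have hs : ∀ j, ∀ t ∈ Set.Icc a (b - 1), HasDerivAt (fun x => Φ j (x + 1) - Φ j x)
          (Φ (j + 1) (t + 1) - Φ (j + 1) t) t := fun j t ht =>
        ((h1 j _ ⟨by linarith [ht.1], by linarith [ht.2]⟩).comp_add_const t 1).sub
          (h1 j t ⟨ht.1, by linarith [ht.2]⟩)
      obtain ⟨y, hy, hy'⟩ := mvt (Φ := fun j x => Φ j (x + 1) - Φ j x) hs 0 one_pos
        (x := x) ⟨m0.1, by linarith [m1.2]⟩ ⟨m1.1, by linarith [m2.2]⟩
      obtain ⟨v, hv, hv'⟩ := mvt h1 1 one_pos (x := y) ⟨hy.1, by linarith [hy.2]⟩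
        ⟨by linarith [hy.1], by linarith [hy.2]⟩
      have e : (g (n + 2) - g (n + 1)) - (g (n + 1) - g n) = Φ 2 v := by
        simp only [hg, show n + 2 = (n + 1) + 1 by ring, cast1]
        simp only [one_mul, zero_add] at hy' hv'
        rw [← hx, hy', hv']
      rw [e]
      exact h2 2 (by norm_num) (by norm_num) v hv)
  refine (norm_add_le _ _).trans ?_
  rw [norm_ee]
  have hsum : ∑ n ∈ range L, ee (Φ 0 ((⌊a⌋ + 1 + n : ℤ) : ℝ)) = ∑ n ∈ range L, ee (g n) := rfl
  rw [hsum]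
  have hM1 : 1 ≤ M := by linarith
  have hbound : ‖∑ n ∈ range L, ee (g n)‖ + 1 ≤ (C₀ + 2 * C₀ ^ 3 + 1) * N * (1 / M ^ (1 / 2 : ℝ)) := by
    have hMsq : M ^ (1 / 2 : ℝ) * M ^ (1 / 2 : ℝ) = M := by
      rw [← Real.rpow_add hM]; norm_num
    have hM12 : 1 ≤ M ^ (1 / 2 : ℝ) := Real.one_le_rpow hM1 (by norm_num)
    have e1 : 1 / M ≤ 1 / M ^ (1 / 2 : ℝ) := by
      apply one_div_le_one_div_of_le (by linarith); nlinarith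
    have e2 : 1 ≤ N * (1 / M ^ (1 / 2 : ℝ)) := by
      rw [mul_one_div, le_div_iff₀ (by linarith), one_mul]
      simp only [pow_one] at hMN
      nlinarith
    have e3 : 2 * (1 / (4 * (M / C₀ / N))) ≤ C₀ * N * (1 / M) := by
      rw [show 2 * (1 / (4 * (M / C₀ / N))) = (C₀ * N * (1 / M)) / 2 by field_simp; norm_num]
      have : 0 ≤ C₀ * N * (1 / M) := by positivity
      linarith
    have e4 : L * (2 * Real.pi * (C₀ * M / N ^ 2) / (16 * (M / C₀ / N) ^ 2)) ≤
        2 * C₀ ^ 3 * N * (1 / M) := by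
      rw [show (2 * Real.pi * (C₀ * M / N ^ 2) / (16 * (M / C₀ / N) ^ 2)) =
        (Real.pi / 8) * (C₀ ^ 3 * (1 / M)) by field_simp; norm_num]
      have hpi : Real.pi / 8 ≤ 1 := by linarith [Real.pi_le_four]
      have hq : 0 ≤ C₀ ^ 3 * (1 / M) := by positivity
      calc _ ≤ N * (1 * (C₀ ^ 3 * (1 / M))) := by gcongr
        _ ≤ _ := by nlinarith [mul_nonneg hN0.le hq]
    have e5 : (C₀ * N + 2 * C₀ ^ 3 * N) * (1 / M) ≤
        (C₀ * N + 2 * C₀ ^ 3 * N) * (1 / M ^ (1 / 2 : ℝ)) := by gcongr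
    nlinarith
  refine hbound.trans ?_
  rw [Real.rpow_neg hM.le, one_div]
  refine mul_le_mul_of_nonneg_right (mul_le_mul_of_nonneg_right ?_ hN0.le) (by positivity)
  linarith

end FV

/-! ### The `k`-th derivative test -/

namespace FV

lemma sum_inv_sqrt (n : ℕ) : ∑ d ∈ range n, 1 / √((d : ℝ) + 1) ≤ 2 * √(n : ℝ) := by
  induction n with
  | zero => simp
  | succ n ih =>
    rw [Finset.sum_range_succ]
    have h1 : 0 < √((n : ℝ) + 1) := Real.sqrt_pos.2 (by positivity)
    have h2 := Real.sq_sqrt (by positivity : (0 : ℝ) ≤ n + 1)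
    have h3 := Real.sq_sqrt (Nat.cast_nonneg n : (0 : ℝ) ≤ n)
    have h4 : 0 ≤ √(n : ℝ) := Real.sqrt_nonneg _
    have : 1 / √((n : ℝ) + 1) ≤ 2 * √((n : ℝ) + 1) - 2 * √(n : ℝ) := by
      rw [div_le_iff₀ h1]
      nlinarith [sq_nonneg (√((n : ℝ) + 1) - √(n : ℝ))]
    push_cast; linarith

lemma sum_rpow_neg (δ : ℝ) (hδ : δ ≤ 1 / 2) (n H : ℕ) (hn : n ≤ H) (hH : 1 ≤ H) :
    ∑ d ∈ range n, ((d : ℝ) + 1) ^ (-δ) ≤ 2 * H * (H : ℝ) ^ (-δ) := by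
  have hHr : (0 : ℝ) < H := by exact_mod_cast hH
  have h1 : ∀ d ∈ range n, ((d : ℝ) + 1) ^ (-δ) ≤
      ((H : ℝ) ^ (-δ) * √H) * (1 / √((d : ℝ) + 1)) := by
    intro d hd
    rw [mem_range] at hd
    have hd1 : (0 : ℝ) < (d : ℝ) + 1 := by positivity
    have hdH : (d : ℝ) + 1 ≤ H := by exact_mod_cast (by omega : d + 1 ≤ H)
    have e1 : 1 ≤ (H : ℝ) / (d + 1) := by rw [le_div_iff₀ hd1]; linarith
    have e2 : ((H : ℝ) / (d + 1)) ^ δ ≤ ((H : ℝ) / (d + 1)) ^ (1 / 2 : ℝ) :=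
      Real.rpow_le_rpow_of_exponent_le e1 hδ
    rw [Real.div_rpow hHr.le hd1.le, Real.div_rpow hHr.le hd1.le, ← Real.sqrt_eq_rpow,
      ← Real.sqrt_eq_rpow] at e2
    rw [Real.rpow_neg hd1.le, Real.rpow_neg hHr.le]
    have p1 : 0 < (H : ℝ) ^ δ := Real.rpow_pos_of_pos hHr _
    have p2 : 0 < ((d : ℝ) + 1) ^ δ := Real.rpow_pos_of_pos hd1 _
    calc (((d : ℝ) + 1) ^ δ)⁻¹ = ((H : ℝ) ^ δ)⁻¹ * ((H : ℝ) ^ δ / ((d : ℝ) + 1) ^ δ) := by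
          field_simp
      _ ≤ ((H : ℝ) ^ δ)⁻¹ * (√H / √((d : ℝ) + 1)) := by gcongr
      _ = _ := by ring
  refine (Finset.sum_le_sum h1).trans ?_
  rw [← Finset.mul_sum]
  have h2 : ∑ d ∈ range n, 1 / √((d : ℝ) + 1) ≤ 2 * √(H : ℝ) :=
    (sum_inv_sqrt n).trans (by gcongr)
  have h3 := Real.mul_self_sqrt hHr.le
  have p : 0 ≤ (H : ℝ) ^ (-δ) * √H := by positivity
  calc _ ≤ (H : ℝ) ^ (-δ) * √H * (2 * √H) := by gcongr
    _ = 2 * (√H * √H) * (H : ℝ) ^ (-δ) := by ring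
    _ = _ := by rw [h3]

set_option maxHeartbeats 1000000 in
/-- The inductive step: van der Corput differencing (`vdc`) turns the sum into sums whose phases are
controlled to order `k` by `Ctrl.shift`. -/
lemma claim_succ (k : ℕ) (hk : 1 ≤ k) (ih : Claim k) : Claim (k + 1) := by
  intro C₀ hC₀
  obtain ⟨C, δ, hC, hδ, hδ2, hcl⟩ := ih C₀ hC₀
  have hK : (0 : ℝ) < (k + 1 : ℕ) := by positivity
  have hK1 : (1 : ℝ) ≤ (k + 1 : ℕ) := by exact_mod_cast (by omega : 1 ≤ k + 1)
  refine ⟨24 * (1 + C), δ / (2 * (k + 1 : ℕ)), by positivity, by positivity, ?_, ?_⟩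
  · rw [div_le_iff₀ (by positivity)]; nlinarith
  intro N M a b Φ hN hM hMN hab hb hΦ
  have hN0 : 0 < N := by linarith
  set δ' := δ / (2 * (k + 1 : ℕ)) with hδ'
  have hδ'0 : 0 < δ' := by positivity
  have htriv := triv_bound (fun n => Φ 0 n) a b N hN hab hb
  rcases le_or_gt M 1 with hM1 | hM1
  · refine htriv.trans ?_
    have : 1 ≤ M ^ (-δ') := Real.one_le_rpow_of_pos_of_le_one_of_nonpos hM hM1 (by linarith)
    nlinarith [mul_pos hC hN0]
  set X := M ^ (1 / (k + 1 : ℕ) : ℝ) with hX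
  have hX1 : 1 ≤ X := Real.one_le_rpow hM1.le (by positivity)
  have hXK : X ^ (k + 1) = M := by
    rw [hX, ← Real.rpow_natCast, ← Real.rpow_mul hM.le]
    rw [one_div_mul_cancel hK.ne', Real.rpow_one]
  have hX2 : X ^ 2 ≤ N := by
    have : (X ^ 2) ^ (k + 1) ≤ N ^ (k + 1) := by
      rw [← pow_mul, mul_comm, pow_mul, hXK]; exact hMN
    exact le_of_pow_le_pow_left₀ (by omega) hN0.le this
  set H := ⌊N / X⌋₊ with hH
  have hX0 : 0 < X := by linarith
  have hNX : 1 ≤ N / X := by rw [le_div_iff₀ hX0]; nlinarith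
  have hH1 : 1 ≤ H := Nat.le_floor (by simpa using hNX)
  have hHle : (H : ℝ) ≤ N / X := Nat.floor_le (by positivity)
  have hHge : N / (2 * X) ≤ H := by
    have := Nat.lt_floor_add_one (N / X)
    have h1 : (1 : ℝ) ≤ H := by exact_mod_cast hH1
    have e : N / (2 * X) = N / X / 2 := by field_simp
    rw [e]; linarith
  have hHr : (0 : ℝ) < H := by exact_mod_cast hH1
  have hfl : ⌊a⌋ ≤ ⌊b⌋ := Int.floor_le_floor hab
  set B : ℕ → ℝ := fun d => if d = 0 then 2 * N else C * N * (M * d / N) ^ (-δ) with hB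
  have hv := vdc (fun n => ee (Φ 0 n)) ⌊a⌋ ⌊b⌋ hfl H hH1 B
    (fun d => by simp only [hB]; split_ifs <;> positivity)
    (fun d hd => by
      rcases Nat.eq_zero_or_pos d with rfl | hd0
      · simp only [hB, if_true, Nat.cast_zero, sub_zero, add_zero]
        have : ∀ n ∈ Ioc ⌊a⌋ ⌊b⌋, ee (Φ 0 n) * (starRingEnd ℂ) (ee (Φ 0 n)) = ee 0 := by
          intro n _; rw [← ee_sub, sub_self]
        rw [Finset.sum_congr rfl this]
        exact triv_bound (fun _ => 0) a b N hN hab hb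
      · have hdr : (0 : ℝ) < d := by exact_mod_cast hd0
        simp only [hB, if_neg hd0.ne']
        have e : ⌊b⌋ - (d : ℤ) = ⌊b - d⌋ := by
          rw [← Int.floor_sub_natCast]
        rw [e]
        rcases lt_or_ge (b - d) a with hlt | hge
        · rw [Finset.Ioc_eq_empty (by
            have := Int.floor_le_floor hlt.le; omega)]
          simp only [sum_empty, norm_zero]; positivity
        · have hM' : (M * d / N) ^ 2 ≤ N ^ k := by
            have h1 : M * d / N ≤ X ^ k := by
              have hdH : (d : ℝ) ≤ N / X := le_trans (by exact_mod_cast hd.le) hHle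
              rw [le_div_iff₀ hX0] at hdH
              rw [div_le_iff₀ hN0, ← hXK, pow_succ]
              have : 0 < X ^ k := by positivity
              nlinarith
            calc (M * d / N) ^ 2 ≤ (X ^ k) ^ 2 := by gcongr
              _ = (X ^ 2) ^ k := by rw [← pow_mul, ← pow_mul, mul_comm]
              _ ≤ _ := by gcongr
          have := hcl N (M * d / N) a (b - d) _ hN (by positivity) hM' hge (by linarith)
            (hΦ.shift hN0 hdr)
          refine le_trans (le_of_eq ?_) this
          congr 1
          refine Finset.sum_congr rfl fun n _ => ?_
          rw [ee_sub]; push_cast; rfl)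
  -- bound for the sum of correlations
  have hXk : 0 < X ^ k := by positivity
  have hsumB : ∑ d ∈ range H, B d ≤ 2 * N + 4 * C * N * H * X ^ (-δ) := by
    obtain ⟨H', hH'⟩ : ∃ H', H = H' + 1 := ⟨H - 1, by omega⟩
    have e1 : ∑ d ∈ range H, B d = 2 * N + C * N * (M / N) ^ (-δ) *
        ∑ d ∈ range H', ((d : ℝ) + 1) ^ (-δ) := by
      rw [hH', Finset.sum_range_succ', add_comm, Finset.mul_sum]
      simp only [hB, if_true, Nat.add_eq_zero_iff, one_ne_zero, and_false, if_false]
      congr 1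
      refine Finset.sum_congr rfl fun d _ => ?_
      rw [mul_assoc _ ((M / N) ^ (-δ)), ← Real.mul_rpow (by positivity) (by positivity)]
      congr 2; push_cast; ring
    rw [e1]
    have e2 := sum_rpow_neg δ hδ2 H' H (by omega) hH1
    have e3 : (M / N) ^ (-δ) * (H : ℝ) ^ (-δ) ≤ 2 * X ^ (-δ) := by
      rw [← Real.mul_rpow (by positivity) (by positivity)]
      have h1 : X / 2 ≤ M / N * H := by
        have hXX : X ≤ X ^ k := le_self_pow₀ hX1 (by omega)
        calc X / 2 ≤ X ^ k / 2 := by linarith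
          _ = M / N * (N / (2 * X)) := by rw [← hXK, pow_succ]; field_simp
          _ ≤ _ := by gcongr
      calc _ ≤ (X / 2) ^ (-δ) := Real.rpow_le_rpow_of_nonpos (by positivity) h1 (by linarith)
        _ = X ^ (-δ) * 2 ^ δ := by
            rw [Real.div_rpow hX0.le (by norm_num), Real.rpow_neg (by norm_num : (0:ℝ) ≤ 2)]
            field_simp
        _ ≤ X ^ (-δ) * 2 ^ (1 : ℝ) := by
            gcongr
            · norm_num
            · linarith
        _ = _ := by rw [Real.rpow_one]; ring
    calc _ ≤ 2 * N + C * N * (M / N) ^ (-δ) * (2 * H * (H : ℝ) ^ (-δ)) := by gcongr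
      _ = 2 * N + 2 * C * N * H * ((M / N) ^ (-δ) * (H : ℝ) ^ (-δ)) := by ring
      _ ≤ 2 * N + 2 * C * N * H * (2 * X ^ (-δ)) := by gcongr
      _ = _ := by ring
  set S := ‖∑ n ∈ Ioc ⌊a⌋ ⌊b⌋, ee (Φ 0 n)‖ with hS
  have hLH : (((⌊b⌋ - ⌊a⌋ : ℤ) : ℝ) + H) ≤ 3 * N := by
    have h1 := Int.floor_le b
    have h2 := Int.lt_floor_add_one a
    have h3 : N / X ≤ N := div_le_self hN0.le hX1
    push_cast; linarith
  have hXd : X⁻¹ ≤ X ^ (-δ) := by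
    rw [← Real.rpow_neg_one]; exact Real.rpow_le_rpow_of_exponent_le hX1 (by linarith)
  have hXp : 0 < X ^ (-δ) := by positivity
  have hS2 : S ^ 2 ≤ 24 * (1 + C) * N ^ 2 * X ^ (-δ) := by
    have h1 : H * S ^ 2 ≤ 2 * (3 * N) * (2 * N + 4 * C * N * H * X ^ (-δ)) := by
      refine hv.trans ?_
      have : 0 ≤ ∑ d ∈ range H, B d := Finset.sum_nonneg fun d _ => by
        simp only [hB]; split_ifs <;> positivity
      gcongr
    have h2 : N ≤ 2 * H * N * X ^ (-δ) := by
      have : X ≤ 2 * H := by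
        rw [div_le_iff₀ (by positivity)] at hHge
        nlinarith
      have h3 : 1 ≤ 2 * H * X ^ (-δ) := by
        calc 1 = X * X⁻¹ := by field_simp
          _ ≤ 2 * H * X ^ (-δ) := by gcongr
      nlinarith
    have h3 : H * S ^ 2 ≤ H * (24 * (1 + C) * N ^ 2 * X ^ (-δ)) := by
      refine h1.trans ?_
      have h4 := mul_le_mul_of_nonneg_left h2 (by positivity : 0 ≤ 12 * N)
      calc 2 * (3 * N) * (2 * N + 4 * C * N * H * X ^ (-δ))
          = 12 * N * N + 24 * C * N ^ 2 * H * X ^ (-δ) := by ring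
        _ ≤ 12 * N * (2 * H * N * X ^ (-δ)) + 24 * C * N ^ 2 * H * X ^ (-δ) := by linarith
        _ = _ := by ring
    exact le_of_mul_le_mul_left h3 hHr
  have hXM : X ^ (-δ) = (M ^ (-δ')) ^ 2 := by
    rw [hX, ← Real.rpow_mul hM.le, ← Real.rpow_natCast, ← Real.rpow_mul hM.le]
    congr 1; rw [hδ']; push_cast; field_simp
  have hfin : S ^ 2 ≤ (24 * (1 + C) * N * M ^ (-δ')) ^ 2 := by
    refine hS2.trans ?_
    rw [hXM]
    have hc : 24 * (1 + C) ≤ (24 * (1 + C)) ^ 2 := le_self_pow₀ (by linarith) (by norm_num)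
    calc _ ≤ (24 * (1 + C)) ^ 2 * N ^ 2 * (M ^ (-δ')) ^ 2 := by gcongr
      _ = _ := by ring
  exact le_of_sq_le_sq hfin (by positivity)

lemma claim_all (k : ℕ) (hk : 1 ≤ k) : Claim k := by
  induction k, hk using Nat.le_induction with
  | base => exact claim_one
  | succ k hk ih => exact claim_succ k hk ih

end FV

/-! ### Exponential sums with phase `∑ θ_i n ^ c_i` -/

namespace FV

/-- The falling factorial `c (c-1) ⋯ (c-j+1)`. -/
def ff (c : ℝ) (j : ℕ) : ℝ := (descPochhammer ℝ j).eval c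

lemma ff_zero (c : ℝ) : ff c 0 = 1 := by simp [ff]

lemma ff_succ (c : ℝ) (j : ℕ) : ff c (j + 1) = ff c j * (c - j) := descPochhammer_succ_eval j c

lemma ff_add (c : ℝ) (k j : ℕ) : ff c (k + j) = ff c k * ff (c - k) j := by
  unfold ff
  rw [← descPochhammer_mul]
  simp [Polynomial.eval_comp]

lemma ff_ne_zero {c : ℝ} (hint : ∀ k : ℤ, c ≠ (k : ℝ)) (j : ℕ) : ff c j ≠ 0 := by
  unfold ff
  rw [descPochhammer_eval_eq_prod_range, Finset.prod_ne_zero_iff]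
  intro l _ h
  exact hint l (by push_cast; linarith)

/-- The `j`-th derivative of `∑ θ_i x^{c_i}`. -/
def Ph {m : ℕ} (c θ : Fin m → ℝ) (j : ℕ) (x : ℝ) : ℝ := ∑ i, θ i * ff (c i) j * x ^ (c i - j)

lemma Ph_deriv {m : ℕ} (c θ : Fin m → ℝ) (j : ℕ) {x : ℝ} (hx : 0 < x) :
    HasDerivAt (Ph c θ j) (Ph c θ (j + 1) x) x := by
  unfold Ph
  refine HasDerivAt.fun_sum fun i _ => ?_
  have := (Real.hasDerivAt_rpow_const (x := x) (p := c i - j) (Or.inl hx.ne')).const_mul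
    (θ i * ff (c i) j)
  have e : θ i * ff (c i) (j + 1) * x ^ (c i - (j + 1 : ℕ)) =
      θ i * ff (c i) j * ((c i - ↑j) * x ^ (c i - ↑j - 1)) := by
    rw [ff_succ]; push_cast; rw [sub_add_eq_sub_sub]; ring
  rw [e]; exact this

lemma Ph_eq {m : ℕ} (c θ : Fin m → ℝ) (j : ℕ) {x : ℝ} (hx : 0 < x) :
    Ph c θ j x = (∑ i, ff (c i) j * (θ i * x ^ c i)) / x ^ j := by
  unfold Ph
  rw [Finset.sum_div]
  refine Finset.sum_congr rfl fun i _ => ?_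
  rw [Real.rpow_sub hx, Real.rpow_natCast]; ring

/-- Vandermonde: consecutive derivatives cannot all be small. -/
lemma ff_lower {m : ℕ} (c : Fin m → ℝ) (hinj : Function.Injective c)
    (hint : ∀ i, ∀ k : ℤ, c i ≠ (k : ℝ)) (k : ℕ) :
    ∃ K : ℝ, 0 < K ∧ ∀ y : Fin m → ℝ, ∀ i, ∃ j : Fin m,
      |y i| ≤ K * |∑ i, ff (c i) (k + j) * y i| := by
  let f : (Fin m → ℝ) →ₗ[ℝ] (Fin m → ℝ) :=
    { toFun := fun y j => ∑ i, ff (c i) (k + j) * y i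
      map_add' := by intro x y; ext j; simp [mul_add, Finset.sum_add_distrib]
      map_smul' := by
        intro a y; ext j
        simp only [Pi.smul_apply, smul_eq_mul, RingHom.id_apply, Finset.mul_sum]
        exact Finset.sum_congr rfl fun i _ => by ring }
  have hker : f.ker = ⊥ := by
    rw [LinearMap.ker_eq_bot']
    intro y hy
    set V : Matrix (Fin m) (Fin m) ℝ :=
      Matrix.of fun i j => Polynomial.eval (c i - k) (descPochhammer ℝ (j : ℕ)) with hV
    have hdet : V.det ≠ 0 := by
      rw [hV, ← Matrix.det_eval_matrixOfPolynomials_eq_det_vandermonde (fun i => c i - k)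
        (fun j => descPochhammer ℝ (j : ℕ)) (fun j => descPochhammer_natDegree ℝ j)
        (fun j => monic_descPochhammer ℝ j), Matrix.det_vandermonde_ne_zero_iff]
      intro a b hab
      exact hinj (by simpa using hab)
    have h0 := Matrix.eq_zero_of_vecMul_eq_zero hdet (v := fun i => ff (c i) k * y i) (by
      ext j
      have := congrFun hy j
      simp only [f, LinearMap.coe_mk, AddHom.coe_mk, Pi.zero_apply] at this
      simp only [Matrix.vecMul, dotProduct, hV, Matrix.of_apply, Pi.zero_apply]
      rw [← this]
      refine Finset.sum_congr rfl fun i _ => ?_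
      rw [ff_add]; simp only [ff]; ring)
    ext i
    have := congrFun h0 i
    simpa [ff_ne_zero (hint i) k] using this
  obtain ⟨K, hK, hf⟩ := f.exists_antilipschitzWith hker
  refine ⟨K, by exact_mod_cast hK, fun y i => ?_⟩
  have : Nonempty (Fin m) := ⟨i⟩
  obtain ⟨j, hj⟩ : ∃ j, ‖f y j‖ = ‖f y‖ := by
    obtain ⟨j, _, hj⟩ := Finset.exists_max_image Finset.univ (fun j => ‖f y j‖) Finset.univ_nonempty
    exact ⟨j, le_antisymm (norm_le_pi_norm _ _) ((pi_norm_le_iff_of_nonneg (norm_nonneg _)).2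
      fun l => hj l (Finset.mem_univ _))⟩
  refine ⟨j, ?_⟩
  have h1 : ‖y‖ ≤ K * ‖f y‖ := by
    have := hf.le_mul_dist y 0
    simpa [dist_zero_right] using this
  calc |y i| = ‖y i‖ := rfl
    _ ≤ ‖y‖ := norm_le_pi_norm y i
    _ ≤ K * ‖f y‖ := h1
    _ = _ := by rw [← hj]; rfl

/-- `Claim (k + j)` with constants uniform in `j < m`. -/
lemma claim_unif (C₀ : ℝ) (hC : 1 ≤ C₀) (k : ℕ) (hk : 1 ≤ k) (m : ℕ) :
    ∃ C δ : ℝ, 0 < C ∧ 0 < δ ∧ δ ≤ 1 / 2 ∧ ∀ j < m,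
  ∀ (N M a b : ℝ) (Φ : ℕ → ℝ → ℝ), 1 ≤ N → 1 ≤ M → M ^ 2 ≤ N ^ (k + j) → a ≤ b → b - a ≤ N →
    Ctrl C₀ (k + j) N M a b Φ → ‖∑ n ∈ Ioc ⌊a⌋ ⌊b⌋, ee (Φ 0 n)‖ ≤ C * N * M ^ (-δ) := by
  induction m with
  | zero => exact ⟨1, 1 / 2, by norm_num, by norm_num, le_rfl, fun j hj => absurd hj (by omega)⟩
  | succ m ih =>
    obtain ⟨C, δ, hC0, hδ, hδ2, h⟩ := ih
    obtain ⟨C', δ', hC0', hδ', hδ2', h'⟩ := claim_all (k + m) (by omega) C₀ hC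
    refine ⟨max C C', min δ δ', lt_max_of_lt_left hC0, lt_min hδ hδ', (min_le_left _ _).trans hδ2,
      fun j hj N M a b Φ hN hM hMN hab hb hc => ?_⟩
    have hpow : ∀ d, min δ δ' ≤ d → M ^ (-d) ≤ M ^ (-(min δ δ')) := fun d hd =>
      Real.rpow_le_rpow_of_exponent_le hM (by linarith)
    rcases Nat.lt_succ_iff_lt_or_eq.1 hj with hj | rfl
    · refine (h j hj N M a b Φ hN hM hMN hab hb hc).trans ?_
      have := hpow δ (min_le_left _ _)
      have := le_max_left C C'
      gcongr
    · refine (h' N M a b Φ hN (by linarith) hMN hab hb hc).trans ?_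
      have := hpow δ' (min_le_right _ _)
      have := le_max_right C C'
      gcongr

lemma sum_pieces (F : ℤ → ℂ) (a : ℕ → ℝ) (ha : Monotone a) (R : ℕ) :
    ∑ n ∈ Ioc ⌊a 0⌋ ⌊a R⌋, F n = ∑ r ∈ range R, ∑ n ∈ Ioc ⌊a r⌋ ⌊a (r + 1)⌋, F n := by
  induction R with
  | zero => simp
  | succ R ih =>
    rw [Finset.sum_range_succ, ← ih, ← Finset.sum_union]
    · congr 1
      ext n
      have h1 := Int.floor_le_floor (ha (Nat.zero_le R))
      have h2 := Int.floor_le_floor (ha (Nat.le_succ R))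
      simp only [mem_union, mem_Ioc, Nat.succ_eq_add_one] at *
      omega
    · rw [Finset.disjoint_left]; intro n; simp only [mem_Ioc]; omega

set_option maxHeartbeats 1000000 in
/-- Exponential sums with phase `∑ θ_i n^{c_i}`. -/
lemma nt_real {m : ℕ} (c : Fin m → ℝ) (hpos : ∀ i, 0 < c i) (hinj : Function.Injective c)
    (hint : ∀ i, ∀ k : ℤ, c i ≠ (k : ℝ)) (A : ℝ) :
    ∃ C δ : ℝ, 0 < C ∧ 0 < δ ∧ δ ≤ 1 / 2 ∧ ∀ (N M : ℝ) (θ : Fin m → ℝ), 1 ≤ N → 1 ≤ M →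
      M ≤ N ^ A → (∀ i, N ^ c i * |θ i| ≤ M) → (∃ i, M ≤ N ^ c i * |θ i|) →
      ‖∑ n ∈ Ioc ⌊N / 2⌋ ⌊N⌋, ee (∑ i, θ i * (n : ℝ) ^ c i)‖ ≤ C * N * M ^ (-δ) := by
  obtain ⟨k, hkA⟩ := exists_nat_ge (max 1 (2 * A))
  have hk1 : 1 ≤ k := by exact_mod_cast (le_max_left _ _).trans hkA
  have hk2 : 2 * A ≤ k := (le_max_right _ _).trans hkA
  obtain ⟨K, hK, hlow⟩ := ff_lower c hinj hint k
  -- constants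
  obtain ⟨B, hB1, hB⟩ : ∃ B : ℝ, 1 ≤ B ∧ ∀ i, ∀ j ≤ k + m + 1, |ff (c i) j| * 2 ^ j ≤ B := by
    refine ⟨1 + ∑ i, ∑ j ∈ range (k + m + 2), |ff (c i) j| * 2 ^ j, ?_, ?_⟩
    · have : 0 ≤ ∑ i, ∑ j ∈ range (k + m + 2), |ff (c i) j| * 2 ^ j := by positivity
      linarith
    · intro i j hj
      have h1 : |ff (c i) j| * 2 ^ j ≤ ∑ j ∈ range (k + m + 2), |ff (c i) j| * 2 ^ j :=
        Finset.single_le_sum (f := fun j => |ff (c i) j| * 2 ^ j) (fun _ _ => by positivity)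
          (mem_range.2 (by omega))
      have h2 : ∑ j ∈ range (k + m + 2), |ff (c i) j| * 2 ^ j ≤
          ∑ i, ∑ j ∈ range (k + m + 2), |ff (c i) j| * 2 ^ j :=
        Finset.single_le_sum (f := fun i => ∑ j ∈ range (k + m + 2), |ff (c i) j| * 2 ^ j)
          (fun _ _ => by positivity) (mem_univ i)
      linarith
  obtain ⟨E, hE0, hE⟩ : ∃ E : ℝ, 1 ≤ E ∧ ∀ i, (2 : ℝ) ^ c i ≤ E := by
    refine ⟨1 + ∑ i, (2 : ℝ) ^ c i, ?_, fun i => ?_⟩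
    · have : 0 ≤ ∑ i, (2 : ℝ) ^ c i := by positivity
      linarith
    · have := Finset.single_le_sum (f := fun i => (2 : ℝ) ^ c i) (fun _ _ => by positivity)
        (mem_univ i)
      linarith
  set C₁ : ℝ := m * B + 1 with hC₁
  have hC₁1 : 1 ≤ C₁ := by
    have : 0 ≤ (m : ℝ) * B := by positivity
    linarith
  set C₀ : ℝ := C₁ + 2 * K * E with hC₀
  have hC₀1 : 1 ≤ C₀ := by
    have : 0 ≤ 2 * K * E := by positivity
    linarith
  obtain ⟨C, δ, hC, hδ, hδ2, hcl⟩ := claim_unif C₀ hC₀1 k hk1 m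
  obtain ⟨R, hR⟩ := exists_nat_ge (max 1 (C₁ * K * E))
  have hR1 : (1 : ℝ) ≤ R := (le_max_left _ _).trans hR
  have hR2 : C₁ * K * E ≤ R := (le_max_right _ _).trans hR
  refine ⟨R * C, δ, by positivity, hδ, hδ2, ?_⟩
  intro N M θ hN hM hMA hθ ⟨i₀, hi₀⟩
  have hN0 : 0 < N := by linarith
  have hupper : ∀ j ≤ k + m + 1, ∀ x ∈ Set.Icc (N / 2) N, |Ph c θ j x| ≤ C₁ * M / N ^ j := by
    intro j hj x hx
    have hx0 : 0 < x := by linarith [hx.1]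
    rw [Ph_eq c θ j hx0, abs_div, abs_of_pos (pow_pos hx0 j), div_le_div_iff₀ (by positivity)
      (by positivity)]
    have h1 : |∑ i, ff (c i) j * (θ i * x ^ c i)| * 2 ^ j ≤ m * B * M := by
      calc _ ≤ (∑ i, |ff (c i) j * (θ i * x ^ c i)|) * 2 ^ j := by
            gcongr; exact Finset.abs_sum_le_sum_abs _ _
        _ = ∑ i, |ff (c i) j| * 2 ^ j * (x ^ c i * |θ i|) := by
            rw [Finset.sum_mul]
            refine Finset.sum_congr rfl fun i _ => ?_
            rw [abs_mul, abs_mul, abs_of_pos (Real.rpow_pos_of_pos hx0 _)]; ring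
        _ ≤ ∑ i : Fin m, B * M := by
            refine Finset.sum_le_sum fun i _ => mul_le_mul (hB i j hj) ?_ (by positivity)
              (by linarith)
            refine le_trans ?_ (hθ i)
            gcongr
            · exact (hpos i).le
            · exact hx.2
        _ = _ := by simp; ring
    have h2 : N ^ j ≤ 2 ^ j * x ^ j := by
      rw [← mul_pow]; gcongr; linarith [hx.1]
    calc |∑ i, ff (c i) j * (θ i * x ^ c i)| * N ^ j
        ≤ |∑ i, ff (c i) j * (θ i * x ^ c i)| * (2 ^ j * x ^ j) := by gcongr
      _ = |∑ i, ff (c i) j * (θ i * x ^ c i)| * 2 ^ j * x ^ j := by ring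
      _ ≤ m * B * M * x ^ j := by gcongr
      _ ≤ C₁ * M * x ^ j := by gcongr; linarith
  have hlower : ∀ x ∈ Set.Icc (N / 2) N, ∃ j < m, M / (K * E) / N ^ (k + j) ≤
      |Ph c θ (k + j) x| := by
    intro x hx
    have hx0 : 0 < x := by linarith [hx.1]
    obtain ⟨j, hj⟩ := hlow (fun i => θ i * x ^ c i) i₀
    refine ⟨j, j.2, ?_⟩
    rw [Ph_eq c θ _ hx0, abs_div, abs_of_pos (pow_pos hx0 _)]
    have h1 : M ≤ E * |θ i₀ * x ^ c i₀| := by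
      rw [abs_mul, abs_of_pos (Real.rpow_pos_of_pos hx0 _)]
      have : N ^ c i₀ ≤ 2 ^ c i₀ * x ^ c i₀ := by
        rw [← Real.mul_rpow (by norm_num) hx0.le]
        exact Real.rpow_le_rpow hN0.le (by linarith [hx.1]) (hpos i₀).le
      calc M ≤ N ^ c i₀ * |θ i₀| := hi₀
        _ ≤ (2 ^ c i₀ * x ^ c i₀) * |θ i₀| := by gcongr
        _ ≤ (E * x ^ c i₀) * |θ i₀| := by gcongr; exact hE i₀
        _ = _ := by ring
    have h2 : M / (K * E) ≤ |∑ i, ff (c i) (k + j) * (θ i * x ^ c i)| := by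
      rw [div_le_iff₀ (by positivity)]
      calc M ≤ E * |θ i₀ * x ^ c i₀| := h1
        _ ≤ E * (K * |∑ i, ff (c i) (k + j) * (θ i * x ^ c i)|) := by gcongr
        _ = _ := by ring
    calc _ ≤ M / (K * E) / x ^ (k + (j : ℕ)) := by gcongr; exact hx.2
      _ ≤ _ := by gcongr
  set a : ℕ → ℝ := fun r => N / 2 + r * (N / 2 / R) with ha
  have hamono : Monotone a := by
    intro r s hrs
    simp only [ha]; gcongr
  have ha0 : a 0 = N / 2 := by simp [ha]
  have haR : a R = N := by simp only [ha]; field_simp; ring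
  have hF : ∀ n : ℤ, ee (∑ i, θ i * (n : ℝ) ^ c i) = ee (Ph c θ 0 n) := by
    intro n; simp [Ph, ff_zero]
  rw [← ha0]
  conv_lhs => rw [← haR]
  rw [sum_pieces _ a hamono R]
  refine (norm_sum_le _ _).trans ?_
  have hpiece : ∀ r ∈ range R, ‖∑ n ∈ Ioc ⌊a r⌋ ⌊a (r + 1)⌋, ee (∑ i, θ i * (n : ℝ) ^ c i)‖ ≤
      C * N * M ^ (-δ) := by
    intro r hr
    rw [mem_range] at hr
    have hl : N / 2 ≤ a r := by rw [← ha0]; exact hamono (by omega)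
    have hu : a (r + 1) ≤ N := by rw [← haR]; exact hamono (by omega)
    have hlu : a r ≤ a (r + 1) := hamono (by omega)
    have hdiff : a (r + 1) - a r = N / 2 / R := by simp only [ha]; push_cast; ring
    have hsub : ∀ x ∈ Set.Icc (a r) (a (r + 1)), x ∈ Set.Icc (N / 2) N := fun x hx =>
      ⟨hl.trans hx.1, hx.2.trans hu⟩
    obtain ⟨j, hjm, hj⟩ := hlower (a r) (hsub _ ⟨le_rfl, hlu⟩)
    simp only [hF]
    refine hcl j hjm N M (a r) (a (r + 1)) (Ph c θ) hN hM ?_ hlu ?_ ⟨?_, ?_, ?_⟩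
    · have : M ^ 2 ≤ N ^ (2 * A) := by
        rw [mul_comm, Real.rpow_mul hN0.le]
        calc M ^ 2 ≤ (N ^ A) ^ 2 := by gcongr
          _ = _ := by norm_cast
      refine this.trans ?_
      rw [← Real.rpow_natCast]
      exact Real.rpow_le_rpow_of_exponent_le hN (by push_cast; linarith [Nat.cast_nonneg (α := ℝ) j])
    · linarith
    · intro l x hx
      exact Ph_deriv c θ l (by linarith [(hsub x hx).1])
    · intro l _ hl2 x hx
      refine (hupper l (by omega) x (hsub x hx)).trans ?_
      gcongr
      have : 0 ≤ 2 * K * E := by positivity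
      linarith
    · intro x hx
      have hvar : |Ph c θ (k + j) x - Ph c θ (k + j) (a r)| ≤ M / (2 * K * E) / N ^ (k + j) := by
        rcases eq_or_lt_of_le hx.1 with h | h
        · rw [← h, sub_self, abs_zero]; positivity
        · obtain ⟨y, hy, hy'⟩ := mvt (Φ := Ph c θ) (a := a r) (b := a (r + 1))
            (fun l x hx => Ph_deriv c θ l (by linarith [(hsub x hx).1])) (k + j) (x := a r)
            (h := x - a r) (by linarith) ⟨le_rfl, hlu⟩ (by simpa using hx)
          rw [add_sub_cancel] at hy'
          rw [hy', abs_mul, abs_of_pos (by linarith)]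
          have hxle : x - a r ≤ N / 2 / R := by linarith [hx.2]
          calc (x - a r) * |Ph c θ (k + j + 1) y|
              ≤ N / 2 / R * (C₁ * M / N ^ (k + j + 1)) := by
                gcongr; exact hupper _ (by omega) y (hsub y hy)
            _ = C₁ * K * E * (M / (2 * K * E) / N ^ (k + j)) / R := by
                rw [pow_succ]; field_simp
            _ ≤ R * (M / (2 * K * E) / N ^ (k + j)) / R := by gcongr
            _ = _ := by field_simp
      have h3 : M / (K * E) / N ^ (k + j) = 2 * (M / (2 * K * E) / N ^ (k + j)) := by
        field_simp
      have h4 : M / C₀ / N ^ (k + j) ≤ M / (2 * K * E) / N ^ (k + j) := by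
        gcongr; linarith
      have h5 := abs_sub_abs_le_abs_sub (Ph c θ (k + j) (a r)) (Ph c θ (k + j) x)
      rw [abs_sub_comm] at h5
      linarith
  refine (Finset.sum_le_sum hpiece).trans (le_of_eq ?_)
  simp; ring

/-- Exponential sums over natural numbers, allowing any phase bound `M`. -/
lemma nt_nat {m : ℕ} (c : Fin m → ℝ) (hpos : ∀ i, 0 < c i) (hinj : Function.Injective c)
    (hint : ∀ i, ∀ k : ℤ, c i ≠ (k : ℝ)) (A : ℝ) :
    ∃ C δ : ℝ, 0 < C ∧ 0 < δ ∧ δ ≤ 1 / 2 ∧ ∀ (N : ℕ) (M : ℝ) (θ : Fin m → ℝ), 1 ≤ N → 0 < M →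
      (∀ i, (N : ℝ) ^ c i * |θ i| ≤ (N : ℝ) ^ A) → (∃ i, M ≤ (N : ℝ) ^ c i * |θ i|) →
      ‖∑ n ∈ Ioc (N / 2) N, ee (∑ i, θ i * (n : ℝ) ^ c i)‖ ≤ C * N * M ^ (-δ) := by
  obtain ⟨C, δ, hC, hδ, hδ2, h⟩ := nt_real c hpos hinj hint A
  refine ⟨C + 1, δ, by positivity, hδ, hδ2, ?_⟩
  intro N M θ hN hM hA ⟨i₀, hi₀⟩
  have hNr : (1 : ℝ) ≤ N := by exact_mod_cast hN
  have hMp : 0 < M ^ (-δ) := Real.rpow_pos_of_pos hM _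
  rcases lt_or_ge M 1 with hM1 | hM1
  · refine (norm_sum_le _ _).trans ?_
    simp only [norm_ee, sum_const, nsmul_eq_mul, mul_one, Nat.card_Ioc]
    have h1 : 1 ≤ M ^ (-δ) := Real.one_le_rpow_of_pos_of_le_one_of_nonpos hM hM1.le (by linarith)
    have h2 : ((N - N / 2 : ℕ) : ℝ) ≤ N := by exact_mod_cast Nat.sub_le _ _
    calc ((N - N / 2 : ℕ) : ℝ) ≤ 1 * N * 1 := by linarith
      _ ≤ (C + 1) * N * M ^ (-δ) := by gcongr; linarith
  · obtain ⟨i₁, -, hi₁⟩ := Finset.exists_max_image Finset.univ (fun i => (N : ℝ) ^ c i * |θ i|)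
      ⟨i₀, mem_univ _⟩
    set M' := (N : ℝ) ^ c i₁ * |θ i₁| with hM'
    have hMM : M ≤ M' := hi₀.trans (hi₁ i₀ (mem_univ _))
    have := h N M' θ hNr (hM1.trans hMM) (hA i₁) (fun i => hi₁ i (mem_univ _)) ⟨i₁, le_rfl⟩
    have e1 : ⌊(N : ℝ) / 2⌋ = ((N / 2 : ℕ) : ℤ) := by
      rw [Int.floor_eq_iff]
      have h1 : 2 * (N / 2) ≤ N := by omega
      have h2 : N < 2 * (N / 2) + 2 := by omega
      have h1' : 2 * ((N / 2 : ℕ) : ℝ) ≤ N := by exact_mod_cast h1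
      have h2' : (N : ℝ) < 2 * ((N / 2 : ℕ) : ℝ) + 2 := by exact_mod_cast h2
      rw [Int.cast_natCast]
      constructor <;> linarith
    have e2 : ∑ n ∈ Ioc ⌊(N : ℝ) / 2⌋ ⌊(N : ℝ)⌋, ee (∑ i, θ i * (n : ℝ) ^ c i) =
        ∑ n ∈ Ioc (N / 2) N, ee (∑ i, θ i * (n : ℝ) ^ c i) := by
      rw [e1, Int.floor_natCast]
      refine (Finset.sum_nbij' (fun n : ℕ => (n : ℤ)) (fun n : ℤ => n.toNat) ?_ ?_ ?_ ?_ ?_).symm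
      · intro n hn; simp only [mem_Ioc] at *; omega
      · intro n hn; simp only [mem_Ioc] at *; omega
      · intro n hn; simp
      · intro n hn; simp only [mem_Ioc] at *; omega
      · intro n hn; simp
    rw [e2] at this
    refine this.trans ?_
    have h3 : M' ^ (-δ) ≤ M ^ (-δ) := Real.rpow_le_rpow_of_nonpos hM hMM (by linarith)
    have h4 : 0 ≤ M' ^ (-δ) := by positivity
    gcongr
    linarith

end FV

/-! ### Fejér kernels -/

namespace FV

/-- The Dirichlet sum `∑_{j < R} e(j t)`; its square modulus over `R` is the Fejér kernel. -/
def Dk (R : ℕ) (t : ℝ) : ℂ := ∑ j ∈ range R, ee (j * t)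

lemma Dk_sq (R : ℕ) (t : ℝ) :
    ((‖Dk R t‖ ^ 2 : ℝ) : ℂ) = ∑ j ∈ range R ×ˢ range R, ee (((j.1 : ℝ) - j.2) * t) := by
  rw [Finset.sum_product]
  push_cast
  rw [← Complex.mul_conj']
  unfold Dk
  rw [map_sum, Finset.sum_mul_sum]
  refine Finset.sum_congr rfl fun j _ => Finset.sum_congr rfl fun k _ => ?_
  rw [← ee_sub]; congr 1; ring

lemma ee_mul_nat (t : ℝ) (j : ℕ) : ee (j * t) = ee t ^ j := by
  induction j with
  | zero => simp [ee_zero]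
  | succ j ih => rw [pow_succ, ← ih, ← ee_add]; congr 1; push_cast; ring

lemma Dk_mul (R : ℕ) (t : ℝ) : Dk R t * (ee t - 1) = ee (R * t) - 1 := by
  unfold Dk
  simp only [ee_mul_nat]
  exact geom_sum_mul _ _

lemma far_bound {ρ t : ℝ} (hρ : 0 ≤ ρ) (h1 : ρ ≤ |t|) (h2 : |t| ≤ 1 - ρ) : 4 * ρ ≤ ‖ee t - 1‖ := by
  have key : ∀ t : ℝ, 0 ≤ t → ρ ≤ t → t ≤ 1 - ρ → 4 * ρ ≤ ‖ee t - 1‖ := by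
    intro t ht h1 h2
    rcases le_or_gt t (1 / 2) with h | h
    · have := le_norm_ee_sub_one (x := t) (by rwa [abs_of_nonneg ht])
      rw [abs_of_nonneg ht] at this; linarith
    · have := le_norm_ee_sub_one (x := t - 1) (by rw [abs_le]; constructor <;> linarith)
      have e : ee (t - 1) = ee t := by
        have := ee_int 1
        rw [sub_eq_add_neg, ee_add, ee_neg]
        simp only [Int.cast_one] at this
        rw [this]; simp
      rw [e, abs_of_nonpos (by linarith)] at this
      linarith
  rcases le_total 0 t with h | h
  · rw [abs_of_nonneg h] at h1 h2; exact key t h h1 h2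
  · rw [abs_of_nonpos h] at h1 h2
    have := key (-t) (by linarith) h1 h2
    rw [ee_neg] at this
    have e : (starRingEnd ℂ) (ee t) - 1 = (starRingEnd ℂ) (ee t - 1) := by simp
    rwa [e, RCLike.norm_conj] at this

lemma Dk_far {ρ t : ℝ} (R : ℕ) (hρ : 0 < ρ) (h1 : ρ ≤ |t|) (h2 : |t| ≤ 1 - ρ) :
    ‖Dk R t‖ ≤ 1 / (2 * ρ) := by
  have h := far_bound hρ.le h1 h2
  have h3 : ‖Dk R t‖ * ‖ee t - 1‖ ≤ 2 := by
    rw [← norm_mul, Dk_mul]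
    refine (norm_sub_le _ _).trans ?_
    rw [norm_ee, norm_one]; norm_num
  rw [le_div_iff₀ (by positivity)]
  nlinarith [norm_nonneg (Dk R t)]

lemma Dk_near {t : ℝ} (R : ℕ) (h : 4 * Real.pi * R * |t| ≤ 1) : (R : ℝ) / 2 ≤ ‖Dk R t‖ := by
  have h1 : ‖Dk R t - R‖ ≤ R / 2 := by
    have e : Dk R t - R = ∑ j ∈ range R, (ee (j * t) - 1) := by
      rw [Finset.sum_sub_distrib]; simp [Dk]
    rw [e]
    refine (norm_sum_le _ _).trans ?_
    have : ∀ j ∈ range R, ‖ee (j * t) - 1‖ ≤ 1 / 2 := by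
      intro j hj
      refine (norm_ee_sub_one_le _).trans ?_
      rw [abs_mul, Nat.abs_cast]
      have hj' : (j : ℝ) ≤ R := by exact_mod_cast (mem_range.1 hj).le
      have : 4 * Real.pi * j * |t| ≤ 4 * Real.pi * R * |t| := by gcongr
      nlinarith
    refine (Finset.sum_le_sum this).trans ?_
    simp; linarith
  have h2 : ‖(R : ℂ)‖ ≤ ‖Dk R t‖ + ‖Dk R t - R‖ := by
    have := norm_sub_le (Dk R t) (Dk R t - R)
    simpa using this
  rw [Complex.norm_natCast] at h2
  linarith

lemma ee_fract (l : ℤ) (u : ℝ) : ee (l * Int.fract u) = ee (l * u) := by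
  have : (l : ℝ) * u = l * Int.fract u + ((l * ⌊u⌋ : ℤ) : ℝ) := by
    push_cast; rw [← mul_add, Int.fract_add_floor]
  rw [this, ee_add, ee_int, mul_one]

lemma Dk_fract (R : ℕ) (u : ℝ) : Dk R (Int.fract u) = Dk R u := by
  unfold Dk
  refine Finset.sum_congr rfl fun j _ => ?_
  exact_mod_cast ee_fract j u

lemma Dk_sub_one (R : ℕ) (u : ℝ) : Dk R (u - 1) = Dk R u := by
  rw [← Dk_fract R (u - 1), ← Dk_fract R u]; simp

/-- Orthogonality of characters of `ℤ/Q`. -/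
lemma roots_sum (Q : ℕ) (hQ : 0 < Q) (l : ℤ) (hl : l ≠ 0) (hlQ : |l| < Q) :
    ∑ q ∈ range Q, ee (l * ((q : ℝ) / Q)) = 0 := by
  have hQr : (0 : ℝ) < Q := by exact_mod_cast hQ
  have e : ∑ q ∈ range Q, ee (l * ((q : ℝ) / Q)) = Dk Q (l / Q) := by
    unfold Dk
    refine Finset.sum_congr rfl fun q _ => ?_
    congr 1; ring
  rw [e]
  have h := Dk_mul Q (l / Q)
  rw [show (Q : ℝ) * (l / Q) = l by field_simp, ee_int, sub_self] at h
  have hne : ee (l / Q) - 1 ≠ 0 := by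
    have h1 : (1 : ℝ) ≤ |(l : ℝ)| := by exact_mod_cast Int.one_le_abs hl
    have h2 : |(l : ℝ)| ≤ Q - 1 := by
      have : |l| + 1 ≤ (Q : ℤ) := hlQ
      have : (|(l : ℝ)|) + 1 ≤ Q := by exact_mod_cast this
      linarith
    have := far_bound (ρ := 1 / Q) (t := l / Q) (by positivity)
      (by rw [abs_div, abs_of_pos hQr]; gcongr)
      (by rw [abs_div, abs_of_pos hQr, div_le_iff₀ hQr, sub_mul, one_div_mul_cancel hQr.ne']
          linarith)
    rw [← norm_pos_iff]
    have : 0 < 4 * (1 / (Q : ℝ)) := by positivity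
    linarith
  rcases mul_eq_zero.1 h with h | h
  · exact h
  · exact absurd h hne

/-- The Fejér kernels at the nodes `q/Q` average to one. -/
lemma fejer_avg (Q : ℕ) (hQ : 0 < Q) (u : ℝ) :
    ∑ q ∈ range Q, ‖Dk Q (u - q / Q)‖ ^ 2 = Q ^ 2 := by
  have hQr : (0 : ℝ) < Q := by exact_mod_cast hQ
  have : ((∑ q ∈ range Q, ‖Dk Q (u - q / Q)‖ ^ 2 : ℝ) : ℂ) = (Q : ℂ) ^ 2 := by
    rw [Complex.ofReal_sum]
    simp only [Dk_sq]
    rw [Finset.sum_comm]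
    have h1 : ∀ j ∈ range Q ×ˢ range Q, ∑ q ∈ range Q, ee (((j.1 : ℝ) - j.2) * (u - q / Q)) =
        if j.1 = j.2 then (Q : ℂ) else 0 := by
      rintro ⟨j, k⟩ hjk
      simp only [mem_product, mem_range] at hjk
      have h2 : ∀ q : ℕ, ee (((j : ℝ) - k) * (u - q / Q)) =
          ee (((j : ℝ) - k) * u) * ee (((k - j : ℤ) : ℝ) * ((q : ℝ) / Q)) := by
        intro q; rw [← ee_add]; congr 1; push_cast; ring
      simp only [h2]
      rw [← Finset.mul_sum]
      split_ifs with h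
      · subst h; simp [ee_zero]
      · rw [roots_sum Q hQ (k - j) (by omega) (by rw [abs_lt]; constructor <;> omega), mul_zero]
    rw [Finset.sum_congr rfl h1, Finset.sum_product]
    simp only [Finset.sum_ite_eq]
    rw [Finset.sum_congr rfl fun x hx => if_pos hx]
    simp; ring
  exact_mod_cast this

/-- Fejér-type trigonometric approximation of the sawtooth character `u ↦ e(-ξ {u})`. -/
def Tf (Q : ℕ) (ξ : ℝ) (u : ℝ) : ℂ :=
  ∑ q ∈ range Q, ((‖Dk Q (u - q / Q)‖ ^ 2 / Q ^ 2 : ℝ) : ℂ) * ee (-(ξ * (q / Q)))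

lemma Tf_norm (Q : ℕ) (hQ : 0 < Q) (ξ u : ℝ) : ‖Tf Q ξ u‖ ≤ 1 := by
  have hQr : (0 : ℝ) < Q := by exact_mod_cast hQ
  unfold Tf
  refine (norm_sum_le _ _).trans ?_
  have : ∀ q ∈ range Q, ‖((‖Dk Q (u - q / Q)‖ ^ 2 / Q ^ 2 : ℝ) : ℂ) * ee (-(ξ * (q / Q)))‖ =
      ‖Dk Q (u - q / Q)‖ ^ 2 / Q ^ 2 := by
    intro q _
    rw [norm_mul, norm_ee, mul_one, Complex.norm_real, Real.norm_of_nonneg (by positivity)]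
  rw [Finset.sum_congr rfl this, ← Finset.sum_div, fejer_avg Q hQ, div_self (by positivity)]

/-- The coefficients of `Tf`, indexed by pairs of frequencies. -/
def Tb (Q : ℕ) (ξ : ℝ) (j : ℕ × ℕ) : ℂ :=
  ∑ q ∈ range Q, ((1 / Q ^ 2 : ℝ) : ℂ) * ee (-(((j.1 : ℝ) - j.2) * (q / Q)) - (ξ * (q / Q)))

lemma Tb_norm (Q : ℕ) (hQ : 0 < Q) (ξ : ℝ) (j : ℕ × ℕ) : ‖Tb Q ξ j‖ ≤ 1 / Q := by
  have hQr : (0 : ℝ) < Q := by exact_mod_cast hQ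
  unfold Tb
  refine (norm_sum_le _ _).trans ?_
  simp only [norm_mul, norm_ee, mul_one, Complex.norm_real]
  rw [Real.norm_of_nonneg (by positivity)]
  simp only [sum_const, card_range, nsmul_eq_mul]
  rw [le_div_iff₀ hQr]; apply le_of_eq; field_simp

lemma Tf_expand (Q : ℕ) (ξ u : ℝ) :
    Tf Q ξ u = ∑ j ∈ range Q ×ˢ range Q, Tb Q ξ j * ee (((j.1 : ℝ) - j.2) * u) := by
  unfold Tf Tb
  simp only [Finset.sum_mul]
  rw [Finset.sum_comm]
  refine Finset.sum_congr rfl fun q _ => ?_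
  rw [div_eq_mul_one_div, Complex.ofReal_mul, Dk_sq, Finset.sum_mul, Finset.sum_mul]
  refine Finset.sum_congr rfl fun j _ => ?_
  rw [mul_comm (ee _) (((1 / (Q : ℝ) ^ 2 : ℝ)) : ℂ), mul_assoc, mul_assoc, ← ee_add, ← ee_add]
  congr 2; ring

lemma Tf_err {Q : ℕ} (hQ : 0 < Q) {ξ u ρ : ℝ} (hξ : |ξ| ≤ 1 / 2) (hρ : 0 < ρ)
    (h1 : ρ ≤ Int.fract u) (h2 : Int.fract u ≤ 1 - ρ) :
    ‖ee (-(ξ * Int.fract u)) - Tf Q ξ u‖ ≤ Real.pi * ρ + 1 / (2 * Q * ρ ^ 2) := by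
  have hQr : (0 : ℝ) < Q := by exact_mod_cast hQ
  set v := Int.fract u with hv
  have hD : ∀ q : ℕ, Dk Q (u - q / Q) = Dk Q (v - q / Q) := by
    intro q
    rw [← Dk_fract Q (u - _), ← Dk_fract Q (v - _)]
    have : v - (q : ℝ) / Q = u - q / Q - (⌊u⌋ : ℤ) := by rw [hv, Int.fract]; ring
    rw [this, Int.fract_sub_intCast]
  have hsum : ee (-(ξ * v)) - Tf Q ξ u =
      ∑ q ∈ range Q, ((‖Dk Q (v - q / Q)‖ ^ 2 / Q ^ 2 : ℝ) : ℂ) *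
        (ee (-(ξ * v)) - ee (-(ξ * (q / Q)))) := by
    simp only [mul_sub]
    rw [Finset.sum_sub_distrib, ← Finset.sum_mul, ← Complex.ofReal_sum, ← Finset.sum_div,
      fejer_avg Q hQ, div_self (by positivity)]
    unfold Tf
    simp only [hD, Complex.ofReal_one, one_mul]
  rw [hsum]
  refine (norm_sum_le _ _).trans ?_
  have hterm : ∀ q ∈ range Q, ‖((‖Dk Q (v - q / Q)‖ ^ 2 / Q ^ 2 : ℝ) : ℂ) *
        (ee (-(ξ * v)) - ee (-(ξ * (q / Q))))‖ ≤
      ‖Dk Q (v - q / Q)‖ ^ 2 / Q ^ 2 * (Real.pi * ρ) + 1 / (2 * Q * ρ ^ 2) / Q := by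
    intro q hq
    rw [norm_mul, Complex.norm_real, Real.norm_of_nonneg (by positivity)]
    rcases le_or_gt |v - q / Q| ρ with hc | hc
    · have : ‖ee (-(ξ * v)) - ee (-(ξ * (q / Q)))‖ ≤ Real.pi * ρ := by
        refine (norm_ee_sub_ee_le _ _).trans ?_
        rw [show -(ξ * v) - -(ξ * (q / Q)) = -(ξ * (v - q / Q)) by ring, abs_neg, abs_mul]
        have := Real.pi_pos
        calc 2 * Real.pi * (|ξ| * |v - q / Q|) ≤ 2 * Real.pi * (1 / 2 * ρ) := by gcongr
          _ = _ := by ring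
      have h0 : 0 ≤ 1 / (2 * Q * ρ ^ 2) / (Q : ℝ) := by positivity
      have := mul_le_mul_of_nonneg_left this
        (by positivity : 0 ≤ ‖Dk Q (v - q / Q)‖ ^ 2 / (Q : ℝ) ^ 2)
      linarith
    · have hq0 : (0 : ℝ) ≤ (q : ℝ) / Q := by positivity
      have hq1 : (q : ℝ) / Q ≤ 1 := by
        rw [div_le_one hQr]; exact_mod_cast (mem_range.1 hq).le
      have hD2 := Dk_far (ρ := ρ) (t := v - q / Q) Q hρ hc.le
        (by rw [abs_le]; constructor <;> linarith)
      have h3 : ‖ee (-(ξ * v)) - ee (-(ξ * (q / Q)))‖ ≤ 2 := by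
        refine (norm_sub_le _ _).trans ?_
        rw [norm_ee, norm_ee]; norm_num
      have h4 : 0 ≤ ‖Dk Q (v - q / Q)‖ ^ 2 / Q ^ 2 * (Real.pi * ρ) := by
        have := Real.pi_pos; positivity
      calc ‖Dk Q (v - q / Q)‖ ^ 2 / Q ^ 2 * ‖ee (-(ξ * v)) - ee (-(ξ * (q / Q)))‖
          ≤ (1 / (2 * ρ)) ^ 2 / Q ^ 2 * 2 := by gcongr
        _ = 1 / (2 * Q * ρ ^ 2) / Q := by field_simp
        _ ≤ _ := by linarith
  refine (Finset.sum_le_sum hterm).trans (le_of_eq ?_)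
  rw [Finset.sum_add_distrib, ← Finset.sum_mul, ← Finset.sum_div, fejer_avg Q hQ,
    div_self (by positivity)]
  simp; field_simp

end FV

/-! ### Removal of integer parts -/

namespace FV

/-- Few points of a sequence with small exponential sums lie close to integers. -/
lemma count_bad (I : Finset ℕ) (g : ℕ → ℝ) (R : ℕ) (hR : 0 < R) (B : ℝ) (hB0 : 0 ≤ B)
    (hB : ∀ l : ℤ, l ≠ 0 → |l| < R → ‖∑ n ∈ I, ee (l * g n)‖ ≤ B) (ρ : ℝ)
    (hρ : 4 * Real.pi * R * ρ = 1) :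
    ((I.filter fun n => Int.fract (g n) < ρ ∨ 1 - ρ < Int.fract (g n)).card : ℝ) ≤
      4 * (I.card / R + B) := by
  have hRr : (0 : ℝ) < R := by exact_mod_cast hR
  set J := I.filter fun n => Int.fract (g n) < ρ ∨ 1 - ρ < Int.fract (g n) with hJ
  have hpi := Real.pi_pos
  have h1 : ∀ n ∈ J, (R : ℝ) ^ 2 / 4 ≤ ‖Dk R (g n)‖ ^ 2 := by
    intro n hn
    have hn2 := (mem_filter.1 hn).2
    have h0 := Int.fract_nonneg (g n)
    have h01 := Int.fract_lt_one (g n)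
    have h2 : (R : ℝ) / 2 ≤ ‖Dk R (g n)‖ := by
      rw [← Dk_fract]
      rcases hn2 with h | h
      · apply Dk_near
        rw [← hρ, abs_of_nonneg h0]; gcongr
      · rw [← Dk_sub_one]
        apply Dk_near
        rw [← hρ, abs_of_nonpos (by linarith)]; gcongr; linarith
    calc (R : ℝ) ^ 2 / 4 = (R / 2) ^ 2 := by ring
      _ ≤ _ := by gcongr
  have h2 : (J.card : ℝ) * (R ^ 2 / 4) ≤ ∑ n ∈ I, ‖Dk R (g n)‖ ^ 2 := by
    calc (J.card : ℝ) * (R ^ 2 / 4) = ∑ n ∈ J, (R : ℝ) ^ 2 / 4 := by simp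
      _ ≤ ∑ n ∈ J, ‖Dk R (g n)‖ ^ 2 := Finset.sum_le_sum h1
      _ ≤ _ := Finset.sum_le_sum_of_subset_of_nonneg (filter_subset _ _) fun _ _ _ => by positivity
  have h3 : ∑ n ∈ I, ‖Dk R (g n)‖ ^ 2 ≤ R * I.card + R ^ 2 * B := by
    have e : ((∑ n ∈ I, ‖Dk R (g n)‖ ^ 2 : ℝ) : ℂ) =
        ∑ j ∈ range R ×ˢ range R, ∑ n ∈ I, ee (((j.1 : ℝ) - j.2) * g n) := by
      rw [Complex.ofReal_sum, Finset.sum_comm]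
      exact Finset.sum_congr rfl fun n _ => Dk_sq R (g n)
    have e2 : ∑ n ∈ I, ‖Dk R (g n)‖ ^ 2 = ‖((∑ n ∈ I, ‖Dk R (g n)‖ ^ 2 : ℝ) : ℂ)‖ := by
      rw [Complex.norm_real, Real.norm_of_nonneg (by positivity)]
    rw [e2, e]
    refine (norm_sum_le _ _).trans ?_
    have h4 : ∀ j ∈ range R ×ˢ range R, ‖∑ n ∈ I, ee (((j.1 : ℝ) - j.2) * g n)‖ ≤
        (if j.1 = j.2 then (I.card : ℝ) else 0) + B := by
      rintro ⟨j, k⟩ hjk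
      simp only [mem_product, mem_range] at hjk
      simp only
      split_ifs with h
      · subst h
        simp [ee_zero, hB0]
      · rw [zero_add]
        have := hB (j - k) (by omega) (by rw [abs_lt]; constructor <;> omega)
        push_cast at this
        exact this
    refine (Finset.sum_le_sum h4).trans (le_of_eq ?_)
    rw [Finset.sum_add_distrib, Finset.sum_product]
    simp only [Finset.sum_ite_eq]
    rw [Finset.sum_congr rfl fun x hx => if_pos hx]
    simp only [sum_const, card_range, card_product, nsmul_eq_mul]
    push_cast; ring
  have h5 := h2.trans h3
  have h6 : 4 * ((I.card : ℝ) / R + B) = (R * I.card + R ^ 2 * B) / (R ^ 2 / 4) := by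
    field_simp
  rw [h6, le_div_iff₀ (by positivity)]
  exact h5

lemma prod_sub_prod_le {ι : Type*} (s : Finset ι) (a b : ι → ℂ) (ha : ∀ i ∈ s, ‖a i‖ ≤ 1)
    (hb : ∀ i ∈ s, ‖b i‖ ≤ 1) : ‖∏ i ∈ s, a i - ∏ i ∈ s, b i‖ ≤ ∑ i ∈ s, ‖a i - b i‖ := by
  classical
  induction s using Finset.induction_on with
  | empty => simp
  | insert i s hi ih =>
    rw [prod_insert hi, prod_insert hi, sum_insert hi]
    have h1 := ih (fun j hj => ha j (mem_insert_of_mem hj)) (fun j hj => hb j (mem_insert_of_mem hj))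
    have e : a i * ∏ j ∈ s, a j - b i * ∏ j ∈ s, b j =
        (a i - b i) * ∏ j ∈ s, a j + b i * (∏ j ∈ s, a j - ∏ j ∈ s, b j) := by ring
    rw [e]
    refine (norm_add_le _ _).trans ?_
    rw [norm_mul, norm_mul]
    have h2 : ‖∏ j ∈ s, a j‖ ≤ 1 := by
      rw [norm_prod]
      exact Finset.prod_le_one (fun _ _ => norm_nonneg _)
        (fun j hj => ha j (mem_insert_of_mem hj))
    have h3 := hb i (mem_insert_self _ _)
    have h4 := norm_nonneg (a i - b i)
    have h5 := norm_nonneg (∏ j ∈ s, a j - ∏ j ∈ s, b j)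
    nlinarith

lemma ee_sum {ι : Type*} (s : Finset ι) (g : ι → ℝ) : ee (∑ i ∈ s, g i) = ∏ i ∈ s, ee (g i) := by
  classical
  induction s using Finset.induction_on with
  | empty => simp [ee_zero]
  | insert i s hi ih => rw [sum_insert hi, prod_insert hi, ee_add, ih]

/-- The exponential sum with integer parts. -/
def Sf {m : ℕ} (c : Fin m → ℝ) (N : ℕ) (ξ : Fin m → ℝ) : ℂ :=
  ∑ n ∈ Ioc (N / 2) N, ee (∑ i, ξ i * (⌊(n : ℝ) ^ c i⌋ : ℤ))

lemma card_half (N : ℕ) : ((Ioc (N / 2) N).card : ℝ) ≤ N := by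
  rw [Nat.card_Ioc]; exact_mod_cast Nat.sub_le _ _

lemma Sf_triv {m : ℕ} (c : Fin m → ℝ) (N : ℕ) (ξ : Fin m → ℝ) : ‖Sf c N ξ‖ ≤ N := by
  refine (norm_sum_le _ _).trans ?_
  simp only [norm_ee, sum_const, nsmul_eq_mul, mul_one]
  exact card_half N

set_option maxHeartbeats 1000000 in
/-- Removing the floors: a bound for `Sf` in terms of smooth exponential sums. -/
lemma Sf_smooth {m : ℕ} (c : Fin m → ℝ) (N : ℕ) (ξ : Fin m → ℝ) (hξ : ∀ i, |ξ i| ≤ 1 / 2)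
    (R : ℕ) (hR : 0 < R) (B₀ B : ℝ) (hB0 : 0 ≤ B) (hB₀0 : 0 ≤ B₀)
    (h0 : ‖∑ n ∈ Ioc (N / 2) N, ee (∑ i, ξ i * (n : ℝ) ^ c i)‖ ≤ B₀)
    (hB : ∀ l : Fin m → ℤ, l ≠ 0 → (∀ i, |l i| < (R ^ 3 : ℕ)) →
      ‖∑ n ∈ Ioc (N / 2) N, ee (∑ i, (ξ i + l i) * (n : ℝ) ^ c i)‖ ≤ B)
    (hB' : ∀ l : Fin m → ℤ, l ≠ 0 → (∀ i, |l i| < (R ^ 3 : ℕ)) →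
      ‖∑ n ∈ Ioc (N / 2) N, ee (∑ i, (l i : ℝ) * (n : ℝ) ^ c i)‖ ≤ B) :
    ‖Sf c N ξ‖ ≤ B₀ + R ^ (3 * m) * B + m * (100 * N / R + 8 * B) := by
  classical
  have hRr : (0 : ℝ) < R := by exact_mod_cast hR
  have hR1 : (1 : ℝ) ≤ R := by exact_mod_cast hR
  have hpi := Real.pi_pos
  set Q := R ^ 3 with hQ
  have hQ0 : 0 < Q := by positivity
  have hQr : (0 : ℝ) < Q := by exact_mod_cast hQ0
  set I := Ioc (N / 2) N with hI
  set ρ : ℝ := 1 / (4 * Real.pi * R) with hρ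
  have hρ0 : 0 < ρ := by positivity
  have hρ1 : 4 * Real.pi * R * ρ = 1 := by rw [hρ]; field_simp
  set u : Fin m → ℕ → ℝ := fun i n => (n : ℝ) ^ c i with hu
  set f : Fin m → ℕ → ℂ := fun i n => ee (-(ξ i * Int.fract (u i n))) with hf
  set T : Fin m → ℕ → ℂ := fun i n => Tf Q (ξ i) (u i n) with hT
  have hIc : (I.card : ℝ) ≤ N := card_half N
  -- error of the approximation
  have herr : ∀ i, ∑ n ∈ I, ‖f i n - T i n‖ ≤ 100 * N / R + 8 * B := by
    intro i
    have hcount := count_bad I (u i) R hR B hB0 (fun l hl hlR => by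
      have h := hB' (Pi.single i l) (by simpa using hl) (fun j => by
        rcases eq_or_ne j i with rfl | hji
        · simp only [Pi.single_eq_same]
          refine hlR.trans_le ?_
          have : R ≤ R ^ 3 := Nat.le_self_pow (by norm_num) R
          exact_mod_cast this
        · simp only [Pi.single_eq_of_ne hji, abs_zero]; exact_mod_cast hQ0)
      refine le_trans (le_of_eq ?_) h
      congr 1
      refine Finset.sum_congr rfl fun n _ => ?_
      congr 1
      rw [Finset.sum_eq_single i]
      · simp [hu]
      · intro j _ hji; simp [Pi.single_eq_of_ne hji]
      · simp) ρ hρ1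
    have hterm : ∀ n ∈ I, ‖f i n - T i n‖ ≤ (Real.pi * ρ + 1 / (2 * Q * ρ ^ 2)) +
        if (Int.fract (u i n) < ρ ∨ 1 - ρ < Int.fract (u i n)) then 2 else 0 := by
      intro n _
      split_ifs with h
      · have h1 : ‖f i n - T i n‖ ≤ 2 := by
          refine (norm_sub_le _ _).trans ?_
          have := Tf_norm Q hQ0 (ξ i) (u i n)
          simp only [hf, hT, norm_ee]; linarith
        have : 0 ≤ Real.pi * ρ + 1 / (2 * Q * ρ ^ 2) := by positivity
        linarith
      · push Not at h
        rw [add_zero]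
        exact Tf_err hQ0 (hξ i) hρ0 h.1 h.2
    refine (Finset.sum_le_sum hterm).trans ?_
    rw [Finset.sum_add_distrib, ← Finset.sum_filter]
    simp only [sum_const, nsmul_eq_mul]
    have e1 : Real.pi * ρ + 1 / (2 * Q * ρ ^ 2) = (1 / 4 + 8 * Real.pi ^ 2) / R := by
      rw [hρ, hQ]; push_cast; field_simp; ring
    rw [e1]
    have hpi2 : Real.pi ^ 2 ≤ 10 := by
      have := Real.pi_lt_d2
      nlinarith
    have h2 : (I.card : ℝ) * ((1 / 4 + 8 * Real.pi ^ 2) / R) ≤ N * ((81 : ℝ) / R) := by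
      gcongr; linarith
    have h3 : (I.card : ℝ) / R ≤ N / R := by gcongr
    have h4 : (N : ℝ) * (81 / R) = 81 * (N / R) := by ring
    have h5 : 100 * (N : ℝ) / R = 100 * (N / R) := by ring
    have h6 : 0 ≤ (N : ℝ) / R := by positivity
    rw [h5]; linarith
  -- the approximated sum
  have hsplit : ∀ n : ℕ, ee (∑ i, ξ i * (⌊(n : ℝ) ^ c i⌋ : ℤ)) =
      ee (∑ i, ξ i * u i n) * ∏ i, f i n := by
    intro n
    simp only [hf]
    rw [← ee_sum, ← ee_add, ← Finset.sum_add_distrib]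
    congr 1
    refine Finset.sum_congr rfl fun i _ => ?_
    simp only [hu, Int.fract]; ring
  have hmain : ‖∑ n ∈ I, ee (∑ i, ξ i * u i n) * ∏ i, T i n‖ ≤ B₀ + R ^ (3 * m) * B := by
    have e1 : ∑ n ∈ I, ee (∑ i, ξ i * u i n) * ∏ i, T i n =
        ∑ j ∈ Fintype.piFinset fun _ : Fin m => range Q ×ˢ range Q,
          (∏ i, Tb Q (ξ i) (j i)) *
            ∑ n ∈ I, ee (∑ i, (ξ i + (((j i).1 : ℤ) - ((j i).2 : ℤ) : ℤ)) * (n : ℝ) ^ c i) := by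
      simp only [Finset.mul_sum]
      rw [Finset.sum_comm]
      refine Finset.sum_congr rfl fun n _ => ?_
      simp only [hT, Tf_expand]
      rw [Finset.prod_univ_sum, Finset.mul_sum]
      refine Finset.sum_congr rfl fun j _ => ?_
      rw [Finset.prod_mul_distrib, mul_left_comm]
      congr 1
      rw [← ee_sum, ← ee_add, ← Finset.sum_add_distrib]
      congr 1
      refine Finset.sum_congr rfl fun i _ => ?_
      simp only [hu]; push_cast; ring
    rw [e1]
    refine (norm_sum_le _ _).trans ?_
    have hTb : ∀ j : Fin m → ℕ × ℕ, ‖∏ i, Tb Q (ξ i) (j i)‖ ≤ (1 / Q : ℝ) ^ m := by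
      intro j
      rw [norm_prod]
      calc _ ≤ ∏ i : Fin m, (1 / Q : ℝ) :=
            Finset.prod_le_prod (fun _ _ => norm_nonneg _) (fun i _ => Tb_norm Q hQ0 _ _)
        _ = _ := by simp
    have hj : ∀ j ∈ Fintype.piFinset fun _ : Fin m => range Q ×ˢ range Q,
        ‖(∏ i, Tb Q (ξ i) (j i)) *
            ∑ n ∈ I, ee (∑ i, (ξ i + (((j i).1 : ℤ) - ((j i).2 : ℤ) : ℤ)) * (n : ℝ) ^ c i)‖ ≤
          (1 / Q : ℝ) ^ m * (B + if (∀ i, (j i).1 = (j i).2) then B₀ else 0) := by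
      intro j hj
      rw [norm_mul]
      refine mul_le_mul (hTb j) ?_ (norm_nonneg _) (by positivity)
      split_ifs with h
      · simp only [h, sub_self, Int.cast_zero, add_zero]
        linarith
      · rw [add_zero]
        refine hB (fun i => ((j i).1 : ℤ) - ((j i).2 : ℤ)) ?_ ?_
        · intro h'
          apply h
          intro i
          have := congrFun h' i
          simp only [Pi.zero_apply] at this
          omega
        · intro i
          have := Fintype.mem_piFinset.1 hj i
          simp only [mem_product, mem_range] at this
          rw [abs_lt]; constructor <;> omega
    refine (Finset.sum_le_sum hj).trans ?_
    rw [← Finset.mul_sum, Finset.sum_add_distrib, ← Finset.sum_filter]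
    simp only [sum_const, nsmul_eq_mul]
    have c1 : ((Fintype.piFinset fun _ : Fin m => range Q ×ˢ range Q).card : ℝ) =
        (Q : ℝ) ^ m * Q ^ m := by
      rw [Fintype.card_piFinset]; simp [mul_pow]
    have c2 : ((((Fintype.piFinset fun _ : Fin m => range Q ×ˢ range Q).filter
        fun j => ∀ i, (j i).1 = (j i).2)).card : ℝ) ≤ (Q : ℝ) ^ m := by
      have : (((Fintype.piFinset fun _ : Fin m => range Q ×ˢ range Q).filter
        fun j => ∀ i, (j i).1 = (j i).2)).card ≤
          (Fintype.piFinset fun _ : Fin m => range Q).card := by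
        refine Finset.card_le_card_of_injOn (fun j i => (j i).1) ?_ ?_
        · intro j hj
          have hj' := (mem_filter.1 (Finset.mem_coe.1 hj)).1
          refine Finset.mem_coe.2 (Fintype.mem_piFinset.2 fun i => ?_)
          exact (mem_product.1 (Fintype.mem_piFinset.1 hj' i)).1
        · intro j hj k hk hjk
          have hj' := (mem_filter.1 (Finset.mem_coe.1 hj)).2
          have hk' := (mem_filter.1 (Finset.mem_coe.1 hk)).2
          ext i
          · exact congrFun hjk i
          · have := congrFun hjk i
            simp only at this
            rw [← hj' i, ← hk' i, this]
      rw [Fintype.card_piFinset] at this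
      simp only [card_range, prod_const, card_univ, Fintype.card_fin] at this
      exact_mod_cast this
    rw [c1]
    calc (1 / Q : ℝ) ^ m * ((Q : ℝ) ^ m * Q ^ m * B + _ * B₀)
        ≤ (1 / Q : ℝ) ^ m * ((Q : ℝ) ^ m * Q ^ m * B + Q ^ m * B₀) := by gcongr
      _ = B₀ + Q ^ m * B := by
          rw [div_pow, one_pow]; field_simp; ring
      _ = _ := by rw [hQ]; push_cast; rw [← pow_mul]
  have hdiff : ‖Sf c N ξ - ∑ n ∈ I, ee (∑ i, ξ i * u i n) * ∏ i, T i n‖ ≤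
      m * (100 * N / R + 8 * B) := by
    unfold Sf
    simp only [hsplit]
    rw [← Finset.sum_sub_distrib]
    refine (norm_sum_le _ _).trans ?_
    calc _ ≤ ∑ n ∈ I, ∑ i, ‖f i n - T i n‖ := by
          refine Finset.sum_le_sum fun n _ => ?_
          rw [← mul_sub, norm_mul, norm_ee, one_mul]
          exact prod_sub_prod_le _ _ _ (fun i _ => (norm_ee _).le)
            (fun i _ => Tf_norm Q hQ0 _ _)
      _ = ∑ i, ∑ n ∈ I, ‖f i n - T i n‖ := Finset.sum_comm
      _ ≤ ∑ i : Fin m, (100 * (N : ℝ) / R + 8 * B) := Finset.sum_le_sum fun i _ => herr i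
      _ = _ := by simp; ring
  have := norm_sub_norm_le (Sf c N ξ) (∑ n ∈ I, ee (∑ i, ξ i * u i n) * ∏ i, T i n)
  linarith

end FV

/-! ### Decay of the exponential sum with integer parts -/

namespace FV

lemma exists_bounds {m : ℕ} (c : Fin m → ℝ) (hpos : ∀ i, 0 < c i) :
    ∃ c₀ c₁ : ℝ, 0 < c₀ ∧ 0 < c₁ ∧ (∀ i, c₀ ≤ c i) ∧ ∀ i, c i ≤ c₁ := by
  rcases Nat.eq_zero_or_pos m with rfl | hm
  · exact ⟨1, 1, one_pos, one_pos, fun i => i.elim0, fun i => i.elim0⟩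
  · have : Nonempty (Fin m) := ⟨⟨0, hm⟩⟩
    obtain ⟨a, -, ha⟩ := Finset.exists_min_image Finset.univ c Finset.univ_nonempty
    obtain ⟨b, -, hb⟩ := Finset.exists_max_image Finset.univ c Finset.univ_nonempty
    exact ⟨c a, c b, hpos a, hpos b, fun i => ha i (mem_univ _), fun i => hb i (mem_univ _)⟩

set_option maxHeartbeats 1000000 in
/-- Decay of the exponential sum with integer parts in terms of each `N ^ c i * |ξ i|`: `Sf_smooth`
expands it into the floor-free sums bounded by `nt_nat`. -/
lemma Sf_decay {m : ℕ} (c : Fin m → ℝ) (hpos : ∀ i, 0 < c i) (hinj : Function.Injective c)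
    (hint : ∀ i, ∀ k : ℤ, c i ≠ (k : ℝ)) :
    ∃ C δ : ℝ, 0 < C ∧ 0 < δ ∧ δ ≤ 1 / 2 ∧ ∀ (N : ℕ) (ξ : Fin m → ℝ), 1 ≤ N →
      (∀ i, |ξ i| ≤ 1 / 2) → ∀ i, ξ i ≠ 0 →
      ‖Sf c N ξ‖ ≤ C * N * ((N : ℝ) ^ c i * |ξ i|) ^ (-δ) := by
  obtain ⟨c₀, c₁, hc₀, hc₁, hle₀, hle₁⟩ := exists_bounds c hpos
  obtain ⟨C, δ, hC, hδ, hδ2, hnt⟩ := nt_nat c hpos hinj hint (c₁ + 1)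
  set η : ℝ := min (1 / 3) (c₀ * δ / (6 * (m + 1))) with hη
  have hη0 : 0 < η := lt_min (by norm_num) (by positivity)
  have hη1 : η ≤ 1 / 3 := min_le_left _ _
  have hη2 : 3 * m * η ≤ c₀ * δ / 2 := by
    have h1 : η ≤ c₀ * δ / (6 * (m + 1)) := min_le_right _ _
    calc 3 * m * η ≤ 3 * m * (c₀ * δ / (6 * (m + 1))) := by gcongr
      _ = c₀ * δ / 2 * (m / (m + 1)) := by field_simp; ring
      _ ≤ c₀ * δ / 2 * 1 := by
          gcongr
          rw [div_le_one (by positivity)]; linarith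
      _ = _ := mul_one _
  have hη3 : η ≤ c₀ * δ / 2 := by
    have h1 : η ≤ c₀ * δ / (6 * (m + 1)) := min_le_right _ _
    refine h1.trans ?_
    gcongr
    have : (0 : ℝ) ≤ m := Nat.cast_nonneg m
    linarith
  set δ' : ℝ := min δ (η / c₁) with hδ'
  have hδ'0 : 0 < δ' := lt_min hδ (by positivity)
  have hδ'1 : δ' ≤ δ := min_le_left _ _
  have hδ'2 : c₁ * δ' ≤ η := by
    have : δ' ≤ η / c₁ := min_le_right _ _
    rw [le_div_iff₀ hc₁] at this; linarith
  set K : ℝ := C + 2 * C + m * (200 + 16 * C) + 1 with hK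
  refine ⟨K, δ', by positivity, hδ'0, hδ'1.trans hδ2, ?_⟩
  intro N ξ hN hξ i hi
  have hNr : (1 : ℝ) ≤ N := by exact_mod_cast hN
  have hN0 : (0 : ℝ) < N := by linarith
  set M : ℝ := (N : ℝ) ^ c i * |ξ i| with hM
  have hM0 : 0 < M := mul_pos (Real.rpow_pos_of_pos hN0 _) (abs_pos.2 hi)
  have hMp : 0 < M ^ (-δ') := Real.rpow_pos_of_pos hM0 _
  rcases lt_or_ge M 1 with hM1 | hM1
  · refine (Sf_triv c N ξ).trans ?_
    have h1 : 1 ≤ M ^ (-δ') := Real.one_le_rpow_of_pos_of_le_one_of_nonpos hM0 hM1.le (by linarith)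
    have hK1 : 1 ≤ K := by
      have : 0 ≤ C + 2 * C + m * (200 + 16 * C) := by positivity
      linarith
    calc (N : ℝ) = 1 * N * 1 := by ring
      _ ≤ K * N * M ^ (-δ') := by gcongr
  set R : ℕ := ⌊(N : ℝ) ^ η⌋₊ with hR
  have hNη : 1 ≤ (N : ℝ) ^ η := Real.one_le_rpow hNr hη0.le
  have hR1 : 1 ≤ R := Nat.le_floor (by exact_mod_cast hNη)
  have hRle : (R : ℝ) ≤ (N : ℝ) ^ η := Nat.floor_le (by linarith)
  have hRge : (N : ℝ) ^ η / 2 ≤ R := by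
    have h1 := Nat.lt_floor_add_one ((N : ℝ) ^ η)
    have h2 : (1 : ℝ) ≤ R := by exact_mod_cast hR1
    rw [← hR] at h1
    linarith
  have hR3 : ((R ^ 3 : ℕ) : ℝ) ≤ N := by
    push_cast
    calc (R : ℝ) ^ 3 ≤ ((N : ℝ) ^ η) ^ 3 := by gcongr
      _ = (N : ℝ) ^ (η * 3) := by rw [Real.rpow_mul hN0.le]; norm_cast
      _ ≤ (N : ℝ) ^ (1 : ℝ) := Real.rpow_le_rpow_of_exponent_le hNr (by linarith)
      _ = N := Real.rpow_one _
  have hup : ∀ (j : Fin m) (t : ℝ), |t| ≤ N → (N : ℝ) ^ c j * |t| ≤ (N : ℝ) ^ (c₁ + 1) := by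
    intro j t ht
    rw [Real.rpow_add hN0, Real.rpow_one]
    gcongr
    · exact hle₁ j
  set B : ℝ := C * N * ((N : ℝ) ^ c₀ / 2) ^ (-δ) with hB
  have hB0 : 0 ≤ B := by positivity
  have hbd : ∀ (l : Fin m → ℤ), (∀ i, |l i| < (R ^ 3 : ℕ)) → ∀ j, |(l j : ℝ)| ≤ N - 1 := by
    intro l hl j
    have h1 : |l j| + 1 ≤ ((R ^ 3 : ℕ) : ℤ) := hl j
    have h2 : |(l j : ℝ)| + 1 ≤ ((R ^ 3 : ℕ) : ℝ) := by exact_mod_cast h1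
    linarith
  have hlow : ∀ (j : Fin m) (t : ℝ), 1 / 2 ≤ |t| → (N : ℝ) ^ c₀ / 2 ≤ (N : ℝ) ^ c j * |t| := by
    intro j t ht
    calc (N : ℝ) ^ c₀ / 2 = (N : ℝ) ^ c₀ * (1 / 2) := by ring
      _ ≤ _ := by
        gcongr
        · exact hle₀ j
  have hne : ∀ l : Fin m → ℤ, l ≠ 0 → ∃ j, (1 : ℝ) ≤ |(l j : ℝ)| := by
    intro l hl
    obtain ⟨j, hj⟩ := Function.ne_iff.1 hl
    exact ⟨j, by exact_mod_cast Int.one_le_abs hj⟩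
  have main := Sf_smooth c N ξ hξ R (by omega) (C * N * M ^ (-δ)) B hB0 (by positivity)
    (hnt N M ξ hN hM0 (fun j => hup j _ ((hξ j).trans (by linarith))) ⟨i, le_rfl⟩)
    (fun l hl hlR => by
      refine hnt N _ (fun i => ξ i + l i) hN (by positivity) (fun j => hup j _ ?_) ?_
      · have h1 := hbd l hlR j
        have h2 := abs_add_le (ξ j) (l j)
        have := hξ j
        linarith
      · obtain ⟨j, hj⟩ := hne l hl
        refine ⟨j, hlow j _ ?_⟩
        have := hξ j
        have h3 := abs_sub_abs_le_abs_sub (l j : ℝ) (-ξ j)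
        rw [abs_neg, sub_neg_eq_add, add_comm] at h3
        rw [add_comm] at h3
        have e : (l j : ℝ) + ξ j = ξ j + l j := add_comm _ _
        rw [e] at h3
        linarith)
    (fun l hl hlR => by
      refine hnt N _ (fun i => (l i : ℝ)) hN (by positivity) (fun j => hup j _ ?_) ?_
      · have h1 := hbd l hlR j
        linarith
      · obtain ⟨j, hj⟩ := hne l hl
        exact ⟨j, hlow j _ (by linarith)⟩)
  refine main.trans ?_
  -- sizes of the pieces
  have hp1 : M ^ (-δ) ≤ M ^ (-δ') := Real.rpow_le_rpow_of_exponent_le hM1 (by linarith)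
  have hMN : (N : ℝ) ^ (-η) ≤ M ^ (-δ') := by
    have h1 : M ≤ (N : ℝ) ^ c₁ := by
      calc M ≤ (N : ℝ) ^ c₁ * 1 := by
            rw [hM]; gcongr
            · exact hle₁ i
            · linarith [hξ i]
        _ = _ := mul_one _
    calc (N : ℝ) ^ (-η) ≤ (N : ℝ) ^ (c₁ * (-δ')) :=
          Real.rpow_le_rpow_of_exponent_le hNr (by linarith)
      _ = ((N : ℝ) ^ c₁) ^ (-δ') := Real.rpow_mul hN0.le _ _
      _ ≤ _ := Real.rpow_le_rpow_of_nonpos hM0 h1 (by linarith)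
  have hBle : B ≤ 2 * C * N * (N : ℝ) ^ (-(c₀ * δ)) := by
    have : ((N : ℝ) ^ c₀ / 2) ^ (-δ) ≤ 2 * (N : ℝ) ^ (-(c₀ * δ)) := by
      rw [Real.div_rpow (by positivity) (by norm_num), ← Real.rpow_mul hN0.le,
        Real.rpow_neg (by norm_num : (0 : ℝ) ≤ 2), div_inv_eq_mul, mul_comm, mul_neg]
      gcongr
      calc (2 : ℝ) ^ δ ≤ 2 ^ (1 : ℝ) := Real.rpow_le_rpow_of_exponent_le (by norm_num) (by linarith)
        _ = 2 := Real.rpow_one _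
    calc B ≤ C * N * (2 * (N : ℝ) ^ (-(c₀ * δ))) := by rw [hB]; gcongr
      _ = _ := by ring
  have hpiece2 : (R : ℝ) ^ (3 * m) * B ≤ 2 * C * N * M ^ (-δ') := by
    have h1 : (R : ℝ) ^ (3 * m) ≤ (N : ℝ) ^ (3 * m * η) := by
      calc (R : ℝ) ^ (3 * m) ≤ ((N : ℝ) ^ η) ^ (3 * m) := by gcongr
        _ = ((N : ℝ) ^ η) ^ ((3 * m : ℕ) : ℝ) := (Real.rpow_natCast _ _).symm
        _ = _ := by rw [← Real.rpow_mul hN0.le]; congr 1; push_cast; ring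
    calc (R : ℝ) ^ (3 * m) * B ≤ (N : ℝ) ^ (3 * m * η) * (2 * C * N * (N : ℝ) ^ (-(c₀ * δ))) := by
          gcongr
      _ = 2 * C * N * ((N : ℝ) ^ (3 * m * η) * (N : ℝ) ^ (-(c₀ * δ))) := by ring
      _ = 2 * C * N * (N : ℝ) ^ (3 * m * η + -(c₀ * δ)) := by rw [Real.rpow_add hN0]
      _ ≤ 2 * C * N * (N : ℝ) ^ (-η) := by
          gcongr
          · linarith
      _ ≤ _ := by gcongr
  have hBle2 : B ≤ 2 * C * N * M ^ (-δ') := by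
    refine hBle.trans ?_
    gcongr
    refine le_trans ?_ hMN
    exact Real.rpow_le_rpow_of_exponent_le hNr (by linarith)
  have hpiece3 : 100 * (N : ℝ) / R ≤ 200 * N * M ^ (-δ') := by
    have hRr : (0 : ℝ) < R := by exact_mod_cast hR1
    calc 100 * (N : ℝ) / R ≤ 100 * N / ((N : ℝ) ^ η / 2) := by gcongr
      _ = 200 * N * (N : ℝ) ^ (-η) := by
          rw [Real.rpow_neg hN0.le]; field_simp; norm_num
      _ ≤ _ := by gcongr
  have hp1' : C * N * M ^ (-δ) ≤ C * N * M ^ (-δ') := by gcongr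
  have hmm : (m : ℝ) * (100 * N / R + 8 * B) ≤ m * (200 * N * M ^ (-δ') + 8 * (2 * C * N * M ^ (-δ'))) := by
    gcongr
  have hfin : 0 ≤ (N : ℝ) * M ^ (-δ') := by positivity
  calc _ ≤ C * N * M ^ (-δ') + 2 * C * N * M ^ (-δ') +
        m * (200 * N * M ^ (-δ') + 8 * (2 * C * N * M ^ (-δ'))) := by linarith
    _ = (K - 1) * (N * M ^ (-δ')) := by rw [hK]; ring
    _ ≤ K * (N * M ^ (-δ')) := by gcongr; linarith
    _ = _ := by ring

/-- The exponential sum is close to its number of terms at low frequencies. -/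
lemma Sf_near {m : ℕ} (c : Fin m → ℝ) (hpos : ∀ i, 0 < c i) (N : ℕ) (ξ : Fin m → ℝ) :
    ‖Sf c N ξ - N / 2‖ ≤ 2 * Real.pi * N * ∑ i, (N : ℝ) ^ c i * |ξ i| + 1 / 2 := by
  have h1 : ‖Sf c N ξ - ((Ioc (N / 2) N).card : ℂ)‖ ≤ 2 * Real.pi * N * ∑ i, (N : ℝ) ^ c i * |ξ i| := by
    have e : Sf c N ξ - ((Ioc (N / 2) N).card : ℂ) =
        ∑ n ∈ Ioc (N / 2) N, (ee (∑ i, ξ i * (⌊(n : ℝ) ^ c i⌋ : ℤ)) - 1) := by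
      rw [Finset.sum_sub_distrib]; simp [Sf]
    rw [e]
    refine (norm_sum_le _ _).trans ?_
    have hpi := Real.pi_pos
    have : ∀ n ∈ Ioc (N / 2) N, ‖ee (∑ i, ξ i * (⌊(n : ℝ) ^ c i⌋ : ℤ)) - 1‖ ≤
        2 * Real.pi * ∑ i, (N : ℝ) ^ c i * |ξ i| := by
      intro n hn
      refine (norm_ee_sub_one_le _).trans ?_
      gcongr
      refine (Finset.abs_sum_le_sum_abs _ _).trans (Finset.sum_le_sum fun i _ => ?_)
      rw [abs_mul, mul_comm]
      gcongr
      have h0 : (0 : ℝ) ≤ (n : ℝ) ^ c i := by positivity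
      rw [abs_of_nonneg (by exact_mod_cast Int.floor_nonneg.2 h0)]
      refine (Int.floor_le _).trans ?_
      have : (n : ℝ) ≤ N := by exact_mod_cast (mem_Ioc.1 hn).2
      exact Real.rpow_le_rpow (by positivity) this (hpos i).le
    refine (Finset.sum_le_sum this).trans ?_
    rw [sum_const, nsmul_eq_mul]
    have h2 := card_half N
    have h3 : 0 ≤ 2 * Real.pi * ∑ i, (N : ℝ) ^ c i * |ξ i| := by positivity
    calc _ ≤ (N : ℝ) * (2 * Real.pi * ∑ i, (N : ℝ) ^ c i * |ξ i|) := by gcongr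
      _ = _ := by ring
  have h2 : ‖((Ioc (N / 2) N).card : ℂ) - N / 2‖ ≤ 1 / 2 := by
    rw [Nat.card_Ioc]
    have e : (((N - N / 2 : ℕ) : ℂ) - N / 2) = (((N - N / 2 : ℕ) : ℝ) - N / 2 : ℝ) := by push_cast; ring
    rw [e, Complex.norm_real, Real.norm_eq_abs, abs_le]
    have a1 : N ≤ 2 * (N - N / 2) := by omega
    have a2 : 2 * (N - N / 2) ≤ N + 1 := by omega
    have a1' : (N : ℝ) ≤ 2 * ((N - N / 2 : ℕ) : ℝ) := by exact_mod_cast a1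
    have a2' : 2 * ((N - N / 2 : ℕ) : ℝ) ≤ N + 1 := by exact_mod_cast a2
    constructor <;> linarith
  calc _ = ‖(Sf c N ξ - ((Ioc (N / 2) N).card : ℂ)) + (((Ioc (N / 2) N).card : ℂ) - N / 2)‖ := by
        congr 1; ring
    _ ≤ _ := (norm_add_le _ _).trans (add_le_add h1 h2)

end FV

/-! ### Stopping construction along a path -/

namespace FV

/-- Running maximum of a path. -/
def mx (a : ℕ → ℂ) : ℕ → ℝ
  | 0 => ‖a 0‖
  | k + 1 => max (mx a k) ‖a (k + 1)‖

/-- Stopping construction at relative threshold `μ`: the first component is the current base point,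
the second one the accumulated sum of squared jumps. The base is reset to `a (k+1)` as soon as it is
at distance at least `μ` times the running maximum. -/
def bs (μ : ℝ) (a : ℕ → ℂ) : ℕ → ℂ × ℝ
  | 0 => (a 0, 0)
  | k + 1 => if μ * mx a (k + 1) ≤ ‖a (k + 1) - (bs μ a k).1‖ then
      (a (k + 1), (bs μ a k).2 + ‖a (k + 1) - (bs μ a k).1‖ ^ 2) else bs μ a k

/-- The accumulated squares plus the square of the current excursion. -/
def Gs (μ : ℝ) (a : ℕ → ℂ) (k : ℕ) : ℝ := (bs μ a k).2 + ‖a k - (bs μ a k).1‖ ^ 2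

/-- The predictable majorant of the running maximum. -/
def mt (ε : ℝ) (a : ℕ → ℂ) : ℕ → ℝ
  | 0 => ε + ‖a 0‖
  | k + 1 => max (mt ε a k) (‖a k‖ + ‖a (k + 1) - a k‖)

lemma mx_congr {a a' : ℕ → ℂ} {k : ℕ} (h : ∀ i ≤ k, a i = a' i) : mx a k = mx a' k := by
  induction k with
  | zero => simp [mx, h 0 le_rfl]
  | succ k ih => rw [mx, mx, ih fun i hi => h i (by omega), h _ le_rfl]

lemma bs_congr {μ : ℝ} {a a' : ℕ → ℂ} {k : ℕ} (h : ∀ i ≤ k, a i = a' i) :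
    bs μ a k = bs μ a' k := by
  induction k with
  | zero => simp [bs, h 0 le_rfl]
  | succ k ih => rw [bs, bs, ih fun i hi => h i (by omega), h _ le_rfl, mx_congr h]

lemma mt_congr {ε : ℝ} {a a' : ℕ → ℂ} {k : ℕ} (h : ∀ i ≤ k, a i = a' i) :
    mt ε a k = mt ε a' k := by
  induction k with
  | zero => simp [mt, h 0 le_rfl]
  | succ k ih => rw [mt, mt, ih fun i hi => h i (by omega), h _ le_rfl, h k (by omega)]

lemma mx_nonneg (a : ℕ → ℂ) (k : ℕ) : 0 ≤ mx a k := by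
  cases k with
  | zero => exact norm_nonneg _
  | succ k => exact (norm_nonneg _).trans (le_max_right _ _)

lemma mx_mono (a : ℕ → ℂ) : Monotone (mx a) := monotone_nat_of_le_succ fun _ => le_max_left _ _

lemma norm_le_mx' (a : ℕ → ℂ) (k : ℕ) : ‖a k‖ ≤ mx a k := by
  cases k with
  | zero => exact le_rfl
  | succ k => exact le_max_right _ _

lemma norm_le_mx (a : ℕ → ℂ) {k l : ℕ} (h : k ≤ l) : ‖a k‖ ≤ mx a l :=
  (norm_le_mx' a k).trans (mx_mono a h)

lemma mx_zero_iff {a : ℕ → ℂ} {l : ℕ} (h : mx a l = 0) {k : ℕ} (hk : k ≤ l) : a k = 0 :=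
  norm_le_zero_iff.1 (h ▸ norm_le_mx a hk)

lemma mt_mono (ε : ℝ) (a : ℕ → ℂ) : Monotone (mt ε a) :=
  monotone_nat_of_le_succ fun _ => le_max_left _ _

lemma mt_pos {ε : ℝ} (hε : 0 < ε) (a : ℕ → ℂ) (k : ℕ) : 0 < mt ε a k :=
  lt_of_lt_of_le (by simp only [mt]; positivity) (mt_mono ε a (Nat.zero_le k))

lemma norm_le_mt {ε : ℝ} (hε : 0 < ε) (a : ℕ → ℂ) (k : ℕ) : ‖a k‖ ≤ mt ε a k := by
  cases k with
  | zero => simp only [mt]; linarith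
  | succ k =>
    refine le_trans ?_ (le_max_right _ _)
    have := norm_add_le (a k) (a (k + 1) - a k)
    simpa using this

lemma mt_le {ε : ℝ} (hε : 0 < ε) (a : ℕ → ℂ) (k : ℕ) : mt ε a k ≤ ε + 3 * mx a k := by
  induction k with
  | zero => simp only [mt, mx]; linarith [norm_nonneg (a 0)]
  | succ k ih =>
    have h1 := mx_mono a (Nat.le_succ k)
    have h2 := norm_le_mx a (Nat.le_succ k)
    have h3 := norm_le_mx' a (k + 1)
    have h4 := norm_sub_le (a (k + 1)) (a k)
    simp only [Nat.succ_eq_add_one] at *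
    rw [mt]
    refine max_le (by linarith) (by linarith)

lemma bs_base (μ : ℝ) (a : ℕ → ℂ) (k : ℕ) : ‖(bs μ a k).1‖ ≤ mx a k := by
  induction k with
  | zero => exact le_rfl
  | succ k ih =>
    rw [bs]
    split_ifs
    · exact norm_le_mx' a (k + 1)
    · exact ih.trans (mx_mono a (Nat.le_succ k))

lemma Ss_mono (μ : ℝ) (a : ℕ → ℂ) : Monotone fun k => (bs μ a k).2 := by
  refine monotone_nat_of_le_succ fun k => ?_
  simp only [bs]
  split_ifs
  · simp only; linarith [sq_nonneg ‖a (k + 1) - (bs μ a k).1‖]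
  · exact le_rfl

lemma Ss_nonneg (μ : ℝ) (a : ℕ → ℂ) (k : ℕ) : 0 ≤ (bs μ a k).2 :=
  Ss_mono μ a (Nat.zero_le k)

lemma Gs_zero (μ : ℝ) (a : ℕ → ℂ) : Gs μ a 0 = 0 := by simp [Gs, bs]

lemma Gs_succ (μ : ℝ) (a : ℕ → ℂ) (k : ℕ) :
    Gs μ a (k + 1) = (bs μ a k).2 + ‖a (k + 1) - (bs μ a k).1‖ ^ 2 := by
  unfold Gs
  rw [bs]
  split_ifs <;> simp

lemma Gs_nonneg (μ : ℝ) (a : ℕ → ℂ) (k : ℕ) : 0 ≤ Gs μ a k :=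
  add_nonneg (Ss_nonneg μ a k) (sq_nonneg _)

lemma Ss_le_Gs (μ : ℝ) (a : ℕ → ℂ) (k : ℕ) : (bs μ a k).2 ≤ Gs μ a k :=
  le_add_of_nonneg_right (sq_nonneg _)

/-- The increments of `Gs` and of `|a|²` differ by a linear term in the increment of the path. -/
lemma Gs_diff (μ : ℝ) (a : ℕ → ℂ) (k : ℕ) :
    Gs μ a (k + 1) - Gs μ a k =
      (‖a (k + 1)‖ ^ 2 - ‖a k‖ ^ 2) - 2 * inner ℝ (bs μ a k).1 (a (k + 1) - a k) := by
  rw [Gs_succ, Gs, norm_sub_sq_real, norm_sub_sq_real, inner_sub_right,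
    real_inner_comm (a (k + 1)), real_inner_comm (a k)]
  ring

/-- The path stays within the relative threshold of its current base point. -/
lemma bs_close {μ : ℝ} (hμ : 0 ≤ μ) (a : ℕ → ℂ) (k : ℕ) : ‖a k - (bs μ a k).1‖ ≤ μ * mx a k := by
  cases k with
  | zero => simp only [bs, sub_self, norm_zero]; exact mul_nonneg hμ (mx_nonneg a 0)
  | succ k =>
    rw [bs]
    split_ifs with h
    · simp only [sub_self, norm_zero]; exact mul_nonneg hμ (mx_nonneg a _)
    · exact (not_le.1 h).le

/-- Pathwise dichotomy between times `s ≤ t`: either no reset occurred, or the accumulated squares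
increased substantially. -/
lemma bs_dichotomy {μ : ℝ} (hμ : 0 ≤ μ) (hμ4 : μ ≤ 1 / 4) (a : ℕ → ℂ) {s t : ℕ} (hst : s ≤ t) :
    (bs μ a t = bs μ a s) ∨ ∃ x : ℝ, 0 ≤ x ∧ ‖(bs μ a t).1‖ ≤ x ∧ 3 / 4 * mx a t ≤ x ∧
      (μ * x) ^ 2 ≤ (bs μ a t).2 - (bs μ a s).2 := by
  induction t, hst using Nat.le_induction with
  | base => exact Or.inl rfl
  | succ t hst ih =>
    have hm0 := mx_nonneg a (t + 1)
    have hmono := Ss_mono μ a hst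
    simp only at hmono
    by_cases hr : μ * mx a (t + 1) ≤ ‖a (t + 1) - (bs μ a t).1‖
    · right
      refine ⟨mx a (t + 1), hm0, bs_base μ a (t + 1), by linarith, ?_⟩
      rw [bs, if_pos hr]
      simp only
      have : (μ * mx a (t + 1)) ^ 2 ≤ ‖a (t + 1) - (bs μ a t).1‖ ^ 2 := by gcongr
      linarith
    · have e : bs μ a (t + 1) = bs μ a t := by rw [bs, if_neg hr]
      rcases ih with h | ⟨x, hx0, hx1, hx2, hx3⟩
      · left; rw [e, h]
      · right
        refine ⟨x, hx0, by rw [e]; exact hx1, ?_, by rw [e]; exact hx3⟩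
        rcases le_total ‖a (t + 1)‖ (mx a t) with hc | hc
        · rw [mx, max_eq_left hc]; exact hx2
        · have hm : mx a (t + 1) = ‖a (t + 1)‖ := by rw [mx, max_eq_right hc]
          push Not at hr
          have h1 := norm_sub_norm_le (a (t + 1)) (bs μ a t).1
          rw [hm] at hr hm0 ⊢
          nlinarith

/-- An increment exceeding the threshold forces a stopping time in between, which increases the accumulated
square sum. -/
lemma Ss_jump {μ : ℝ} (hμ : 0 ≤ μ) (hμ4 : μ ≤ 1 / 4) (a : ℕ → ℂ) {s t : ℕ} (hst : s ≤ t)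
    (h : 2 * μ * mx a t < ‖a t - a s‖) :
    (3 / 4 * μ * mx a t) ^ 2 ≤ (bs μ a t).2 - (bs μ a s).2 := by
  have hm0 := mx_nonneg a t
  rcases bs_dichotomy hμ hμ4 a hst with h1 | ⟨x, hx0, -, hx2, hx3⟩
  · exfalso
    have h2 := bs_close hμ a t
    have h3 := bs_close hμ a s
    have h4 : μ * mx a s ≤ μ * mx a t := by gcongr; exact mx_mono a hst
    rw [h1] at h2
    have h5 : ‖a t - a s‖ ≤ ‖a t - (bs μ a s).1‖ + ‖a s - (bs μ a s).1‖ := by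
      have := norm_sub_le (a t - (bs μ a s).1) (a s - (bs μ a s).1)
      simpa using this
    linarith
  · refine le_trans ?_ hx3
    have : 3 / 4 * μ * mx a t ≤ μ * x := by nlinarith
    gcongr

/-- A large increment is captured by some level `2^{-j}`. -/
lemma level_exists (a : ℕ → ℂ) {s t : ℕ} (hst : s ≤ t) (hne : a t ≠ a s) :
    ∃ j : ℕ, 2 ≤ j ∧ 2 * (1 / 2 : ℝ) ^ j * mx a t < ‖a t - a s‖ ∧
      ‖a t - a s‖ ≤ 8 * (1 / 2 : ℝ) ^ j * mx a t ∧
      ∀ J : ℕ, 2 ≤ J → 2 * (1 / 2 : ℝ) ^ J * mx a t < ‖a t - a s‖ → j ≤ J := by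
  have hδ : 0 < ‖a t - a s‖ := norm_pos_iff.2 (sub_ne_zero.2 hne)
  have hδ2 : ‖a t - a s‖ ≤ 2 * mx a t := by
    have := norm_sub_le (a t) (a s)
    linarith [norm_le_mx a (le_refl t), norm_le_mx a hst]
  have hm : 0 < mx a t := by linarith
  have hex : ∃ j : ℕ, 2 ≤ j ∧ 2 * (1 / 2 : ℝ) ^ j * mx a t < ‖a t - a s‖ := by
    obtain ⟨n, hn⟩ := exists_pow_lt_of_lt_one (show 0 < ‖a t - a s‖ / (2 * mx a t) by positivity)
      (by norm_num : (1 / 2 : ℝ) < 1)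
    refine ⟨n + 2, by omega, ?_⟩
    have h1 : (1 / 2 : ℝ) ^ (n + 2) ≤ (1 / 2) ^ n :=
      pow_le_pow_of_le_one (by norm_num) (by norm_num) (by omega)
    rw [lt_div_iff₀ (by positivity)] at hn
    nlinarith
  classical
  refine ⟨Nat.find hex, (Nat.find_spec hex).1, (Nat.find_spec hex).2, ?_,
    fun J h1 h2 => Nat.find_min' hex ⟨h1, h2⟩⟩
  obtain ⟨j, hj⟩ : ∃ j, Nat.find hex = j + 2 := ⟨Nat.find hex - 2, by have := (Nat.find_spec hex).1; omega⟩
  rw [hj]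
  rcases Nat.eq_zero_or_pos j with rfl | hj0
  · norm_num; linarith
  · have := Nat.find_min hex (m := j + 1) (by omega)
    push Not at this
    have h1 := this (by omega)
    rw [pow_succ (1 / 2 : ℝ) (j + 1)]
    nlinarith

end FV

/-! ### Martingales on a finite probability space -/

namespace FV

/-- A finite martingale with respect to conditionally symmetric signs: `τ k` is an involution of the
(uniform, finite) probability space which preserves the first `k` steps of the path and reflects the
next one about its mean. -/
structure Mart {Ω : Type*} (L : ℕ) (τ : ℕ → Ω → Ω) (M : ℕ → Ω → ℂ) : Prop where
  inv : ∀ k < L, Function.Involutive (τ k)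
  past : ∀ k < L, ∀ i ≤ k, ∀ ω, M i (τ k ω) = M i ω
  avg : ∀ k < L, ∀ ω, M (k + 1) ω + M (k + 1) (τ k ω) = 2 * M k ω

/-- The path of `ω`. -/
def pth {Ω : Type*} (M : ℕ → Ω → ℂ) (ω : Ω) : ℕ → ℂ := fun k => M k ω

/-- Weighted two-term arithmetic-geometric mean inequality in the form of Young's inequality for
`y^(p-1) x`. -/
lemma young_pow {p : ℝ} (hp : 1 < p) {x y : ℝ} (hx : 0 ≤ x) (hy : 0 ≤ y) :
    y ^ (p - 1) * x ≤ (1 - 1 / p) * y ^ p + 1 / p * x ^ p := by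
  have hc : (p / (p - 1)).HolderConjugate p := (Real.HolderConjugate.conjExponent hp).symm
  have h := Real.young_inequality_of_nonneg (Real.rpow_nonneg hy (p - 1)) hx hc
  rw [← Real.rpow_mul hy] at h
  have e : (p - 1) * (p / (p - 1)) = p := by
    have : p - 1 ≠ 0 := by linarith
    field_simp
  rw [e] at h
  have e2 : y ^ p / (p / (p - 1)) = (1 - 1 / p) * y ^ p := by
    have : p ≠ 0 := by linarith
    field_simp
  rw [e2] at h
  linarith [show x ^ p / p = 1 / p * x ^ p by ring]

lemma young_sum {Ω : Type*} [Fintype Ω] {p K : ℝ} (hp : 1 < p) (hK : 0 ≤ K) {x y : Ω → ℝ}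
    (hx : ∀ ω, 0 ≤ x ω) (hy : ∀ ω, 0 ≤ y ω)
    (h : ∑ ω, y ω ^ p ≤ K * ∑ ω, y ω ^ (p - 1) * x ω) :
    ∑ ω, y ω ^ p ≤ K ^ p * ∑ ω, x ω ^ p := by
  have h1 : K * ∑ ω, y ω ^ (p - 1) * x ω ≤
      ∑ ω, ((1 - 1 / p) * y ω ^ p + 1 / p * (K ^ p * x ω ^ p)) := by
    rw [mul_sum]
    refine sum_le_sum fun ω _ => ?_
    have := young_pow hp (mul_nonneg hK (hx ω)) (hy ω)
    rw [Real.mul_rpow hK (hx ω)] at this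
    linarith [show K * (y ω ^ (p - 1) * x ω) = y ω ^ (p - 1) * (K * x ω) by ring]
  rw [sum_add_distrib, ← mul_sum, ← mul_sum, ← mul_sum] at h1
  have hp0 : 0 < 1 / p := by positivity
  have h2 := h.trans h1
  have h3 : 1 / p * ∑ ω, y ω ^ p ≤ 1 / p * (K ^ p * ∑ ω, x ω ^ p) := by linarith
  exact le_of_mul_le_mul_left h3 hp0

namespace Mart
set_option linter.unusedSectionVars false
variable {Ω : Type*} [Fintype Ω] {L : ℕ} {τ : ℕ → Ω → Ω} {M : ℕ → Ω → ℂ}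

lemma sum_flip (hM : Mart L τ M) {k : ℕ} (hk : k < L) (g : Ω → ℝ) :
    ∑ ω, g (τ k ω) = ∑ ω, g ω :=
  Equiv.sum_comp (hM.inv k hk).toPerm g

/-- Martingale increments are orthogonal to quantities determined by the past. -/
lemma orth (hM : Mart L τ M) {k : ℕ} (hk : k < L) {B : Ω → ℝ} {b : Ω → ℂ}
    (hB : ∀ ω, B (τ k ω) = B ω) (hb : ∀ ω, b (τ k ω) = b ω) :
    ∑ ω, B ω * inner ℝ (b ω) (M (k + 1) ω - M k ω) = 0 := by
  have h := hM.sum_flip hk fun ω => B ω * inner ℝ (b ω) (M (k + 1) ω - M k ω)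
  have h2 : ∑ ω, B (τ k ω) * inner ℝ (b (τ k ω)) (M (k + 1) (τ k ω) - M k (τ k ω)) =
      - ∑ ω, B ω * inner ℝ (b ω) (M (k + 1) ω - M k ω) := by
    rw [← sum_neg_distrib]
    refine sum_congr rfl fun ω _ => ?_
    rw [hB, hb, hM.past k hk k le_rfl ω]
    have : M (k + 1) (τ k ω) - M k ω = -(M (k + 1) ω - M k ω) := by
      linear_combination hM.avg k hk ω
    rw [this, inner_neg_right]; ring
  linarith

lemma norm_incr_flip (hM : Mart L τ M) {k : ℕ} (hk : k < L) (ω : Ω) :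
    ‖M (k + 1) (τ k ω) - M k (τ k ω)‖ = ‖M (k + 1) ω - M k ω‖ := by
  rw [hM.past k hk k le_rfl ω, ← norm_neg (M (k + 1) ω - M k ω)]
  congr 1
  linear_combination hM.avg k hk ω

/-- The norm of a martingale is a submartingale. -/
lemma submart (hM : Mart L τ M) {k : ℕ} (hk : k < L) {B : Ω → ℝ} (hB0 : ∀ ω, 0 ≤ B ω)
    (hB : ∀ ω, B (τ k ω) = B ω) :
    ∑ ω, B ω * ‖M k ω‖ ≤ ∑ ω, B ω * ‖M (k + 1) ω‖ := by
  have h := hM.sum_flip hk fun ω => B ω * ‖M (k + 1) ω‖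
  have h2 : ∑ ω, 2 * (B ω * ‖M k ω‖) ≤
      ∑ ω, (B ω * ‖M (k + 1) ω‖ + B (τ k ω) * ‖M (k + 1) (τ k ω)‖) := by
    refine sum_le_sum fun ω _ => ?_
    rw [hB]
    have h3 : ‖2 * M k ω‖ ≤ ‖M (k + 1) ω‖ + ‖M (k + 1) (τ k ω)‖ := by
      rw [← hM.avg k hk ω]; exact norm_add_le _ _
    rw [norm_mul, Complex.norm_ofNat] at h3
    nlinarith [hB0 ω]
  rw [sum_add_distrib, h, ← mul_sum] at h2
  linarith

lemma mx_flip (hM : Mart L τ M) {k l : ℕ} (hk : k < L) (hl : l ≤ k) (ω : Ω) :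
    mx (pth M (τ k ω)) l = mx (pth M ω) l :=
  mx_congr fun i hi => hM.past k hk i (hi.trans hl) ω

lemma bs_flip (hM : Mart L τ M) {k l : ℕ} (hk : k < L) (hl : l ≤ k) (μ : ℝ) (ω : Ω) :
    bs μ (pth M (τ k ω)) l = bs μ (pth M ω) l :=
  bs_congr fun i hi => hM.past k hk i (hi.trans hl) ω

lemma mt_flip (hM : Mart L τ M) {k : ℕ} (hk : k < L) (ε : ℝ) (ω : Ω) :
    mt ε (pth M (τ k ω)) (k + 1) = mt ε (pth M ω) (k + 1) := by
  have h := hM.norm_incr_flip hk ω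
  rw [hM.past k hk k le_rfl ω] at h
  have h2 : mt ε (pth M (τ k ω)) k = mt ε (pth M ω) k :=
    mt_congr fun i hi => hM.past k hk i hi ω
  simp only [mt, h2]
  simp only [pth, hM.past k hk k le_rfl ω, h]

/-- Doob's maximal inequality. -/
lemma doob (hM : Mart L τ M) {p : ℝ} (hp : 1 < p) :
    ∑ ω, mx (pth M ω) L ^ p ≤ (p / (p - 1)) ^ p * ∑ ω, ‖M L ω‖ ^ p := by
  have hp0 : 0 < p := by linarith
  have key : ∀ k ≤ L, (1 - 1 / p) * ∑ ω, mx (pth M ω) k ^ p ≤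
      ∑ ω, mx (pth M ω) k ^ (p - 1) * ‖M k ω‖ := by
    intro k
    induction k with
    | zero =>
      intro _
      rw [mul_sum]
      refine sum_le_sum fun ω _ => ?_
      have h0 : 0 ≤ ‖M 0 ω‖ := norm_nonneg _
      have e : mx (pth M ω) 0 ^ (p - 1) * ‖M 0 ω‖ = ‖M 0 ω‖ ^ p := by
        simp only [mx, pth]
        rw [← Real.rpow_add_one' h0 (by linarith)]; congr 1; ring
      rw [e]
      simp only [mx, pth]
      have : 0 ≤ 1 / p * ‖M 0 ω‖ ^ p := by positivity
      linarith
    | succ k ih =>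
      intro hk
      have hk' : k < L := hk
      have h1 := ih hk'.le
      have h2 := hM.submart hk' (B := fun ω => mx (pth M ω) k ^ (p - 1))
        (fun ω => Real.rpow_nonneg (mx_nonneg _ _) _)
        (fun ω => by simp only [hM.mx_flip hk' le_rfl ω])
      have h3 : ∑ ω, (1 - 1 / p) * (mx (pth M ω) (k + 1) ^ p - mx (pth M ω) k ^ p) ≤
          ∑ ω, (mx (pth M ω) (k + 1) ^ (p - 1) * ‖M (k + 1) ω‖
            - mx (pth M ω) k ^ (p - 1) * ‖M (k + 1) ω‖) := by
        refine sum_le_sum fun ω _ => ?_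
        set x := mx (pth M ω) k with hx
        have hx0 : 0 ≤ x := mx_nonneg _ _
        have hy : mx (pth M ω) (k + 1) = max x ‖M (k + 1) ω‖ := rfl
        rcases le_total ‖M (k + 1) ω‖ x with h | h
        · rw [hy, max_eq_left h]; simp
        · rw [hy, max_eq_right h]
          set y := ‖M (k + 1) ω‖
          have hy0 : 0 ≤ y := hx0.trans h
          have e : y ^ (p - 1) * y = y ^ p := by
            rw [← Real.rpow_add_one' hy0 (by linarith)]; congr 1; ring
          have := young_pow hp hy0 hx0
          rw [e]; linarith
      rw [← mul_sum, sum_sub_distrib, sum_sub_distrib] at h3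
      linarith
  have h := key L le_rfl
  have hq : 0 < 1 - 1 / p := by
    rw [sub_pos, div_lt_one hp0]; exact hp
  have hq2 : (1 - 1 / p) * (p / (p - 1)) = 1 := by
    have : p - 1 ≠ 0 := by linarith
    field_simp
  have hq3 : 0 ≤ p / (p - 1) := div_nonneg hp0.le (by linarith)
  refine young_sum hp hq3 (fun ω => norm_nonneg _) (fun ω => mx_nonneg _ _) ?_
  have := mul_le_mul_of_nonneg_left h hq3
  calc ∑ ω, mx (pth M ω) L ^ p
      = p / (p - 1) * ((1 - 1 / p) * ∑ ω, mx (pth M ω) L ^ p) := by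
        rw [← mul_assoc, mul_comm (p / (p - 1)), hq2, one_mul]
    _ ≤ _ := this

/-- One step of the energy identity. -/
lemma energy_step (hM : Mart L τ M) (μ : ℝ) {k : ℕ} (hk : k < L) {B : Ω → ℝ}
    (hB : ∀ ω, B (τ k ω) = B ω) :
    ∑ ω, B ω * (Gs μ (pth M ω) (k + 1) - Gs μ (pth M ω) k) =
      ∑ ω, B ω * (‖M (k + 1) ω‖ ^ 2 - ‖M k ω‖ ^ 2) := by
  have h := hM.orth hk (B := B) (b := fun ω => (bs μ (pth M ω) k).1) hB
    (fun ω => by simp only [hM.bs_flip hk le_rfl])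
  have : ∀ ω, B ω * (Gs μ (pth M ω) (k + 1) - Gs μ (pth M ω) k) =
      B ω * (‖M (k + 1) ω‖ ^ 2 - ‖M k ω‖ ^ 2) -
      2 * (B ω * inner ℝ (bs μ (pth M ω) k).1 (M (k + 1) ω - M k ω)) := by
    intro ω
    rw [Gs_diff]
    simp only [pth]; ring
  rw [sum_congr rfl fun ω _ => this ω, sum_sub_distrib, ← mul_sum, h]
  ring

/-- The energy identity: tested against quantities `B` known at time `k`, the square sum of the stopped
increments has the same increment as `‖M‖²`. -/
lemma energy (hM : Mart L τ M) (μ : ℝ) {k l : ℕ} (hkl : k ≤ l) (hl : l ≤ L) {B : Ω → ℝ}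
    (hB : ∀ i, k ≤ i → i < L → ∀ ω, B (τ i ω) = B ω) :
    ∑ ω, B ω * (Gs μ (pth M ω) l - Gs μ (pth M ω) k) =
      ∑ ω, B ω * (‖M l ω‖ ^ 2 - ‖M k ω‖ ^ 2) := by
  induction l, hkl using Nat.le_induction with
  | base => simp
  | succ l hkl ih =>
    have h1 := ih (by omega)
    have h2 := hM.energy_step μ (k := l) (by omega) (hB l hkl (by omega))
    simp only [mul_sub, sum_sub_distrib] at *
    linarith

/-- Square function bound for `1 < p ≤ 2` up to the regularisation `ε`. -/
lemma square_le_two_aux (hM : Mart L τ M) {p : ℝ} (hp : 1 < p) (hp2 : p ≤ 2) (μ : ℝ) {ε : ℝ}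
    (hε : 0 < ε) :
    ∑ ω, (bs μ (pth M ω) L).2 ^ (p / 2) ≤ 2 * ∑ ω, mt ε (pth M ω) L ^ p := by
  have hp0 : 0 < p := by linarith
  -- weighted arithmetic-geometric mean: `x^p ≤ (p/2) y^(p-2) x² + (1-p/2) y^p`
  have am : ∀ x y : ℝ, 0 ≤ x → 0 < y →
      x ^ (p / 2) ≤ (p / 2) * (y ^ (p - 2) * x) + (1 - p / 2) * y ^ p := by
    intro x y hx hy
    have h := Real.geom_mean_le_arith_mean2_weighted (w₁ := p / 2) (w₂ := 1 - p / 2)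
      (p₁ := y ^ (p - 2) * x) (p₂ := y ^ p) (by positivity) (by linarith) (by positivity)
      (by positivity) (by ring)
    rw [Real.mul_rpow (by positivity) hx, ← Real.rpow_mul hy.le, ← Real.rpow_mul hy.le,
      mul_right_comm, ← Real.rpow_add hy] at h
    have e : (p - 2) * (p / 2) + p * (1 - p / 2) = 0 := by ring
    rwa [e, Real.rpow_zero, one_mul] at h
  have hsq : ∀ x : ℝ, 0 ≤ x → (x ^ 2) ^ (p / 2) = x ^ p := by
    intro x hx
    rw [← Real.rpow_natCast, ← Real.rpow_mul hx]; congr 1; push_cast; ring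
  have key : ∀ k ≤ L, ∑ ω, mt ε (pth M ω) k ^ (p - 2) * Gs μ (pth M ω) k ≤
      ∑ ω, (mt ε (pth M ω) k ^ (p - 2) * ‖M k ω‖ ^ 2 + (2 - p) / p * mt ε (pth M ω) k ^ p) := by
    intro k
    induction k with
    | zero =>
      intro _
      refine sum_le_sum fun ω _ => ?_
      have := mt_pos hε (pth M ω) 0
      have h2 : 0 ≤ (2 - p) / p := div_nonneg (by linarith) hp0.le
      rw [Gs_zero]; simp only [mul_zero]; positivity
    | succ k ih =>
      intro hk
      have hk' : k < L := hk
      have h1 := ih hk'.le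
      have h2 := hM.energy_step μ hk' (B := fun ω => mt ε (pth M ω) (k + 1) ^ (p - 2))
        (fun ω => by simp only [hM.mt_flip hk' ε ω])
      have h3 : ∑ ω, (mt ε (pth M ω) k ^ (p - 2) * (‖M k ω‖ ^ 2 - Gs μ (pth M ω) k) +
          (2 - p) / p * mt ε (pth M ω) k ^ p +
          mt ε (pth M ω) (k + 1) ^ (p - 2) * (Gs μ (pth M ω) k - ‖M k ω‖ ^ 2)) ≤
          ∑ ω, (2 - p) / p * mt ε (pth M ω) (k + 1) ^ p := by
        refine sum_le_sum fun ω _ => ?_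
        have hx := mt_pos hε (pth M ω) k
        have hxy := mt_mono ε (pth M ω) (Nat.le_succ k)
        rw [Nat.succ_eq_add_one] at hxy
        have hN := norm_le_mt hε (pth M ω) k
        simp only [pth] at hN
        have hG := Gs_nonneg μ (pth M ω) k
        change ‖M k ω‖ ≤ mt ε (pth M ω) k at hN
        set x := mt ε (pth M ω) k
        set y := mt ε (pth M ω) (k + 1)
        have hy : 0 < y := hx.trans_le hxy
        have hw : y ^ (p - 2) ≤ x ^ (p - 2) :=
          Real.rpow_le_rpow_of_nonpos hx hxy (by linarith)
        have a1 := am (x ^ 2) y (by positivity) hy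
        rw [hsq x hx.le] at a1
        have e : x ^ (p - 2) * x ^ 2 = x ^ p := by
          rw [← Real.rpow_natCast x 2, ← Real.rpow_add hx]; congr 1; push_cast; ring
        have a2 : (x ^ (p - 2) - y ^ (p - 2)) * (‖M k ω‖ ^ 2 - Gs μ (pth M ω) k) ≤
            (x ^ (p - 2) - y ^ (p - 2)) * x ^ 2 := by
          refine mul_le_mul_of_nonneg_left ?_ (by linarith)
          have : ‖M k ω‖ ^ 2 ≤ x ^ 2 := by gcongr
          linarith
        have a3 : x ^ p - y ^ (p - 2) * x ^ 2 ≤ (2 - p) / p * (y ^ p - x ^ p) := by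
          have : (2 - p) / p * (y ^ p - x ^ p) - (x ^ p - y ^ (p - 2) * x ^ 2) =
              2 / p * ((p / 2) * (y ^ (p - 2) * x ^ 2) + (1 - p / 2) * y ^ p - x ^ p) := by
            field_simp; ring
          have h0 : 0 ≤ 2 / p * ((p / 2) * (y ^ (p - 2) * x ^ 2) + (1 - p / 2) * y ^ p - x ^ p) :=
            mul_nonneg (by positivity) (by linarith)
          linarith
        linarith
      simp only [mul_sub, sum_sub_distrib, sum_add_distrib] at *
      linarith
  have h := key L le_rfl
  have h2 : ∑ ω, (mt ε (pth M ω) L ^ (p - 2) * ‖M L ω‖ ^ 2 + (2 - p) / p * mt ε (pth M ω) L ^ p) ≤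
      ∑ ω, 2 / p * mt ε (pth M ω) L ^ p := by
    refine sum_le_sum fun ω _ => ?_
    have hx := mt_pos hε (pth M ω) L
    have hN := norm_le_mt hε (pth M ω) L
    change ‖M L ω‖ ≤ _ at hN
    set x := mt ε (pth M ω) L
    have e : x ^ (p - 2) * x ^ 2 = x ^ p := by
      rw [← Real.rpow_natCast x 2, ← Real.rpow_add hx]; congr 1; push_cast; ring
    have : x ^ (p - 2) * ‖M L ω‖ ^ 2 ≤ x ^ (p - 2) * x ^ 2 := by gcongr
    have e2 : 2 / p * x ^ p = x ^ p + (2 - p) / p * x ^ p := by field_simp; ring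
    linarith
  have h3 : ∑ ω, (bs μ (pth M ω) L).2 ^ (p / 2) ≤
      ∑ ω, ((p / 2) * (mt ε (pth M ω) L ^ (p - 2) * Gs μ (pth M ω) L) +
        (1 - p / 2) * mt ε (pth M ω) L ^ p) := by
    refine sum_le_sum fun ω _ => ?_
    refine le_trans (Real.rpow_le_rpow (Ss_nonneg _ _ _) (Ss_le_Gs _ _ _) (by positivity)) ?_
    exact am _ _ (Gs_nonneg _ _ _) (mt_pos hε _ _)
  rw [sum_add_distrib, ← mul_sum, ← mul_sum] at h3
  rw [← mul_sum] at h2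
  have h4 : 0 ≤ ∑ ω, mt ε (pth M ω) L ^ p :=
    sum_nonneg fun ω _ => Real.rpow_nonneg (mt_pos hε _ _).le _
  have h5 := mul_le_mul_of_nonneg_left (h.trans h2) (show 0 ≤ p / 2 by positivity)
  have e : p / 2 * (2 / p * ∑ ω, mt ε (pth M ω) L ^ p) = ∑ ω, mt ε (pth M ω) L ^ p := by
    field_simp
  rw [e] at h5
  nlinarith

/-- Square function bound for `1 < p ≤ 2`, letting `ε → 0` in `square_le_two_aux`. -/
lemma square_le_two (hM : Mart L τ M) {p : ℝ} (hp : 1 < p) (hp2 : p ≤ 2) (μ : ℝ) :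
    ∑ ω, (bs μ (pth M ω) L).2 ^ (p / 2) ≤ 2 * 3 ^ p * ∑ ω, mx (pth M ω) L ^ p := by
  have hp0 : 0 < p := by linarith
  have hc : Tendsto (fun ε : ℝ => 2 * ∑ ω, (ε + 3 * mx (pth M ω) L) ^ p) (nhdsWithin 0 (Set.Ioi 0))
      (nhds (2 * ∑ ω, (0 + 3 * mx (pth M ω) L) ^ p)) := by
    refine Tendsto.mono_left ?_ nhdsWithin_le_nhds
    refine Continuous.tendsto (f := fun ε : ℝ => 2 * ∑ ω, (ε + 3 * mx (pth M ω) L) ^ p) ?_ 0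
    refine continuous_const.mul (continuous_finsetSum _ fun ω _ => ?_)
    exact (continuous_id.add continuous_const).rpow_const fun _ => Or.inr hp0.le
  have h := ge_of_tendsto hc (b := ∑ ω, (bs μ (pth M ω) L).2 ^ (p / 2)) ?_
  · refine h.trans (le_of_eq ?_)
    rw [mul_assoc, mul_sum (a := (3 : ℝ) ^ p)]
    congr 1
    refine sum_congr rfl fun ω _ => ?_
    rw [zero_add, Real.mul_rpow (by norm_num) (mx_nonneg _ _)]
  · filter_upwards [self_mem_nhdsWithin] with ε hε
    refine (hM.square_le_two_aux hp hp2 μ hε).trans ?_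
    gcongr with ω
    · exact (mt_pos hε _ _).le
    · exact mt_le hε _ _

/-- Square function bound for exponents `2 q > 2`, by summation by parts in the telescoped `q`-th power and
the energy identity from each time onwards. -/
lemma square_gt_two (hM : Mart L τ M) {q : ℝ} (hq : 1 < q) {μ : ℝ} (hμ0 : 0 ≤ μ) (hμ : μ ≤ 1) :
    ∑ ω, (bs μ (pth M ω) L).2 ^ q ≤ (6 * q) ^ q * ∑ ω, (mx (pth M ω) L ^ 2) ^ q := by
  have hq0 : 0 < q := by linarith
  set S : ℕ → Ω → ℝ := fun k ω => (bs μ (pth M ω) k).2 with hS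
  set mm : Ω → ℝ := fun ω => mx (pth M ω) L with hmm
  have hS0 : ∀ k ω, 0 ≤ S k ω := fun k ω => Ss_nonneg _ _ _
  have hSm : ∀ ω, Monotone fun k => S k ω := fun ω => Ss_mono μ (pth M ω)
  have key : ∀ k ≤ L, ∑ ω, (S k ω ^ (q - 1) * (S L ω - S k ω) + 1 / q * S k ω ^ q) ≤
      6 * ∑ ω, S k ω ^ (q - 1) * mm ω ^ 2 := by
    intro k
    induction k with
    | zero =>
      intro _
      have e : ∀ ω, S 0 ω = 0 := fun ω => rfl
      have e1 : q - 1 ≠ 0 := by linarith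
      simp [e, Real.zero_rpow e1, Real.zero_rpow hq0.ne']
    | succ k ih =>
      intro hk
      have h1 := ih (by omega)
      set B : Ω → ℝ := fun ω => S (k + 1) ω ^ (q - 1) - S k ω ^ (q - 1) with hB
      have hB0 : ∀ ω, 0 ≤ B ω := fun ω => sub_nonneg.2
        (Real.rpow_le_rpow (hS0 _ _) (hSm ω (Nat.le_succ k)) (by linarith))
      have h2 := hM.energy μ (k := k + 1) (l := L) hk le_rfl (B := B) (fun i hi hi' ω => by
        simp only [hB, hS, hM.bs_flip hi' hi, hM.bs_flip hi' (by omega : k ≤ i)])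
      have h3 : ∑ ω, ((S (k + 1) ω ^ (q - 1) * (S L ω - S (k + 1) ω) + 1 / q * S (k + 1) ω ^ q)
          - (S k ω ^ (q - 1) * (S L ω - S k ω) + 1 / q * S k ω ^ q)
          - B ω * (Gs μ (pth M ω) L - Gs μ (pth M ω) (k + 1))
          + B ω * (‖M L ω‖ ^ 2 - ‖M (k + 1) ω‖ ^ 2)) ≤ ∑ ω, 6 * (B ω * mm ω ^ 2) := by
        refine sum_le_sum fun ω _ => ?_
        have g1 : S L ω - S (k + 1) ω ≤
            Gs μ (pth M ω) L - Gs μ (pth M ω) (k + 1) + mm ω ^ 2 := by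
          have a1 := Ss_le_Gs μ (pth M ω) L
          have a2 := bs_close hμ0 (pth M ω) (k + 1)
          have a3 : μ * mx (pth M ω) (k + 1) ≤ mm ω := by
            have := mx_mono (pth M ω) hk
            have h0 := mx_nonneg (pth M ω) (k + 1)
            nlinarith
          have a4 : ‖pth M ω (k + 1) - (bs μ (pth M ω) (k + 1)).1‖ ^ 2 ≤ mm ω ^ 2 := by
            have := a2.trans a3
            gcongr
          have a5 : Gs μ (pth M ω) (k + 1) = S (k + 1) ω +
            ‖pth M ω (k + 1) - (bs μ (pth M ω) (k + 1)).1‖ ^ 2 := rfl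
          have a6 : S L ω ≤ Gs μ (pth M ω) L := a1
          linarith
        have g2 : S (k + 1) ω - S k ω ≤ 4 * mm ω ^ 2 := by
          have b1 := norm_le_mx (pth M ω) hk
          have b2 := (bs_base μ (pth M ω) k).trans (mx_mono (pth M ω) (by omega : k ≤ L))
          have b3 := norm_sub_le (pth M ω (k + 1)) (bs μ (pth M ω) k).1
          have b4 : ‖pth M ω (k + 1) - (bs μ (pth M ω) k).1‖ ^ 2 ≤ (2 * mm ω) ^ 2 := by
            gcongr
            change _ ≤ 2 * mx (pth M ω) L
            linarith
          have b5 : S (k + 1) ω ≤ Gs μ (pth M ω) (k + 1) := Ss_le_Gs _ _ _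
          rw [Gs_succ] at b5
          change _ ≤ S k ω + _ at b5
          nlinarith
        have g3 : ‖M L ω‖ ^ 2 - ‖M (k + 1) ω‖ ^ 2 ≤ mm ω ^ 2 := by
          have : ‖M L ω‖ ≤ mm ω := norm_le_mx' (pth M ω) L
          have h2 : ‖M L ω‖ ^ 2 ≤ mm ω ^ 2 := by gcongr
          nlinarith [sq_nonneg ‖M (k + 1) ω‖]
        have g4 : 1 / q * S (k + 1) ω ^ q - 1 / q * S k ω ^ q ≤
            S (k + 1) ω ^ (q - 1) * (S (k + 1) ω - S k ω) := by
          have := young_pow hq (hS0 k ω) (hS0 (k + 1) ω)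
          have e : S (k + 1) ω ^ (q - 1) * S (k + 1) ω = S (k + 1) ω ^ q := by
            rw [← Real.rpow_add_one' (hS0 _ _) (by linarith)]; congr 1; ring
          rw [mul_sub, e]; linarith
        have g5 : B ω * ((S L ω - S (k + 1) ω) + (S (k + 1) ω - S k ω)
            - (Gs μ (pth M ω) L - Gs μ (pth M ω) (k + 1))
            + (‖M L ω‖ ^ 2 - ‖M (k + 1) ω‖ ^ 2)) ≤ B ω * (6 * mm ω ^ 2) :=
          mul_le_mul_of_nonneg_left (by linarith) (hB0 ω)
        simp only [hB] at g5 ⊢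
        linarith
      have e : ∑ ω, 6 * (B ω * mm ω ^ 2) = 6 * ∑ ω, S (k + 1) ω ^ (q - 1) * mm ω ^ 2 -
          6 * ∑ ω, S k ω ^ (q - 1) * mm ω ^ 2 := by
        rw [mul_sum, mul_sum, ← sum_sub_distrib]
        refine sum_congr rfl fun ω _ => ?_
        simp only [hB]; ring
      rw [sum_add_distrib, sum_sub_distrib, sum_sub_distrib, e] at h3
      linarith
  have h := key L le_rfl
  refine young_sum hq (by positivity) (fun ω => sq_nonneg _) (fun ω => hS0 L ω) ?_
  simp only [sub_self, mul_zero, zero_add] at h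
  rw [← mul_sum] at h
  have h6 := mul_le_mul_of_nonneg_left h hq0.le
  have e : q * (1 / q * ∑ ω, S L ω ^ q) = ∑ ω, S L ω ^ q := by field_simp
  rw [e] at h6
  linarith

end Mart
end FV

/-! ### Lépingle's inequality -/

namespace FV

lemma add_rpow_le_two {θ x y : ℝ} (hθ : 0 < θ) (hx : 0 ≤ x) (hy : 0 ≤ y) :
    (x + y) ^ θ ≤ 2 ^ θ * (x ^ θ + y ^ θ) := by
  have hx' := Real.rpow_nonneg hx θ
  have hy' := Real.rpow_nonneg hy θ
  have h : (x + y) ^ θ ≤ (2 * max x y) ^ θ := by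
    refine Real.rpow_le_rpow (by positivity) ?_ hθ.le
    linarith [le_max_left x y, le_max_right x y]
  rw [Real.mul_rpow (by norm_num) (hx.trans (le_max_left _ _))] at h
  refine h.trans ?_
  gcongr
  rcases le_total x y with h | h
  · rw [max_eq_right h]; linarith
  · rw [max_eq_left h]; linarith

/-- A geometric sum raised to the power `θ` is controlled by a geometric sum of `θ`-th powers. -/
lemma geom_sum_rpow {θ γ : ℝ} (hθ : 0 < θ) (hγ0 : 0 < γ) (hγ : γ < 1) (J : ℕ) (x : ℕ → ℝ)
    (hx : ∀ j, 0 ≤ x j) :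
    (∑ j ∈ range J, (γ * γ) ^ j * x j) ^ θ ≤
      (1 / (1 - γ)) ^ θ * ∑ j ∈ range J, (γ ^ θ) ^ j * x j ^ θ := by
  have h1 : 0 < 1 - γ := by linarith
  rcases Nat.eq_zero_or_pos J with rfl | hJ
  · simp [Real.zero_rpow hθ.ne']
  obtain ⟨i, hi, hmax⟩ := exists_max_image (range J) (fun j => γ ^ j * x j)
    ⟨0, mem_range.2 hJ⟩
  have hnn : ∀ j, 0 ≤ γ ^ j * x j := fun j => mul_nonneg (by positivity) (hx j)
  have h2 : ∑ j ∈ range J, (γ * γ) ^ j * x j ≤ 1 / (1 - γ) * (γ ^ i * x i) := by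
    calc ∑ j ∈ range J, (γ * γ) ^ j * x j ≤ ∑ j ∈ range J, γ ^ j * (γ ^ i * x i) := by
          refine sum_le_sum fun j hj => ?_
          rw [mul_pow, mul_assoc]
          exact mul_le_mul_of_nonneg_left (hmax j hj) (by positivity)
      _ = (∑ j ∈ range J, γ ^ j) * (γ ^ i * x i) := by rw [sum_mul]
      _ ≤ _ := by
          refine mul_le_mul_of_nonneg_right ?_ (hnn i)
          rw [geom_sum_eq hγ.ne, ← neg_div_neg_eq]
          have : 0 ≤ γ ^ J := by positivity
          rw [neg_sub, neg_sub]
          gcongr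
          linarith
  calc (∑ j ∈ range J, (γ * γ) ^ j * x j) ^ θ ≤ (1 / (1 - γ) * (γ ^ i * x i)) ^ θ :=
        Real.rpow_le_rpow (sum_nonneg fun j _ => mul_nonneg (by positivity) (hx j)) h2 hθ.le
    _ = (1 / (1 - γ)) ^ θ * ((γ ^ θ) ^ i * x i ^ θ) := by
        rw [Real.mul_rpow (by positivity) (hnn i), Real.mul_rpow (by positivity) (hx i),
          ← Real.rpow_natCast γ, ← Real.rpow_mul hγ0.le, mul_comm (i : ℝ), Real.rpow_mul hγ0.le,
          Real.rpow_natCast]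
    _ ≤ _ := by
        gcongr
        refine single_le_sum (f := fun j => (γ ^ θ) ^ j * x j ^ θ) (fun j _ => ?_) hi
        exact mul_nonneg (by positivity) (Real.rpow_nonneg (hx j) _)

/-- The square functions are bounded by the maximal function in every `L^p`. -/
lemma Mart.square (p : ℝ) (hp : 1 < p) : ∃ C : ℝ, 0 < C ∧ ∀ {Ω : Type} [Fintype Ω] {L : ℕ}
    {τ : ℕ → Ω → Ω} {M : ℕ → Ω → ℂ}, Mart L τ M → ∀ μ : ℝ, 0 ≤ μ → μ ≤ 1 →
    ∑ ω, (bs μ (pth M ω) L).2 ^ (p / 2) ≤ C * ∑ ω, mx (pth M ω) L ^ p := by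
  rcases le_or_gt p 2 with h | h
  · exact ⟨2 * 3 ^ p, by positivity, fun hM μ _ _ => hM.square_le_two hp h μ⟩
  · refine ⟨(6 * (p / 2)) ^ (p / 2), by positivity, fun {Ω _ L τ M} hM μ h0 h1 => ?_⟩
    have := hM.square_gt_two (q := p / 2) (by linarith) h0 h1
    refine this.trans (le_of_eq ?_)
    congr 1
    refine sum_congr rfl fun ω _ => ?_
    rw [← Real.rpow_natCast, ← Real.rpow_mul (mx_nonneg _ _)]; congr 1; push_cast; ring

/-- Pathwise bound of the `r`-th powers of increments by the square functions at the levels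
`2^{-j}`. -/
lemma incr_bound {r : ℝ} (hr : 2 < r) (a : ℕ → ℂ) {s t L J : ℕ} (hst : s ≤ t) (ht : t ≤ L)
    (hJ : a t ≠ a s → ∃ j < J, 2 ≤ j ∧ 2 * (1 / 2 : ℝ) ^ j * mx a t < ‖a t - a s‖ ∧
      ‖a t - a s‖ ≤ 8 * (1 / 2 : ℝ) ^ j * mx a t) :
    ‖a t - a s‖ ^ r ≤ 8 ^ r * 2 * ∑ j ∈ range J, ((1 / 2 : ℝ) ^ (r - 2)) ^ j *
      (mx a L ^ (r - 2) * ((bs ((1 / 2) ^ j) a t).2 - (bs ((1 / 2) ^ j) a s).2)) := by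
  have hm := mx_nonneg a t
  have hmL := mx_mono a ht
  have hnn : ∀ j ∈ range J, 0 ≤ ((1 / 2 : ℝ) ^ (r - 2)) ^ j *
      (mx a L ^ (r - 2) * ((bs ((1 / 2) ^ j) a t).2 - (bs ((1 / 2) ^ j) a s).2)) := by
    intro j _
    have := Ss_mono ((1 / 2) ^ j) a hst
    simp only at this
    have h2 := Real.rpow_nonneg (mx_nonneg a L) (r - 2)
    have h3 : 0 ≤ (bs ((1 / 2) ^ j) a t).2 - (bs ((1 / 2) ^ j) a s).2 := by linarith
    positivity
  by_cases hne : a t = a s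
  · rw [hne, sub_self, norm_zero, Real.zero_rpow (by linarith)]
    exact mul_nonneg (by positivity) (sum_nonneg hnn)
  obtain ⟨j, hj, hj2, h1, h2⟩ := hJ hne
  refine le_trans ?_ (mul_le_mul_of_nonneg_left (single_le_sum hnn (mem_range.2 hj))
    (by positivity))
  set μ : ℝ := (1 / 2) ^ j with hμ
  have hμ0 : 0 < μ := by positivity
  have hμ4 : μ ≤ 1 / 4 := by
    calc μ ≤ (1 / 2 : ℝ) ^ 2 := pow_le_pow_of_le_one (by norm_num) (by norm_num) hj2
      _ = 1 / 4 := by norm_num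
  have h3 := Ss_jump hμ0.le hμ4 a hst h1
  have hδ : 0 ≤ ‖a t - a s‖ := norm_nonneg _
  have e : ‖a t - a s‖ ^ r = ‖a t - a s‖ ^ (r - 2) * ‖a t - a s‖ ^ 2 := by
    rw [← Real.rpow_natCast, ← Real.rpow_add' hδ (by push_cast; linarith)]; congr 1; push_cast; ring
  have h4 : ‖a t - a s‖ ^ (r - 2) ≤ 8 ^ (r - 2) * (((1 / 2 : ℝ) ^ (r - 2)) ^ j * mx a L ^ (r - 2)) := by
    have e2 : ((1 / 2 : ℝ) ^ (r - 2)) ^ j = μ ^ (r - 2) := by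
      rw [hμ, ← Real.rpow_natCast, ← Real.rpow_natCast, ← Real.rpow_mul (by norm_num),
        ← Real.rpow_mul (by norm_num), mul_comm]
    rw [e2, ← mul_assoc, ← Real.mul_rpow (by norm_num) hμ0.le,
      ← Real.mul_rpow (by positivity) (mx_nonneg a L)]
    refine Real.rpow_le_rpow hδ (h2.trans ?_) (by linarith)
    gcongr
  have h5 : ‖a t - a s‖ ^ 2 ≤ 8 ^ 2 * 2 * ((bs μ a t).2 - (bs μ a s).2) := by
    have : ‖a t - a s‖ ^ 2 ≤ (8 * μ * mx a t) ^ 2 := by gcongr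
    nlinarith [sq_nonneg (μ * mx a t)]
  have h6 : 0 ≤ (bs μ a t).2 - (bs μ a s).2 := le_trans (sq_nonneg _) h3
  have e8 : (8 : ℝ) ^ r = 8 ^ (r - 2) * 8 ^ 2 := by
    rw [← Real.rpow_natCast, ← Real.rpow_add (by norm_num)]; congr 1; push_cast; ring
  have hL0 := Real.rpow_nonneg (mx_nonneg a L) (r - 2)
  rw [e, e8]
  calc _ ≤ (8 ^ (r - 2) * (((1 / 2 : ℝ) ^ (r - 2)) ^ j * mx a L ^ (r - 2))) *
        (8 ^ 2 * 2 * ((bs μ a t).2 - (bs μ a s).2)) := by gcongr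
    _ = _ := by ring

lemma sum_telescope_le {F : ℕ → ℝ} (hF : Monotone F) (h0 : ∀ k, 0 ≤ F k) {L J : ℕ} {u : ℕ → ℕ}
    (huL : u J ≤ L) :
    ∑ i ∈ range J, (F (u (i + 1)) - F (u i)) ≤ F L := by
  rw [sum_range_sub (fun i => F (u i))]
  linarith [hF huL, h0 (u 0)]

set_option maxHeartbeats 1000000 in
/-- Lépingle's inequality for the `r`-variation of a martingale. -/
theorem lepingle (p r : ℝ) (hp : 1 < p) (hr : 2 < r) : ∃ C : ℝ, 0 < C ∧
    ∀ {Ω : Type} [Fintype Ω] {L : ℕ} {τ : ℕ → Ω → Ω} {M : ℕ → Ω → ℂ}, Mart L τ M →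
    ∃ W : Ω → ℝ, (∀ ω, 0 ≤ W ω) ∧ (∀ ω, ∀ k ≤ L, ‖M k ω‖ ≤ W ω) ∧
      (∀ ω (J : ℕ) (u : ℕ → ℕ), (∀ i < J, u i ≤ u (i + 1)) → u J ≤ L →
        ∑ i ∈ range J, ‖M (u (i + 1)) ω - M (u i) ω‖ ^ r ≤ W ω ^ r) ∧
      ∑ ω, W ω ^ p ≤ C * ∑ ω, ‖M L ω‖ ^ p := by
  obtain ⟨C1, hC1, hsq⟩ := Mart.square p hp
  have hp0 : 0 < p := by linarith
  have hr0 : 0 < r := by linarith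
  set θ := p / r with hθd
  have hθ : 0 < θ := by positivity
  set γ : ℝ := ((1 / 2 : ℝ) ^ (r - 2)) ^ (1 / 2 : ℝ) with hγd
  have hγ0 : 0 < γ := by positivity
  have hβ : (1 / 2 : ℝ) ^ (r - 2) < 1 := Real.rpow_lt_one (by norm_num) (by norm_num) (by linarith)
  have hγ1 : γ < 1 := Real.rpow_lt_one (by positivity) hβ (by norm_num)
  have hγγ : γ * γ = (1 / 2 : ℝ) ^ (r - 2) := by
    rw [hγd, ← Real.rpow_add (by positivity)]; norm_num
  have hγθ : γ ^ θ < 1 := Real.rpow_lt_one hγ0.le hγ1 hθ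
  have hγθ0 : 0 < γ ^ θ := by positivity
  have hg1 : 0 < 1 - γ := by linarith
  have hg2 : 0 < 1 - γ ^ θ := by linarith
  set K : ℝ := 8 ^ r * 2 with hK
  have hK0 : 0 < K := by positivity
  set C2 : ℝ := 2 ^ θ * (1 + K ^ θ * ((1 / (1 - γ)) ^ θ * (1 / (1 - γ ^ θ) * (1 + C1)))) with hC2
  refine ⟨C2 * (p / (p - 1)) ^ p, ?_, ?_⟩
  · have : 0 < p / (p - 1) := div_pos hp0 (by linarith)
    positivity
  intro Ω _ L τ M hM
  -- a level large enough for all pairs of times and all paths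
  have hJ : ∃ J : ℕ, ∀ ω, ∀ s t : ℕ, s ≤ t → t ≤ L → M t ω ≠ M s ω →
      ∃ j < J, 2 ≤ j ∧ 2 * (1 / 2 : ℝ) ^ j * mx (pth M ω) t < ‖M t ω - M s ω‖ ∧
      ‖M t ω - M s ω‖ ≤ 8 * (1 / 2 : ℝ) ^ j * mx (pth M ω) t := by
    have : ∀ x : Ω × Fin (L + 1) × Fin (L + 1), ∃ j : ℕ,
        (x.2.1 : ℕ) ≤ x.2.2 → M x.2.2 x.1 ≠ M x.2.1 x.1 → 2 ≤ j ∧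
        2 * (1 / 2 : ℝ) ^ j * mx (pth M x.1) x.2.2 < ‖M x.2.2 x.1 - M x.2.1 x.1‖ ∧
        ‖M x.2.2 x.1 - M x.2.1 x.1‖ ≤ 8 * (1 / 2 : ℝ) ^ j * mx (pth M x.1) x.2.2 := by
      rintro ⟨ω, s, t⟩
      by_cases h : (s : ℕ) ≤ t ∧ M t ω ≠ M s ω
      · obtain ⟨j, h1, h2, h3, -⟩ := level_exists (pth M ω) h.1 h.2
        exact ⟨j, fun _ _ => ⟨h1, h2, h3⟩⟩
      · exact ⟨0, fun h1 h2 => absurd ⟨h1, h2⟩ h⟩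
    choose j hj using this
    refine ⟨univ.sup j + 1, fun ω s t hst ht hne => ?_⟩
    have hx := hj (ω, ⟨s, by omega⟩, ⟨t, by omega⟩) hst hne
    exact ⟨_, Nat.lt_succ_of_le (le_sup (f := j) (mem_univ _)), hx⟩
  obtain ⟨J0, hJ0⟩ := hJ
  set S : ℕ → Ω → ℝ := fun j ω => (bs ((1 / 2) ^ j) (pth M ω) L).2 with hS
  have hS0 : ∀ j ω, 0 ≤ S j ω := fun j ω => Ss_nonneg _ _ _
  set mm : Ω → ℝ := fun ω => mx (pth M ω) L with hmm
  have hm0 : ∀ ω, 0 ≤ mm ω := fun ω => mx_nonneg _ _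
  set X : ℕ → Ω → ℝ := fun j ω => mm ω ^ (r - 2) * S j ω with hX
  have hX0 : ∀ j ω, 0 ≤ X j ω := fun j ω => mul_nonneg (Real.rpow_nonneg (hm0 ω) _) (hS0 j ω)
  set Y : Ω → ℝ := fun ω => ∑ j ∈ range J0, (γ * γ) ^ j * X j ω with hY
  have hY0 : ∀ ω, 0 ≤ Y ω := fun ω => sum_nonneg fun j _ => mul_nonneg (by positivity) (hX0 j ω)
  have hW0 : ∀ ω, 0 ≤ mm ω ^ r + K * Y ω := fun ω =>
    add_nonneg (Real.rpow_nonneg (hm0 ω) _) (mul_nonneg hK0.le (hY0 ω))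
  have hWr : ∀ ω, ((mm ω ^ r + K * Y ω) ^ (1 / r)) ^ r = mm ω ^ r + K * Y ω := by
    intro ω
    rw [← Real.rpow_mul (hW0 ω), one_div, inv_mul_cancel₀ hr0.ne', Real.rpow_one]
  refine ⟨fun ω => (mm ω ^ r + K * Y ω) ^ (1 / r), fun ω => Real.rpow_nonneg (hW0 ω) _, ?_, ?_, ?_⟩
  · intro ω k hk
    have h1 : ‖M k ω‖ ≤ mm ω := norm_le_mx (pth M ω) hk
    refine h1.trans ?_
    calc mm ω = (mm ω ^ r) ^ (1 / r) := by
          rw [← Real.rpow_mul (hm0 ω), one_div, mul_inv_cancel₀ hr0.ne', Real.rpow_one]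
      _ ≤ _ := by
          refine Real.rpow_le_rpow (Real.rpow_nonneg (hm0 ω) _) ?_ (by positivity)
          linarith [mul_nonneg hK0.le (hY0 ω)]
  · intro ω J u hu huL
    simp only
    rw [hWr ω]
    have hule : ∀ i ≤ J, u i ≤ L := by
      intro i hi
      refine le_trans ?_ huL
      induction J, hi using Nat.le_induction with
      | base => exact le_rfl
      | succ n hn ih =>
        exact (ih (fun i hi => hu i (by omega)) ((hu n (by omega)).trans huL)).trans
          (hu n (by omega))
    have h1 : ∑ i ∈ range J, ‖M (u (i + 1)) ω - M (u i) ω‖ ^ r ≤ ∑ i ∈ range J, K *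
        ∑ j ∈ range J0, (γ * γ) ^ j * (mm ω ^ (r - 2) *
          ((bs ((1 / 2) ^ j) (pth M ω) (u (i + 1))).2 - (bs ((1 / 2) ^ j) (pth M ω) (u i)).2)) := by
      refine sum_le_sum fun i hi => ?_
      rw [mem_range] at hi
      rw [hγγ]
      exact incr_bound hr (pth M ω) (hu i hi) (hule (i + 1) (by omega))
        (hJ0 ω _ _ (hu i hi) (hule (i + 1) (by omega)))
    have h2 : ∑ i ∈ range J, K *
        ∑ j ∈ range J0, (γ * γ) ^ j * (mm ω ^ (r - 2) *
          ((bs ((1 / 2) ^ j) (pth M ω) (u (i + 1))).2 - (bs ((1 / 2) ^ j) (pth M ω) (u i)).2)) ≤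
        K * Y ω := by
      rw [← mul_sum, sum_comm]
      refine mul_le_mul_of_nonneg_left (sum_le_sum fun j _ => ?_) hK0.le
      rw [← mul_sum, ← mul_sum]
      refine mul_le_mul_of_nonneg_left (mul_le_mul_of_nonneg_left ?_
        (Real.rpow_nonneg (hm0 ω) _)) (by positivity)
      exact sum_telescope_le (Ss_mono _ _) (Ss_nonneg _ _) huL
    linarith [Real.rpow_nonneg (hm0 ω) r]
  · have hd := hM.doob hp
    have hmain : ∑ ω, ((mm ω ^ r + K * Y ω) ^ (1 / r)) ^ p ≤ C2 * ∑ ω, mm ω ^ p := by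
      have hpt : ∀ ω, ((mm ω ^ r + K * Y ω) ^ (1 / r)) ^ p ≤ 2 ^ θ * (mm ω ^ p + K ^ θ *
          ((1 / (1 - γ)) ^ θ * ∑ j ∈ range J0, (γ ^ θ) ^ j * (mm ω ^ p + S j ω ^ (p / 2)))) := by
        intro ω
        rw [← Real.rpow_mul (hW0 ω), show 1 / r * p = θ by rw [hθd]; ring]
        refine (add_rpow_le_two hθ (Real.rpow_nonneg (hm0 ω) _)
          (mul_nonneg hK0.le (hY0 ω))).trans ?_
        rw [← Real.rpow_mul (hm0 ω), show r * θ = p by rw [hθd]; field_simp,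
          Real.mul_rpow hK0.le (hY0 ω)]
        have := geom_sum_rpow hθ hγ0 hγ1 J0 (fun j => X j ω) (fun j => hX0 j ω)
        have h3 : Y ω ^ θ ≤ (1 / (1 - γ)) ^ θ *
            ∑ j ∈ range J0, (γ ^ θ) ^ j * (mm ω ^ p + S j ω ^ (p / 2)) := by
          refine this.trans ?_
          refine mul_le_mul_of_nonneg_left (sum_le_sum fun j _ =>
            mul_le_mul_of_nonneg_left ?_ (by positivity)) (by positivity)
          simp only [hX]
          have h4 := Real.geom_mean_le_arith_mean2_weighted (w₁ := 1 - 2 / r) (w₂ := 2 / r)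
            (p₁ := mm ω ^ p) (p₂ := S j ω ^ (p / 2))
            (by rw [sub_nonneg, div_le_one hr0]; exact hr.le) (by positivity)
            (Real.rpow_nonneg (hm0 ω) _) (Real.rpow_nonneg (hS0 j ω) _) (by ring)
          rw [← Real.rpow_mul (hm0 ω), ← Real.rpow_mul (hS0 j ω)] at h4
          rw [Real.mul_rpow (Real.rpow_nonneg (hm0 ω) _) (hS0 j ω), ← Real.rpow_mul (hm0 ω)]
          have e1 : (r - 2) * θ = p * (1 - 2 / r) := by rw [hθd]; field_simp
          have e2 : θ = p / 2 * (2 / r) := by rw [hθd]; field_simp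
          rw [e1, e2]
          refine h4.trans ?_
          have h5 : 2 / r ≤ 1 := by rw [div_le_one hr0]; exact hr.le
          have h6 : 0 ≤ 2 / r := by positivity
          have h7 := Real.rpow_nonneg (hm0 ω) p
          have h8 := Real.rpow_nonneg (hS0 j ω) (p / 2)
          nlinarith
        gcongr
      refine (sum_le_sum fun ω _ => hpt ω).trans ?_
      have e : ∑ ω, 2 ^ θ * (mm ω ^ p + K ^ θ *
          ((1 / (1 - γ)) ^ θ * ∑ j ∈ range J0, (γ ^ θ) ^ j * (mm ω ^ p + S j ω ^ (p / 2)))) =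
          2 ^ θ * (∑ ω, mm ω ^ p + K ^ θ * ((1 / (1 - γ)) ^ θ *
            ∑ j ∈ range J0, (γ ^ θ) ^ j * (∑ ω, mm ω ^ p + ∑ ω, S j ω ^ (p / 2)))) := by
        rw [← mul_sum, sum_add_distrib, ← mul_sum, ← mul_sum, sum_comm]
        simp_rw [← mul_sum, sum_add_distrib]
      rw [e]
      have hmnn : 0 ≤ ∑ ω, mm ω ^ p := sum_nonneg fun ω _ => Real.rpow_nonneg (hm0 ω) _
      have h9 : ∑ j ∈ range J0, (γ ^ θ) ^ j * (∑ ω, mm ω ^ p + ∑ ω, S j ω ^ (p / 2)) ≤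
          1 / (1 - γ ^ θ) * (1 + C1) * ∑ ω, mm ω ^ p := by
        calc _ ≤ ∑ j ∈ range J0, (γ ^ θ) ^ j * ((1 + C1) * ∑ ω, mm ω ^ p) := by
              refine sum_le_sum fun j _ => mul_le_mul_of_nonneg_left ?_ (by positivity)
              have := hsq hM ((1 / 2) ^ j) (by positivity)
                (pow_le_one₀ (by norm_num) (by norm_num))
              linarith
          _ = (∑ j ∈ range J0, (γ ^ θ) ^ j) * ((1 + C1) * ∑ ω, mm ω ^ p) := by rw [sum_mul]
          _ ≤ 1 / (1 - γ ^ θ) * ((1 + C1) * ∑ ω, mm ω ^ p) := by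
              refine mul_le_mul_of_nonneg_right ?_ (by positivity)
              rw [geom_sum_eq hγθ.ne, ← neg_div_neg_eq, neg_sub, neg_sub]
              have : 0 ≤ (γ ^ θ) ^ J0 := by positivity
              gcongr
              linarith
          _ = _ := by ring
      calc _ ≤ 2 ^ θ * (∑ ω, mm ω ^ p + K ^ θ * ((1 / (1 - γ)) ^ θ *
            (1 / (1 - γ ^ θ) * (1 + C1) * ∑ ω, mm ω ^ p))) := by gcongr
        _ = _ := by rw [hC2]; ring
    refine hmain.trans ?_
    rw [mul_assoc C2]
    exact mul_le_mul_of_nonneg_left hd (by positivity)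

end FV

/-! ### Rota's dilation of convolution products -/

namespace FV

/-- Finitely supported complex functions on `G` with convolution as product. -/
abbrev RR (G : Type) := AddMonoidAlgebra ℂ G

/-- The point mass at `v`; multiplication by it is translation by `v`. -/
def XX {G : Type} (v : G) : RR G := AddMonoidAlgebra.single v 1

section
variable {G : Type} [AddCommGroup G]

lemma XX_add (u v : G) : XX (u + v) = XX u * XX v := by
  simp [XX, AddMonoidAlgebra.single_mul_single]

lemma XX_zero : XX (0 : G) = 1 := rfl

lemma XX_mul_coeff (v : G) (f : RR G) (x : G) : (XX v * f).coeff x = f.coeff (x - v) := by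
  have := AddMonoidAlgebra.coeff_single_mul_add f (1 : ℂ) v (x - v)
  rw [add_sub_cancel, one_mul] at this
  exact this

lemma XX_sum {ι : Type*} (s : Finset ι) (v : ι → G) : XX (∑ i ∈ s, v i) = ∏ i ∈ s, XX (v i) := by
  classical
  induction s using Finset.induction_on with
  | empty => simp [XX_zero]
  | insert a s ha ih => rw [sum_insert ha, prod_insert ha, XX_add, ih]

/-- The symmetric step `¼(X^v + 2 + X^{-v})`. -/
def kap (v : G) : RR G := (1 / 4 : ℂ) • (XX v + 2 + XX (-v))

/-- The factor of the martingale coming from the `l`-th coin: it is the actual translation once the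
coin is known and the average of the two possible ones before. -/
def mfac (v : ℕ → G) (k l : ℕ) (b : Bool) : RR G :=
  if l < k then (if b then XX (v l) else 1) else (1 / 2 : ℂ) • (1 + XX (v l))

/-- The martingale attached to the random translation by `∑ ω_l v_l`. -/
def mrv (v : ℕ → G) (L k : ℕ) (ω : Fin L → Bool) : RR G := ∏ l : Fin L, mfac v k l (ω l)

/-- Revealing one coin at a time gives a martingale; flipping the `k`-th coin is the reflection `τ k`. -/
lemma mrv_mart (v : ℕ → G) (L : ℕ) (f : RR G) (y : G) :
    Mart L (fun k ω => if h : k < L then Function.update ω ⟨k, h⟩ (!ω ⟨k, h⟩) else ω)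
      (fun k ω => (mrv v L k ω * f).coeff y) := by
  constructor
  · intro k hk ω
    simp [hk]
  · intro k hk i hi ω
    simp only [hk, dif_pos]
    congr 3
    refine prod_congr rfl fun l _ => ?_
    by_cases h : l = ⟨k, hk⟩
    · subst h
      simp [mfac, not_lt.2 hi]
    · rw [Function.update_of_ne h]
  · intro k hk ω
    simp only [hk, dif_pos]
    have key : mrv v L (k + 1) ω + mrv v L (k + 1) (Function.update ω ⟨k, hk⟩ (!ω ⟨k, hk⟩)) =
        2 * mrv v L k ω := by
      unfold mrv
      rw [← mul_prod_erase univ _ (mem_univ ⟨k, hk⟩), ← mul_prod_erase univ _ (mem_univ ⟨k, hk⟩),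
        ← mul_prod_erase univ (fun l : Fin L => mfac v k l (ω l)) (mem_univ ⟨k, hk⟩)]
      have e1 : ∏ l ∈ (univ : Finset (Fin L)).erase ⟨k, hk⟩,
          mfac v (k + 1) l (Function.update ω ⟨k, hk⟩ (!ω ⟨k, hk⟩) l) =
          ∏ l ∈ (univ : Finset (Fin L)).erase ⟨k, hk⟩, mfac v (k + 1) l (ω l) := by
        refine prod_congr rfl fun l hl => ?_
        rw [Function.update_of_ne (ne_of_mem_erase hl)]
      have e2 : ∏ l ∈ (univ : Finset (Fin L)).erase ⟨k, hk⟩, mfac v k l (ω l) =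
          ∏ l ∈ (univ : Finset (Fin L)).erase ⟨k, hk⟩, mfac v (k + 1) l (ω l) := by
        refine prod_congr rfl fun l hl => ?_
        have hne : (l : ℕ) ≠ k := fun h => ne_of_mem_erase hl (Fin.ext h)
        unfold mfac
        have : ((l : ℕ) < k) ↔ (l : ℕ) < k + 1 := by omega
        simp only [this]
      rw [e1, e2, ← add_mul, ← mul_assoc]
      congr 1
      simp only [mfac, lt_irrefl, if_false, Nat.lt_succ_self, if_true, Function.update_self]
      have e3 : (2 : RR G) * ((1 / 2 : ℂ) • (1 + XX (v k))) = 1 + XX (v k) := by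
        rw [mul_smul_comm, ← smul_mul_assoc]
        have : ((1 / 2 : ℂ) • (2 : RR G)) = 1 := by
          rw [show (2 : RR G) = (2 : ℂ) • 1 by rw [← Algebra.algebraMap_eq_smul_one, map_ofNat],
            smul_smul]; norm_num
        rw [this, one_mul]
      rw [e3]
      cases ω ⟨k, hk⟩ <;> simp [add_comm]
    have := congrArg (fun g : RR G => (g * f).coeff y) key
    simp only [add_mul, AddMonoidAlgebra.coeff_add, Finsupp.add_apply] at this
    rw [this, mul_assoc, two_mul, two_mul]
    simp

/-- Averaging the martingale, translated back, gives the symmetric convolution powers. -/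
lemma mrv_avg (v : ℕ → G) (L k : ℕ) :
    ∑ ω : Fin L → Bool, (∏ l : Fin L, (if ω l then XX (-v l) else 1)) * mrv v L k ω =
      (2 : ℂ) ^ L • ∏ l : Fin L, (if (l : ℕ) < k then 1 else kap (v l)) := by
  have h := (Finset.prod_univ_sum (fun _ : Fin L => (univ : Finset Bool))
    (fun l b => (if b then XX (-v l) else 1) * mfac v k l b)).symm
  rw [Fintype.piFinset_univ] at h
  simp only [prod_mul_distrib] at h
  unfold mrv
  rw [h]
  have : ∀ l : Fin L, ∑ b : Bool, (if b then XX (-v l) else 1) * mfac v k l b =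
      (2 : ℂ) • (if (l : ℕ) < k then 1 else kap (v l)) := by
    intro l
    rw [Fintype.sum_bool]
    unfold mfac
    have hX : XX (-v l) * XX (v l) = 1 := by rw [← XX_add, neg_add_cancel, XX_zero]
    by_cases hl : (l : ℕ) < k
    · simp only [hl, if_true, hX]
      simp only [Bool.false_eq_true, if_false, mul_one]
      rw [two_smul]
    · simp only [hl, if_false, if_true, Bool.false_eq_true, kap]
      rw [smul_smul, mul_smul_comm, mul_add, mul_one, hX, one_mul, ← smul_add]
      have e : (2 * (1 / 4) : ℂ) = 1 / 2 := by norm_num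
      rw [e]
      congr 1
      rw [← one_add_one_eq_two (R := RR G)]
      abel
  rw [prod_congr rfl fun l _ => this l, prod_smul]
  simp

end

/-- Minkowski's inequality in `ℓ^r` for a finite sum of sequences. -/
lemma minkowski_sum {ι κ : Type*} (s : Finset ι) (t : Finset κ) {r : ℝ} (hr : 1 ≤ r)
    (x : ι → κ → ℝ) (hx : ∀ i w, 0 ≤ x i w) :
    (∑ i ∈ s, (∑ w ∈ t, x i w) ^ r) ^ (1 / r) ≤ ∑ w ∈ t, (∑ i ∈ s, x i w ^ r) ^ (1 / r) := by
  classical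
  induction t using Finset.induction_on with
  | empty =>
    have : r ≠ 0 := by linarith
    simp [Real.zero_rpow this, Real.zero_rpow (inv_ne_zero this)]
  | insert a t ha ih =>
    simp only [sum_insert ha]
    refine (Real.Lp_add_le_of_nonneg s hr (fun i _ => hx i a)
      (fun i _ => sum_nonneg fun w _ => hx i w)).trans ?_
    linarith

set_option maxHeartbeats 1000000 in
/-- Rota's dilation argument: convolution powers of the symmetric steps satisfy the variational
inequality. -/
theorem rota (p r : ℝ) (hp : 1 < p) (hr : 2 < r) : ∃ C : ℝ, 0 < C ∧
    ∀ {G : Type} [AddCommGroup G] (v : ℕ → G) (L : ℕ) (f : RR G),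
    ∃ W : G → ℝ, (∀ x, 0 ≤ W x) ∧
      (∀ x, ∀ k ≤ L, ‖((∏ l : Fin L, (if (l : ℕ) < k then 1 else kap (v l))) * f).coeff x‖ ≤ W x) ∧
      (∀ x (J : ℕ) (u : ℕ → ℕ), (∀ i < J, u i ≤ u (i + 1)) → u J ≤ L →
        ∑ i ∈ range J, ‖((∏ l : Fin L, (if (l : ℕ) < u (i + 1) then 1 else kap (v l))) * f).coeff x -
          ((∏ l : Fin L, (if (l : ℕ) < u i then 1 else kap (v l))) * f).coeff x‖ ^ r ≤ W x ^ r) ∧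
      ∑' x, ENNReal.ofReal (W x ^ p) ≤ ENNReal.ofReal C * ∑' x, ENNReal.ofReal (‖f.coeff x‖ ^ p) := by
  obtain ⟨C, hC, hlep⟩ := lepingle p r hp hr
  refine ⟨C, hC, fun {G} _ v L f => ?_⟩
  have hp0 : 0 < p := by linarith
  have hr0 : 0 < r := by linarith
  have hmart := fun y => hlep (mrv_mart v L f y)
  choose W hW0 hW1 hW2 hW3 using hmart
  set S : (Fin L → Bool) → G := fun ω => ∑ l : Fin L, if ω l then v l else 0 with hS
  have hE : ∀ ω : Fin L → Bool, (∏ l : Fin L, (if ω l then XX (-v l) else 1)) = XX (-S ω) := by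
    intro ω
    rw [hS, ← sum_neg_distrib, XX_sum]
    refine prod_congr rfl fun l _ => ?_
    split_ifs <;> simp [XX_zero]
  have hpow : (0 : ℝ) < 2 ^ L := by positivity
  -- the symmetric powers are averages of the martingale along translates
  have havg : ∀ k x, ((∏ l : Fin L, (if (l : ℕ) < k then 1 else kap (v l))) * f).coeff x =
      (1 / 2 ^ L : ℂ) * ∑ ω : Fin L → Bool, (mrv v L k ω * f).coeff (x + S ω) := by
    intro k x
    have h := congrArg (fun g : RR G => (g * f).coeff x) (mrv_avg v L k)
    simp only [sum_mul, AddMonoidAlgebra.coeff_sum, Finsupp.finsetSum_apply, smul_mul_assoc,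
      AddMonoidAlgebra.coeff_smul, Finsupp.smul_apply] at h
    have h2 : ∀ ω : Fin L → Bool, ((∏ l : Fin L, (if ω l then XX (-v l) else 1)) *
        mrv v L k ω * f).coeff x = (mrv v L k ω * f).coeff (x + S ω) := by
      intro ω
      rw [hE, mul_assoc, XX_mul_coeff, sub_neg_eq_add]
    rw [sum_congr rfl fun ω _ => h2 ω] at h
    rw [h, smul_eq_mul, ← mul_assoc]
    field_simp
  set V : G → ℝ := fun x => 1 / 2 ^ L * ∑ ω, W (x + S ω) ω with hV
  have hV0 : ∀ x, 0 ≤ V x := fun x => mul_nonneg (by positivity) (sum_nonneg fun ω _ => hW0 _ _)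
  have hn : ‖(1 / 2 ^ L : ℂ)‖ = 1 / 2 ^ L := by simp
  refine ⟨V, hV0, ?_, ?_, ?_⟩
  · intro x k hk
    rw [havg, norm_mul, hn]
    refine mul_le_mul_of_nonneg_left ((norm_sum_le _ _).trans (sum_le_sum fun ω _ => ?_))
      (by positivity)
    exact hW1 _ _ k hk
  · intro x J u hu huL
    have h1 : ∑ i ∈ range J, ‖((∏ l : Fin L, (if (l : ℕ) < u (i + 1) then 1 else kap (v l))) *
        f).coeff x - ((∏ l : Fin L, (if (l : ℕ) < u i then 1 else kap (v l))) * f).coeff x‖ ^ r ≤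
        ∑ i ∈ range J, (∑ ω : Fin L → Bool, 1 / 2 ^ L *
          ‖(mrv v L (u (i + 1)) ω * f).coeff (x + S ω) - (mrv v L (u i) ω * f).coeff (x + S ω)‖)
            ^ r := by
      refine sum_le_sum fun i _ => ?_
      refine Real.rpow_le_rpow (norm_nonneg _) ?_ hr0.le
      rw [havg, havg, ← mul_sub, norm_mul, hn, ← sum_sub_distrib, ← mul_sum]
      exact mul_le_mul_of_nonneg_left (norm_sum_le _ _) (by positivity)
    have h2 := minkowski_sum (range J) (univ : Finset (Fin L → Bool)) (r := r) (by linarith)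
      (fun i ω => 1 / 2 ^ L *
          ‖(mrv v L (u (i + 1)) ω * f).coeff (x + S ω) - (mrv v L (u i) ω * f).coeff (x + S ω)‖)
      (fun i ω => by positivity)
    have h3 : ∑ ω : Fin L → Bool, (∑ i ∈ range J, (1 / 2 ^ L *
          ‖(mrv v L (u (i + 1)) ω * f).coeff (x + S ω) - (mrv v L (u i) ω * f).coeff (x + S ω)‖)
            ^ r) ^ (1 / r) ≤ V x := by
      rw [hV]
      simp only
      rw [mul_sum]
      refine sum_le_sum fun ω _ => ?_
      have e : ∀ z : ℝ, 0 ≤ z → (z ^ r) ^ (1 / r) = z := fun z hz => by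
        rw [← Real.rpow_mul hz, mul_one_div_cancel hr0.ne', Real.rpow_one]
      have hz : 0 ≤ 1 / 2 ^ L * W (x + S ω) ω := mul_nonneg (by positivity) (hW0 _ _)
      rw [← e _ hz]
      refine Real.rpow_le_rpow (sum_nonneg fun i _ => by positivity) ?_ (by positivity)
      rw [Real.mul_rpow (by positivity) (hW0 _ _)]
      refine le_trans (le_of_eq ?_) (mul_le_mul_of_nonneg_left (hW2 (x + S ω) ω J u hu huL)
        (by positivity))
      rw [mul_sum]
      refine sum_congr rfl fun i _ => ?_
      rw [Real.mul_rpow (by positivity) (norm_nonneg _)]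
    refine h1.trans ?_
    have h4 := Real.rpow_le_rpow (Real.rpow_nonneg (sum_nonneg fun i _ => by positivity) _)
      (h2.trans h3) hr0.le
    rw [← Real.rpow_mul (sum_nonneg fun i _ => by positivity), one_div_mul_cancel hr0.ne',
      Real.rpow_one] at h4
    exact h4
  · have h1 : ∀ x, ENNReal.ofReal (V x ^ p) ≤
        ∑ ω : Fin L → Bool, ENNReal.ofReal (1 / 2 ^ L * W (x + S ω) ω ^ p) := by
      intro x
      rw [← ENNReal.ofReal_sum_of_nonneg fun ω _ => mul_nonneg (by positivity)
        (Real.rpow_nonneg (hW0 _ _) _)]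
      refine ENNReal.ofReal_le_ofReal ?_
      have := Real.rpow_arith_mean_le_arith_mean_rpow (univ : Finset (Fin L → Bool))
        (fun _ => 1 / 2 ^ L) (fun ω => W (x + S ω) ω) (fun _ _ => by positivity)
        (by simp) (fun ω _ => hW0 _ _) hp.le
      rw [← mul_sum] at this
      exact this
    calc ∑' x, ENNReal.ofReal (V x ^ p)
        ≤ ∑' x, ∑ ω : Fin L → Bool, ENNReal.ofReal (1 / 2 ^ L * W (x + S ω) ω ^ p) :=
          ENNReal.tsum_le_tsum h1
      _ = ∑ ω : Fin L → Bool, ∑' x, ENNReal.ofReal (1 / 2 ^ L * W (x + S ω) ω ^ p) :=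
          Summable.tsum_finsetSum fun ω _ => ENNReal.summable
      _ = ∑ ω : Fin L → Bool, ∑' x, ENNReal.ofReal (1 / 2 ^ L * W x ω ^ p) := by
          refine sum_congr rfl fun ω _ => ?_
          exact (Equiv.addRight (S ω)).tsum_eq fun x => ENNReal.ofReal (1 / 2 ^ L * W x ω ^ p)
      _ = ∑' x, ∑ ω : Fin L → Bool, ENNReal.ofReal (1 / 2 ^ L * W x ω ^ p) :=
          (Summable.tsum_finsetSum fun ω _ => ENNReal.summable).symm
      _ ≤ ∑' x, ∑ ω : Fin L → Bool, ENNReal.ofReal C *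
            ENNReal.ofReal (1 / 2 ^ L * ‖f.coeff (x - S ω)‖ ^ p) := by
          refine ENNReal.tsum_le_tsum fun x => ?_
          rw [← mul_sum, ← ENNReal.ofReal_sum_of_nonneg fun ω _ => mul_nonneg (by positivity)
            (Real.rpow_nonneg (hW0 _ _) _), ← ENNReal.ofReal_sum_of_nonneg fun ω _ => by positivity,
            ← ENNReal.ofReal_mul hC.le]
          refine ENNReal.ofReal_le_ofReal ?_
          rw [← mul_sum, ← mul_sum, mul_left_comm]
          refine mul_le_mul_of_nonneg_left ((hW3 x).trans (le_of_eq ?_)) (by positivity)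
          congr 1
          refine sum_congr rfl fun ω _ => ?_
          have : mrv v L L ω = XX (S ω) := by
            rw [hS, XX_sum]
            refine prod_congr rfl fun l _ => ?_
            simp only [mfac, l.2, if_true]
            split_ifs <;> simp [XX_zero]
          rw [this, XX_mul_coeff]
      _ = ∑ ω : Fin L → Bool, ∑' x, ENNReal.ofReal C *
            ENNReal.ofReal (1 / 2 ^ L * ‖f.coeff (x - S ω)‖ ^ p) :=
          Summable.tsum_finsetSum fun ω _ => ENNReal.summable
      _ = ∑ ω : Fin L → Bool, ENNReal.ofReal (1 / 2 ^ L) * (ENNReal.ofReal C *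
            ∑' x, ENNReal.ofReal (‖f.coeff x‖ ^ p)) := by
          refine sum_congr rfl fun ω _ => ?_
          rw [ENNReal.tsum_mul_left, mul_left_comm]
          congr 1
          rw [← ENNReal.tsum_mul_left,
            ← (Equiv.subRight (S ω)).tsum_eq fun x => ENNReal.ofReal (1 / 2 ^ L) *
              ENNReal.ofReal (‖f.coeff x‖ ^ p)]
          refine tsum_congr fun x => ?_
          rw [ENNReal.ofReal_mul (by positivity)]
          rfl
      _ = _ := by
          rw [sum_const, nsmul_eq_mul, ← mul_assoc]
          have : ((univ : Finset (Fin L → Bool)).card : ℝ≥0∞) * ENNReal.ofReal (1 / 2 ^ L) = 1 := by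
            have : ((univ : Finset (Fin L → Bool)).card : ℝ≥0∞) = ENNReal.ofReal (2 ^ L) := by
              simp [ENNReal.ofReal_pow]
            rw [this, ← ENNReal.ofReal_mul (by positivity), mul_one_div_cancel (by positivity)]
            simp
          rw [this, one_mul]

end FV

/-! ### The smoothing operators and their variation -/

namespace FV

/-- The time-reversed form of `rota`: partial products of symmetric steps. -/
theorem rota_prod (p r : ℝ) (hp : 1 < p) (hr : 2 < r) : ∃ C : ℝ, 0 < C ∧
    ∀ {G : Type} [AddCommGroup G] (v : ℕ → G) (L : ℕ) (f : RR G),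
    ∃ W : G → ℝ, (∀ x, 0 ≤ W x) ∧
      (∀ x, ∀ k ≤ L, ‖((∏ l ∈ range k, kap (v l)) * f).coeff x‖ ≤ W x) ∧
      (∀ x (J : ℕ) (u : ℕ → ℕ), (∀ i < J, u i ≤ u (i + 1)) → u J ≤ L →
        ∑ i ∈ range J, ‖((∏ l ∈ range (u (i + 1)), kap (v l)) * f).coeff x -
          ((∏ l ∈ range (u i), kap (v l)) * f).coeff x‖ ^ r ≤ W x ^ r) ∧
      ∑' x, ENNReal.ofReal (W x ^ p) ≤ ENNReal.ofReal C * ∑' x, ENNReal.ofReal (‖f.coeff x‖ ^ p) := by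
  obtain ⟨C, hC, h⟩ := rota p r hp hr
  refine ⟨C, hC, fun {G} _ v L f => ?_⟩
  obtain ⟨W, h0, h1, h2, h3⟩ := h (fun l => v (L - 1 - l)) L f
  have hprod : ∀ k ≤ L, ∏ l : Fin L, (if (l : ℕ) < L - k then 1 else kap (v (L - 1 - l))) =
      ∏ l ∈ range k, kap (v l) := by
    intro k hk
    rw [Fin.prod_univ_eq_prod_range (fun l => if l < L - k then 1 else kap (v (L - 1 - l))) L,
      ← Finset.prod_range_reflect]
    rw [← prod_subset (range_subset_range.2 hk)]
    · refine prod_congr rfl fun l hl => ?_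
      rw [mem_range] at hl
      rw [if_neg (by omega)]
      congr 2; omega
    · intro l hl hl'
      rw [mem_range] at hl hl'
      rw [if_pos (by omega)]
  refine ⟨W, h0, fun x k hk => ?_, fun x J u hu huL => ?_, h3⟩
  · have := h1 x (L - k) (by omega)
    rwa [hprod k hk] at this
  · have hule : ∀ i ≤ J, u i ≤ L := by
      intro i hi
      refine le_trans ?_ huL
      clear huL
      induction J, hi using Nat.le_induction with
      | base => exact le_rfl
      | succ n hn ih => exact (ih fun i hi => hu i (by omega)).trans (hu n (by omega))
    have := h2 x J (fun i => L - u (J - i)) (fun i hi => by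
      have := hu (J - i - 1) (by omega)
      rw [show J - i - 1 + 1 = J - i by omega] at this
      rw [show J - (i + 1) = J - i - 1 by omega]
      omega) (by simp)
    refine le_trans (le_of_eq ?_) this
    rw [← Finset.sum_range_reflect]
    refine sum_congr rfl fun i hi => ?_
    rw [mem_range] at hi
    rw [hprod _ (hule _ (by omega)), hprod _ (hule _ (by omega)), norm_sub_rev]
    rw [show J - 1 - i + 1 = J - i by omega, show J - (i + 1) = J - 1 - i by omega]

variable {m : ℕ}

/-- The coordinate steps. -/
def kapi (i : Fin m) : RR (Fin m → ℤ) := kap (Pi.single i 1)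

/-- Number of steps in direction `i` at scale `s`. -/
def nst (c : Fin m → ℝ) (s : ℝ) (i : Fin m) : ℕ := ⌊s ^ (2 * c i)⌋₊

/-- The smoothing kernel at scale `s`. -/
def PP (c : Fin m → ℝ) (s : ℝ) : RR (Fin m → ℤ) := ∏ i, kapi i ^ nst c s i

lemma nst_mono {c : Fin m → ℝ} (hpos : ∀ i, 0 < c i) {s t : ℝ} (hs : 0 ≤ s) (h : s ≤ t) (i : Fin m) :
    nst c s i ≤ nst c t i :=
  Nat.floor_le_floor (Real.rpow_le_rpow hs h (by have := hpos i; linarith))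

/-- List of steps leading to scale `N`. -/
def wl (c : Fin m → ℝ) : ℕ → List (Fin m → ℤ)
  | 0 => []
  | N + 1 => wl c N ++ (List.finRange m).flatMap fun i =>
      List.replicate (nst c (N + 1 : ℕ) i - nst c N i) (Pi.single i 1)

lemma wl_extend (c : Fin m → ℝ) {N M : ℕ} (h : N ≤ M) : wl c N <+: wl c M := by
  induction M, h using Nat.le_induction with
  | base => exact List.prefix_refl _
  | succ M h ih => exact ih.trans (by rw [wl]; exact List.prefix_append _ _)

/-- The list `wl c N` enumerates the factors of `PP c N`; the lists for increasing `N` extend each other. -/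
lemma wl_prod {c : Fin m → ℝ} (hpos : ∀ i, 0 < c i) (N : ℕ) :
    ((wl c N).map kap).prod = PP c N := by
  induction N with
  | zero =>
    have : ∀ i, nst c 0 i = 0 := by
      intro i
      have := hpos i
      simp [nst, Real.zero_rpow (show 2 * c i ≠ 0 by positivity)]
    simp [wl, PP, this]
  | succ N ih =>
    rw [wl, List.map_append, List.prod_append, ih, List.map_flatMap, List.flatMap, List.prod_flatten,
      List.map_map]
    have : ((List.map (List.prod ∘ fun a => List.map kap (List.replicate
        (nst c ((N + 1 : ℕ) : ℝ) a - nst c N a) (Pi.single a 1)))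
        (List.finRange m)).prod : RR (Fin m → ℤ)) =
        ∏ i : Fin m, kapi i ^ (nst c ((N + 1 : ℕ) : ℝ) i - nst c N i) := by
      rw [← Fin.prod_ofFn, List.ofFn_eq_map]
      congr 1
      refine List.map_congr_left fun i _ => ?_
      simp [kapi]
    rw [this, PP, PP, ← prod_mul_distrib]
    refine prod_congr rfl fun i _ => ?_
    rw [← pow_add]
    congr 1
    have := nst_mono hpos (s := (N : ℝ)) (t := ((N + 1 : ℕ) : ℝ)) (by positivity)
      (by push_cast; linarith) i
    omega

lemma prod_getD_append (w t : List (Fin m → ℤ)) :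
    ∏ l ∈ range w.length, kap ((w ++ t).getD l 0) = (w.map kap).prod := by
  induction w with
  | nil => simp
  | cons a w ih =>
    rw [List.length_cons, prod_range_succ', List.map_cons, List.prod_cons, ← ih, mul_comm]
    simp

/-- The variational inequality for the smoothing kernels. -/
theorem varPP (c : Fin m → ℝ) (hpos : ∀ i, 0 < c i) (p r : ℝ) (hp : 1 < p) (hr : 2 < r) :
    ∃ C : ℝ, 0 < C ∧ ∀ (T : ℕ) (f : RR (Fin m → ℤ)),
    ∃ W : (Fin m → ℤ) → ℝ, (∀ x, 0 ≤ W x) ∧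
      (∀ x, ∀ N : ℕ, N ≤ T → ‖(PP c N * f).coeff x‖ ≤ W x) ∧
      (∀ x (J : ℕ) (u : ℕ → ℕ), (∀ i < J, u i ≤ u (i + 1)) → u J ≤ T →
        ∑ i ∈ range J, ‖(PP c (u (i + 1) : ℕ) * f).coeff x - (PP c (u i : ℕ) * f).coeff x‖ ^ r
          ≤ W x ^ r) ∧
      ∑' x, ENNReal.ofReal (W x ^ p) ≤ ENNReal.ofReal C * ∑' x, ENNReal.ofReal (‖f.coeff x‖ ^ p) := by
  obtain ⟨C, hC, h⟩ := rota_prod p r hp hr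
  refine ⟨C, hC, fun T f => ?_⟩
  obtain ⟨W, h0, h1, h2, h3⟩ := h (fun l => (wl c T).getD l 0) (wl c T).length f
  have hprod : ∀ N ≤ T, ∏ l ∈ range (wl c N).length, kap ((wl c T).getD l 0) = PP c N := by
    intro N hN
    rw [← wl_prod hpos N]
    obtain ⟨t, ht⟩ := wl_extend c hN
    rw [← ht]
    exact prod_getD_append _ _
  have hlen : ∀ {N M : ℕ}, N ≤ M → (wl c N).length ≤ (wl c M).length := fun hNM =>
    (wl_extend c hNM).length_le
  refine ⟨W, h0, fun x N hN => ?_, fun x J u hu huL => ?_, h3⟩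
  · have := h1 x _ (hlen hN)
    rwa [hprod N hN] at this
  · have hule : ∀ i ≤ J, u i ≤ T := by
      intro i hi
      refine le_trans ?_ huL
      clear huL
      induction J, hi using Nat.le_induction with
      | base => exact le_rfl
      | succ n hn ih => exact (ih fun i hi => hu i (by omega)).trans (hu n (by omega))
    have := h2 x J (fun i => (wl c (u i)).length) (fun i hi => hlen (hu i hi)) (hlen huL)
    refine le_trans (le_of_eq ?_) this
    refine sum_congr rfl fun i hi => ?_
    rw [mem_range] at hi
    rw [hprod _ (hule _ (by omega)), hprod _ (hule _ (by omega))]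

end FV

/-! ### Weighted `ℓ¹` norms -/

namespace FV

section
set_option linter.unusedSectionVars false
variable {G : Type} [AddCommGroup G]

lemma sub_coeff (f g : RR G) (x : G) : (f - g).coeff x = f.coeff x - g.coeff x := rfl

lemma add_coeff (f g : RR G) (x : G) : (f + g).coeff x = f.coeff x + g.coeff x := rfl

lemma smul_coeff (a : ℂ) (f : RR G) (x : G) : (a • f).coeff x = a * f.coeff x := rfl

lemma sum_coeff {ι : Type*} (s : Finset ι) (f : ι → RR G) (x : G) :
    (∑ i ∈ s, f i).coeff x = ∑ i ∈ s, (f i).coeff x := by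
  rw [AddMonoidAlgebra.coeff_sum, Finsupp.finsetSum_apply]

lemma eq_sum_XX (f : RR G) (s : Finset G) (hs : f.coeff.support ⊆ s) :
    f = ∑ y ∈ s, f.coeff y • XX y := by
  classical
  ext x
  rw [sum_coeff]
  simp only [smul_coeff, XX, AddMonoidAlgebra.coeff_single, Finsupp.single_apply]
  simp only [mul_ite, mul_one, mul_zero, sum_ite_eq']
  split_ifs with h
  · rfl
  · by_contra h'
    exact h (hs (Finsupp.mem_support_iff.2 h'))

lemma mul_coeff_eq (K f : RR G) (s : Finset G) (hs : f.coeff.support ⊆ s) (x : G) :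
    (K * f).coeff x = ∑ y ∈ s, f.coeff y * K.coeff (x - y) := by
  conv_lhs => rw [eq_sum_XX f s hs, mul_sum, sum_coeff]
  refine sum_congr rfl fun y _ => ?_
  rw [mul_smul_comm, smul_coeff, mul_comm K, XX_mul_coeff]

/-- Weighted `ℓ¹` norm. -/
def nw (w : G → ℝ) (f : RR G) : ℝ := ∑ x ∈ f.coeff.support, w x * ‖f.coeff x‖

lemma nw_eq (w : G → ℝ) (f : RR G) (s : Finset G) (hs : f.coeff.support ⊆ s) :
    nw w f = ∑ x ∈ s, w x * ‖f.coeff x‖ :=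
  sum_subset hs fun x _ hx => by rw [Finsupp.notMem_support_iff.1 hx]; simp

lemma nw_nonneg {w : G → ℝ} (hw : ∀ x, 0 ≤ w x) (f : RR G) : 0 ≤ nw w f :=
  sum_nonneg fun x _ => mul_nonneg (hw x) (norm_nonneg _)

lemma sum_le_nw {w : G → ℝ} (hw : ∀ x, 0 ≤ w x) (f : RR G) (s : Finset G) :
    ∑ x ∈ s, w x * ‖f.coeff x‖ ≤ nw w f := by
  classical
  rw [nw_eq w f (f.coeff.support ∪ s) subset_union_left]
  exact sum_le_sum_of_subset_of_nonneg subset_union_right fun x _ _ =>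
    mul_nonneg (hw x) (norm_nonneg _)

lemma nw_sum_XX {w : G → ℝ} (hw : ∀ x, 0 ≤ w x) {ι : Type*} (s : Finset ι) (z : ι → ℂ) (v : ι → G) :
    nw w (∑ a ∈ s, z a • XX (v a)) ≤ ∑ a ∈ s, ‖z a‖ * w (v a) := by
  classical
  set f := ∑ a ∈ s, z a • XX (v a) with hf
  set S := f.coeff.support ∪ s.image v
  rw [nw_eq w f S subset_union_left]
  have h1 : ∀ x, w x * ‖f.coeff x‖ ≤ ∑ a ∈ s, if x = v a then ‖z a‖ * w (v a) else 0 := by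
    intro x
    rw [hf, sum_coeff]
    calc w x * ‖∑ i ∈ s, (z i • XX (v i)).coeff x‖ ≤ w x * ∑ i ∈ s, ‖(z i • XX (v i)).coeff x‖ := by
          have := hw x
          gcongr
          exact norm_sum_le _ _
      _ = _ := by
          rw [mul_sum]
          refine sum_congr rfl fun a _ => ?_
          rw [smul_coeff]
          simp only [XX, AddMonoidAlgebra.coeff_single, Finsupp.single_apply]
          by_cases h : v a = x
          · rw [if_pos h, if_pos h.symm, h]; simp [mul_comm]
          · rw [if_neg h, if_neg (Ne.symm h)]; simp
  refine (sum_le_sum fun x _ => h1 x).trans (le_of_eq ?_)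
  rw [sum_comm]
  refine sum_congr rfl fun a ha => ?_
  rw [sum_ite_eq' S (v a) fun _ => _]
  exact if_pos (mem_union_right _ (mem_image_of_mem _ ha))

lemma nw_mul {w : G → ℝ} (hw : ∀ x, 0 ≤ w x) (f g : RR G) :
    nw w (f * g) ≤ ∑ x ∈ f.coeff.support, ∑ y ∈ g.coeff.support,
      ‖f.coeff x‖ * ‖g.coeff y‖ * w (x + y) := by
  have : f * g = ∑ a ∈ f.coeff.support ×ˢ g.coeff.support,
      (f.coeff a.1 * g.coeff a.2) • XX (a.1 + a.2) := by
    conv_lhs => rw [eq_sum_XX f _ subset_rfl, eq_sum_XX g _ subset_rfl]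
    rw [sum_mul_sum, sum_product]
    refine sum_congr rfl fun x _ => sum_congr rfl fun y _ => ?_
    rw [smul_mul_smul_comm, XX_add]
  rw [this]
  refine (nw_sum_XX hw _ _ _).trans (le_of_eq ?_)
  rw [sum_product]
  simp only [norm_mul]

lemma nw_add {w : G → ℝ} (hw : ∀ x, 0 ≤ w x) (f g : RR G) : nw w (f + g) ≤ nw w f + nw w g := by
  classical
  set S := (f + g).coeff.support ∪ (f.coeff.support ∪ g.coeff.support)
  rw [nw_eq w _ S subset_union_left,
    nw_eq w f S (subset_union_left.trans subset_union_right),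
    nw_eq w g S (subset_union_right.trans subset_union_right), ← sum_add_distrib]
  refine sum_le_sum fun x _ => ?_
  rw [← mul_add, add_coeff]
  exact mul_le_mul_of_nonneg_left (norm_add_le _ _) (hw x)

lemma nw_smul (w : G → ℝ) (a : ℂ) (f : RR G) : nw w (a • f) = ‖a‖ * nw w f := by
  rw [nw_eq w (a • f) f.coeff.support Finsupp.support_smul, nw, mul_sum]
  refine sum_congr rfl fun x _ => ?_
  rw [smul_coeff, norm_mul]; ring

lemma nw_neg (w : G → ℝ) (f : RR G) : nw w (-f) = nw w f := by
  rw [← neg_one_smul ℂ f, nw_smul]; simp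

lemma nw_sub {w : G → ℝ} (hw : ∀ x, 0 ≤ w x) (f g : RR G) : nw w (f - g) ≤ nw w f + nw w g := by
  rw [sub_eq_add_neg, ← nw_neg w g]; exact nw_add hw _ _

/-- The `ℓ¹` norm. -/
def n1 (f : RR G) : ℝ := nw (fun _ => 1) f

lemma n1_nonneg (f : RR G) : 0 ≤ n1 f := nw_nonneg (fun _ => zero_le_one) f

lemma n1_eq (f : RR G) : n1 f = ∑ x ∈ f.coeff.support, ‖f.coeff x‖ := by simp [n1, nw]

lemma sum_le_n1 (f : RR G) (s : Finset G) : ∑ x ∈ s, ‖f.coeff x‖ ≤ n1 f := by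
  rw [n1]; simpa using sum_le_nw (w := fun _ => (1 : ℝ)) (fun _ => zero_le_one) f s

lemma n1_mul (f g : RR G) : n1 (f * g) ≤ n1 f * n1 g := by
  refine (nw_mul (fun _ => zero_le_one) f g).trans (le_of_eq ?_)
  rw [n1_eq, n1_eq, sum_mul_sum]
  simp

lemma n1_add (f g : RR G) : n1 (f + g) ≤ n1 f + n1 g := nw_add (fun _ => zero_le_one) f g

lemma n1_sub (f g : RR G) : n1 (f - g) ≤ n1 f + n1 g := nw_sub (fun _ => zero_le_one) f g

lemma n1_XX (v : G) : n1 (XX v) ≤ 1 := by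
  have := nw_sum_XX (w := fun _ : G => (1 : ℝ)) (fun _ => zero_le_one) {()} (fun _ => 1) (fun _ => v)
  rw [n1]; simpa using this

lemma n1_one : n1 (1 : RR G) ≤ 1 := by rw [← XX_zero]; exact n1_XX _

lemma n1_prod {ι : Type*} (s : Finset ι) (f : ι → RR G) (h : ∀ i ∈ s, n1 (f i) ≤ 1) :
    n1 (∏ i ∈ s, f i) ≤ 1 := by
  classical
  induction s using Finset.induction_on with
  | empty => simpa using n1_one
  | insert a s ha ih =>
    rw [prod_insert ha]
    refine (n1_mul _ _).trans ?_
    have h1 := h a (mem_insert_self _ _)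
    have h2 := ih fun i hi => h i (mem_insert_of_mem hi)
    have := n1_nonneg (f a); have := n1_nonneg (∏ i ∈ s, f i)
    nlinarith

lemma n1_pow (f : RR G) (h : n1 f ≤ 1) (n : ℕ) : n1 (f ^ n) ≤ 1 := by
  rw [← card_range n, ← prod_const]
  exact n1_prod _ _ fun _ _ => h

end

variable {m : ℕ}

/-- First absolute moment in the `i`-th coordinate. -/
def mom (i : Fin m) (f : RR (Fin m → ℤ)) : ℝ := nw (fun x => |(x i : ℝ)|) f

lemma mom_nonneg (i : Fin m) (f : RR (Fin m → ℤ)) : 0 ≤ mom i f := nw_nonneg (fun _ => abs_nonneg _) f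

lemma mom_sub (i : Fin m) (f g : RR (Fin m → ℤ)) : mom i (f - g) ≤ mom i f + mom i g :=
  nw_sub (fun _ => abs_nonneg _) f g

lemma mom_mul (i : Fin m) (f g : RR (Fin m → ℤ)) :
    mom i (f * g) ≤ mom i f * n1 g + n1 f * mom i g := by
  refine (nw_mul (fun _ => abs_nonneg _) f g).trans ?_
  rw [n1_eq, n1_eq, mom, mom, nw, nw, sum_mul_sum, sum_mul_sum, ← sum_add_distrib]
  refine sum_le_sum fun x _ => ?_
  rw [← sum_add_distrib]
  refine sum_le_sum fun y _ => ?_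
  have : |(((x + y) i : ℤ) : ℝ)| ≤ |(x i : ℝ)| + |(y i : ℝ)| := by
    rw [Pi.add_apply]; push_cast; exact abs_add_le _ _
  calc _ ≤ ‖f.coeff x‖ * ‖g.coeff y‖ * (|(x i : ℝ)| + |(y i : ℝ)|) := by gcongr
    _ = _ := by ring

lemma mom_one (i : Fin m) : mom i (1 : RR (Fin m → ℤ)) = 0 := by
  refine le_antisymm ?_ (mom_nonneg _ _)
  have := nw_sum_XX (w := fun x : Fin m → ℤ => |(x i : ℝ)|) (fun _ => abs_nonneg _) {()}
    (fun _ => 1) (fun _ => 0)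
  rw [mom]; simpa [XX_zero] using this

/-- The first moment is subadditive over products of factors of `ℓ¹` norm at most one. -/
lemma mom_prod (i : Fin m) {ι : Type*} (s : Finset ι) (f : ι → RR (Fin m → ℤ))
    (h : ∀ a ∈ s, n1 (f a) ≤ 1) : mom i (∏ a ∈ s, f a) ≤ ∑ a ∈ s, mom i (f a) := by
  classical
  induction s using Finset.induction_on with
  | empty => simp [mom_one]
  | insert a s ha ih =>
    rw [prod_insert ha, sum_insert ha]
    refine (mom_mul _ _ _).trans ?_
    have h1 := h a (mem_insert_self _ _)
    have h2 := n1_prod s f fun i hi => h i (mem_insert_of_mem hi)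
    have h3 := ih fun i hi => h i (mem_insert_of_mem hi)
    have := n1_nonneg (f a); have := n1_nonneg (∏ i ∈ s, f i)
    have := mom_nonneg i (f a); have := mom_nonneg i (∏ i ∈ s, f i)
    nlinarith

end FV

/-! ### Smoothness and moments of binomial kernels -/

namespace FV

/-- Binomial probabilities. -/
def pb (n k : ℕ) : ℝ := (n.choose k : ℝ) / 2 ^ n

lemma pb_nonneg (n k : ℕ) : 0 ≤ pb n k := by unfold pb; positivity

lemma pb_sum (n : ℕ) : ∑ k ∈ range (n + 1), pb n k = 1 := by
  simp only [pb, ← sum_div]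
  rw [← Nat.cast_sum, Nat.sum_range_choose]
  push_cast
  exact div_self (by positivity)

lemma pb_var (n : ℕ) : ∑ k ∈ range (n + 1), pb n k * (2 * k - n : ℝ) ^ 2 = n := by
  have h := congrArg (Polynomial.eval (1 / 2 : ℝ)) (bernsteinPolynomial.variance ℝ n)
  simp only [Polynomial.eval_finsetSum, Polynomial.eval_mul, Polynomial.eval_pow, Polynomial.eval_sub,
    Polynomial.eval_X, bernsteinPolynomial, Polynomial.eval_natCast, Polynomial.eval_one,
    nsmul_eq_mul] at h
  have h2 : ∀ k ∈ range (n + 1), pb n k * (2 * k - n : ℝ) ^ 2 =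
      4 * (((n : ℝ) * (1 / 2) - k) ^ 2 * ((n.choose k : ℝ) * (1 / 2) ^ k * (1 - 1 / 2) ^ (n - k))) := by
    intro k hk
    rw [mem_range] at hk
    have : (1 / 2 : ℝ) ^ k * (1 - 1 / 2) ^ (n - k) = 1 / 2 ^ n := by
      rw [show (1 - 1 / 2 : ℝ) = 1 / 2 by norm_num, ← pow_add, show k + (n - k) = n by omega, one_div_pow]
    rw [mul_assoc (n.choose k : ℝ), this, pb]
    ring
  rw [sum_congr rfl h2, ← mul_sum, h]
  ring

lemma pb_abs (n : ℕ) : ∑ k ∈ range (n + 1), pb n k * |(2 * k - n : ℝ)| ≤ √n := by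
  refine Real.le_sqrt_of_sq_le ?_
  have := sum_mul_sq_le_sq_mul_sq (range (n + 1)) (fun k => √(pb n k))
    (fun k => √(pb n k) * |(2 * k - n : ℝ)|)
  have e1 : ∀ k, √(pb n k) * (√(pb n k) * |(2 * k - n : ℝ)|) = pb n k * |(2 * k - n : ℝ)| := fun k => by
    rw [← mul_assoc, Real.mul_self_sqrt (pb_nonneg n k)]
  have e2 : ∀ k, √(pb n k) ^ 2 = pb n k := fun k => Real.sq_sqrt (pb_nonneg n k)
  simp only [mul_pow, e1, e2, sq_abs, pb_sum, pb_var, one_mul] at this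
  exact this

section
variable {G : Type} [AddCommGroup G]

/-- Half step. -/
def hb (v : G) : RR G := (1 / 2 : ℂ) • (1 + XX v)

lemma XX_pow (v : G) (k : ℕ) : XX v ^ k = XX (k • v) := by
  induction k with
  | zero => simp [XX_zero]
  | succ k ih => rw [pow_succ, ih, succ_nsmul, XX_add]

lemma kap_eq (v : G) : kap v = XX (-v) * hb v ^ 2 := by
  have h : XX (-v) * XX v = (1 : RR G) := by rw [← XX_add, neg_add_cancel, XX_zero]
  have e : (hb v : RR G) ^ 2 = (1 / 4 : ℂ) • (1 + XX v) ^ 2 := by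
    rw [hb, smul_pow]; norm_num
  rw [e, kap, mul_smul_comm]
  congr 1
  linear_combination (-2 - XX v) * h

lemma hb_pow (v : G) (n : ℕ) : hb v ^ n = ∑ k ∈ range (n + 1), (pb n k : ℂ) • XX (k • v) := by
  rw [hb, smul_pow, add_comm, add_pow, smul_sum]
  refine sum_congr rfl fun k _ => ?_
  rw [one_pow, mul_one, XX_pow, pb, mul_comm, ← nsmul_eq_mul, ← Nat.cast_smul_eq_nsmul ℂ, smul_smul]
  congr 1
  push_cast
  rw [one_div_pow]; ring

lemma n1_hb (v : G) : n1 (hb v) ≤ 1 := by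
  rw [hb, n1, nw_smul]
  have := n1_add 1 (XX v); have := n1_XX v; have := n1_one (G := G)
  rw [n1] at this
  unfold n1 at *
  norm_num
  linarith

lemma n1_kap (v : G) : n1 (kap v) ≤ 1 := by
  rw [kap_eq]
  refine (n1_mul _ _).trans ?_
  have := n1_XX (-v); have := n1_pow _ (n1_hb v) 2
  have := n1_nonneg (XX (-v)); have := n1_nonneg (hb v ^ 2)
  nlinarith

/-- The difference coefficients of the binomial distribution. -/
lemma pb_diff (n k : ℕ) : pb n (k + 1) - pb n k =
    2 * pb (n + 1) (k + 1) * ((n + 1 - 2 * (k + 1) : ℝ) / (n + 1)) := by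
  have h1 : ((n + 1).choose (k + 1) : ℝ) * (k + 1) = (n + 1) * n.choose k := by
    have := Nat.add_one_mul_choose_eq n k
    exact_mod_cast this.symm
  have h2 : ((n + 1).choose (k + 1) : ℝ) = n.choose k + n.choose (k + 1) := by
    exact_mod_cast Nat.choose_succ_succ n k
  have hn : (n : ℝ) + 1 ≠ 0 := by positivity
  have hk : (k : ℝ) + 1 ≠ 0 := by positivity
  unfold pb
  have h3 : ((n.choose (k + 1) : ℝ) - n.choose k) * (n + 1) =
      (n + 1).choose (k + 1) * (n + 1 - 2 * (k + 1)) := by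
    linear_combination (-(n + 1) : ℝ) * h2 + 2 * h1
  rw [pow_succ]
  field_simp
  linear_combination h3

/-- By `pb_diff` the coefficients are `2 (n + 1 - 2 k) / (n + 1) * pb (n+1) k`, so the norm is a first absolute moment of a
binomial distribution. -/
lemma n1_diff_hb (v : G) (n : ℕ) : n1 ((1 - XX v) * hb v ^ n) ≤ 2 / √(n + 1) := by
  have e : (1 - XX v) * hb v ^ n = ∑ k ∈ range (n + 2),
      ((2 * pb (n + 1) k * ((n + 1 - 2 * k : ℝ) / (n + 1)) : ℝ) : ℂ) • XX (k • v) := by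
    rw [hb_pow, sub_mul, one_mul, mul_sum]
    have h1 : ∑ k ∈ range (n + 1), XX v * (pb n k : ℂ) • XX (k • v) =
        ∑ k ∈ range (n + 1), (pb n k : ℂ) • XX ((k + 1) • v) := by
      refine sum_congr rfl fun k _ => ?_
      rw [mul_smul_comm, ← XX_add, succ_nsmul']
    have h2 : ∑ k ∈ range (n + 1), (pb n k : ℂ) • XX (k • v) =
        ∑ k ∈ range (n + 2), (pb n k : ℂ) • XX (k • v) := by
      rw [sum_range_succ _ (n + 1)]
      simp [pb]
    rw [h1, h2, sum_range_succ', sum_range_succ' _ (n + 1), add_sub_right_comm, ← sum_sub_distrib]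
    congr 1
    · refine sum_congr rfl fun k _ => ?_
      rw [← sub_smul]
      congr 1
      have := pb_diff n k
      rw [← Complex.ofReal_sub, this]
      push_cast; rfl
    · congr 2
      have hn : (n : ℝ) + 1 ≠ 0 := by positivity
      simp only [pb, pow_succ]
      field_simp
      simp
  rw [e, n1]
  refine (nw_sum_XX (fun _ => zero_le_one) _ _ _).trans ?_
  have h3 : ∀ k : ℕ, ‖((2 * pb (n + 1) k * ((n + 1 - 2 * k : ℝ) / (n + 1)) : ℝ) : ℂ)‖ * 1 =
      2 / (n + 1) * (pb (n + 1) k * |(2 * k - (n + 1 : ℕ) : ℝ)|) := by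
    intro k
    rw [Complex.norm_real, Real.norm_eq_abs, abs_mul, abs_mul, abs_div, abs_of_nonneg (pb_nonneg _ _),
      abs_of_pos (show (0 : ℝ) < n + 1 by positivity), abs_sub_comm, abs_two]
    push_cast
    ring
  rw [sum_congr rfl fun k _ => h3 k, ← mul_sum]
  have h4 := pb_abs (n + 1)
  calc _ ≤ 2 / ((n : ℝ) + 1) * √((n + 1 : ℕ) : ℝ) := by gcongr
    _ = 2 / √(n + 1) := by
      push_cast
      have h5 : (0 : ℝ) < √(n + 1) := Real.sqrt_pos.2 (by positivity)
      have h6 : √((n : ℝ) + 1) * √(n + 1) = n + 1 := Real.mul_self_sqrt (by positivity)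
      field_simp
      linarith

lemma n1_diff_kap (v : G) (n : ℕ) : n1 ((XX v - 1) * kap v ^ n) ≤ 2 / √(n + 1) := by
  have e : (XX v - 1) * kap v ^ n = XX (n • -v) * (-1 : ℂ) • ((1 - XX v) * hb v ^ (2 * n)) := by
    rw [kap_eq, mul_pow, XX_pow, ← pow_mul, neg_one_smul]; ring
  rw [e]
  refine (n1_mul _ _).trans ?_
  have h1 := n1_XX (n • -v)
  have h2 := n1_diff_hb v (2 * n)
  have h3 : n1 ((-1 : ℂ) • ((1 - XX v) * hb v ^ (2 * n))) = n1 ((1 - XX v) * hb v ^ (2 * n)) := by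
    rw [n1, nw_smul, n1]; simp
  rw [h3]
  have h4 : 2 / √((2 * n : ℕ) + 1) ≤ 2 / √((n : ℝ) + 1) := by
    push_cast
    have : (0 : ℝ) < √(n + 1) := Real.sqrt_pos.2 (by positivity)
    gcongr
    have : (0 : ℝ) ≤ n := by positivity
    linarith
  have := n1_nonneg ((1 - XX v) * hb v ^ (2 * n))
  have := n1_nonneg (XX (n • -v))
  nlinarith

lemma n1_shift_zsmul (v : G) (P : RR G) (k : ℤ) :
    n1 ((XX (k • v) - 1) * P) ≤ |(k : ℝ)| * n1 ((XX v - 1) * P) := by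
  have hadd : ∀ a b : G, n1 ((XX (a + b) - 1) * P) ≤ n1 ((XX a - 1) * P) + n1 ((XX b - 1) * P) := by
    intro a b
    have e : (XX (a + b) - 1) * P = XX a * ((XX b - 1) * P) + (XX a - 1) * P := by
      rw [XX_add]; ring
    rw [e]
    refine (n1_add _ _).trans ?_
    have h1 := n1_mul (XX a) ((XX b - 1) * P)
    have h2 := n1_XX a
    have := n1_nonneg ((XX b - 1) * P)
    nlinarith
  have hneg : ∀ a : G, n1 ((XX (-a) - 1) * P) ≤ n1 ((XX a - 1) * P) := by
    intro a
    have e : (XX (-a) - 1) * P = XX (-a) * (-1 : ℂ) • ((XX a - 1) * P) := by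
      have h : XX (-a) * XX a = (1 : RR G) := by rw [← XX_add, neg_add_cancel, XX_zero]
      rw [neg_one_smul]
      linear_combination P * h
    rw [e]
    refine (n1_mul _ _).trans ?_
    have h2 := n1_XX (-a)
    have h3 : n1 ((-1 : ℂ) • ((XX a - 1) * P)) = n1 ((XX a - 1) * P) := by
      rw [n1, nw_smul, n1]; simp
    have := n1_nonneg ((XX a - 1) * P)
    rw [h3]
    nlinarith
  have hnat : ∀ k : ℕ, n1 ((XX (k • v) - 1) * P) ≤ k * n1 ((XX v - 1) * P) := by
    intro k
    induction k with
    | zero => simp [XX_zero, n1, nw]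
    | succ k ih =>
      rw [succ_nsmul]
      refine (hadd _ _).trans ?_
      push_cast
      linarith
  obtain ⟨n, rfl | rfl⟩ := Int.eq_nat_or_neg k
  · simpa using hnat n
  · rw [neg_smul]
    refine (hneg _).trans ?_
    simpa using hnat n

end

variable {m : ℕ}

lemma n1_PP (c : Fin m → ℝ) (s : ℝ) : n1 (PP c s) ≤ 1 :=
  n1_prod _ _ fun i _ => n1_pow _ (n1_kap _) _

lemma rpow_lt_nst (c : Fin m → ℝ) {s : ℝ} (hs : 0 < s) (i : Fin m) :
    s ^ c i ≤ √(nst c s i + 1) := by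
  refine Real.le_sqrt_of_sq_le ?_
  rw [← Real.rpow_natCast, ← Real.rpow_mul hs.le, mul_comm]
  exact (Nat.lt_floor_add_one _).le

lemma sqrt_nst_le (c : Fin m → ℝ) {s : ℝ} (hs : 0 < s) (i : Fin m) :
    √(nst c s i) ≤ s ^ c i := by
  refine Real.sqrt_le_iff.2 ⟨by positivity, ?_⟩
  rw [← Real.rpow_natCast, ← Real.rpow_mul hs.le, mul_comm]
  exact Nat.floor_le (by positivity)

lemma n1_diff_PP (c : Fin m → ℝ) {s : ℝ} (hs : 0 < s) (i : Fin m) :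
    n1 ((XX (Pi.single i 1) - 1) * PP c s) ≤ 2 * s ^ (-c i) := by
  rw [PP, ← mul_prod_erase univ _ (mem_univ i), ← mul_assoc]
  refine (n1_mul _ _).trans ?_
  have h1 : n1 (∏ j ∈ univ.erase i, kapi j ^ nst c s j) ≤ 1 :=
    n1_prod _ _ fun i _ => n1_pow _ (n1_kap _) _
  have h2 := n1_diff_kap (Pi.single i 1 : Fin m → ℤ) (nst c s i)
  have h3 := rpow_lt_nst c hs i
  have h4 : 2 / √((nst c s i : ℝ) + 1) ≤ 2 * s ^ (-c i) := by
    rw [Real.rpow_neg hs.le, ← div_eq_mul_inv]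
    gcongr
  have := n1_nonneg (∏ j ∈ univ.erase i, kapi j ^ nst c s j)
  have := n1_nonneg ((XX (Pi.single i 1) - 1) * kapi i ^ nst c s i)
  unfold kapi at *
  nlinarith

/-- `ℓ¹` smoothness of the kernels. -/
lemma n1_shift_PP (c : Fin m → ℝ) {s : ℝ} (hs : 0 < s) (d : Fin m → ℤ) :
    n1 ((XX d - 1) * PP c s) ≤ ∑ i, 2 * |(d i : ℝ)| * s ^ (-c i) := by
  have key : ∀ S : Finset (Fin m), n1 ((XX (∑ i ∈ S, d i • Pi.single i (1 : ℤ)) - 1) * PP c s) ≤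
      ∑ i ∈ S, 2 * |(d i : ℝ)| * s ^ (-c i) := by
    intro S
    induction S using Finset.induction_on with
    | empty => simp [XX_zero, n1, nw]
    | insert a S ha ih =>
      rw [sum_insert ha, sum_insert ha, XX_add]
      have e : (XX (d a • Pi.single a (1 : ℤ)) * XX (∑ i ∈ S, d i • Pi.single i (1 : ℤ)) - 1) * PP c s =
        XX (d a • Pi.single a (1 : ℤ)) * ((XX (∑ i ∈ S, d i • Pi.single i (1 : ℤ)) - 1) * PP c s) +
        (XX (d a • Pi.single a (1 : ℤ)) - 1) * PP c s := by ring
      rw [e]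
      refine (n1_add _ _).trans ?_
      rw [add_comm]
      refine add_le_add ?_ (((n1_mul _ _).trans ?_).trans ih)
      · refine (n1_shift_zsmul _ _ _).trans ?_
        have := n1_diff_PP c hs a
        calc _ ≤ |(d a : ℝ)| * (2 * s ^ (-c a)) := by gcongr
          _ = _ := by ring
      · have := n1_XX (d a • Pi.single a (1 : ℤ) : Fin m → ℤ)
        exact mul_le_of_le_one_left (n1_nonneg _) this
  have := key univ
  have e : ∑ i, d i • Pi.single i (1 : ℤ) = d := by
    ext j
    simp [Finset.sum_apply, Pi.single_apply]
  rwa [e] at this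

lemma mom_kap_pow (i j : Fin m) (n : ℕ) : mom i (kapi j ^ n) ≤ if i = j then √n else 0 := by
  have e : (kapi j : RR (Fin m → ℤ)) ^ n = ∑ k ∈ range (2 * n + 1),
      (pb (2 * n) k : ℂ) • XX (((k : ℤ) - n) • Pi.single j 1) := by
    rw [kapi, kap_eq, mul_pow, ← pow_mul, hb_pow, XX_pow, mul_sum]
    refine sum_congr rfl fun k _ => ?_
    rw [mul_smul_comm, ← XX_add]
    congr 2
    rw [sub_smul, natCast_zsmul, natCast_zsmul, smul_neg]; abel
  rw [e]
  refine (nw_sum_XX (fun _ => abs_nonneg _) _ _ _).trans ?_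
  split_ifs with h
  · subst h
    have h1 : ∀ k ∈ range (2 * n + 1), ‖((pb (2 * n) k : ℝ) : ℂ)‖ *
        |(((((k : ℤ) - n) • Pi.single i (1 : ℤ) : Fin m → ℤ) i : ℤ) : ℝ)| =
        1 / 2 * (pb (2 * n) k * |(2 * k - (2 * n : ℕ) : ℝ)|) := by
      intro k _
      rw [Complex.norm_real, Real.norm_eq_abs, abs_of_nonneg (pb_nonneg _ _)]
      simp only [Pi.smul_apply, Pi.single_eq_same, smul_eq_mul, mul_one]
      push_cast
      rw [show (2 * k - 2 * n : ℝ) = 2 * (k - n) by ring, abs_mul, abs_two]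
      ring
    rw [sum_congr rfl h1, ← mul_sum]
    have h2 := pb_abs (2 * n)
    have h3 : √((2 * n : ℕ) : ℝ) ≤ 2 * √n := by
      refine Real.sqrt_le_iff.2 ⟨by positivity, ?_⟩
      rw [mul_pow, Real.sq_sqrt (by positivity)]
      push_cast
      have : (0 : ℝ) ≤ n := by positivity
      linarith
    linarith
  · refine le_of_eq (sum_eq_zero fun k _ => ?_)
    simp [Pi.single_apply, h]

lemma mom_PP (c : Fin m → ℝ) {s : ℝ} (hs : 0 < s) (i : Fin m) : mom i (PP c s) ≤ s ^ c i := by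
  refine (mom_prod i _ _ fun i _ => n1_pow _ (n1_kap _) _).trans ?_
  refine (sum_le_sum fun j _ => mom_kap_pow i j _).trans ?_
  rw [sum_ite_eq univ i fun j => √(nst c s j : ℝ)]
  simpa using sqrt_nst_le c hs i

end FV

/-! ### Fourier transform and Parseval -/

namespace FV

variable {m : ℕ}

/-- The character of `ℤ^m` of frequency `ξ`. -/
def chr (ξ : Fin m → ℝ) : Multiplicative (Fin m → ℤ) →* ℂ where
  toFun x := ee (∑ i, ξ i * ((Multiplicative.toAdd x i : ℤ) : ℝ))
  map_one' := by simp [ee_zero]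
  map_mul' x y := by
    rw [← ee_add, ← sum_add_distrib]
    congr 1
    refine sum_congr rfl fun i _ => ?_
    rw [toAdd_mul, Pi.add_apply]; push_cast; ring

/-- The Fourier transform at the frequency `ξ`, as an algebra homomorphism. -/
def FT (ξ : Fin m → ℝ) : RR (Fin m → ℤ) →ₐ[ℂ] ℂ := AddMonoidAlgebra.lift ℂ ℂ (Fin m → ℤ) (chr ξ)

lemma FT_XX (ξ : Fin m → ℝ) (v : Fin m → ℤ) : FT ξ (XX v) = ee (∑ i, ξ i * (v i : ℝ)) := by
  rw [FT, XX, AddMonoidAlgebra.lift_single, one_smul]; rfl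

lemma FT_eq (ξ : Fin m → ℝ) (f : RR (Fin m → ℤ)) (s : Finset (Fin m → ℤ)) (hs : f.coeff.support ⊆ s) :
    FT ξ f = ∑ x ∈ s, f.coeff x * ee (∑ i, ξ i * (x i : ℝ)) := by
  conv_lhs => rw [eq_sum_XX f s hs, map_sum]
  refine sum_congr rfl fun x _ => ?_
  rw [map_smul, FT_XX, smul_eq_mul]

lemma FT_kapi (ξ : Fin m → ℝ) (i : Fin m) :
    FT ξ (kapi i) = ((1 - Real.sin (Real.pi * ξ i) ^ 2 : ℝ) : ℂ) := by
  have h1 : ∀ k : ℤ, (∑ j, ξ j * (((Pi.single i k : Fin m → ℤ) j : ℤ) : ℝ)) = ξ i * k := by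
    intro k
    rw [sum_eq_single i]
    · simp
    · intro j _ hj; simp [Pi.single_apply, hj]
    · simp
  rw [kapi, kap, map_smul, map_add, map_add, FT_XX, FT_XX, ← Pi.single_neg, h1, h1]
  have h2 : FT ξ (2 : RR (Fin m → ℤ)) = 2 := map_ofNat _ _
  rw [h2]
  push_cast
  rw [show ξ i * 1 = ξ i by ring, show ξ i * -1 = -ξ i by ring, ee_neg]
  have h3 : ee (ξ i) + (starRingEnd ℂ) (ee (ξ i)) = ((2 * Real.cos (2 * Real.pi * ξ i) : ℝ) : ℂ) := by
    rw [Complex.add_conj, ee, mul_comm Complex.I, Complex.exp_ofReal_mul_I_re]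
  have h4 : Real.cos (2 * Real.pi * ξ i) = 1 - 2 * Real.sin (Real.pi * ξ i) ^ 2 := by
    rw [mul_assoc, Real.cos_two_mul, Real.cos_sq']; ring
  rw [h4] at h3
  push_cast at h3
  rw [smul_eq_mul]
  linear_combination (1 / 4 : ℂ) * h3

/-- The (real) Fourier transform of `PP`. -/
def PPh (c : Fin m → ℝ) (s : ℝ) (ξ : Fin m → ℝ) : ℝ :=
  ∏ i, (1 - Real.sin (Real.pi * ξ i) ^ 2) ^ nst c s i

lemma FT_PP (c : Fin m → ℝ) (s : ℝ) (ξ : Fin m → ℝ) : FT ξ (PP c s) = (PPh c s ξ : ℂ) := by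
  rw [PP, map_prod, PPh]
  push_cast
  refine prod_congr rfl fun i _ => ?_
  rw [map_pow, FT_kapi]; push_cast; rfl

lemma sinfac (x : ℝ) : 0 ≤ 1 - Real.sin x ^ 2 ∧ 1 - Real.sin x ^ 2 ≤ 1 :=
  ⟨by nlinarith [Real.sin_sq_add_cos_sq x, sq_nonneg (Real.cos x)], by nlinarith [sq_nonneg (Real.sin x)]⟩

lemma PPh_nonneg (c : Fin m → ℝ) (s : ℝ) (ξ : Fin m → ℝ) : 0 ≤ PPh c s ξ :=
  prod_nonneg fun _ _ => pow_nonneg (sinfac _).1 _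

lemma PPh_le_one (c : Fin m → ℝ) (s : ℝ) (ξ : Fin m → ℝ) : PPh c s ξ ≤ 1 :=
  prod_le_one (fun _ _ => pow_nonneg (sinfac _).1 _) fun _ _ => pow_le_one₀ (sinfac _).1 (sinfac _).2

/-- High frequency decay of the symbol of `PP`. -/
lemma PPh_decay (c : Fin m → ℝ) (hpos : ∀ i, 0 < c i) {s : ℝ} (hs : 0 < s) (ξ : Fin m → ℝ) (i : Fin m)
    (hξ : |ξ i| ≤ 1 / 2) : PPh c s ξ * (s ^ c i * |ξ i|) ≤ 1 := by
  have h1 : PPh c s ξ ≤ (1 - Real.sin (Real.pi * ξ i) ^ 2) ^ nst c s i := by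
    rw [PPh, ← mul_prod_erase univ _ (mem_univ i)]
    refine mul_le_of_le_one_right (pow_nonneg (sinfac _).1 _) ?_
    exact prod_le_one (fun _ _ => pow_nonneg (sinfac _).1 _) fun _ _ => pow_le_one₀ (sinfac _).1 (sinfac _).2
  set y := s ^ c i * |ξ i| with hy
  have hy0 : 0 ≤ y := by positivity
  by_cases hs1 : s < 1
  · have h2 : s ^ c i ≤ 1 := Real.rpow_le_one hs.le hs1.le (hpos i).le
    have h3 : y ≤ 1 := by
      rw [hy]; nlinarith [abs_nonneg (ξ i)]
    nlinarith [PPh_le_one c s ξ, PPh_nonneg c s ξ]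
  · push Not at hs1
    have hsin : 4 * ξ i ^ 2 ≤ Real.sin (Real.pi * ξ i) ^ 2 := by
      have := le_norm_ee_sub_one hξ
      rw [norm_ee_sub_one] at this
      have h5 : 2 * |ξ i| ≤ |Real.sin (Real.pi * ξ i)| := by linarith
      have h6 := pow_le_pow_left₀ (by positivity) h5 2
      rw [mul_pow, sq_abs, sq_abs] at h6
      linarith
    set n := nst c s i with hn
    have hn1 : s ^ (2 * c i) ≤ 2 * n := by
      have h7 : 1 ≤ n := by
        rw [hn, nst, Nat.one_le_floor_iff]
        exact Real.one_le_rpow hs1 (by have := hpos i; linarith)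
      have h8 := (Nat.lt_floor_add_one (s ^ (2 * c i))).le
      have h9 : (1 : ℝ) ≤ n := by exact_mod_cast h7
      have : ((⌊s ^ (2 * c i)⌋₊ : ℕ) : ℝ) = n := rfl
      linarith
    have hyy : y ^ 2 ≤ 2 * n * ξ i ^ 2 := by
      rw [hy, mul_pow, sq_abs, ← Real.rpow_natCast, ← Real.rpow_mul hs.le, mul_comm (c i)]
      exact mul_le_mul_of_nonneg_right (by exact_mod_cast hn1) (sq_nonneg _)
    set q := 1 - Real.sin (Real.pi * ξ i) ^ 2 with hq
    have hq0 : 0 ≤ q := (sinfac _).1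
    have hbern : q ^ n * (1 + n * (4 * ξ i ^ 2)) ≤ 1 := by
      have hb := one_add_mul_le_pow (a := 4 * ξ i ^ 2) (by nlinarith [sq_nonneg (ξ i)]) n
      have hq1 : q * (1 + 4 * ξ i ^ 2) ≤ 1 := by nlinarith [sq_nonneg (ξ i)]
      calc q ^ n * (1 + n * (4 * ξ i ^ 2)) ≤ q ^ n * (1 + 4 * ξ i ^ 2) ^ n := by gcongr
        _ = (q * (1 + 4 * ξ i ^ 2)) ^ n := by rw [mul_pow]
        _ ≤ 1 := pow_le_one₀ (by positivity) hq1
    calc PPh c s ξ * y ≤ q ^ n * y := by gcongr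
      _ ≤ q ^ n * (1 + n * (4 * ξ i ^ 2)) := by
          have := pow_nonneg hq0 n
          gcongr
          nlinarith [sq_nonneg (y - 1)]
      _ ≤ 1 := hbern

/-- Low frequency behaviour of the symbol of `PP`. -/
lemma PPh_near (c : Fin m → ℝ) {s : ℝ} (hs : 0 < s) (ξ : Fin m → ℝ) :
    1 - PPh c s ξ ≤ 10 * ∑ i, (s ^ c i * |ξ i|) ^ 2 := by
  have key : ∀ S : Finset (Fin m), 1 - ∏ i ∈ S, (1 - Real.sin (Real.pi * ξ i) ^ 2) ^ nst c s i ≤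
      10 * ∑ i ∈ S, (s ^ c i * |ξ i|) ^ 2 := by
    intro S
    induction S using Finset.induction_on with
    | empty => simp
    | insert a S ha ih =>
      rw [prod_insert ha, sum_insert ha]
      have h0 : 0 ≤ ∏ i ∈ S, (1 - Real.sin (Real.pi * ξ i) ^ 2) ^ nst c s i :=
        prod_nonneg fun _ _ => pow_nonneg (sinfac _).1 _
      have h1 : ∏ i ∈ S, (1 - Real.sin (Real.pi * ξ i) ^ 2) ^ nst c s i ≤ 1 :=
        prod_le_one (fun _ _ => pow_nonneg (sinfac _).1 _)
          fun _ _ => pow_le_one₀ (sinfac _).1 (sinfac _).2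
      have h2 : 1 - (1 - Real.sin (Real.pi * ξ a) ^ 2) ^ nst c s a ≤ 10 * (s ^ c a * |ξ a|) ^ 2 := by
        have hb := one_add_mul_le_pow (a := -Real.sin (Real.pi * ξ a) ^ 2)
          (by nlinarith [(sinfac (Real.pi * ξ a)).1]) (nst c s a)
        rw [← sub_eq_add_neg] at hb
        have hsin : Real.sin (Real.pi * ξ a) ^ 2 ≤ 10 * ξ a ^ 2 := by
          have h5 : |Real.sin (Real.pi * ξ a)| ≤ |Real.pi * ξ a| := Real.abs_sin_le_abs
          have h6 := pow_le_pow_left₀ (by positivity) h5 2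
          rw [sq_abs, sq_abs, mul_pow] at h6
          have := Real.pi_lt_d2; have := Real.pi_pos
          have hpi : Real.pi ^ 2 ≤ 10 := by nlinarith
          exact h6.trans (mul_le_mul_of_nonneg_right hpi (sq_nonneg _))
        have hn : (nst c s a : ℝ) ≤ s ^ (2 * c a) := Nat.floor_le (by positivity)
        have e : (s ^ c a * |ξ a|) ^ 2 = s ^ (2 * c a) * ξ a ^ 2 := by
          rw [mul_pow, sq_abs, ← Real.rpow_natCast, ← Real.rpow_mul hs.le, mul_comm (c a)]; norm_cast
        rw [e]
        have : (nst c s a : ℝ) * Real.sin (Real.pi * ξ a) ^ 2 ≤ s ^ (2 * c a) * (10 * ξ a ^ 2) := by gcongr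
        linarith
      set A := (1 - Real.sin (Real.pi * ξ a) ^ 2) ^ nst c s a
      have hA0 : 0 ≤ A := pow_nonneg (sinfac _).1 _
      have hA1 : A ≤ 1 := pow_le_one₀ (sinfac _).1 (sinfac _).2
      nlinarith
  exact key univ

/-! ### Discrete Parseval -/

lemma geom_ee (M : ℕ) (d : ℤ) (hd : |d| ≤ 2 * M) :
    ∑ l ∈ range (2 * M + 1), ee (((l : ℝ) - M) / (2 * M + 1 : ℕ) * d) =
      if d = 0 then ((2 * M + 1 : ℕ) : ℂ) else 0 := by
  split_ifs with h
  · subst h; simp [ee_zero]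
  · set Q : ℝ := ((2 * M + 1 : ℕ) : ℝ) with hQ
    have hQ0 : 0 < Q := by rw [hQ]; positivity
    have e : ∀ l : ℕ, ee (((l : ℝ) - M) / Q * d) = ee (-M / Q * d) * ee (d / Q) ^ l := by
      intro l
      have : ∀ l : ℕ, ee (d / Q) ^ l = ee (l * (d / Q)) := by
        intro l
        induction l with
        | zero => simp [ee_zero]
        | succ l ih => rw [pow_succ, ih, ← ee_add]; congr 1; push_cast; ring
      rw [this, ← ee_add]; congr 1; field_simp; ring
    rw [sum_congr rfl fun l _ => e l, ← mul_sum]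
    have hne : ee (d / Q) ≠ 1 := by
      intro h1
      rw [ee, Complex.exp_eq_one_iff] at h1
      obtain ⟨k, hk⟩ := h1
      have h2 : (d / Q : ℝ) = k := by
        have h3 : Complex.I * (2 * Real.pi) ≠ 0 := by
          simp [Complex.I_ne_zero, Real.pi_ne_zero]
        have h4 : Complex.I * (2 * Real.pi) * ((d / Q : ℝ) : ℂ) = Complex.I * (2 * Real.pi) * (k : ℂ) := by
          push_cast at hk ⊢
          linear_combination hk
        exact_mod_cast mul_left_cancel₀ h3 h4
      rw [div_eq_iff hQ0.ne', hQ] at h2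
      have h5 : d = k * (2 * M + 1 : ℕ) := by exact_mod_cast h2
      have hk0 : k ≠ 0 := by rintro rfl; simp at h5; exact h h5
      have : 1 ≤ |k| := Int.one_le_abs hk0
      rw [h5, abs_mul] at hd
      have h6 : |((2 * M + 1 : ℕ) : ℤ)| = 2 * M + 1 := by rw [abs_of_nonneg (by positivity)]; push_cast; ring
      rw [h6] at hd
      nlinarith
    have hz : (∑ l ∈ range (2 * M + 1), ee (d / Q) ^ l) * (ee (d / Q) - 1) = 0 := by
      rw [geom_sum_mul]
      have : ∀ l : ℕ, ee (d / Q) ^ l = ee (l * (d / Q)) := by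
        intro l
        induction l with
        | zero => simp [ee_zero]
        | succ l ih => rw [pow_succ, ih, ← ee_add]; congr 1; push_cast; ring
      rw [this, show ((2 * M + 1 : ℕ) : ℝ) * (d / Q) = d by rw [← hQ]; field_simp, ee_int, sub_self]
    rcases mul_eq_zero.1 hz with h1 | h1
    · rw [h1, mul_zero]
    · exact absurd (sub_eq_zero.1 h1) hne

/-- The grid of frequencies. -/
def grd (M : ℕ) (l : Fin m → ℕ) (i : Fin m) : ℝ := ((l i : ℝ) - M) / (2 * M + 1 : ℕ)

lemma grd_le (M : ℕ) (l : Fin m → ℕ) (i : Fin m) (h : l i ∈ range (2 * M + 1)) : |grd M l i| ≤ 1 / 2 := by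
  rw [mem_range] at h
  have h1 : (l i : ℝ) ≤ 2 * M := by exact_mod_cast Nat.lt_succ_iff.1 h
  have h2 : (0 : ℝ) ≤ l i := by positivity
  have hQ : (0 : ℝ) < (2 * M + 1 : ℕ) := by positivity
  rw [grd, abs_div, abs_of_pos hQ, div_le_iff₀ hQ, abs_le]
  push_cast
  constructor <;> linarith

/-- Parseval on the grid of `(2 M + 1)`-division points, exact for functions supported in `[-M, M]^m`. -/
lemma parseval (f : RR (Fin m → ℤ)) (M : ℕ) (hM : ∀ x ∈ f.coeff.support, ∀ i, |x i| ≤ M) :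
    ∑ l ∈ Fintype.piFinset (fun _ : Fin m => range (2 * M + 1)), ‖FT (grd M l) f‖ ^ 2 =
      ((2 * M + 1 : ℕ) : ℝ) ^ m * ∑ x ∈ f.coeff.support, ‖f.coeff x‖ ^ 2 := by
  have hC : ∀ z : ℂ, ((‖z‖ ^ 2 : ℝ) : ℂ) = z * (starRingEnd ℂ) z := fun z => by
    rw [Complex.mul_conj, Complex.normSq_eq_norm_sq]
  have : ((∑ l ∈ Fintype.piFinset (fun _ : Fin m => range (2 * M + 1)), ‖FT (grd M l) f‖ ^ 2 : ℝ) : ℂ) =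
      ((((2 * M + 1 : ℕ) : ℝ) ^ m * ∑ x ∈ f.coeff.support, ‖f.coeff x‖ ^ 2 : ℝ) : ℂ) := by
    rw [Complex.ofReal_sum]
    have h1 : ∀ l : Fin m → ℕ, ((‖FT (grd M l) f‖ ^ 2 : ℝ) : ℂ) = ∑ x ∈ f.coeff.support,
        ∑ y ∈ f.coeff.support, f.coeff x * (starRingEnd ℂ) (f.coeff y) *
          ∏ i, ee (((l i : ℝ) - M) / (2 * M + 1 : ℕ) * ((x i - y i : ℤ) : ℝ)) := by
      intro l
      rw [hC, FT_eq _ f _ subset_rfl, map_sum, sum_mul_sum]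
      refine sum_congr rfl fun x _ => sum_congr rfl fun y _ => ?_
      rw [map_mul, mul_mul_mul_comm, ← ee_sub, ← sum_sub_distrib, ee_sum]
      congr 1
      refine prod_congr rfl fun i _ => ?_
      congr 1
      rw [grd]; push_cast; ring
    rw [sum_congr rfl fun l _ => h1 l, sum_comm]
    rw [Complex.ofReal_mul, Complex.ofReal_sum, mul_sum]
    refine sum_congr rfl fun x hx => ?_
    rw [sum_comm]
    have h2 : ∀ y ∈ f.coeff.support, ∑ l ∈ Fintype.piFinset (fun _ : Fin m => range (2 * M + 1)),
        f.coeff x * (starRingEnd ℂ) (f.coeff y) *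
          ∏ i, ee (((l i : ℝ) - M) / (2 * M + 1 : ℕ) * ((x i - y i : ℤ) : ℝ)) =
        if y = x then ((2 * M + 1 : ℕ) : ℂ) ^ m * (f.coeff x * (starRingEnd ℂ) (f.coeff x)) else 0 := by
      intro y hy
      rw [← mul_sum, ← Finset.prod_univ_sum (fun _ : Fin m => range (2 * M + 1))
        (fun i (l : ℕ) => ee (((l : ℝ) - M) / (2 * M + 1 : ℕ) * ((x i - y i : ℤ) : ℝ)))]
      have h3 : ∀ i, ∑ l ∈ range (2 * M + 1), ee (((l : ℝ) - M) / (2 * M + 1 : ℕ) * ((x i - y i : ℤ) : ℝ)) =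
          if x i - y i = 0 then ((2 * M + 1 : ℕ) : ℂ) else 0 := fun i =>
        geom_ee M (x i - y i) (by
          have h4 := hM x hx i; have h5 := hM y hy i
          have := abs_sub (x i) (y i)
          linarith)
      simp only [h3]
      split_ifs with h
      · subst h; simp [mul_comm]
      · obtain ⟨i, hi⟩ := Function.ne_iff.1 h
        rw [prod_eq_zero (mem_univ i) (if_neg (sub_ne_zero.2 (Ne.symm hi))), mul_zero]
    rw [sum_congr rfl h2, sum_ite_eq' f.coeff.support x, if_pos hx, hC]
    push_cast; rfl
  exact_mod_cast this

/-- `ℓ²` bound for a convolution operator with bounded Fourier transform. -/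
theorem l2_bound (K f : RR (Fin m → ℤ)) (A : ℝ)
    (hK : ∀ ξ : Fin m → ℝ, (∀ i, |ξ i| ≤ 1 / 2) → ‖FT ξ K‖ ≤ A) :
    ∑ x ∈ (K * f).coeff.support, ‖(K * f).coeff x‖ ^ 2 ≤
      A ^ 2 * ∑ x ∈ f.coeff.support, ‖f.coeff x‖ ^ 2 := by
  classical
  obtain ⟨M, hM⟩ : ∃ M : ℕ, ∀ x ∈ f.coeff.support ∪ (K * f).coeff.support, ∀ i, |x i| ≤ M := by
    refine ⟨∑ x ∈ f.coeff.support ∪ (K * f).coeff.support, ∑ i, (x i).natAbs, fun x hx i => ?_⟩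
    rw [Int.abs_eq_natAbs]
    norm_cast
    calc (x i).natAbs ≤ ∑ i, (x i).natAbs := single_le_sum (f := fun i => (x i).natAbs)
          (fun _ _ => Nat.zero_le _) (mem_univ i)
      _ ≤ _ := single_le_sum (f := fun x : Fin m → ℤ => ∑ i, (x i).natAbs)
          (fun _ _ => Nat.zero_le _) hx
  have h1 := parseval f M fun x hx => hM x (mem_union_left _ hx)
  have h2 := parseval (K * f) M fun x hx => hM x (mem_union_right _ hx)
  have hQ : (0 : ℝ) < ((2 * M + 1 : ℕ) : ℝ) ^ m := by positivity
  refine le_of_mul_le_mul_left ?_ hQ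
  rw [← h2, mul_left_comm, ← h1, mul_sum]
  refine sum_le_sum fun l hl => ?_
  rw [map_mul, norm_mul, mul_pow]
  have := hK (grd M l) fun i => grd_le M l i (Fintype.mem_piFinset.1 hl i)
  gcongr

end FV

/-! ### Calderón–Zygmund decomposition for anisotropic dyadic boxes -/

namespace FV

variable {m : ℕ}

/-- Lower corner of the dyadic box of level `k` (sides `2 ^ a k i`) containing `x`. -/
def cor (a : ℕ → Fin m → ℕ) (k : ℕ) (x : Fin m → ℤ) (i : Fin m) : ℤ := 2 ^ a k i * (x i / 2 ^ a k i)

/-- The dyadic box of level `k` containing `x`. -/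
def box (a : ℕ → Fin m → ℕ) (k : ℕ) (x : Fin m → ℤ) : Finset (Fin m → ℤ) :=
  Fintype.piFinset fun i => Ico (cor a k x i) (cor a k x i + 2 ^ a k i)

/-- The volume of the boxes of level `k`. -/
def vol (a : ℕ → Fin m → ℕ) (k : ℕ) : ℕ := ∏ i, 2 ^ a k i

section
variable {a : ℕ → Fin m → ℕ} {k l : ℕ} {x y : Fin m → ℤ}

lemma vol_pos : 0 < vol a k := prod_pos fun _ _ => by positivity

lemma card_box : (box a k x).card = vol a k := by
  rw [box, Fintype.card_piFinset, vol]
  refine prod_congr rfl fun i _ => ?_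
  rw [Int.card_Ico, add_sub_cancel_left, show ((2 : ℤ) ^ a k i) = ((2 ^ a k i : ℕ) : ℤ) by push_cast; rfl,
    Int.toNat_natCast]

lemma cor_bounds (i : Fin m) : cor a k x i ≤ x i ∧ x i < cor a k x i + 2 ^ a k i := by
  unfold cor
  have h := Int.emod_add_mul_ediv (x i) (2 ^ a k i)
  have h1 := Int.emod_nonneg (x i) (b := 2 ^ a k i) (by positivity)
  have h2 := Int.emod_lt_of_pos (x i) (b := 2 ^ a k i) (by positivity)
  constructor <;> linarith

lemma mem_box : y ∈ box a k x ↔ cor a k y = cor a k x := by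
  rw [box, Fintype.mem_piFinset]
  constructor
  · intro h
    ext i
    have hi := mem_Ico.1 (h i)
    have hp : (0 : ℤ) < 2 ^ a k i := by positivity
    unfold cor at *
    congr 1
    rw [Int.ediv_eq_iff_of_pos hp]
    constructor
    · linarith [mul_comm (x i / 2 ^ a k i) (2 ^ a k i)]
    · linarith [mul_comm (x i / 2 ^ a k i) (2 ^ a k i)]
  · intro h i
    rw [← h, mem_Ico]
    exact cor_bounds i

lemma self_mem_box : x ∈ box a k x := mem_box.2 rfl

lemma box_congr (h : cor a k y = cor a k x) : box a k y = box a k x := by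
  ext z; rw [mem_box, mem_box, h]

lemma cor_nest (hmono : ∀ i, Monotone fun k => a k i) (hkl : k ≤ l) (h : cor a k y = cor a k x) :
    cor a l y = cor a l x := by
  ext i
  have hi := congrFun h i
  unfold cor at *
  congr 1
  have hp : (2 : ℤ) ^ a k i ≠ 0 := by positivity
  have h1 := mul_left_cancel₀ hp hi
  have h2 : (2 : ℤ) ^ a l i = 2 ^ a k i * 2 ^ (a l i - a k i) := by
    rw [← pow_add]; congr 1; have := hmono i hkl; simp only at this; omega
  rw [h2, ← Int.ediv_ediv_of_nonneg (by positivity), ← Int.ediv_ediv_of_nonneg (by positivity), h1]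

lemma box_subset (hmono : ∀ i, Monotone fun k => a k i) (hkl : k ≤ l) : box a k x ⊆ box a l x :=
  fun _ hz => mem_box.2 (cor_nest hmono hkl (mem_box.1 hz))

lemma vol_succ {E : ℕ} (hE : ∀ k i, a (k + 1) i ≤ a k i + E) : vol a (k + 1) ≤ 2 ^ (E * m) * vol a k := by
  have : (2 : ℕ) ^ (E * m) = ∏ _i : Fin m, 2 ^ E := by simp [pow_mul]
  rw [this, vol, vol, ← prod_mul_distrib]
  refine prod_le_prod' fun i _ => ?_
  rw [← pow_add]
  exact Nat.pow_le_pow_right (by norm_num) (by have := hE k i; omega)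

end

/-- Sum of `|f|` over a box. -/
def bsum (a : ℕ → Fin m → ℕ) (f : RR (Fin m → ℤ)) (k : ℕ) (x : Fin m → ℤ) : ℝ :=
  ∑ y ∈ box a k x, ‖f.coeff y‖

/-- The average of `|f|` over the box of level `k` exceeds `t`. -/
def big (a : ℕ → Fin m → ℕ) (f : RR (Fin m → ℤ)) (t : ℝ) (x : Fin m → ℤ) (k : ℕ) : Prop :=
  t * vol a k < bsum a f k x

open Classical in
/-- The largest level at most `L` at which the average exceeds `t`. -/
def stp (a : ℕ → Fin m → ℕ) (f : RR (Fin m → ℤ)) (t : ℝ) (L : ℕ) (x : Fin m → ℤ) : ℕ :=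
  Nat.findGreatest (big a f t x) L

open Classical in
/-- The union of the selected boxes. -/
def Om (a : ℕ → Fin m → ℕ) (f : RR (Fin m → ℤ)) (t : ℝ) (L : ℕ) : Finset (Fin m → ℤ) :=
  (f.coeff.support.biUnion (box a L)).filter fun x => ∃ k ≤ L, big a f t x k

/-- The selected box containing `x`, encoded by level and corner. -/
def key (a : ℕ → Fin m → ℕ) (f : RR (Fin m → ℤ)) (t : ℝ) (L : ℕ) (x : Fin m → ℤ) : ℕ × (Fin m → ℤ) :=
  (stp a f t L x, cor a (stp a f t L x) x)

section
variable {a : ℕ → Fin m → ℕ} {f : RR (Fin m → ℤ)} {t : ℝ} {L : ℕ} {x y : Fin m → ℤ}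

lemma mem_Om (hmono : ∀ i, Monotone fun k => a k i) (ht : 0 ≤ t) :
    x ∈ Om a f t L ↔ ∃ k ≤ L, big a f t x k := by
  classical
  rw [Om, mem_filter, and_iff_right_iff_imp]
  rintro ⟨k, hk, hb⟩
  have h0 : 0 < bsum a f k x := lt_of_le_of_lt (by positivity) hb
  obtain ⟨y, hy, hy0⟩ := exists_ne_zero_of_sum_ne_zero h0.ne'
  rw [mem_biUnion]
  refine ⟨y, Finsupp.mem_support_iff.2 (norm_ne_zero_iff.1 hy0), mem_box.2 ?_⟩
  exact (cor_nest hmono hk (mem_box.1 hy)).symm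

lemma stp_spec (hmono : ∀ i, Monotone fun k => a k i) (ht : 0 ≤ t) (hx : x ∈ Om a f t L) :
    big a f t x (stp a f t L x) := by
  classical
  obtain ⟨k, hk, hb⟩ := (mem_Om hmono ht).1 hx
  exact Nat.findGreatest_spec (P := big a f t x) hk hb

lemma stp_le : stp a f t L x ≤ L := by
  classical
  exact Nat.findGreatest_le _

lemma not_big {k : ℕ} (h : stp a f t L x < k) (hk : k ≤ L) : ¬ big a f t x k := by
  classical
  exact Nat.findGreatest_is_greatest (P := big a f t x) h hk

lemma big_congr {k : ℕ} (h : cor a k y = cor a k x) : big a f t y k ↔ big a f t x k := by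
  rw [big, big, bsum, bsum, box_congr h]

lemma stp_box (hmono : ∀ i, Monotone fun k => a k i) (ht : 0 ≤ t) (hx : x ∈ Om a f t L)
    (hy : y ∈ box a (stp a f t L x) x) : y ∈ Om a f t L ∧ key a f t L y = key a f t L x := by
  classical
  have hc := mem_box.1 hy
  have hb := (big_congr (f := f) (t := t) hc).2 (stp_spec hmono ht hx)
  have hyO : y ∈ Om a f t L := (mem_Om hmono ht).2 ⟨_, stp_le, hb⟩
  refine ⟨hyO, ?_⟩
  have h1 : stp a f t L x ≤ stp a f t L y := by
    by_contra h
    push Not at h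
    exact not_big h stp_le hb
  have h2 : stp a f t L y ≤ stp a f t L x := by
    by_contra h
    push Not at h
    refine not_big h stp_le ((big_congr (cor_nest hmono h.le hc)).1 (stp_spec hmono ht hyO))
  have h3 : stp a f t L y = stp a f t L x := le_antisymm h2 h1
  simp only [key, h3, hc]

lemma fiber_eq (hmono : ∀ i, Monotone fun k => a k i) (ht : 0 ≤ t) (hx : x ∈ Om a f t L) :
    (Om a f t L).filter (fun y => key a f t L y = key a f t L x) = box a (stp a f t L x) x := by
  ext y
  rw [mem_filter]
  constructor
  · rintro ⟨_, hy⟩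
    simp only [key, Prod.mk.injEq] at hy
    rw [mem_box, ← hy.2, hy.1]
  · intro hy
    exact stp_box hmono ht hx hy

/-- The set `Om` is a disjoint union of stopping boxes, so inequalities on each box can be summed. -/
lemma Om_sum_le (hmono : ∀ i, Monotone fun k => a k i) (ht : 0 ≤ t) (φ ψ : (Fin m → ℤ) → ℝ)
    (h : ∀ x ∈ Om a f t L, ∑ y ∈ box a (stp a f t L x) x, φ y ≤ ∑ y ∈ box a (stp a f t L x) x, ψ y) :
    ∑ x ∈ Om a f t L, φ x ≤ ∑ x ∈ Om a f t L, ψ x := by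
  rw [← sum_fiberwise_of_maps_to (fun x hx => mem_image_of_mem (key a f t L) hx) φ,
    ← sum_fiberwise_of_maps_to (fun x hx => mem_image_of_mem (key a f t L) hx) ψ]
  refine sum_le_sum fun q hq => ?_
  obtain ⟨x, hx, rfl⟩ := mem_image.1 hq
  rw [fiber_eq hmono ht hx]
  exact h x hx

lemma Om_weak (hmono : ∀ i, Monotone fun k => a k i) (ht : 0 ≤ t) :
    t * (Om a f t L).card ≤ ∑ x ∈ Om a f t L, ‖f.coeff x‖ := by
  have := Om_sum_le (f := f) (L := L) hmono ht (fun _ => t) (fun x => ‖f.coeff x‖) (fun x hx => by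
    rw [sum_const, card_box, nsmul_eq_mul, mul_comm]
    exact (stp_spec hmono ht hx).le)
  rwa [sum_const, nsmul_eq_mul, mul_comm] at this

/-- The selected boxes have average at most a constant times `t`, since their parents are not
selected. -/
lemma bsum_le {E : ℕ} (hmono : ∀ i, Monotone fun k => a k i) (hE : ∀ k i, a (k + 1) i ≤ a k i + E)
    (ht : 0 ≤ t) (hL : ∀ x, ¬ big a f t x L) (hx : x ∈ Om a f t L) :
    bsum a f (stp a f t L x) x ≤ 2 ^ (E * m) * t * vol a (stp a f t L x) := by
  set k := stp a f t L x with hk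
  have hkL : k < L := by
    refine lt_of_le_of_ne stp_le fun h => hL x ?_
    have := stp_spec hmono ht hx
    rwa [← hk, h] at this
  have h1 := not_big (a := a) (f := f) (t := t) (x := x) (L := L) (Nat.lt_succ_self k) hkL
  rw [big, not_lt] at h1
  have h2 : bsum a f k x ≤ bsum a f (k + 1) x :=
    sum_le_sum_of_subset_of_nonneg (box_subset hmono (Nat.le_succ k)) fun _ _ _ => norm_nonneg _
  have h3 : (vol a (k + 1) : ℝ) ≤ 2 ^ (E * m) * vol a k := by exact_mod_cast vol_succ hE
  calc bsum a f k x ≤ t * vol a (k + 1) := h2.trans h1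
    _ ≤ t * (2 ^ (E * m) * vol a k) := by gcongr
    _ = _ := by ring

lemma Om_f_le {E : ℕ} (hmono : ∀ i, Monotone fun k => a k i) (hE : ∀ k i, a (k + 1) i ≤ a k i + E)
    (ht : 0 ≤ t) (hL : ∀ x, ¬ big a f t x L) :
    ∑ x ∈ Om a f t L, ‖f.coeff x‖ ≤ 2 ^ (E * m) * t * (Om a f t L).card := by
  have := Om_sum_le (f := f) (L := L) hmono ht (fun x => ‖f.coeff x‖) (fun _ => 2 ^ (E * m) * t)
    (fun x hx => by
      rw [sum_const, card_box, nsmul_eq_mul, mul_comm (vol _ _ : ℝ)]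
      exact bsum_le hmono hE ht hL hx)
  rwa [sum_const, nsmul_eq_mul, mul_comm ((Om a f t L).card : ℝ)] at this

lemma not_mem_Om (hmono : ∀ i, Monotone fun k => a k i) (h0 : ∀ i, a 0 i = 0) (ht : 0 ≤ t)
    (hx : x ∉ Om a f t L) : ‖f.coeff x‖ ≤ t := by
  rw [mem_Om hmono ht] at hx
  push Not at hx
  have h1 := hx 0 (Nat.zero_le _)
  have h2 : box a 0 x = {x} := by
    refine eq_singleton_iff_unique_mem.2 ⟨self_mem_box, fun y hy => ?_⟩
    have := mem_box.1 hy
    ext i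
    have := congrFun this i
    simpa [cor, h0] using this
  rw [big, bsum, h2, not_lt] at h1
  simpa [vol, h0] using h1

/-- Average of `f` over the selected box. -/
def savg (a : ℕ → Fin m → ℕ) (f : RR (Fin m → ℤ)) (t : ℝ) (L : ℕ) (x : Fin m → ℤ) : ℂ :=
  (vol a (stp a f t L x) : ℂ)⁻¹ * ∑ y ∈ box a (stp a f t L x) x, f.coeff y

/-- The bad part of the Calderón–Zygmund decomposition. -/
def bad (a : ℕ → Fin m → ℕ) (f : RR (Fin m → ℤ)) (t : ℝ) (L : ℕ) : RR (Fin m → ℤ) :=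
  ∑ y ∈ Om a f t L, (f.coeff y - savg a f t L y) • XX y

open Classical in
lemma bad_coeff (x : Fin m → ℤ) : (bad a f t L).coeff x =
    if x ∈ Om a f t L then f.coeff x - savg a f t L x else 0 := by
  rw [bad, sum_coeff]
  simp only [smul_coeff, XX, AddMonoidAlgebra.coeff_single, Finsupp.single_apply]
  simp only [mul_ite, mul_one, mul_zero]
  rw [sum_ite_eq' (Om a f t L) x]

lemma savg_congr (h : key a f t L y = key a f t L x) : savg a f t L y = savg a f t L x := by
  simp only [key, Prod.mk.injEq] at h
  obtain ⟨h1, h2⟩ := h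
  rw [savg, savg, h1]
  rw [h1] at h2
  rw [box_congr h2]

lemma savg_le {E : ℕ} (hmono : ∀ i, Monotone fun k => a k i) (hE : ∀ k i, a (k + 1) i ≤ a k i + E)
    (ht : 0 ≤ t) (hL : ∀ x, ¬ big a f t x L) (hx : x ∈ Om a f t L) :
    ‖savg a f t L x‖ ≤ 2 ^ (E * m) * t := by
  have hv : (0 : ℝ) < vol a (stp a f t L x) := by exact_mod_cast vol_pos
  rw [savg, norm_mul, norm_inv, Complex.norm_natCast, inv_mul_le_iff₀ hv, mul_comm]
  exact (norm_sum_le _ _).trans (bsum_le hmono hE ht hL hx)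

/-- The bad part has mean zero on each stopping box. -/
lemma bad_zero (hmono : ∀ i, Monotone fun k => a k i) (ht : 0 ≤ t) (F : ℕ × (Fin m → ℤ) → ℂ) :
    ∑ y ∈ Om a f t L, (bad a f t L).coeff y * F (key a f t L y) = 0 := by
  classical
  rw [← sum_fiberwise_of_maps_to (fun x hx => mem_image_of_mem (key a f t L) hx)]
  refine sum_eq_zero fun q hq => ?_
  obtain ⟨x, hx, rfl⟩ := mem_image.1 hq
  have h1 : ∀ y ∈ (Om a f t L).filter (fun y => key a f t L y = key a f t L x),
      (bad a f t L).coeff y * F (key a f t L y) =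
        f.coeff y * F (key a f t L x) - savg a f t L x * F (key a f t L x) := by
    intro y hy
    rw [mem_filter] at hy
    rw [bad_coeff, if_pos hy.1, hy.2, savg_congr hy.2]; ring
  rw [sum_congr rfl h1, fiber_eq hmono ht hx, sum_sub_distrib, ← sum_mul, sum_const, card_box, savg,
    nsmul_eq_mul]
  have hv : (vol a (stp a f t L x) : ℂ) ≠ 0 := by exact_mod_cast (vol_pos).ne'
  field_simp
  ring

lemma bad_le (hmono : ∀ i, Monotone fun k => a k i) (ht : 0 ≤ t) :
    ∑ x ∈ Om a f t L, ‖(bad a f t L).coeff x‖ ≤ 2 * ∑ x ∈ Om a f t L, ‖f.coeff x‖ := by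
  classical
  rw [mul_sum]
  refine Om_sum_le hmono ht _ _ fun x hx => ?_
  have hv : (0 : ℝ) < vol a (stp a f t L x) := by exact_mod_cast vol_pos
  have h1 : ∀ y ∈ box a (stp a f t L x) x, ‖(bad a f t L).coeff y‖ ≤ ‖f.coeff y‖ + ‖savg a f t L x‖ := by
    intro y hy
    obtain ⟨h2, h3⟩ := stp_box hmono ht hx hy
    rw [bad_coeff, if_pos h2, savg_congr h3]
    exact norm_sub_le _ _
  refine (sum_le_sum h1).trans ?_
  rw [sum_add_distrib, sum_const, card_box, nsmul_eq_mul, ← mul_sum, two_mul]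
  gcongr
  rw [savg, norm_mul, norm_inv, Complex.norm_natCast, ← mul_assoc, mul_inv_cancel₀ hv.ne', one_mul]
  exact norm_sum_le _ _

/-- The Hörmander condition for a convolution kernel, relative to the boxes of sides `2 ^ a k i`. -/
def Horm (a : ℕ → Fin m → ℕ) (K : RR (Fin m → ℤ)) (H : ℝ) : Prop :=
  ∀ (k : ℕ) (d : Fin m → ℤ) (S : Finset (Fin m → ℤ)), (∀ i, |d i| < 2 ^ a k i) →
    (∀ x ∈ S, ∃ i, 2 * 2 ^ a k i ≤ |x i|) → ∑ x ∈ S, ‖K.coeff (x - d) - K.coeff x‖ ≤ H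

/-- The union of the dilated selected boxes. -/
def Oms (a : ℕ → Fin m → ℕ) (f : RR (Fin m → ℤ)) (t : ℝ) (L : ℕ) : Finset (Fin m → ℤ) :=
  ((Om a f t L).image (key a f t L)).biUnion fun q =>
    Fintype.piFinset fun i => Ico (q.2 i - 2 * 2 ^ a q.1 i) (q.2 i + 2 * 2 ^ a q.1 i)

lemma Oms_card (hmono : ∀ i, Monotone fun k => a k i) (ht : 0 ≤ t) :
    ((Oms a f t L).card : ℝ) ≤ 4 ^ m * (Om a f t L).card := by
  have h : (Oms a f t L).card ≤ 4 ^ m * (Om a f t L).card := by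
    refine card_biUnion_le.trans ?_
    rw [card_eq_sum_card_image (key a f t L) (Om a f t L), mul_sum]
    refine sum_le_sum fun q hq => ?_
    obtain ⟨x, hx, rfl⟩ := mem_image.1 hq
    rw [fiber_eq hmono ht hx, card_box, Fintype.card_piFinset]
    have : (4 : ℕ) ^ m = ∏ _i : Fin m, 4 := by simp
    rw [this, vol, ← prod_mul_distrib]
    refine prod_le_prod' fun i _ => ?_
    rw [Int.card_Ico]
    simp only [key]
    have h2 : ((2 : ℤ) ^ a (stp a f t L x) i) = ((2 ^ a (stp a f t L x) i : ℕ) : ℤ) := by push_cast; rfl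
    rw [h2]
    omega
  exact_mod_cast h

/-- Away from the enlarged exceptional set, mean zero and the Hörmander condition control `K * bad`. -/
lemma bad_horm (hmono : ∀ i, Monotone fun k => a k i) (ht : 0 ≤ t) {K : RR (Fin m → ℤ)} {H : ℝ}
    (hK : Horm a K H) (S : Finset (Fin m → ℤ)) (hS : Disjoint S (Oms a f t L)) :
    ∑ x ∈ S, ‖(K * bad a f t L).coeff x‖ ≤ H * ∑ y ∈ Om a f t L, ‖(bad a f t L).coeff y‖ := by
  classical
  have hsupp : (bad a f t L).coeff.support ⊆ Om a f t L := by
    intro x hx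
    rw [Finsupp.mem_support_iff, bad_coeff] at hx
    by_contra h
    exact hx (if_neg h)
  have h1 : ∀ x ∈ S, ‖(K * bad a f t L).coeff x‖ ≤ ∑ y ∈ Om a f t L, ‖(bad a f t L).coeff y‖ *
      ‖K.coeff (x - y) - K.coeff (x - (key a f t L y).2)‖ := by
    intro x _
    have e : (K * bad a f t L).coeff x = ∑ y ∈ Om a f t L, (bad a f t L).coeff y *
        (K.coeff (x - y) - K.coeff (x - (key a f t L y).2)) := by
      rw [mul_coeff_eq K _ _ hsupp]
      have := bad_zero (f := f) (L := L) hmono ht (fun q => K.coeff (x - q.2))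
      simp only [mul_sub, sum_sub_distrib]
      rw [this, sub_zero]
    rw [e]
    refine (norm_sum_le _ _).trans (le_of_eq (sum_congr rfl fun y _ => norm_mul _ _))
  refine (sum_le_sum h1).trans ?_
  rw [sum_comm, mul_comm, sum_mul]
  refine sum_le_sum fun y hy => ?_
  rw [← mul_sum]
  refine mul_le_mul_of_nonneg_left ?_ (norm_nonneg _)
  set q := (key a f t L y).2 with hq
  have h2 := hK (stp a f t L y) (y - q) (S.image fun x => x - q) (fun i => by
    have := cor_bounds (a := a) (k := stp a f t L y) (x := y) i
    have e : q i = cor a (stp a f t L y) y i := rfl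
    rw [Pi.sub_apply, e, abs_lt]
    constructor <;> linarith) (fun x hx => by
    obtain ⟨z, hz, rfl⟩ := mem_image.1 hx
    have hz' := disjoint_left.1 hS hz
    by_contra hcon
    push Not at hcon
    refine hz' (mem_biUnion.2 ⟨_, mem_image_of_mem _ hy, Fintype.mem_piFinset.2 fun i => ?_⟩)
    have := hcon i
    rw [Pi.sub_apply, abs_lt] at this
    rw [mem_Ico]
    simp only [key] at hq ⊢
    rw [hq] at this
    constructor <;> linarith)
  rw [sum_image (fun x _ y _ h => sub_left_injective h)] at h2
  refine le_trans (le_of_eq (sum_congr rfl fun x _ => ?_)) h2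
  have e : x - q - (y - q) = x - y := by abel
  simp only [e]

end

end FV

/-! ### Weak type estimate and `ℓ^p` bounds for `p < 2` -/

namespace FV

variable {m : ℕ}

/-- The `p`-th power of the `ℓ^p` norm. -/
def nrm (p : ℝ) (f : RR (Fin m → ℤ)) : ℝ := ∑ x ∈ f.coeff.support, ‖f.coeff x‖ ^ p

lemma nrm_nonneg (p : ℝ) (f : RR (Fin m → ℤ)) : 0 ≤ nrm p f := sum_nonneg fun _ _ => by positivity

lemma sum_le_nrm {p : ℝ} (hp : 0 < p) (f : RR (Fin m → ℤ)) (U : Finset (Fin m → ℤ)) :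
    ∑ x ∈ U, ‖f.coeff x‖ ^ p ≤ nrm p f := by
  classical
  rw [← sum_filter_ne_zero]
  refine sum_le_sum_of_subset_of_nonneg (fun x hx => ?_) fun _ _ _ => by positivity
  rw [Finsupp.mem_support_iff]
  intro h
  refine (mem_filter.1 hx).2 ?_
  rw [h, norm_zero, Real.zero_rpow hp.ne']

lemma geoZ {q : ℝ} (hq : 0 < q) (Λ : Finset ℤ) (M : ℤ) (h : ∀ k ∈ Λ, k ≤ M) :
    ∑ k ∈ Λ, (2 : ℝ) ^ ((k : ℝ) * q) ≤ (1 - (2 : ℝ) ^ (-q))⁻¹ * (2 : ℝ) ^ ((M : ℝ) * q) := by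
  have hr1 : (2 : ℝ) ^ (-q) < 1 := Real.rpow_lt_one_of_one_lt_of_neg (by norm_num) (by linarith)
  have hr0 : (0 : ℝ) ≤ (2 : ℝ) ^ (-q) := by positivity
  have h1 : ∀ k ∈ Λ, (2 : ℝ) ^ ((k : ℝ) * q) = ((2 : ℝ) ^ (-q)) ^ ((M - k).toNat) * (2 : ℝ) ^ ((M : ℝ) * q) := by
    intro k hk
    rw [← Real.rpow_natCast, ← Real.rpow_mul (by norm_num), ← Real.rpow_add (by norm_num)]
    congr 1
    have e : (((M - k).toNat : ℕ) : ℝ) = (M : ℝ) - k := by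
      have : (((M - k).toNat : ℕ) : ℤ) = M - k := Int.toNat_of_nonneg (by have := h k hk; omega)
      exact_mod_cast congrArg (fun z : ℤ => (z : ℝ)) this
    rw [e]; ring
  rw [sum_congr rfl h1, ← sum_mul]
  refine mul_le_mul_of_nonneg_right ?_ (by positivity)
  have h2 : ∑ k ∈ Λ, ((2 : ℝ) ^ (-q)) ^ ((M - k).toNat) =
      ∑ n ∈ Λ.image (fun k => (M - k).toNat), ((2 : ℝ) ^ (-q)) ^ n := by
    rw [sum_image]
    intro k hk l hl hkl
    have := h k hk
    have := h l hl
    simp only at hkl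
    omega
  rw [h2, ← tsum_geometric_of_lt_one hr0 hr1]
  exact Summable.sum_le_tsum _ (fun _ _ => by positivity) (summable_geometric_of_lt_one hr0 hr1)

lemma geoZ' {q : ℝ} (hq : 0 < q) (Λ : Finset ℤ) (M : ℤ) (h : ∀ k ∈ Λ, M ≤ k) :
    ∑ k ∈ Λ, (2 : ℝ) ^ (-((k : ℝ) * q)) ≤ (1 - (2 : ℝ) ^ (-q))⁻¹ * (2 : ℝ) ^ (-((M : ℝ) * q)) := by
  have := geoZ hq (Λ.image fun k => -k) (-M) (fun k hk => by
    obtain ⟨l, hl, rfl⟩ := mem_image.1 hk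
    have := h l hl
    omega)
  rw [sum_image (fun x _ y _ h => neg_injective h)] at this
  push_cast at this
  simpa only [neg_mul] using this

section
variable {a : ℕ → Fin m → ℕ} {f : RR (Fin m → ℤ)} {t : ℝ} {L : ℕ}

/-- Chebyshev on a finite set. -/
lemma cheb (S : Finset (Fin m → ℤ)) (F : (Fin m → ℤ) → ℝ) {B s : ℝ}
    (h : ∀ x ∈ S, s ≤ F x) (hB : ∑ x ∈ S, F x ≤ B) : s * S.card ≤ B := by
  refine le_trans ?_ hB
  rw [mul_comm, ← nsmul_eq_mul]
  exact card_nsmul_le_sum _ _ _ h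

/-- The `ℓ²` norm of the good part. -/
lemma good_l2 {E : ℕ} (hmono : ∀ i, Monotone fun k => a k i) (h0 : ∀ i, a 0 i = 0)
    (hE : ∀ k i, a (k + 1) i ≤ a k i + E) (ht : 0 ≤ t) (hL : ∀ x, ¬ big a f t x L) :
    ∑ x ∈ (f - bad a f t L).coeff.support, ‖(f - bad a f t L).coeff x‖ ^ 2 ≤
      ∑ x ∈ f.coeff.support.filter (fun x => ‖f.coeff x‖ ≤ t), ‖f.coeff x‖ ^ 2 +
        (2 ^ (E * m) * t) ^ 2 * (Om a f t L).card := by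
  classical
  have hsub : (f - bad a f t L).coeff.support ⊆
      f.coeff.support.filter (fun x => ‖f.coeff x‖ ≤ t) ∪ Om a f t L := by
    intro x hx
    rw [Finsupp.mem_support_iff, sub_coeff, bad_coeff] at hx
    rw [mem_union, mem_filter, Finsupp.mem_support_iff]
    by_cases hO : x ∈ Om a f t L
    · exact Or.inr hO
    · rw [if_neg hO, sub_zero] at hx
      exact Or.inl ⟨hx, not_mem_Om hmono h0 ht hO⟩
  refine (sum_le_sum_of_subset_of_nonneg (f := fun x => ‖(f - bad a f t L).coeff x‖ ^ 2) hsub (fun _ _ _ => by positivity)).trans ?_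
  rw [← sdiff_union_self_eq_union, sum_union sdiff_disjoint]
  refine add_le_add ?_ ?_
  · refine le_trans (sum_le_sum (g := fun x => ‖f.coeff x‖ ^ 2) fun x hx => ?_)
      (sum_le_sum_of_subset_of_nonneg sdiff_subset fun _ _ _ => by positivity)
    rw [sub_coeff, bad_coeff, if_neg (mem_sdiff.1 hx).2, sub_zero]
  · rw [mul_comm, ← nsmul_eq_mul]
    refine sum_le_card_nsmul _ _ _ fun x hx => ?_
    rw [sub_coeff, bad_coeff, if_pos hx, sub_sub_cancel]
    exact pow_le_pow_left₀ (norm_nonneg _) (savg_le hmono hE ht hL hx) 2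

/-- The distributional estimate coming from the Calderón–Zygmund decomposition at height `s / A`. -/
lemma weak {E : ℕ} (hmono : ∀ i, Monotone fun k => a k i) (h0 : ∀ i, a 0 i = 0)
    (hE : ∀ k i, a (k + 1) i ≤ a k i + E) {K : RR (Fin m → ℤ)} {A H s : ℝ} (hA : 0 < A) (hAH : A ≤ H)
    (hs : 0 < s) (hL : ∀ x, ¬ big a f (s / A) x L)
    (hF : ∀ ξ : Fin m → ℝ, (∀ i, |ξ i| ≤ 1 / 2) → ‖FT ξ K‖ ≤ A) (hK : Horm a K H)
    (S : Finset (Fin m → ℤ)) (hS : ∀ x ∈ S, s < ‖(K * f).coeff x‖) :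
    (S.card : ℝ) ≤ 4 * A ^ 2 / s ^ 2 *
        ∑ x ∈ f.coeff.support.filter (fun x => ‖f.coeff x‖ ≤ s / A), ‖f.coeff x‖ ^ 2 +
      (4 * (2 ^ (E * m)) ^ 2 + 4 ^ m + 4 * 2 ^ (E * m)) * (H / A) * (Om a f (s / A) L).card := by
  classical
  have hH : 0 < H := hA.trans_le hAH
  set t := s / A with ht'
  have ht : 0 < t := div_pos hs hA
  set b := bad a f t L with hb
  set g := f - b with hg
  set D : ℝ := 2 ^ (E * m) with hD
  have hD1 : 1 ≤ D := one_le_pow₀ (by norm_num)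
  set F2 := ∑ x ∈ f.coeff.support.filter (fun x => ‖f.coeff x‖ ≤ t), ‖f.coeff x‖ ^ 2 with hF2
  set n : ℝ := ((Om a f t L).card : ℝ) with hn
  have hn0 : 0 ≤ n := by positivity
  set S1 := S.filter fun x => s / 2 < ‖(K * g).coeff x‖
  set S2 := (S.filter fun x => s / 2 < ‖(K * b).coeff x‖) \ Oms a f t L
  have hcov : S ⊆ S1 ∪ (Oms a f t L ∪ S2) := by
    intro x hx
    by_contra hcon
    simp only [mem_union, S1, mem_filter, hx, true_and, not_or, not_lt] at hcon
    obtain ⟨h1, h2, h3⟩ := hcon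
    have h4 : ‖(K * b).coeff x‖ ≤ s / 2 := by
      by_contra h5
      exact h3 (mem_sdiff.2 ⟨mem_filter.2 ⟨hx, not_le.1 h5⟩, h2⟩)
    have e : (K * f).coeff x = (K * g).coeff x + (K * b).coeff x := by
      rw [← add_coeff, ← mul_add, hg, sub_add_cancel]
    have := hS x hx
    rw [e] at this
    linarith [norm_add_le ((K * g).coeff x) ((K * b).coeff x)]
  have hc : (S.card : ℝ) ≤ S1.card + ((Oms a f t L).card + S2.card) := by
    have h1 := card_le_card hcov
    have h2 := card_union_le S1 (Oms a f t L ∪ S2)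
    have h3 := card_union_le (Oms a f t L) S2
    exact_mod_cast h1.trans (h2.trans (by omega))
  have b1 : (s / 2) ^ 2 * S1.card ≤ A ^ 2 * (F2 + (D * t) ^ 2 * n) := by
    refine cheb S1 (fun x => ‖(K * g).coeff x‖ ^ 2) (fun x hx => ?_) ?_
    · exact pow_le_pow_left₀ (by positivity) (mem_filter.1 hx).2.le 2
    · have h1 := l2_bound K g A hF
      have h2 := good_l2 (f := f) hmono h0 hE ht.le hL
      have h3 : ∑ x ∈ S1, ‖(K * g).coeff x‖ ^ 2 ≤ ∑ x ∈ (K * g).coeff.support, ‖(K * g).coeff x‖ ^ 2 := by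
        refine sum_le_sum_of_subset_of_nonneg (fun x hx => ?_) fun _ _ _ => by positivity
        rw [Finsupp.mem_support_iff, ← norm_ne_zero_iff]
        have := (mem_filter.1 hx).2
        intro h
        rw [h] at this
        linarith
      exact h3.trans (h1.trans (mul_le_mul_of_nonneg_left h2 (by positivity)))
  have b3 : (s / 2) * S2.card ≤ H * (2 * (D * t * n)) := by
    refine cheb S2 (fun x => ‖(K * b).coeff x‖) (fun x hx => ?_) ?_
    · exact (mem_filter.1 (Finset.mem_sdiff.1 hx).1).2.le
    · refine (bad_horm hmono ht.le hK S2 sdiff_disjoint).trans ?_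
      refine mul_le_mul_of_nonneg_left ((bad_le hmono ht.le).trans ?_) hH.le
      have := Om_f_le (f := f) hmono hE ht.le hL
      linarith
  have b2 := Oms_card (f := f) (L := L) hmono ht.le
  have c1 : (S1.card : ℝ) ≤ 4 * A ^ 2 / s ^ 2 * F2 + 4 * D ^ 2 * n := by
    have e : 4 * A ^ 2 / s ^ 2 * F2 + 4 * D ^ 2 * n = A ^ 2 * (F2 + (D * t) ^ 2 * n) / (s / 2) ^ 2 := by
      rw [ht']; field_simp; try ring
    rw [e, le_div_iff₀ (by positivity)]
    linarith
  have c3 : (S2.card : ℝ) ≤ 4 * D * (H / A) * n := by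
    have e : 4 * D * (H / A) * n = H * (2 * (D * t * n)) / (s / 2) := by
      rw [ht']; field_simp; try ring
    rw [e, le_div_iff₀ (by positivity)]
    linarith
  have hHA : 1 ≤ H / A := (one_le_div hA).2 hAH
  have d1 : 4 * D ^ 2 * n ≤ 4 * D ^ 2 * (H / A) * n := by
    refine mul_le_mul_of_nonneg_right ?_ hn0
    exact le_mul_of_one_le_right (by positivity) hHA
  have d2 : 4 ^ m * n ≤ 4 ^ m * (H / A) * n := by
    refine mul_le_mul_of_nonneg_right ?_ hn0
    exact le_mul_of_one_le_right (by positivity) hHA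
  have e : (4 * D ^ 2 + 4 ^ m + 4 * D) * (H / A) * n =
    4 * D ^ 2 * (H / A) * n + 4 ^ m * (H / A) * n + 4 * D * (H / A) * n := by ring
  rw [e]
  linarith

/-- Doob's maximal inequality in the form of a sum over dyadic levels. -/
lemma doob (hmono : ∀ i, Monotone fun k => a k i) {p A : ℝ} (hp : 1 < p) (hA : 0 < A) (Λ : Finset ℤ) :
    ∑ k ∈ Λ, (2 : ℝ) ^ ((k : ℝ) * p) * (Om a f ((2 : ℝ) ^ (k : ℝ) / A) L).card ≤
      (A * (1 - (2 : ℝ) ^ (-(p - 1)))⁻¹) ^ p * nrm p f := by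
  classical
  set C1 := (1 - (2 : ℝ) ^ (-(p - 1)))⁻¹ with hC1
  have hC0 : 0 ≤ C1 := by
    have : (2 : ℝ) ^ (-(p - 1)) < 1 := Real.rpow_lt_one_of_one_lt_of_neg (by norm_num) (by linarith)
    exact inv_nonneg.2 (by linarith)
  set O : ℤ → Finset (Fin m → ℤ) := fun k => Om a f ((2 : ℝ) ^ (k : ℝ) / A) L with hO
  set U := Λ.biUnion O with hU
  set S := ∑ k ∈ Λ, (2 : ℝ) ^ ((k : ℝ) * p) * (O k).card with hS
  have swap : ∀ (w : ℤ → ℝ) (F : (Fin m → ℤ) → ℝ),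
      ∑ k ∈ Λ, w k * ∑ x ∈ O k, F x = ∑ x ∈ U, F x * ∑ k ∈ Λ.filter (fun k => x ∈ O k), w k := by
    intro w F
    have h1 : ∀ k ∈ Λ, w k * ∑ x ∈ O k, F x = ∑ x ∈ U, if x ∈ O k then F x * w k else 0 := by
      intro k hk
      rw [← sum_filter, filter_mem_eq_inter, inter_eq_right.2 (subset_biUnion_of_mem O hk), mul_sum]
      exact sum_congr rfl fun _ _ => mul_comm _ _
    rw [sum_congr rfl h1, sum_comm]
    refine sum_congr rfl fun x _ => ?_
    rw [mul_sum, sum_filter]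
  have hS' : S = ∑ x ∈ U, ∑ k ∈ Λ.filter (fun k => x ∈ O k), (2 : ℝ) ^ ((k : ℝ) * p) := by
    have := swap (fun k => (2 : ℝ) ^ ((k : ℝ) * p)) (fun _ => 1)
    simp only [sum_const, nsmul_eq_mul, mul_one, one_mul] at this
    exact this
  have h1 : S ≤ ∑ x ∈ U, (A * ‖f.coeff x‖) * ∑ k ∈ Λ.filter (fun k => x ∈ O k), (2 : ℝ) ^ ((k : ℝ) * (p - 1)) := by
    rw [← swap]
    refine sum_le_sum fun k _ => ?_
    have hw := Om_weak (a := a) (f := f) (L := L) (t := (2 : ℝ) ^ (k : ℝ) / A) hmono (by positivity)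
    have e : (2 : ℝ) ^ ((k : ℝ) * p) = (2 : ℝ) ^ ((k : ℝ) * (p - 1)) * (2 : ℝ) ^ (k : ℝ) := by
      rw [← Real.rpow_add (by norm_num)]; congr 1; ring
    rw [e, mul_assoc]
    refine mul_le_mul_of_nonneg_left ?_ (by positivity)
    rw [← mul_sum]
    have := mul_le_mul_of_nonneg_left hw hA.le
    refine le_trans (le_of_eq ?_) this
    rw [← mul_assoc, mul_div_cancel₀ _ hA.ne']
  have h2 : ∀ x ∈ U, (A * ‖f.coeff x‖) * ∑ k ∈ Λ.filter (fun k => x ∈ O k), (2 : ℝ) ^ ((k : ℝ) * (p - 1)) ≤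
      (1 - 1 / p) * (∑ k ∈ Λ.filter (fun k => x ∈ O k), (2 : ℝ) ^ ((k : ℝ) * p)) +
        1 / p * ((A * C1) ^ p * ‖f.coeff x‖ ^ p) := by
    intro x hx
    obtain ⟨k0, hk0, hk0'⟩ := mem_biUnion.1 hx
    have hne : (Λ.filter (fun k => x ∈ O k)).Nonempty := ⟨k0, mem_filter.2 ⟨hk0, hk0'⟩⟩
    set M := (Λ.filter (fun k => x ∈ O k)).max' hne with hM
    have g1 := geoZ (q := p - 1) (by linarith) (Λ.filter (fun k => x ∈ O k)) M (fun k hk => le_max' _ _ hk)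
    have hy : ((2 : ℝ) ^ (M : ℝ)) ^ p ≤ ∑ k ∈ Λ.filter (fun k => x ∈ O k), (2 : ℝ) ^ ((k : ℝ) * p) := by
      rw [← Real.rpow_mul (by norm_num)]
      exact single_le_sum (f := fun k : ℤ => (2 : ℝ) ^ ((k : ℝ) * p)) (fun _ _ => by positivity) (max'_mem _ hne)
    have hyp := young_pow (p := p) (x := A * C1 * ‖f.coeff x‖) (y := (2 : ℝ) ^ (M : ℝ)) hp (by positivity) (by positivity)
    rw [← Real.rpow_mul (by norm_num), Real.mul_rpow (by positivity) (by positivity)] at hyp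
    have hp1 : 0 ≤ 1 - 1 / p := by
      rw [sub_nonneg, div_le_one (by linarith)]; exact hp.le
    calc _ ≤ (A * ‖f.coeff x‖) * (C1 * (2 : ℝ) ^ ((M : ℝ) * (p - 1))) :=
          mul_le_mul_of_nonneg_left g1 (by positivity)
      _ = (2 : ℝ) ^ ((M : ℝ) * (p - 1)) * (A * C1 * ‖f.coeff x‖) := by ring
      _ ≤ _ := hyp
      _ ≤ _ := add_le_add (mul_le_mul_of_nonneg_left hy hp1) le_rfl
  have h3 := h1.trans (sum_le_sum h2)
  rw [sum_add_distrib, ← mul_sum, ← hS', ← mul_sum, ← mul_sum] at h3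
  have h4 : ∑ x ∈ U, ‖f.coeff x‖ ^ p ≤ nrm p f := sum_le_nrm (by linarith) f U
  have h5 : 1 / p * S ≤ 1 / p * ((A * C1) ^ p * nrm p f) := by
    have : (A * C1) ^ p * ∑ x ∈ U, ‖f.coeff x‖ ^ p ≤ (A * C1) ^ p * nrm p f :=
      mul_le_mul_of_nonneg_left h4 (by positivity)
    have hp0 : 0 < 1 / p := by positivity
    nlinarith [mul_le_mul_of_nonneg_left this hp0.le]
  exact le_of_mul_le_mul_left h5 (by positivity)


set_option maxHeartbeats 1000000 in
/-- The `ℓ^p` bound, `1 < p < 2`, by summing the distributional estimate over dyadic levels. -/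
lemma cz_lt_two {E : ℕ} (hmono : ∀ i, Monotone fun k => a k i) (h0 : ∀ i, a 0 i = 0)
    (hE : ∀ k i, a (k + 1) i ≤ a k i + E) (hvol : ∀ B : ℝ, ∃ L, B ≤ vol a L)
    {p : ℝ} (hp : 1 < p) (hp2 : p < 2) :
    ∃ C : ℝ, 0 < C ∧ ∀ (K f : RR (Fin m → ℤ)) (A H : ℝ), 0 < A → A ≤ H →
      (∀ ξ : Fin m → ℝ, (∀ i, |ξ i| ≤ 1 / 2) → ‖FT ξ K‖ ≤ A) → Horm a K H →
      nrm p (K * f) ≤ C * H * A ^ (p - 1) * nrm p f := by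
  classical
  set C2 := (1 - (2 : ℝ) ^ (-(2 - p)))⁻¹ with hC2
  have hC20 : 0 < C2 := by
    have : (2 : ℝ) ^ (-(2 - p)) < 1 := Real.rpow_lt_one_of_one_lt_of_neg (by norm_num) (by linarith)
    exact inv_pos.2 (by linarith)
  set C1 := (1 - (2 : ℝ) ^ (-(p - 1)))⁻¹ with hC1
  have hC10 : 0 < C1 := by
    have : (2 : ℝ) ^ (-(p - 1)) < 1 := Real.rpow_lt_one_of_one_lt_of_neg (by norm_num) (by linarith)
    exact inv_pos.2 (by linarith)
  set B : ℝ := 4 * (2 ^ (E * m)) ^ 2 + 4 ^ m + 4 * 2 ^ (E * m) with hB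
  have hB0 : 0 < B := by positivity
  refine ⟨2 ^ p * (4 * C2 + B * C1 ^ p), by positivity, fun K f A H hA hAH hF hK => ?_⟩
  have hH : 0 < H := hA.trans_le hAH
  have hk : ∀ x, ∃ k : ℤ, x ∈ (K * f).coeff.support →
      (2 : ℝ) ^ (k : ℝ) < ‖(K * f).coeff x‖ ∧ ‖(K * f).coeff x‖ ≤ 2 * (2 : ℝ) ^ (k : ℝ) := by
    intro x
    by_cases hx : x ∈ (K * f).coeff.support
    · have hpos := norm_pos_iff.2 (Finsupp.mem_support_iff.1 hx)
      obtain ⟨k, h1, h2⟩ := exists_mem_Ioc_zpow hpos (y := (2 : ℝ)) (by norm_num)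
      refine ⟨k, fun _ => ?_⟩
      rw [Real.rpow_intCast]
      refine ⟨h1, h2.trans (le_of_eq ?_)⟩
      rw [zpow_add_one₀ (by norm_num), mul_comm]
    · exact ⟨0, fun h => absurd h hx⟩
  choose κ hκ using hk
  set Λ := (K * f).coeff.support.image κ with hΛ
  obtain ⟨L, hL⟩ := hvol (∑ k ∈ Λ, n1 f / ((2 : ℝ) ^ (k : ℝ) / A))
  have hbig : ∀ k ∈ Λ, ∀ x, ¬ big a f ((2 : ℝ) ^ (k : ℝ) / A) x L := by
    intro k hk x hb
    have ht : 0 < (2 : ℝ) ^ (k : ℝ) / A := by positivity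
    have h1 : n1 f / ((2 : ℝ) ^ (k : ℝ) / A) ≤ ∑ k ∈ Λ, n1 f / ((2 : ℝ) ^ (k : ℝ) / A) :=
      single_le_sum (f := fun k : ℤ => n1 f / ((2 : ℝ) ^ (k : ℝ) / A))
        (fun _ _ => div_nonneg (n1_nonneg f) (by positivity)) hk
    have h2 := h1.trans hL
    rw [div_le_iff₀ ht] at h2
    have h3 : bsum a f L x ≤ n1 f := sum_le_n1 f _
    rw [big, mul_comm] at hb
    linarith
  have h1 : nrm p (K * f) ≤ 2 ^ p * ∑ k ∈ Λ, (2 : ℝ) ^ ((k : ℝ) * p) *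
      ((K * f).coeff.support.filter fun x => (2 : ℝ) ^ (k : ℝ) < ‖(K * f).coeff x‖).card := by
    have e : ∑ k ∈ Λ, (2 : ℝ) ^ ((k : ℝ) * p) *
      ((K * f).coeff.support.filter fun x => (2 : ℝ) ^ (k : ℝ) < ‖(K * f).coeff x‖).card =
        ∑ x ∈ (K * f).coeff.support, ∑ k ∈ Λ,
          if (2 : ℝ) ^ (k : ℝ) < ‖(K * f).coeff x‖ then (2 : ℝ) ^ ((k : ℝ) * p) else 0 := by
      rw [sum_comm]
      refine sum_congr rfl fun k _ => ?_
      rw [← sum_filter, sum_const, nsmul_eq_mul, mul_comm]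
    rw [e, mul_sum, nrm]
    refine sum_le_sum fun x hx => ?_
    obtain ⟨u1, u2⟩ := hκ x hx
    calc ‖(K * f).coeff x‖ ^ p ≤ (2 * (2 : ℝ) ^ (κ x : ℝ)) ^ p :=
          Real.rpow_le_rpow (norm_nonneg _) u2 (by linarith)
      _ = 2 ^ p * (2 : ℝ) ^ ((κ x : ℝ) * p) := by
          rw [Real.mul_rpow (by norm_num) (by positivity), ← Real.rpow_mul (by norm_num)]
      _ ≤ _ := by
          refine mul_le_mul_of_nonneg_left ?_ (by positivity)
          refine le_trans (le_of_eq ?_) (single_le_sum (f := fun k : ℤ =>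
            if (2 : ℝ) ^ (k : ℝ) < ‖(K * f).coeff x‖ then (2 : ℝ) ^ ((k : ℝ) * p) else 0)
            (fun k _ => by positivity) (mem_image_of_mem κ hx))
          rw [if_pos u1]
  have h2 : ∀ k ∈ Λ, (2 : ℝ) ^ ((k : ℝ) * p) *
      ((K * f).coeff.support.filter fun x => (2 : ℝ) ^ (k : ℝ) < ‖(K * f).coeff x‖).card ≤
      4 * A ^ 2 * (∑ x ∈ f.coeff.support, if A * ‖f.coeff x‖ ≤ (2 : ℝ) ^ (k : ℝ) then
          ‖f.coeff x‖ ^ 2 * (2 : ℝ) ^ (-((k : ℝ) * (2 - p))) else 0) +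
        B * (H / A) * ((2 : ℝ) ^ ((k : ℝ) * p) * (Om a f ((2 : ℝ) ^ (k : ℝ) / A) L).card) := by
    intro k hk
    have hw := weak hmono h0 hE hA hAH (s := (2 : ℝ) ^ (k : ℝ)) (by positivity) (hbig k hk) hF hK
      ((K * f).coeff.support.filter fun x => (2 : ℝ) ^ (k : ℝ) < ‖(K * f).coeff x‖)
      (fun x hx => (mem_filter.1 hx).2)
    refine (mul_le_mul_of_nonneg_left hw (by positivity)).trans (le_of_eq ?_)
    have e1 : (2 : ℝ) ^ ((k : ℝ) * p) * (4 * A ^ 2 / ((2 : ℝ) ^ (k : ℝ)) ^ 2) =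
        4 * A ^ 2 * (2 : ℝ) ^ (-((k : ℝ) * (2 - p))) := by
      have : (2 : ℝ) ^ ((k : ℝ) * p) = (2 : ℝ) ^ (-((k : ℝ) * (2 - p))) * ((2 : ℝ) ^ (k : ℝ)) ^ 2 := by
        rw [← Real.rpow_natCast, ← Real.rpow_mul (by norm_num), ← Real.rpow_add (by norm_num)]
        congr 1; push_cast; ring
      rw [this]; field_simp
    rw [mul_add, ← mul_assoc, e1, sum_filter, mul_assoc (4 * A ^ 2), mul_sum]
    refine congrArg₂ (· + ·) ?_ (by ring)
    congr 1
    refine sum_congr rfl fun x _ => ?_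
    rw [mul_ite, mul_zero]
    have : ‖f.coeff x‖ ≤ (2 : ℝ) ^ (k : ℝ) / A ↔ A * ‖f.coeff x‖ ≤ (2 : ℝ) ^ (k : ℝ) := by
      rw [le_div_iff₀ hA, mul_comm]
    simp only [this, mul_comm]
  have h3 := h1.trans (mul_le_mul_of_nonneg_left (sum_le_sum h2) (by positivity))
  rw [sum_add_distrib, ← mul_sum, ← mul_sum, sum_comm] at h3
  have h4 : ∑ x ∈ f.coeff.support, ∑ k ∈ Λ, (if A * ‖f.coeff x‖ ≤ (2 : ℝ) ^ (k : ℝ) then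
          ‖f.coeff x‖ ^ 2 * (2 : ℝ) ^ (-((k : ℝ) * (2 - p))) else 0) ≤ C2 * A ^ (p - 2) * nrm p f := by
    rw [nrm, mul_sum]
    refine sum_le_sum fun x hx => ?_
    have hpos := norm_pos_iff.2 (Finsupp.mem_support_iff.1 hx)
    rw [← sum_filter, ← mul_sum]
    have key : ∑ k ∈ Λ.filter (fun k : ℤ => A * ‖f.coeff x‖ ≤ (2 : ℝ) ^ (k : ℝ)),
        (2 : ℝ) ^ (-((k : ℝ) * (2 - p))) ≤ C2 * (A * ‖f.coeff x‖) ^ (p - 2) := by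
      rcases (Λ.filter (fun k : ℤ => A * ‖f.coeff x‖ ≤ (2 : ℝ) ^ (k : ℝ))).eq_empty_or_nonempty with he | hne
      · rw [he, sum_empty]; positivity
      · refine (geoZ' (q := 2 - p) (by linarith) _ (min' _ hne) (fun k hk => min'_le _ _ hk)).trans ?_
        refine mul_le_mul_of_nonneg_left ?_ hC20.le
        have hm := (mem_filter.1 (min'_mem _ hne)).2
        rw [← mul_neg, Real.rpow_mul (by norm_num), neg_sub]
        exact Real.rpow_le_rpow_of_nonpos (by positivity) hm (by linarith)
    refine (mul_le_mul_of_nonneg_left key (by positivity)).trans (le_of_eq ?_)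
    rw [Real.mul_rpow hA.le hpos.le]
    have : ‖f.coeff x‖ ^ p = ‖f.coeff x‖ ^ 2 * ‖f.coeff x‖ ^ (p - 2) := by
      rw [← Real.rpow_natCast, ← Real.rpow_add hpos]; congr 1; push_cast; ring
    rw [this]; ring
  have h5 := doob (f := f) (L := L) hmono hp hA Λ
  rw [← hC1, Real.mul_rpow hA.le hC10.le] at h5
  have hn := nrm_nonneg p f
  have eA : A ^ p = A * A ^ (p - 1) := by
    rw [Real.rpow_sub_one hA.ne', mul_div_cancel₀ _ hA.ne']
  have eA2 : A ^ 2 * A ^ (p - 2) = A * A ^ (p - 1) := by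
    rw [← eA, ← Real.rpow_natCast, ← Real.rpow_add hA]; congr 1; push_cast; ring
  have h6 : 4 * A ^ 2 * (C2 * A ^ (p - 2) * nrm p f) ≤ 4 * C2 * (H * A ^ (p - 1)) * nrm p f := by
    have : 4 * A ^ 2 * (C2 * A ^ (p - 2) * nrm p f) = 4 * C2 * (A * A ^ (p - 1)) * nrm p f := by
      rw [← eA2]; ring
    rw [this]
    gcongr
  have h7 : B * (H / A) * (A ^ p * C1 ^ p * nrm p f) = B * C1 ^ p * (H * A ^ (p - 1)) * nrm p f := by
    rw [eA]; field_simp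
  refine h3.trans ?_
  have h8 := mul_le_mul_of_nonneg_left h4 (show 0 ≤ 4 * A ^ 2 by positivity)
  have h9 := mul_le_mul_of_nonneg_left h5 (show 0 ≤ B * (H / A) by positivity)
  rw [h7] at h9
  have e : 2 ^ p * (4 * C2 + B * C1 ^ p) * H * A ^ (p - 1) * nrm p f = 2 ^ p *
    (4 * C2 * (H * A ^ (p - 1)) * nrm p f + B * C1 ^ p * (H * A ^ (p - 1)) * nrm p f) := by ring
  rw [e]
  refine mul_le_mul_of_nonneg_left ?_ (by positivity)
  linarith

end

end FV

/-! ### Duality and the Calderón–Zygmund theorem -/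

namespace FV

variable {m : ℕ}

lemma XX_coeff (v x : Fin m → ℤ) [Decidable (v = x)] : (XX v : RR (Fin m → ℤ)).coeff x = if v = x then 1 else 0 := by
  classical
  simp only [XX, AddMonoidAlgebra.coeff_single, Finsupp.single_apply]

/-- Duality for convolution operators: since convolution is commutative, no adjoint kernel is needed. -/
lemma dual {p q B : ℝ} (hpq : p.HolderConjugate q) (hB : 0 ≤ B) (K : RR (Fin m → ℤ))
    (h : ∀ g, nrm q (K * g) ≤ B * nrm q g) (f : RR (Fin m → ℤ)) :
    nrm p (K * f) ≤ B ^ (p - 1) * nrm p f := by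
  classical
  have hp := hpq.lt
  have hq := hpq.symm.lt
  set X := nrm p (K * f) with hX
  have hX0 : 0 ≤ X := nrm_nonneg _ _
  set S := (K * f).coeff.support with hS
  set φ : (Fin m → ℤ) → ℂ := fun x => (starRingEnd ℂ) ((K * f).coeff x) * ((‖(K * f).coeff x‖ ^ (p - 2) : ℝ) : ℂ) with hφ
  set g : RR (Fin m → ℤ) := ∑ x ∈ S, φ x • XX (-x) with hg
  have hgc : ∀ y, g.coeff y = if -y ∈ S then φ (-y) else 0 := by
    intro y
    rw [hg, sum_coeff]
    simp only [smul_coeff, XX_coeff]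
    have : ∀ x, (-x = y) ↔ (x = -y) := fun x => neg_eq_iff_eq_neg
    simp only [mul_ite, mul_one, mul_zero, this]
    rw [sum_ite_eq']
  have hφn : ∀ x ∈ S, ‖φ x‖ ^ q = ‖(K * f).coeff x‖ ^ p := by
    intro x hx
    have hpos := norm_pos_iff.2 (Finsupp.mem_support_iff.1 hx)
    rw [hφ]
    simp only
    rw [norm_mul, RCLike.norm_conj, Complex.norm_real, Real.norm_of_nonneg (by positivity),
      ← Real.rpow_one_add' hpos.le (by linarith), ← Real.rpow_mul hpos.le]
    congr 1
    have := hpq.sub_one_mul_conj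
    linarith
  have hgsupp : g.coeff.support ⊆ S.image fun x => -x := by
    intro y hy
    rw [Finsupp.mem_support_iff, hgc] at hy
    by_contra hc
    exact hy (if_neg fun h => hc (mem_image.2 ⟨-y, h, neg_neg y⟩))
  have hng : nrm q g ≤ X := by
    rw [hX, nrm, nrm]
    refine (sum_le_sum_of_subset_of_nonneg (f := fun x => ‖g.coeff x‖ ^ q) hgsupp fun _ _ _ => by positivity).trans ?_
    rw [sum_image (fun x _ y _ h => neg_injective h)]
    refine sum_le_sum fun x hx => le_of_eq ?_
    rw [hgc, neg_neg, if_pos hx, hφn x hx]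
  have e1 : (K * f * g).coeff 0 = (X : ℂ) := by
    rw [mul_coeff_eq _ _ _ hgsupp, sum_image (fun x _ y _ h => neg_injective h), hX, nrm]
    push_cast
    refine sum_congr rfl fun x hx => ?_
    rw [hgc, neg_neg, if_pos hx, sub_neg_eq_add, zero_add]
    simp only [hφ]
    have hpos := norm_pos_iff.2 (Finsupp.mem_support_iff.1 hx)
    rw [mul_right_comm, mul_comm (starRingEnd ℂ _), Complex.mul_conj, Complex.normSq_eq_norm_sq]
    rw [← Complex.ofReal_mul]
    congr 1
    rw [← Real.rpow_natCast, ← Real.rpow_add hpos]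
    congr 1; push_cast; ring
  have e2 : (K * f * g).coeff 0 = ∑ y ∈ f.coeff.support, f.coeff y * (K * g).coeff (-y) := by
    rw [show K * f * g = K * g * f by ring, mul_coeff_eq _ _ _ Subset.rfl]
    exact sum_congr rfl fun y _ => by rw [zero_sub]
  have e3 : X ≤ ∑ y ∈ f.coeff.support, ‖f.coeff y‖ * ‖(K * g).coeff (-y)‖ := by
    have : X = ‖(K * f * g).coeff 0‖ := by rw [e1, Complex.norm_real, Real.norm_of_nonneg hX0]
    rw [this, e2]
    refine (norm_sum_le _ _).trans (le_of_eq (sum_congr rfl fun y _ => norm_mul _ _))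
  have e4 := Real.inner_le_Lp_mul_Lq_of_nonneg f.coeff.support hpq (f := fun y => ‖f.coeff y‖)
    (g := fun y => ‖(K * g).coeff (-y)‖) (fun _ _ => norm_nonneg _) (fun _ _ => norm_nonneg _)
  have e5 : ∑ y ∈ f.coeff.support, ‖(K * g).coeff (-y)‖ ^ q ≤ B * X := by
    rw [← sum_image (f := fun y => ‖(K * g).coeff y‖ ^ q) (g := fun y => -y) (fun x _ y _ h => neg_injective h)]
    exact (sum_le_nrm (by linarith) _ _).trans ((h g).trans (mul_le_mul_of_nonneg_left hng hB))
  have e6 : X ≤ (nrm p f) ^ (1 / p) * (B * X) ^ (1 / q) := by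
    refine (e3.trans e4).trans ?_
    refine mul_le_mul_of_nonneg_left ?_ (Real.rpow_nonneg (nrm_nonneg p f) _)
    exact Real.rpow_le_rpow (sum_nonneg fun _ _ => by positivity) e5 (by positivity)
  rcases hX0.eq_or_lt with h0 | hpos
  · rw [← h0]; exact mul_nonneg (by positivity) (nrm_nonneg p f)
  · have e7 : X ^ (1 / p) ≤ (nrm p f) ^ (1 / p) * B ^ (1 / q) := by
      have : X = X ^ (1 / p) * X ^ (1 / q) := by
        rw [← Real.rpow_add hpos, one_div, one_div, hpq.inv_add_inv_eq_one, Real.rpow_one]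
      rw [Real.mul_rpow hB hX0, ← mul_assoc] at e6
      nth_rewrite 1 [this] at e6
      exact le_of_mul_le_mul_right e6 (by positivity)
    have e8 := Real.rpow_le_rpow (by positivity) e7 (show 0 ≤ p by linarith)
    have hp0 : p ≠ 0 := by linarith
    rw [Real.mul_rpow (Real.rpow_nonneg (nrm_nonneg p f) _) (by positivity), ← Real.rpow_mul hX0,
      ← Real.rpow_mul (nrm_nonneg p f), ← Real.rpow_mul hB, one_div_mul_cancel hp0, Real.rpow_one, Real.rpow_one,
      mul_comm] at e8
    have e9 : 1 / q * p = p - 1 := by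
      have := hpq.inv_add_inv_eq_one
      rw [one_div]
      have : q⁻¹ = 1 - p⁻¹ := by linarith
      rw [this, sub_mul, inv_mul_cancel₀ hp0, one_mul]
    rwa [e9] at e8

/-- Calderón–Zygmund theorem for convolution operators on `ℤ^m`, with respect to the dyadic boxes of
sides `2 ^ a k i`, with a gain of a power of the `ℓ²` bound. -/
theorem cz {a : ℕ → Fin m → ℕ} {E : ℕ} (hmono : ∀ i, Monotone fun k => a k i) (h0 : ∀ i, a 0 i = 0)
    (hE : ∀ k i, a (k + 1) i ≤ a k i + E) (hvol : ∀ B : ℝ, ∃ L, B ≤ vol a L)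
    {p : ℝ} (hp : 1 < p) :
    ∃ C κ η : ℝ, 0 < C ∧ 0 < κ ∧ 0 < η ∧ ∀ (K f : RR (Fin m → ℤ)) (A H : ℝ), 0 < A → A ≤ H →
      (∀ ξ : Fin m → ℝ, (∀ i, |ξ i| ≤ 1 / 2) → ‖FT ξ K‖ ≤ A) → Horm a K H →
      nrm p (K * f) ≤ C * H ^ κ * A ^ η * nrm p f := by
  rcases lt_trichotomy p 2 with hp2 | hp2 | hp2
  · obtain ⟨C, hC, h⟩ := cz_lt_two hmono h0 hE hvol hp hp2
    refine ⟨C, 1, p - 1, hC, one_pos, by linarith, fun K f A H hA hAH hF hK => ?_⟩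
    rw [Real.rpow_one]
    exact h K f A H hA hAH hF hK
  · subst hp2
    refine ⟨1, 1, 1, one_pos, one_pos, one_pos, fun K f A H hA hAH hF hK => ?_⟩
    have := l2_bound K f A hF
    simp only [nrm, Real.rpow_one, one_mul]
    have e : ∀ x : ℝ, x ^ (2 : ℝ) = x ^ 2 := fun x => by rw [← Real.rpow_natCast]; norm_num
    simp only [e]
    refine this.trans (mul_le_mul_of_nonneg_right ?_ (sum_nonneg fun _ _ => by positivity))
    rw [sq]
    exact mul_le_mul_of_nonneg_right hAH hA.le
  · set q := p / (p - 1) with hq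
    have hpq : p.HolderConjugate q := Real.HolderConjugate.conjExponent hp
    have hq1 : q - 1 = 1 / (p - 1) := by
      have : p - 1 ≠ 0 := by linarith
      rw [hq]; field_simp; ring
    have hq2 : q < 2 := by
      rw [hq, div_lt_iff₀ (by linarith)]; linarith
    obtain ⟨C, hC, h⟩ := cz_lt_two hmono h0 hE hvol hpq.symm.lt hq2
    refine ⟨C ^ (p - 1), p - 1, 1, by positivity, by linarith, one_pos, fun K f A H hA hAH hF hK => ?_⟩
    have hH := hA.trans_le hAH
    have := dual hpq (by positivity) K (fun g => h K g A H hA hAH hF hK) f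
    rw [Real.mul_rpow (by positivity) (by positivity), Real.mul_rpow hC.le hH.le, ← Real.rpow_mul hA.le, hq1,
      one_div_mul_cancel (by linarith)] at this
    exact this

end FV

/-! ### Signed sums of kernels along lacunary sets -/

namespace FV

variable {m : ℕ}

lemma lac_up {q : ℝ} (hq : 1 < q) (g : ℕ → ℝ) (D : Finset ℕ)
    (h : ∀ N₁ ∈ D, ∀ N₂ ∈ D, N₁ < N₂ → q * g N₁ ≤ g N₂) :
    ∀ B : ℝ, 0 ≤ B → (∀ N ∈ D, g N ≤ B) → ∑ N ∈ D, g N ≤ B * (q / (q - 1)) := by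
  have hq1 : 0 < q - 1 := by linarith
  induction D using Finset.induction_on_max with
  | empty => intro B hB _; rw [sum_empty]; positivity
  | insert a s has ih =>
    intro B hB hD
    have hn : a ∉ s := fun h => lt_irrefl _ (has a h)
    rw [sum_insert hn]
    have h1 := ih (fun N₁ h₁ N₂ h₂ => h N₁ (mem_insert_of_mem h₁) N₂ (mem_insert_of_mem h₂)) (B / q)
      (by positivity) (fun N hN => by
        rw [le_div_iff₀ (by linarith), mul_comm]
        exact (h N (mem_insert_of_mem hN) a (mem_insert_self _ _) (has N hN)).trans (hD a (mem_insert_self _ _)))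
    have h2 := hD a (mem_insert_self _ _)
    have e : B * (q / (q - 1)) = B + B / q * (q / (q - 1)) := by field_simp; ring
    linarith

lemma lac_down {q : ℝ} (hq : 1 < q) (g : ℕ → ℝ) (D : Finset ℕ)
    (h : ∀ N₁ ∈ D, ∀ N₂ ∈ D, N₁ < N₂ → q * g N₂ ≤ g N₁) :
    ∀ B : ℝ, 0 ≤ B → (∀ N ∈ D, g N ≤ B) → ∑ N ∈ D, g N ≤ B * (q / (q - 1)) := by
  have hq1 : 0 < q - 1 := by linarith
  induction D using Finset.induction_on_min with
  | empty => intro B hB _; rw [sum_empty]; positivity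
  | insert a s has ih =>
    intro B hB hD
    have hn : a ∉ s := fun h => lt_irrefl _ (has a h)
    rw [sum_insert hn]
    have h1 := ih (fun N₁ h₁ N₂ h₂ => h N₁ (mem_insert_of_mem h₁) N₂ (mem_insert_of_mem h₂)) (B / q)
      (by positivity) (fun N hN => by
        rw [le_div_iff₀ (by linarith), mul_comm]
        exact (h a (mem_insert_self _ _) N (mem_insert_of_mem hN) (has N hN)).trans (hD a (mem_insert_self _ _)))
    have h2 := hD a (mem_insert_self _ _)
    have e : B * (q / (q - 1)) = B + B / q * (q / (q - 1)) := by field_simp; ring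
    linarith

/-- A two-sided geometric sum along a lacunary set. -/
lemma lac_sum {q : ℝ} (hq : 1 < q) (g : ℕ → ℝ) (D : Finset ℕ)
    (h : ∀ N₁ ∈ D, ∀ N₂ ∈ D, N₁ < N₂ → q * g N₁ ≤ g N₂) :
    ∑ N ∈ D, min (g N) (g N)⁻¹ ≤ 2 * (q / (q - 1)) := by
  classical
  rw [← sum_filter_add_sum_filter_not D (fun N => g N ≤ 1)]
  have h1 : ∑ N ∈ D.filter (fun N => g N ≤ 1), min (g N) (g N)⁻¹ ≤ 1 * (q / (q - 1)) :=
    (sum_le_sum fun N _ => min_le_left _ _).trans (lac_up hq g _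
      (fun N₁ h₁ N₂ h₂ => h N₁ (mem_filter.1 h₁).1 N₂ (mem_filter.1 h₂).1) 1 zero_le_one
      (fun N hN => (mem_filter.1 hN).2))
  have h2 : ∑ N ∈ D.filter (fun N => ¬ g N ≤ 1), min (g N) (g N)⁻¹ ≤ 1 * (q / (q - 1)) :=
    (sum_le_sum fun N _ => min_le_right _ _).trans (lac_down hq (fun N => (g N)⁻¹) _
      (fun N₁ h₁ N₂ h₂ hl => by
        have a1 := not_le.1 (mem_filter.1 h₁).2
        have a2 := h N₁ (mem_filter.1 h₁).1 N₂ (mem_filter.1 h₂).1 hl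
        have a3 : 0 < g N₂ := lt_of_lt_of_le (by nlinarith) a2
        rw [← div_eq_mul_inv, div_le_iff₀ a3, inv_mul_eq_div, le_div_iff₀ (by linarith)]
        exact a2) 1 zero_le_one
      (fun N hN => inv_le_one_of_one_le₀ (not_le.1 (mem_filter.1 hN).2).le))
  linarith

/-- Lacunarity of a set of positive integers. -/
def Lac (lam : ℝ) (D : Finset ℕ) : Prop :=
  (∀ N ∈ D, 1 ≤ N) ∧ ∀ N₁ ∈ D, ∀ N₂ ∈ D, N₁ < N₂ → lam * (N₁ : ℝ) ≤ (N₂ : ℝ)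

lemma Lac.rpow {lam : ℝ} (hlam : 1 < lam) {D : Finset ℕ} (h : Lac lam D) {β : ℝ} (hβ : 0 < β)
    {N₁ N₂ : ℕ} (h₁ : N₁ ∈ D) (h₂ : N₂ ∈ D) (hl : N₁ < N₂) : lam ^ β * (N₁ : ℝ) ^ β ≤ (N₂ : ℝ) ^ β := by
  rw [← Real.mul_rpow (by linarith) (by positivity)]
  exact Real.rpow_le_rpow (by positivity) (h.2 _ h₁ _ h₂ hl) hβ.le

/-- The exponents of the box sides: the sides at level `k` are comparable to `2 ^ (k c_i)`. -/
def ax (c : Fin m → ℝ) (k : ℕ) (i : Fin m) : ℕ := ⌊(k : ℝ) * c i⌋₊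

lemma ax_mono (c : Fin m → ℝ) (hpos : ∀ i, 0 < c i) (i : Fin m) : Monotone fun k => ax c k i := by
  intro k l h
  have := (hpos i).le
  exact Nat.floor_mono (by gcongr)

lemma ax_zero (c : Fin m → ℝ) (i : Fin m) : ax c 0 i = 0 := by simp [ax]

lemma ax_succ (c : Fin m → ℝ) (hpos : ∀ i, 0 < c i) {c₁ : ℝ} (hc₁ : ∀ i, c i ≤ c₁) (k : ℕ) (i : Fin m) :
    ax c (k + 1) i ≤ ax c k i + (⌊c₁⌋₊ + 1) := by
  unfold ax
  have h1 := Nat.lt_floor_add_one ((k : ℝ) * c i)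
  have h2 := Nat.lt_floor_add_one c₁
  refine Nat.le_of_lt_succ ((Nat.floor_lt (by have := hpos i; positivity)).2 ?_)
  push_cast
  have := hc₁ i
  linarith

lemma ax_vol (hm : 0 < m) (c : Fin m → ℝ) (hpos : ∀ i, 0 < c i) (B : ℝ) : ∃ L, B ≤ vol (ax c) L := by
  set i : Fin m := ⟨0, hm⟩
  obtain ⟨L, hL⟩ := exists_nat_ge ((|B| + 1) / c i)
  refine ⟨L, ?_⟩
  rw [div_le_iff₀ (hpos i)] at hL
  have h1 : (2 : ℕ) ^ ax c L i ≤ vol (ax c) L := by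
    rw [vol]
    exact single_le_prod' (f := fun i => 2 ^ ax c L i) (fun _ _ => Nat.one_le_two_pow) (mem_univ i)
  have h2 : (ax c L i : ℝ) ≤ vol (ax c) L := by
    exact_mod_cast (Nat.lt_two_pow_self).le.trans h1
  have h3 := Nat.lt_floor_add_one ((L : ℝ) * c i)
  have h4 := le_abs_self B
  change (L : ℝ) * c i < (ax c L i : ℝ) + 1 at h3
  linarith

lemma ax_le (c : Fin m → ℝ) (hpos : ∀ i, 0 < c i) (k : ℕ) (i : Fin m) : (2 : ℝ) ^ ax c k i ≤ ((2 : ℝ) ^ k) ^ c i := by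
  rw [← Real.rpow_natCast, ← Real.rpow_natCast, ← Real.rpow_mul (by norm_num)]
  exact Real.rpow_le_rpow_of_exponent_le (by norm_num) (Nat.floor_le (by have := hpos i; positivity))

lemma le_ax (c : Fin m → ℝ) (k : ℕ) (i : Fin m) : ((2 : ℝ) ^ k) ^ c i ≤ 2 * (2 : ℝ) ^ ax c k i := by
  rw [← Real.rpow_natCast, ← Real.rpow_mul (by norm_num), ← pow_succ', ← Real.rpow_natCast]
  refine Real.rpow_le_rpow_of_exponent_le (by norm_num) ?_
  push_cast
  exact (Nat.lt_floor_add_one _).le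

/-- Markov's inequality for the mass of `K` outside an anisotropic box. -/
lemma tail_le (K : RR (Fin m → ℤ)) (b : Fin m → ℕ) (Y : Finset (Fin m → ℤ))
    (hY : ∀ y ∈ Y, ∃ i, (2 : ℤ) ^ b i ≤ |y i|) :
    ∑ y ∈ Y, ‖K.coeff y‖ ≤ ∑ i, mom i K / 2 ^ b i := by
  have h1 : ∀ y ∈ Y, ‖K.coeff y‖ ≤ ∑ i, |(y i : ℝ)| * ‖K.coeff y‖ / 2 ^ b i := by
    intro y hy
    obtain ⟨i, hi⟩ := hY y hy
    refine le_trans ?_ (single_le_sum (f := fun i => |(y i : ℝ)| * ‖K.coeff y‖ / 2 ^ b i)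
      (fun _ _ => by positivity) (mem_univ i))
    have : (2 : ℝ) ^ b i ≤ |(y i : ℝ)| := by exact_mod_cast hi
    rw [le_div_iff₀ (by positivity), mul_comm]
    exact mul_le_mul_of_nonneg_right this (norm_nonneg _)
  refine (sum_le_sum h1).trans ?_
  rw [sum_comm]
  refine sum_le_sum fun i _ => ?_
  rw [← sum_div]
  exact div_le_div_of_nonneg_right (sum_le_nw (fun _ => abs_nonneg _) K Y) (by positivity)

/-- The estimates on a kernel living between the scales `s = N / 2 ^ j` (smoothness) and `N` (decay). -/
structure Ker (c : Fin m → ℝ) (B : ℝ) (j N : ℕ) (K : RR (Fin m → ℤ)) : Prop where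
  n1 : n1 K ≤ B
  shift : ∀ d : Fin m → ℤ, FV.n1 ((XX d - 1) * K) ≤ B * ∑ i, |(d i : ℝ)| * ((N : ℝ) / 2 ^ j) ^ (-c i)
  mom : ∀ i, mom i K ≤ B * (N : ℝ) ^ c i

/-- One kernel in the Hörmander condition at level `k`: smoothness at the scale `N / 2 ^ j` is used below that scale, the first
moments when `2 ^ k ≥ N` and the `ℓ¹` norm in between, all weakened to the power `β`. -/
lemma horm_term (c : Fin m → ℝ) (hpos : ∀ i, 0 < c i) {B β : ℝ} (hB : 0 < B) (hβ : 0 < β) (hβc : ∀ i, β ≤ c i)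
    {j N : ℕ} (hN : 1 ≤ N) {K : RR (Fin m → ℤ)} (hK : Ker c B j N K) (k : ℕ) (d : Fin m → ℤ)
    (S : Finset (Fin m → ℤ)) (hd : ∀ i, |d i| < 2 ^ ax c k i) (hS : ∀ x ∈ S, ∃ i, 2 * 2 ^ ax c k i ≤ |x i|) :
    ∑ x ∈ S, ‖K.coeff (x - d) - K.coeff x‖ ≤ 4 * B * (m + 1) * (2 ^ j) ^ β *
      min (((N : ℝ) / 2 ^ k) ^ β) (((N : ℝ) / 2 ^ k) ^ β)⁻¹ := by
  have hN0 : (0 : ℝ) < N := by exact_mod_cast hN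
  have h2j : (1 : ℝ) ≤ (2 ^ j) ^ β := Real.one_le_rpow (one_le_pow₀ (by norm_num)) hβ.le
  have hm0 : (0 : ℝ) ≤ m := by positivity
  set g := ((N : ℝ) / 2 ^ k) ^ β with hg
  have hg0 : 0 < g := by positivity
  have himg : ∑ x ∈ S, ‖K.coeff (x - d)‖ = ∑ y ∈ S.image (fun x => x - d), ‖K.coeff y‖ := by
    rw [sum_image (fun x _ y _ h => sub_left_injective h)]
  have htri : ∑ x ∈ S, ‖K.coeff (x - d) - K.coeff x‖ ≤ ∑ x ∈ S, ‖K.coeff (x - d)‖ + ∑ x ∈ S, ‖K.coeff x‖ := by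
    rw [← sum_add_distrib]
    exact sum_le_sum fun x _ => norm_sub_le _ _
  have b1 : ∑ x ∈ S, ‖K.coeff (x - d) - K.coeff x‖ ≤ 2 * B := by
    have h1 := sum_le_n1 K S
    have h2 := sum_le_n1 K (S.image fun x => x - d)
    have := hK.n1
    rw [← himg] at h2
    linarith
  have b2 : ∑ x ∈ S, ‖K.coeff (x - d) - K.coeff x‖ ≤ B * ∑ i, ((2 : ℝ) ^ k) ^ c i * ((N : ℝ) / 2 ^ j) ^ (-c i) := by
    have h1 : ∑ x ∈ S, ‖K.coeff (x - d) - K.coeff x‖ ≤ n1 ((XX d - 1) * K) := by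
      refine le_trans (le_of_eq (sum_congr rfl fun x _ => ?_)) (sum_le_n1 _ S)
      rw [sub_mul, one_mul, sub_coeff, XX_mul_coeff]
    refine h1.trans ((hK.shift d).trans (mul_le_mul_of_nonneg_left (sum_le_sum fun i _ => ?_) hB.le))
    refine mul_le_mul_of_nonneg_right ?_ (by positivity)
    have : |(d i : ℝ)| ≤ 2 ^ ax c k i := by exact_mod_cast (hd i).le
    exact this.trans (ax_le c hpos k i)
  have b3 : ∑ x ∈ S, ‖K.coeff (x - d) - K.coeff x‖ ≤ 4 * B * ∑ i, ((N : ℝ) / 2 ^ k) ^ c i := by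
    have h1 := tail_le K (ax c k) S (fun x hx => by
      obtain ⟨i, hi⟩ := hS x hx
      have : (0 : ℤ) < 2 ^ ax c k i := by positivity
      exact ⟨i, by linarith⟩)
    have h2 := tail_le K (ax c k) (S.image fun x => x - d) (fun x hx => by
      obtain ⟨y, hy, rfl⟩ := mem_image.1 hx
      obtain ⟨i, hi⟩ := hS y hy
      refine ⟨i, ?_⟩
      have a1 := hd i
      have a2 := abs_sub_abs_le_abs_sub (y i) (d i)
      rw [Pi.sub_apply]
      linarith)
    rw [← himg] at h2
    have h3 : ∑ i, mom i K / 2 ^ ax c k i ≤ 2 * B * ∑ i, ((N : ℝ) / 2 ^ k) ^ c i := by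
      rw [mul_sum]
      refine sum_le_sum fun i _ => ?_
      rw [div_le_iff₀ (by positivity), Real.div_rpow hN0.le (by positivity), mul_assoc (2 * B), div_mul_eq_mul_div,
        mul_div_assoc']
      rw [le_div_iff₀ (by positivity)]
      calc mom i K * ((2 : ℝ) ^ k) ^ c i ≤ (B * (N : ℝ) ^ c i) * (2 * (2 : ℝ) ^ ax c k i) :=
            mul_le_mul (hK.mom i) (le_ax c k i) (by positivity) (by positivity)
        _ = _ := by ring
    linarith
  rcases le_total ((N : ℝ)) (2 ^ k) with hc | hc
  · have hg1 : g ≤ 1 := Real.rpow_le_one (by positivity) ((div_le_one (by positivity)).2 hc) hβ.le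
    rw [min_eq_left (hg1.trans ((one_le_inv₀ hg0).2 hg1))]
    have h1 : ∑ i, ((N : ℝ) / 2 ^ k) ^ c i ≤ m * g := by
      have : ∑ i : Fin m, ((N : ℝ) / 2 ^ k) ^ c i ≤ ∑ _i : Fin m, g :=
        sum_le_sum fun i _ => Real.rpow_le_rpow_of_exponent_ge (by positivity)
          ((div_le_one (by positivity)).2 hc) (hβc i)
      simpa using this
    have h2 := b3.trans (mul_le_mul_of_nonneg_left h1 (by positivity))
    refine h2.trans ?_
    calc 4 * B * (m * g) = 4 * B * m * 1 * g := by ring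
      _ ≤ 4 * B * (m + 1) * (2 ^ j) ^ β * g := by gcongr; linarith
  · have hg1 : 1 ≤ g := Real.one_le_rpow ((one_le_div (by positivity)).2 hc) hβ.le
    rw [min_eq_right ((inv_le_one_of_one_le₀ hg1).trans hg1)]
    have e : ((2 : ℝ) ^ j) ^ β * g⁻¹ = (2 ^ k / ((N : ℝ) / 2 ^ j)) ^ β := by
      rw [hg, ← Real.inv_rpow (by positivity), ← Real.mul_rpow (by positivity) (by positivity)]
      congr 1
      field_simp
    rw [mul_assoc, e]
    have hs0 : 0 < (N : ℝ) / 2 ^ j := by positivity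
    rcases le_total ((2 : ℝ) ^ k) ((N : ℝ) / 2 ^ j) with hc' | hc'
    · refine b2.trans ?_
      have : ∑ i : Fin m, ((2 : ℝ) ^ k) ^ c i * ((N : ℝ) / 2 ^ j) ^ (-c i) ≤
          ∑ _i : Fin m, (2 ^ k / ((N : ℝ) / 2 ^ j)) ^ β := by
        refine sum_le_sum fun i _ => ?_
        rw [Real.rpow_neg hs0.le, ← Real.inv_rpow hs0.le, ← Real.mul_rpow (by positivity) (by positivity),
          ← div_eq_mul_inv]
        exact Real.rpow_le_rpow_of_exponent_ge (by positivity) ((div_le_one hs0).2 hc') (hβc i)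
      rw [sum_const, card_univ, Fintype.card_fin, nsmul_eq_mul] at this
      refine (mul_le_mul_of_nonneg_left this hB.le).trans ?_
      rw [← mul_assoc]
      refine mul_le_mul_of_nonneg_right ?_ (by positivity)
      nlinarith
    · have : 1 ≤ (2 ^ k / ((N : ℝ) / 2 ^ j)) ^ β := Real.one_le_rpow ((one_le_div hs0).2 hc') hβ.le
      refine b1.trans ?_
      calc 2 * B ≤ 4 * B * (m + 1) * 1 := by nlinarith
        _ ≤ _ := by gcongr

/-- The Hörmander condition for signed sums over a lacunary set. -/
lemma horm_sum (c : Fin m → ℝ) (hpos : ∀ i, 0 < c i) {B β lam : ℝ} (hB : 0 < B) (hβ : 0 < β)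
    (hβc : ∀ i, β ≤ c i) (hlam : 1 < lam) {j : ℕ} {D : Finset ℕ} (hD : Lac lam D) (K : ℕ → RR (Fin m → ℤ))
    (hK : ∀ N ∈ D, Ker c B j N (K N)) (ε : ℕ → ℂ) (hε : ∀ N, ‖ε N‖ ≤ 1) :
    Horm (ax c) (∑ N ∈ D, ε N • K N)
      (4 * B * (m + 1) * (2 ^ j) ^ β * (2 * (lam ^ β / (lam ^ β - 1)))) := by
  intro k d S hd hS
  have h1 : ∀ x ∈ S, ‖(∑ N ∈ D, ε N • K N).coeff (x - d) - (∑ N ∈ D, ε N • K N).coeff x‖ ≤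
      ∑ N ∈ D, ‖(K N).coeff (x - d) - (K N).coeff x‖ := by
    intro x _
    rw [sum_coeff, sum_coeff, ← sum_sub_distrib]
    refine (norm_sum_le _ _).trans (sum_le_sum fun N _ => ?_)
    rw [smul_coeff, smul_coeff, ← mul_sub, norm_mul]
    exact mul_le_of_le_one_left (norm_nonneg _) (hε N)
  refine (sum_le_sum h1).trans ?_
  rw [sum_comm]
  refine (sum_le_sum fun N hN => horm_term c hpos hB hβ hβc (hD.1 N hN) (hK N hN) k d S hd hS).trans ?_
  rw [← mul_sum]
  refine mul_le_mul_of_nonneg_left ?_ (by positivity)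
  refine lac_sum (Real.one_lt_rpow hlam hβ) (fun N => ((N : ℝ) / 2 ^ k) ^ β) D fun N₁ h₁ N₂ h₂ hl => ?_
  rw [Real.div_rpow (by positivity) (by positivity), Real.div_rpow (by positivity) (by positivity), mul_div_assoc']
  exact div_le_div_of_nonneg_right (hD.rpow hlam hβ h₁ h₂ hl) (by positivity)

/-- The anisotropic size of a frequency at scale `s`. -/
def GG (c : Fin m → ℝ) (s : ℝ) (ξ : Fin m → ℝ) : ℝ := ∑ i, s ^ c i * |ξ i|

/-- The multiplier bound for signed sums over a lacunary set. -/
lemma four_sum (c : Fin m → ℝ) {A c₀ lam : ℝ} (hA : 0 < A) (hc₀ : 0 < c₀)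
    (hc : ∀ i, c₀ ≤ c i) (hlam : 1 < lam) {j : ℕ} {D : Finset ℕ} (hD : Lac lam D) (K : ℕ → RR (Fin m → ℤ))
    (ξ : Fin m → ℝ)
    (hK : ∀ N ∈ D, ‖FT ξ (K N)‖ ≤ A * (min (GG c ((N : ℝ) / 2 ^ j) ξ) (GG c ((N : ℝ) / 2 ^ j) ξ)⁻¹ + (N : ℝ)⁻¹))
    (ε : ℕ → ℂ) (hε : ∀ N, ‖ε N‖ ≤ 1) :
    ‖FT ξ (∑ N ∈ D, ε N • K N)‖ ≤
      A * (2 * (lam ^ c₀ / (lam ^ c₀ - 1)) + 2 * (lam / (lam - 1))) := by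
  rw [map_sum]
  refine (norm_sum_le _ _).trans ?_
  have h1 : ∀ N ∈ D, ‖FT ξ (ε N • K N)‖ ≤
      A * (min (GG c ((N : ℝ) / 2 ^ j) ξ) (GG c ((N : ℝ) / 2 ^ j) ξ)⁻¹ + min (N : ℝ) (N : ℝ)⁻¹) := by
    intro N hN
    rw [map_smul, smul_eq_mul, norm_mul]
    refine (mul_le_of_le_one_left (norm_nonneg _) (hε N)).trans ?_
    have h1 : (1 : ℝ) ≤ N := by exact_mod_cast hD.1 N hN
    rw [min_eq_right ((inv_le_one_of_one_le₀ h1).trans h1)]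
    exact hK N hN
  refine (sum_le_sum h1).trans ?_
  rw [← mul_sum, sum_add_distrib]
  refine mul_le_mul_of_nonneg_left (add_le_add ?_ ?_) hA.le
  · refine lac_sum (Real.one_lt_rpow hlam hc₀) (fun N => GG c ((N : ℝ) / 2 ^ j) ξ) D fun N₁ h₁ N₂ h₂ hl => ?_
    simp only [GG]
    rw [mul_sum]
    refine sum_le_sum fun i _ => ?_
    rw [← mul_assoc]
    refine mul_le_mul_of_nonneg_right ?_ (abs_nonneg _)
    rw [Real.div_rpow (by positivity) (by positivity), Real.div_rpow (by positivity) (by positivity), mul_div_assoc']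
    refine div_le_div_of_nonneg_right ?_ (by positivity)
    refine le_trans ?_ (hD.rpow hlam (hc₀.trans_le (hc i)) h₁ h₂ hl)
    exact mul_le_mul_of_nonneg_right (Real.rpow_le_rpow_of_exponent_le hlam.le (hc i)) (by positivity)
  · exact lac_sum hlam (fun N => (N : ℝ)) D fun N₁ h₁ N₂ h₂ hl => hD.2 _ h₁ _ h₂ hl

end FV

/-! ### Decomposition of the averages -/

namespace FV

variable {m : ℕ}

/-- The kernel of the upper-half average. -/
def av (c : Fin m → ℝ) (N : ℕ) : RR (Fin m → ℤ) :=
  ∑ n ∈ Ioc (N / 2) N, ((N : ℂ)⁻¹) • XX (fun i => ⌊(n : ℝ) ^ c i⌋)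

lemma FT_av (c : Fin m → ℝ) (N : ℕ) (ξ : Fin m → ℝ) : FT ξ (av c N) = (N : ℂ)⁻¹ * Sf c N ξ := by
  rw [av, map_sum, Sf, mul_sum]
  refine sum_congr rfl fun n _ => ?_
  rw [map_smul, FT_XX, smul_eq_mul]

lemma nw_av (c : Fin m → ℝ) (N : ℕ) {w : (Fin m → ℤ) → ℝ} (hw : ∀ x, 0 ≤ w x) {b : ℝ} (hb0 : 0 ≤ b)
    (hb : ∀ n ∈ Ioc (N / 2) N, w (fun i => ⌊(n : ℝ) ^ c i⌋) ≤ b) : nw w (av c N) ≤ b := by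
  refine (nw_sum_XX hw _ _ _).trans ?_
  have h1 : ∑ n ∈ Ioc (N / 2) N, ‖(N : ℂ)⁻¹‖ * w (fun i => ⌊(n : ℝ) ^ c i⌋) ≤
      (Ioc (N / 2) N).card • ((N : ℝ)⁻¹ * b) := by
    refine sum_le_card_nsmul _ _ _ fun n hn => ?_
    rw [norm_inv, Complex.norm_natCast]
    exact mul_le_mul_of_nonneg_left (hb n hn) (by positivity)
  refine h1.trans ?_
  rw [nsmul_eq_mul]
  refine (mul_le_mul_of_nonneg_right (card_half N) (by positivity)).trans ?_
  rw [← mul_assoc]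
  exact mul_le_of_le_one_left hb0 (mul_inv_le_one)

lemma n1_av (c : Fin m → ℝ) (N : ℕ) : n1 (av c N) ≤ 1 :=
  nw_av c N (fun _ => zero_le_one) zero_le_one fun _ _ => le_rfl

lemma mom_av (c : Fin m → ℝ) (hpos : ∀ i, 0 < c i) (N : ℕ) (i : Fin m) : mom i (av c N) ≤ (N : ℝ) ^ c i := by
  refine nw_av c N (fun _ => abs_nonneg _) (by positivity) fun n hn => ?_
  have h1 : (0 : ℤ) ≤ ⌊(n : ℝ) ^ c i⌋ := Int.floor_nonneg.2 (by positivity)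
  rw [abs_of_nonneg (by exact_mod_cast h1)]
  refine (Int.floor_le _).trans (Real.rpow_le_rpow (by positivity) ?_ (hpos i).le)
  exact_mod_cast (mem_Ioc.1 hn).2

/-- Main part of the difference between the average and the smoothing kernel. -/
def Km (c : Fin m → ℝ) (N : ℕ) : RR (Fin m → ℤ) := (av c N - (1 / 2 : ℂ) • 1) * PP c N

/-- The `j`-th fine-scale part of the difference between the average and the smoothing kernel. -/
def Kj (c : Fin m → ℝ) (j N : ℕ) : RR (Fin m → ℤ) :=
  av c N * (PP c ((N : ℝ) / 2 ^ (j + 1)) - PP c ((N : ℝ) / 2 ^ j))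

lemma PP_lt_one (c : Fin m → ℝ) (hpos : ∀ i, 0 < c i) {s : ℝ} (hs : 0 ≤ s) (h : s < 1) : PP c s = 1 := by
  rw [PP]
  refine prod_eq_one fun i _ => ?_
  have : nst c s i = 0 := Nat.floor_eq_zero.2 (Real.rpow_lt_one hs h (by have := hpos i; positivity))
  rw [this, pow_zero]

/-- Telescoping in the smoothing scale; it stops at `J` because `PP c s = 1` for `s < 1`. -/
lemma av_decomp (c : Fin m → ℝ) (hpos : ∀ i, 0 < c i) (N J : ℕ) (h : N < 2 ^ J) :
    av c N - (1 / 2 : ℂ) • PP c N = Km c N + ∑ j ∈ range J, Kj c j N := by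
  have h1 : ∑ j ∈ range J, Kj c j N = av c N * (1 - PP c N) := by
    simp only [Kj]
    rw [← mul_sum, sum_range_sub (fun j => PP c ((N : ℝ) / 2 ^ j)), pow_zero, div_one, PP_lt_one c hpos (by positivity)]
    rw [div_lt_one (by positivity)]
    exact_mod_cast h
  rw [h1, Km, sub_mul, smul_mul_assoc, one_mul, mul_sub, mul_one]
  ring

lemma ker_main (c : Fin m → ℝ) (hpos : ∀ i, 0 < c i) (c₁ : ℝ)
    {N : ℕ} (hN : 1 ≤ N) :
    Ker c (4 * (1 + 2 ^ c₁)) 0 N (Km c N) := by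
  have hN0 : (0 : ℝ) < N := by exact_mod_cast hN
  have h2 : (0 : ℝ) < 2 ^ c₁ := by positivity
  have hh : n1 ((1 / 2 : ℂ) • (1 : RR (Fin m → ℤ))) ≤ 1 / 2 := by
    rw [n1, nw_smul]
    have := n1_one (G := Fin m → ℤ)
    rw [n1] at this
    norm_num
    linarith
  have hmh : ∀ i, mom i ((1 / 2 : ℂ) • (1 : RR (Fin m → ℤ))) = 0 := fun i => by
    rw [mom, nw_smul]
    have := mom_one (m := m) i
    rw [mom] at this
    rw [this, mul_zero]
  have ha : n1 (av c N - (1 / 2 : ℂ) • 1) ≤ 2 := by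
    have := n1_sub (av c N) ((1 / 2 : ℂ) • 1)
    have := n1_av c N
    linarith
  refine ⟨?_, fun d => ?_, fun i => ?_⟩
  · refine (n1_mul _ _).trans ?_
    have := mul_le_mul ha (n1_PP c N) (n1_nonneg _) (by norm_num)
    linarith
  · rw [Km, mul_left_comm]
    refine (n1_mul _ _).trans ?_
    refine (mul_le_mul ha (n1_shift_PP c hN0 d) (n1_nonneg _) (by norm_num)).trans ?_
    rw [pow_zero, div_one, mul_sum, mul_sum]
    refine sum_le_sum fun i _ => ?_
    have : 0 ≤ |(d i : ℝ)| * (N : ℝ) ^ (-c i) := by positivity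
    nlinarith
  · refine (mom_mul i _ _).trans ?_
    have h1 := mom_sub i (av c N) ((1 / 2 : ℂ) • 1)
    rw [hmh, add_zero] at h1
    have h3 := h1.trans (mom_av c hpos N i)
    have a1 := mul_le_mul h3 (n1_PP c N) (n1_nonneg _) (by positivity)
    have a2 := mul_le_mul ha (mom_PP c hN0 i) (mom_nonneg _ _) (by norm_num)
    have : 0 ≤ (N : ℝ) ^ c i := by positivity
    nlinarith

lemma ker_fine (c : Fin m → ℝ) (hpos : ∀ i, 0 < c i) {c₁ : ℝ} (hc₁ : ∀ i, c i ≤ c₁)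
    {N : ℕ} (hN : 1 ≤ N) (j : ℕ) :
    Ker c (4 * (1 + 2 ^ c₁)) j N (Kj c j N) := by
  have hN0 : (0 : ℝ) < N := by exact_mod_cast hN
  have h2 : (0 : ℝ) < 2 ^ c₁ := by positivity
  set s := (N : ℝ) / 2 ^ j with hs
  have hs0 : 0 < s := by positivity
  have hsN : s ≤ N := div_le_self hN0.le (one_le_pow₀ (by norm_num))
  have hs2 : (N : ℝ) / 2 ^ (j + 1) = s / 2 := by rw [hs, pow_succ, div_div]
  rw [Kj, hs2]
  refine ⟨?_, fun d => ?_, fun i => ?_⟩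
  · refine (n1_mul _ _).trans ?_
    have h1 := n1_sub (PP c (s / 2)) (PP c s)
    have h3 := n1_PP c (s / 2)
    have h4 := n1_PP c s
    have := mul_le_mul (n1_av c N) (h1.trans (add_le_add h3 h4)) (n1_nonneg _) (by norm_num)
    linarith
  · rw [mul_left_comm]
    refine (n1_mul _ _).trans ?_
    refine (mul_le_mul_of_nonneg_right (n1_av c N) (n1_nonneg _)).trans ?_
    rw [one_mul, mul_sub]
    refine (n1_sub _ _).trans ?_
    refine (add_le_add (n1_shift_PP c (half_pos hs0) d) (n1_shift_PP c hs0 d)).trans ?_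
    rw [← sum_add_distrib, mul_sum]
    refine sum_le_sum fun i _ => ?_
    have e : (s / 2) ^ (-c i) = s ^ (-c i) * 2 ^ c i := by
      rw [Real.div_rpow hs0.le (by norm_num), Real.rpow_neg (show (0 : ℝ) ≤ 2 by norm_num), div_inv_eq_mul]
    have e2 : (2 : ℝ) ^ c i ≤ 2 ^ c₁ := Real.rpow_le_rpow_of_exponent_le (by norm_num) (hc₁ i)
    rw [e]
    have h5 : 0 ≤ |(d i : ℝ)| * s ^ (-c i) := by positivity
    nlinarith [mul_le_mul_of_nonneg_left e2 h5]
  · refine (mom_mul i _ _).trans ?_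
    have h1 := n1_sub (PP c (s / 2)) (PP c s)
    have h3 := n1_PP c (s / 2)
    have h4 := n1_PP c s
    have a1 := mul_le_mul (mom_av c hpos N i) (h1.trans (add_le_add h3 h4)) (n1_nonneg _) (by positivity)
    have b1 := mom_sub i (PP c (s / 2)) (PP c s)
    have b2 := mom_PP c (half_pos hs0) i
    have b3 := mom_PP c hs0 i
    have b4 : (s / 2) ^ c i ≤ (N : ℝ) ^ c i := Real.rpow_le_rpow (by positivity) (by linarith) (hpos i).le
    have b5 : s ^ c i ≤ (N : ℝ) ^ c i := Real.rpow_le_rpow (by positivity) hsN (hpos i).le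
    have a2 := mul_le_mul (n1_av c N) (b1.trans (show _ ≤ 2 * (N : ℝ) ^ c i by linarith)) (mom_nonneg _ _) (by norm_num)
    have : 0 ≤ (N : ℝ) ^ c i := by positivity
    nlinarith

lemma GG_nonneg (c : Fin m → ℝ) {s : ℝ} (hs : 0 ≤ s) (ξ : Fin m → ℝ) : 0 ≤ GG c s ξ :=
  sum_nonneg fun _ _ => by positivity

lemma min_inv_eq_left {G : ℝ} (h0 : 0 ≤ G) (h1 : G ≤ 1) : min G G⁻¹ = G := by
  rcases h0.eq_or_lt with h | h
  · rw [← h]; simp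
  · exact min_eq_left (h1.trans ((one_le_inv₀ h).2 h1))

lemma min_inv_eq_right {G : ℝ} (h1 : 1 ≤ G) : min G G⁻¹ = G⁻¹ :=
  min_eq_right ((inv_le_one_of_one_le₀ h1).trans h1)

lemma PPh_GG (c : Fin m → ℝ) (hpos : ∀ i, 0 < c i) {s : ℝ} (hs : 0 < s) (ξ : Fin m → ℝ)
    (hξ : ∀ i, |ξ i| ≤ 1 / 2) : PPh c s ξ * GG c s ξ ≤ m := by
  rw [GG, mul_sum]
  have : ∑ i : Fin m, PPh c s ξ * (s ^ c i * |ξ i|) ≤ ∑ _i : Fin m, (1 : ℝ) :=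
    sum_le_sum fun i _ => PPh_decay c hpos hs ξ i (hξ i)
  simpa using this

lemma PPh_GG' (c : Fin m → ℝ) {s : ℝ} (hs : 0 < s) (ξ : Fin m → ℝ) : 1 - PPh c s ξ ≤ 10 * GG c s ξ ^ 2 := by
  refine (PPh_near c hs ξ).trans (mul_le_mul_of_nonneg_left ?_ (by norm_num))
  exact sum_sq_le_sq_sum_of_nonneg fun _ _ => by positivity

lemma norm_FT_av (c : Fin m → ℝ) (N : ℕ) (ξ : Fin m → ℝ) : ‖FT ξ (av c N)‖ ≤ 1 := by
  rw [FT_av, norm_mul, norm_inv, Complex.norm_natCast]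
  refine (mul_le_mul_of_nonneg_left (Sf_triv c N ξ) (by positivity)).trans ?_
  exact inv_mul_le_one

/-- At low frequencies `av - ½` is small, at high frequencies `PP` is; the term `N⁻¹` is the parity error in
the number of terms of the upper-half average. -/
lemma four_main (c : Fin m → ℝ) (hpos : ∀ i, 0 < c i) {N : ℕ} (hN : 1 ≤ N) (ξ : Fin m → ℝ)
    (hξ : ∀ i, |ξ i| ≤ 1 / 2) :
    ‖FT ξ (Km c N)‖ ≤ (7 + 2 * m) *
      (min (GG c ((N : ℝ) / 2 ^ 0) ξ) (GG c ((N : ℝ) / 2 ^ 0) ξ)⁻¹ + (N : ℝ)⁻¹) := by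
  have hN0 : (0 : ℝ) < N := by exact_mod_cast hN
  rw [pow_zero, div_one]
  set G := GG c N ξ with hG
  have hG0 : 0 ≤ G := GG_nonneg c hN0.le ξ
  have e : FT ξ (Km c N) = (FT ξ (av c N) - 1 / 2) * (PPh c N ξ : ℂ) := by
    rw [Km, map_mul, map_sub, map_smul, map_one, FT_PP, smul_eq_mul, mul_one]
  have hP0 := PPh_nonneg c N ξ
  have hP1 := PPh_le_one c N ξ
  rw [e, norm_mul, Complex.norm_real, Real.norm_of_nonneg hP0]
  have hi : 0 < (N : ℝ)⁻¹ := by positivity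
  have hm0 : (0 : ℝ) ≤ m := by positivity
  rcases le_total G 1 with h | h
  · rw [min_inv_eq_left hG0 h]
    have h1 := Sf_near c hpos N ξ
    have h2 : ‖FT ξ (av c N) - 1 / 2‖ ≤ 2 * Real.pi * G + (N : ℝ)⁻¹ := by
      have e2 : FT ξ (av c N) - 1 / 2 = (N : ℂ)⁻¹ * (Sf c N ξ - N / 2) := by
        rw [FT_av, mul_sub]
        have : (N : ℂ) ≠ 0 := by exact_mod_cast hN0.ne'
        field_simp
      rw [e2, norm_mul, norm_inv, Complex.norm_natCast, inv_mul_le_iff₀ hN0]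
      refine h1.trans ?_
      rw [hG, GG, mul_add, mul_inv_cancel₀ hN0.ne']
      linarith
    have h3 : ‖FT ξ (av c N) - 1 / 2‖ * PPh c N ξ ≤ 2 * Real.pi * G + (N : ℝ)⁻¹ :=
      (mul_le_of_le_one_right (norm_nonneg _) hP1).trans h2
    have := Real.pi_lt_d2
    have a1 : 2 * Real.pi * G ≤ 7 * G := by nlinarith
    have a2 : 0 ≤ m * (G + (N : ℝ)⁻¹) := by positivity
    nlinarith
  · rw [min_inv_eq_right h]
    have h1 : ‖FT ξ (av c N) - 1 / 2‖ ≤ 2 := by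
      refine (norm_sub_le _ _).trans ?_
      have := norm_FT_av c N ξ
      norm_num
      linarith
    have h2 : PPh c N ξ ≤ m * G⁻¹ := by
      rw [← div_eq_mul_inv, le_div_iff₀ (by linarith)]
      exact PPh_GG c hpos hN0 ξ hξ
    refine (mul_le_mul h1 h2 hP0 (by norm_num)).trans ?_
    have : 0 ≤ G⁻¹ := by positivity
    have : 0 ≤ m * (N : ℝ)⁻¹ := by positivity
    nlinarith

/-- The difference of two consecutive `PP` localises the frequency at anisotropic size `1` at scale `N / 2 ^ j`,
where `Sf_decay` gives the gain `2 ^ (-ω j)`. -/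
lemma four_fine (c : Fin m → ℝ) (hpos : ∀ i, 0 < c i) (hinj : Function.Injective c)
    (hint : ∀ i, ∀ k : ℤ, c i ≠ (k : ℝ)) {c₀ : ℝ} (hc₀0 : 0 < c₀) (hc₀ : ∀ i, c₀ ≤ c i) :
    ∃ A ω : ℝ, 0 < A ∧ 0 < ω ∧ ∀ (j N : ℕ) (ξ : Fin m → ℝ), 1 ≤ N → (∀ i, |ξ i| ≤ 1 / 2) →
      ‖FT ξ (Kj c j N)‖ ≤ A * (2 ^ j) ^ (-ω) *
      (min (GG c ((N : ℝ) / 2 ^ j) ξ) (GG c ((N : ℝ) / 2 ^ j) ξ)⁻¹ + (N : ℝ)⁻¹) := by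
  obtain ⟨_, c₁, _, hc₁0, _, hc₁⟩ := exists_bounds c hpos
  obtain ⟨C, δ, hC, hδ, hδ2, hdec⟩ := Sf_decay c hpos hinj hint
  refine ⟨C * (m + 1) ^ δ * (20 + m * (1 + 2 ^ c₁)), c₀ * δ, by positivity, by positivity, fun j N ξ hN hξ => ?_⟩
  have hN0 : (0 : ℝ) < N := by exact_mod_cast hN
  set s := (N : ℝ) / 2 ^ j with hs
  have hs0 : 0 < s := by positivity
  have hs2 : (N : ℝ) / 2 ^ (j + 1) = s / 2 := by rw [hs, pow_succ, div_div]
  set G := GG c s ξ with hG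
  have hG0 : 0 ≤ G := GG_nonneg c hs0.le ξ
  have hm0 : (0 : ℝ) ≤ m := by positivity
  have e : FT ξ (Kj c j N) = FT ξ (av c N) * ((PPh c (s / 2) ξ - PPh c s ξ : ℝ) : ℂ) := by
    rw [Kj, map_mul, map_sub, FT_PP, FT_PP, hs2]; push_cast; rfl
  rw [e, norm_mul, Complex.norm_real, Real.norm_eq_abs]
  have p0 := PPh_nonneg c s ξ
  have p1 := PPh_le_one c s ξ
  have q0 := PPh_nonneg c (s / 2) ξ
  have q1 := PPh_le_one c (s / 2) ξ
  have hG2 : GG c (s / 2) ξ ≤ G := by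
    refine sum_le_sum fun i _ => mul_le_mul_of_nonneg_right ?_ (abs_nonneg _)
    exact Real.rpow_le_rpow (by positivity) (by linarith) (hpos i).le
  have d1 : |PPh c (s / 2) ξ - PPh c s ξ| ≤ 20 * G ^ 2 := by
    have a1 := PPh_GG' c hs0 ξ
    have a2 := PPh_GG' c (half_pos hs0) ξ
    have a3 : GG c (s / 2) ξ ^ 2 ≤ G ^ 2 := pow_le_pow_left₀ (GG_nonneg c (by positivity) ξ) hG2 2
    rw [abs_le]
    constructor <;> linarith
  set R : ℝ := C * (m + 1) ^ δ * (2 ^ j) ^ (-(c₀ * δ)) with hR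
  have hR0 : 0 < R := by positivity
  have hmin : 0 ≤ min G G⁻¹ := le_min hG0 (inv_nonneg.2 hG0)
  have hav : 0 < G → ‖FT ξ (av c N)‖ ≤ R * G ^ (-δ) := by
    intro hGp
    have hm1 : (Finset.univ : Finset (Fin m)).Nonempty := by
      by_contra hne
      rw [not_nonempty_iff_eq_empty] at hne
      rw [hG, GG, hne, sum_empty] at hGp
      exact lt_irrefl _ hGp
    obtain ⟨i, _, hi⟩ : ∃ i ∈ (Finset.univ : Finset (Fin m)), G / (m + 1) ≤ s ^ c i * |ξ i| := by
      refine exists_le_of_sum_le hm1 ?_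
      rw [sum_const, card_univ, Fintype.card_fin, nsmul_eq_mul]
      change (m : ℝ) * (G / (m + 1)) ≤ G
      rw [mul_div_assoc', div_le_iff₀ (by positivity)]
      nlinarith
    have hpos' : 0 < G / (m + 1) := by positivity
    have hξi : ξ i ≠ 0 := by
      intro h0
      rw [h0, abs_zero, mul_zero] at hi
      linarith
    have h1 := hdec N ξ hN hξ i hξi
    have h2 : (2 ^ j) ^ c₀ * (G / (m + 1)) ≤ (N : ℝ) ^ c i * |ξ i| := by
      have e3 : (N : ℝ) = 2 ^ j * s := by rw [hs]; field_simp
      rw [e3, Real.mul_rpow (by positivity) hs0.le, mul_assoc]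
      refine mul_le_mul ?_ hi hpos'.le (by positivity)
      exact Real.rpow_le_rpow_of_exponent_le (one_le_pow₀ (by norm_num)) (hc₀ i)
    have h3 : ((N : ℝ) ^ c i * |ξ i|) ^ (-δ) ≤ ((2 ^ j) ^ c₀ * (G / (m + 1))) ^ (-δ) :=
      Real.rpow_le_rpow_of_nonpos (by positivity) h2 (by linarith)
    have h4 : ((2 ^ j) ^ c₀ * (G / (m + 1))) ^ (-δ) = (m + 1) ^ δ * (2 ^ j) ^ (-(c₀ * δ)) * G ^ (-δ) := by
      rw [Real.mul_rpow (by positivity) (by positivity), Real.div_rpow hG0 (by positivity), ← Real.rpow_mul (by positivity),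
        Real.rpow_neg (show (0 : ℝ) ≤ m + 1 by positivity), div_inv_eq_mul, mul_neg]
      ring
    rw [FT_av, norm_mul, norm_inv, Complex.norm_natCast, inv_mul_le_iff₀ hN0]
    refine h1.trans ?_
    rw [h4] at h3
    refine (mul_le_mul_of_nonneg_left h3 (by positivity)).trans (le_of_eq ?_)
    rw [hR]; ring
  have goal : ‖FT ξ (av c N)‖ * |PPh c (s / 2) ξ - PPh c s ξ| ≤ R * (20 + m * (1 + 2 ^ c₁)) * min G G⁻¹ := by
    rcases hG0.eq_or_lt with h0 | hGp
    · have : |PPh c (s / 2) ξ - PPh c s ξ| = 0 := by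
        refine le_antisymm (d1.trans ?_) (abs_nonneg _)
        rw [← h0]; norm_num
      rw [this, mul_zero]; positivity
    · rcases le_total G 1 with h | h
      · rw [min_inv_eq_left hG0 h]
        refine (mul_le_mul (hav hGp) d1 (abs_nonneg _) (by positivity)).trans ?_
        have a1 : G ^ (-δ) * G ^ 2 ≤ G := by
          rw [← Real.rpow_natCast, ← Real.rpow_add hGp]
          nth_rewrite 2 [← Real.rpow_one G]
          refine Real.rpow_le_rpow_of_exponent_ge hGp h ?_
          push_cast; linarith
        calc R * G ^ (-δ) * (20 * G ^ 2) = R * 20 * (G ^ (-δ) * G ^ 2) := by ring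
          _ ≤ R * 20 * G := by gcongr
          _ ≤ R * (20 + m * (1 + 2 ^ c₁)) * G := by gcongr; nlinarith [show (0 : ℝ) ≤ m * (1 + 2 ^ c₁) by positivity]
      · rw [min_inv_eq_right h]
        have a1 : ‖FT ξ (av c N)‖ ≤ R := by
          refine (hav hGp).trans (mul_le_of_le_one_right hR0.le ?_)
          exact Real.rpow_le_one_of_one_le_of_nonpos h (by linarith)
        have a2 : PPh c s ξ ≤ m * G⁻¹ := by
          rw [← div_eq_mul_inv, le_div_iff₀ hGp]
          exact PPh_GG c hpos hs0 ξ hξ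
        have a3 : PPh c (s / 2) ξ ≤ m * 2 ^ c₁ * G⁻¹ := by
          rw [← div_eq_mul_inv, le_div_iff₀ hGp]
          have b1 : G ≤ 2 ^ c₁ * GG c (s / 2) ξ := by
            rw [hG, GG, GG, mul_sum]
            refine sum_le_sum fun i _ => ?_
            rw [← mul_assoc]
            refine mul_le_mul_of_nonneg_right ?_ (abs_nonneg _)
            have : s ^ c i = 2 ^ c i * (s / 2) ^ c i := by
              rw [← Real.mul_rpow (by norm_num) (by positivity)]; congr 1; ring
            rw [this]
            refine mul_le_mul_of_nonneg_right ?_ (by positivity)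
            exact Real.rpow_le_rpow_of_exponent_le (by norm_num) (hc₁ i)
          have b2 := PPh_GG c hpos (half_pos hs0) ξ hξ
          calc PPh c (s / 2) ξ * G ≤ PPh c (s / 2) ξ * (2 ^ c₁ * GG c (s / 2) ξ) := by gcongr
            _ = (PPh c (s / 2) ξ * GG c (s / 2) ξ) * 2 ^ c₁ := by ring
            _ ≤ m * 2 ^ c₁ := by gcongr
        have hGi : 0 < G⁻¹ := by positivity
        have a4 : |PPh c (s / 2) ξ - PPh c s ξ| ≤ (20 + m * (1 + 2 ^ c₁)) * G⁻¹ := by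
          rw [abs_le]
          constructor <;> nlinarith [show 0 ≤ (m : ℝ) * 2 ^ c₁ * G⁻¹ by positivity, show 0 ≤ (m : ℝ) * G⁻¹ by positivity]
        refine (mul_le_mul a1 a4 (abs_nonneg _) hR0.le).trans (le_of_eq ?_)
        ring
  refine goal.trans ?_
  have e5 : C * (m + 1) ^ δ * (20 + m * (1 + 2 ^ c₁)) * (2 ^ j) ^ (-(c₀ * δ)) = R * (20 + m * (1 + 2 ^ c₁)) := by
    rw [hR]; ring
  rw [e5]
  refine mul_le_mul_of_nonneg_left ?_ (by positivity)
  have : 0 ≤ (N : ℝ)⁻¹ := by positivity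
  linarith

end FV

/-! ### Boundedness of signed sums -/

namespace FV

variable {m : ℕ}

set_option maxHeartbeats 1000000 in
/-- Interpolating the exponential decay in `j` of the multipliers against the exponential growth
in `j` of the Hörmander constants: the latter has an exponent `β` which can be chosen small. -/
lemma signed_core (hm : 0 < m) (c : Fin m → ℝ) (hpos : ∀ i, 0 < c i) {p lam : ℝ} (hp : 1 < p) (hlam : 1 < lam)
    (P : ℕ → Prop) (K : ℕ → ℕ → RR (Fin m → ℤ)) {A B ω : ℝ} (hA : 0 < A) (hB : 0 < B) (hω : 0 < ω)
    (hK : ∀ j N, P j → 1 ≤ N → Ker c B j N (K j N))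
    (hF : ∀ (j N : ℕ) (ξ : Fin m → ℝ), P j → 1 ≤ N → (∀ i, |ξ i| ≤ 1 / 2) → ‖FT ξ (K j N)‖ ≤ A * (2 ^ j) ^ (-ω) *
      (min (GG c ((N : ℝ) / 2 ^ j) ξ) (GG c ((N : ℝ) / 2 ^ j) ξ)⁻¹ + (N : ℝ)⁻¹)) :
    ∃ C γ : ℝ, 0 < C ∧ 0 < γ ∧ γ < 1 ∧ ∀ (j : ℕ) (D : Finset ℕ) (ε : ℕ → ℂ) (f : RR (Fin m → ℤ)), P j →
      Lac lam D → (∀ N, ‖ε N‖ ≤ 1) → nrm p ((∑ N ∈ D, ε N • K j N) * f) ≤ C * γ ^ j * nrm p f := by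
  obtain ⟨c₀, c₁, hc₀0, hc₁0, hc₀, hc₁⟩ := exists_bounds c hpos
  obtain ⟨C, κ, η, hC, hκ, hη, hcz⟩ := cz (ax_mono c hpos) (ax_zero c) (ax_succ c hpos hc₁) (ax_vol hm c hpos) hp
  set β := min c₀ (ω * η / (2 * κ)) with hβ
  have hβ0 : 0 < β := lt_min hc₀0 (by positivity)
  have hβκ : β * κ ≤ ω * η / 2 := by
    have : β ≤ ω * η / (2 * κ) := min_le_right _ _
    calc β * κ ≤ ω * η / (2 * κ) * κ := by gcongr
      _ = ω * η / 2 := by field_simp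
  have hl1 : 1 < lam ^ c₀ := Real.one_lt_rpow hlam hc₀0
  have hl2 : 1 < lam ^ β := Real.one_lt_rpow hlam hβ0
  set A' := A * (2 * (lam ^ c₀ / (lam ^ c₀ - 1)) + 2 * (lam / (lam - 1))) with hA'
  have hA'0 : 0 < A' := by
    have h1 : 0 < lam ^ c₀ / (lam ^ c₀ - 1) := div_pos (by linarith) (by linarith)
    have h2 : 0 < lam / (lam - 1) := div_pos (by linarith) (by linarith)
    positivity
  set H' := 4 * B * (m + 1) * (2 * (lam ^ β / (lam ^ β - 1))) + A' with hH'
  have hx0 : 0 < lam ^ β / (lam ^ β - 1) := div_pos (by linarith) (by linarith)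
  have hH'0 : 0 < H' := by positivity
  have hAH : A' ≤ H' := by rw [hH']; linarith [show 0 < 4 * B * (m + 1) * (2 * (lam ^ β / (lam ^ β - 1))) by positivity]
  refine ⟨C * H' ^ κ * A' ^ η, (2 : ℝ) ^ (-(ω * η / 2)), by positivity, by positivity,
    Real.rpow_lt_one_of_one_lt_of_neg (by norm_num) (by have : 0 < ω * η := by positivity
                                                        linarith), ?_⟩
  intro j D ε f hPj hD hε
  have h2j : (1 : ℝ) ≤ 2 ^ j := one_le_pow₀ (by norm_num)
  have h2j0 : (0 : ℝ) < 2 ^ j := by positivity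
  have hb1 : (1 : ℝ) ≤ (2 ^ j) ^ β := Real.one_le_rpow h2j hβ0.le
  have hb2 : ((2 : ℝ) ^ j) ^ (-ω) ≤ 1 := Real.rpow_le_one_of_one_le_of_nonpos h2j (by linarith)
  have key := hcz (∑ N ∈ D, ε N • K j N) f (A' * (2 ^ j) ^ (-ω)) (H' * (2 ^ j) ^ β) (by positivity)
    (by
      calc A' * (2 ^ j) ^ (-ω) ≤ A' * 1 := by gcongr
        _ ≤ H' * 1 := by linarith
        _ ≤ _ := by gcongr)
    (fun ξ hξ => by
      have := four_sum c (A := A * (2 ^ j) ^ (-ω)) (by positivity) hc₀0 hc₀ hlam hD (K j) ξ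
        (fun N hN => hF j N ξ hPj (hD.1 N hN) hξ) ε hε
      refine this.trans (le_of_eq ?_)
      rw [hA']; ring)
    (fun k d S hd hS => by
      have := horm_sum c hpos hB hβ0 (fun i => (min_le_left _ _).trans (hc₀ i)) hlam hD (K j)
        (fun N hN => hK j N hPj (hD.1 N hN)) ε hε k d S hd hS
      refine this.trans ?_
      have : 0 ≤ A' * (2 ^ j) ^ β := by positivity
      rw [hH']; nlinarith)
  refine key.trans ?_
  refine mul_le_mul_of_nonneg_right ?_ (nrm_nonneg p f)
  rw [Real.mul_rpow hH'0.le (by positivity), Real.mul_rpow hA'0.le (by positivity), ← Real.rpow_mul h2j0.le,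
    ← Real.rpow_mul h2j0.le]
  have e1 : ((2 : ℝ) ^ j) ^ (β * κ) * (2 ^ j) ^ (-ω * η) ≤ ((2 : ℝ) ^ (-(ω * η / 2))) ^ j := by
    rw [← Real.rpow_add h2j0, ← Real.rpow_natCast (2 ^ (-(ω * η / 2))) j, ← Real.rpow_mul (by norm_num),
      mul_comm (-(ω * η / 2)) (j : ℝ), Real.rpow_mul (by norm_num), Real.rpow_natCast]
    exact Real.rpow_le_rpow_of_exponent_le h2j (by linarith)
  calc C * (H' ^ κ * (2 ^ j) ^ (β * κ)) * (A' ^ η * (2 ^ j) ^ (-ω * η))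
      = C * H' ^ κ * A' ^ η * (((2 : ℝ) ^ j) ^ (β * κ) * (2 ^ j) ^ (-ω * η)) := by ring
    _ ≤ _ := by gcongr

set_option maxHeartbeats 1000000 in
/-- Uniform `ℓ^p` bounds for all signed sums of the differences `av c N - ½ PP c N` along a lacunary set. -/
theorem signed (hm : 0 < m) (c : Fin m → ℝ) (hpos : ∀ i, 0 < c i) (hinj : Function.Injective c)
    (hint : ∀ i, ∀ k : ℤ, c i ≠ (k : ℝ)) {p lam : ℝ} (hp : 1 < p) (hlam : 1 < lam) :
    ∃ C : ℝ, 0 < C ∧ ∀ (D : Finset ℕ) (ε : ℕ → ℂ) (f : RR (Fin m → ℤ)),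
      Lac lam D → (∀ N, ‖ε N‖ ≤ 1) →
      nrm p ((∑ N ∈ D, ε N • (av c N - (1 / 2 : ℂ) • PP c N)) * f) ≤ C * nrm p f := by
  obtain ⟨c₀, c₁, hc₀0, hc₁0, hc₀, hc₁⟩ := exists_bounds c hpos
  obtain ⟨A, ω, hA, hω, hF⟩ := four_fine c hpos hinj hint hc₀0 hc₀
  have hB : (0 : ℝ) < 4 * (1 + 2 ^ c₁) := by positivity
  obtain ⟨C₁, γ, hC₁, hγ0, hγ1, h1⟩ := signed_core hm c hpos hp hlam (fun _ => True) (Kj c) hA hB hω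
    (fun j N _ hN => ker_fine c hpos hc₁ hN j) (fun j N ξ _ hN hξ => hF j N ξ hN hξ)
  obtain ⟨C₂, γ', hC₂, hγ'0, hγ'1, h2⟩ := signed_core hm c hpos hp hlam (fun j => j = 0) (fun _ => Km c)
    (A := 7 + 2 * m) (by positivity) hB one_pos
    (fun j N hj hN => hj ▸ ker_main c hpos c₁ hN) (fun j N ξ hj hN hξ => by
      subst hj
      have := four_main c hpos hN ξ hξ
      rw [pow_zero, Real.one_rpow, mul_one, ← pow_zero (2 : ℝ)]
      exact this)
  have hp0 : 0 < p := by linarith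
  set q := γ ^ (1 / p) with hq
  have hq0 : 0 < q := by positivity
  have hq1 : q < 1 := Real.rpow_lt_one hγ0.le hγ1 (by positivity)
  set S := C₂ ^ (1 / p) + C₁ ^ (1 / p) * (1 - q)⁻¹ with hS
  have hq2 : 0 < (1 - q)⁻¹ := inv_pos.2 (by linarith)
  have hS0 : 0 < S := by positivity
  refine ⟨S ^ p, by positivity, fun D ε f hD hε => ?_⟩
  set J := D.sup id with hJ
  have hlt : ∀ N ∈ D, N < 2 ^ J := fun N hN => lt_of_le_of_lt (Finset.le_sup (f := id) hN) Nat.lt_two_pow_self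
  set Q : ℕ → RR (Fin m → ℤ) := fun w => Nat.casesOn w ((∑ N ∈ D, ε N • Km c N) * f)
    (fun j => (∑ N ∈ D, ε N • Kj c j N) * f) with hQ
  have hdec : (∑ N ∈ D, ε N • (av c N - (1 / 2 : ℂ) • PP c N)) * f = ∑ w ∈ range (J + 1), Q w := by
    rw [sum_range_succ']
    change _ = ∑ j ∈ range J, (∑ N ∈ D, ε N • Kj c j N) * f + (∑ N ∈ D, ε N • Km c N) * f
    rw [← sum_mul, ← add_mul, sum_comm, ← sum_add_distrib]
    congr 1
    refine sum_congr rfl fun N hN => ?_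
    rw [av_decomp c hpos N J (hlt N hN), smul_add, smul_sum, add_comm]
  have hn := nrm_nonneg p f
  have hQ0 : nrm p (Q 0) ≤ C₂ * nrm p f := by
    have := h2 0 D ε f rfl hD hε
    rwa [pow_zero, mul_one] at this
  have hQj : ∀ j, nrm p (Q (j + 1)) ≤ C₁ * γ ^ j * nrm p f := fun j => h1 j D ε f trivial hD hε
  rw [hdec]
  set U := (∑ w ∈ range (J + 1), Q w).coeff.support with hU
  have hmink := minkowski_sum U (range (J + 1)) hp.le (fun x w => ‖(Q w).coeff x‖) (fun _ _ => norm_nonneg _)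
  have hle : nrm p (∑ w ∈ range (J + 1), Q w) ≤ ∑ x ∈ U, (∑ w ∈ range (J + 1), ‖(Q w).coeff x‖) ^ p := by
    refine sum_le_sum fun x _ => Real.rpow_le_rpow (norm_nonneg _) ?_ hp0.le
    rw [sum_coeff]
    exact norm_sum_le _ _
  have hgeo : ∑ w ∈ range (J + 1), (∑ x ∈ U, ‖(Q w).coeff x‖ ^ p) ^ (1 / p) ≤ S * nrm p f ^ (1 / p) := by
    rw [sum_range_succ']
    have e0 : (∑ x ∈ U, ‖(Q 0).coeff x‖ ^ p) ^ (1 / p) ≤ C₂ ^ (1 / p) * nrm p f ^ (1 / p) := by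
      rw [← Real.mul_rpow hC₂.le hn]
      exact Real.rpow_le_rpow (sum_nonneg fun _ _ => by positivity) ((sum_le_nrm hp0 _ _).trans hQ0) (by positivity)
    have ej : ∀ j ∈ range J, (∑ x ∈ U, ‖(Q (j + 1)).coeff x‖ ^ p) ^ (1 / p) ≤
        C₁ ^ (1 / p) * nrm p f ^ (1 / p) * q ^ j := by
      intro j _
      have e : (C₁ * γ ^ j * nrm p f) ^ (1 / p) = C₁ ^ (1 / p) * nrm p f ^ (1 / p) * q ^ j := by
        rw [Real.mul_rpow (by positivity) hn, Real.mul_rpow hC₁.le (by positivity), hq,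
          ← Real.rpow_natCast γ, ← Real.rpow_natCast (γ ^ (1 / p)), ← Real.rpow_mul hγ0.le, ← Real.rpow_mul hγ0.le,
          mul_comm (j : ℝ)]
        ring
      rw [← e]
      exact Real.rpow_le_rpow (sum_nonneg fun _ _ => by positivity) ((sum_le_nrm hp0 _ _).trans (hQj j)) (by positivity)
    have es := sum_le_sum ej
    rw [← mul_sum] at es
    have eg : ∑ j ∈ range J, q ^ j ≤ (1 - q)⁻¹ := by
      rw [← tsum_geometric_of_lt_one hq0.le hq1]
      exact (summable_geometric_of_lt_one hq0.le hq1).sum_le_tsum _ fun _ _ => by positivity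
    have := mul_le_mul_of_nonneg_left eg (show 0 ≤ C₁ ^ (1 / p) * nrm p f ^ (1 / p) by positivity)
    rw [hS]
    nlinarith
  have hfin := (hmink.trans hgeo)
  have hX0 : 0 ≤ ∑ x ∈ U, (∑ w ∈ range (J + 1), ‖(Q w).coeff x‖) ^ p :=
    sum_nonneg fun _ _ => Real.rpow_nonneg (sum_nonneg fun _ _ => norm_nonneg _) _
  have := Real.rpow_le_rpow (Real.rpow_nonneg hX0 _) hfin hp0.le
  rw [← Real.rpow_mul hX0, one_div_mul_cancel hp0.ne', Real.rpow_one, Real.mul_rpow hS0.le (by positivity),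
    ← Real.rpow_mul hn, one_div_mul_cancel hp0.ne', Real.rpow_one] at this
  exact hle.trans this

end FV

/-! ### Khintchine's inequality and the square function -/

namespace FV

/-- The sign attached to `N` by the subset `T`. -/
def sgn (T : Finset ℕ) (N : ℕ) : ℂ := if N ∈ T then 1 else -1

lemma norm_sgn (T : Finset ℕ) (N : ℕ) : ‖sgn T N‖ ≤ 1 := by
  unfold sgn; split_ifs <;> simp

/-- The Rademacher sum of `a` over `D` with signs given by `T ⊆ D`. -/
def rad (a : ℕ → ℂ) (D T : Finset ℕ) : ℂ := ∑ N ∈ D, sgn T N * a N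

lemma rad_insert {a : ℕ → ℂ} {D T : Finset ℕ} {n : ℕ} (hn : n ∉ D) (hT : T ⊆ D) :
    rad a (insert n D) T = rad a D T - a n ∧ rad a (insert n D) (insert n T) = rad a D T + a n := by
  have hnT : n ∉ T := fun h => hn (hT h)
  constructor
  · rw [rad, sum_insert hn, sgn, if_neg hnT, rad]; ring
  · rw [rad, sum_insert hn, sgn, if_pos (mem_insert_self _ _), rad, one_mul, add_comm]
    congr 1
    refine sum_congr rfl fun N hN => ?_
    have : N ≠ n := fun h => hn (h ▸ hN)
    simp [sgn, this]

lemma sum_rad_insert {a : ℕ → ℂ} {D : Finset ℕ} {n : ℕ} (hn : n ∉ D) (g : ℂ → ℝ) :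
    ∑ T ∈ (insert n D).powerset, g (rad a (insert n D) T) =
      ∑ T ∈ D.powerset, (g (rad a D T - a n) + g (rad a D T + a n)) := by
  rw [sum_powerset_insert hn, ← sum_add_distrib]
  refine sum_congr rfl fun T hT => ?_
  obtain ⟨h1, h2⟩ := rad_insert (a := a) hn (mem_powerset.1 hT)
  rw [h1, h2]

lemma par (s a : ℂ) : ‖s - a‖ ^ 2 + ‖s + a‖ ^ 2 = 2 * (‖s‖ ^ 2 + ‖a‖ ^ 2) := by
  have := parallelogram_law_with_norm ℝ s a
  nlinarith

lemma par4 (s a : ℂ) : ‖s - a‖ ^ 4 + ‖s + a‖ ^ 4 ≤ 2 * (‖s‖ ^ 4 + 6 * ‖s‖ ^ 2 * ‖a‖ ^ 2 + ‖a‖ ^ 4) := by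
  have h := par s a
  have h1 : ‖s + a‖ ≤ ‖s‖ + ‖a‖ := norm_add_le _ _
  have h2 : ‖s - a‖ ≤ ‖s‖ + ‖a‖ := norm_sub_le _ _
  have h3 : ‖s + a‖ ^ 2 ≤ (‖s‖ + ‖a‖) ^ 2 := by gcongr
  have h4 : ‖s - a‖ ^ 2 ≤ (‖s‖ + ‖a‖) ^ 2 := by gcongr
  -- with `u = ‖s-a‖²`, `v = ‖s+a‖²`: `u + v = 2 Σ`, and `u, v ≤ Σ + 2‖s‖‖a‖`
  set u := ‖s - a‖ ^ 2
  set v := ‖s + a‖ ^ 2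
  have e1 : ‖s - a‖ ^ 4 = u ^ 2 := by simp only [u]; ring
  have e2 : ‖s + a‖ ^ 4 = v ^ 2 := by simp only [v]; ring
  rw [e1, e2]
  have h5 : 0 ≤ ((‖s‖ + ‖a‖) ^ 2 - u) * ((‖s‖ + ‖a‖) ^ 2 - v) := mul_nonneg (by linarith) (by linarith)
  have hu : u = 2 * (‖s‖ ^ 2 + ‖a‖ ^ 2) - v := by linarith
  rw [hu] at h5 ⊢
  nlinarith

/-- Second moment of a Rademacher sum. -/
lemma rad_two (a : ℕ → ℂ) (D : Finset ℕ) :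
    ∑ T ∈ D.powerset, ‖rad a D T‖ ^ 2 = 2 ^ D.card * ∑ N ∈ D, ‖a N‖ ^ 2 := by
  induction D using Finset.induction_on with
  | empty => simp [rad]
  | insert n D hn ih =>
    rw [sum_rad_insert hn (fun z => ‖z‖ ^ 2)]
    simp only [par]
    rw [← mul_sum, sum_add_distrib, ih, sum_const, card_powerset, card_insert_of_notMem hn, sum_insert hn,
      nsmul_eq_mul]
    push_cast
    ring

/-- Fourth moment of a Rademacher sum. -/
lemma rad_four (a : ℕ → ℂ) (D : Finset ℕ) :
    ∑ T ∈ D.powerset, ‖rad a D T‖ ^ 4 ≤ 2 ^ D.card * (3 * (∑ N ∈ D, ‖a N‖ ^ 2) ^ 2) := by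
  induction D using Finset.induction_on with
  | empty => simp [rad]
  | insert n D hn ih =>
    rw [sum_rad_insert hn (fun z => ‖z‖ ^ 4)]
    refine (sum_le_sum fun T _ => par4 _ _).trans ?_
    rw [← mul_sum, sum_add_distrib, sum_add_distrib, sum_const, card_powerset, card_insert_of_notMem hn,
      sum_insert hn, nsmul_eq_mul, ← sum_mul, ← mul_sum, rad_two]
    push_cast
    have : 0 ≤ (2 : ℝ) ^ D.card * ‖a n‖ ^ 4 := by positivity
    rw [pow_succ (2 : ℝ)]
    nlinarith

/-- The lower Khintchine inequality. -/
theorem khintchine {p : ℝ} (hp : 1 < p) : ∃ C : ℝ, 0 < C ∧ ∀ (a : ℕ → ℂ) (D : Finset ℕ),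
    2 ^ D.card * (∑ N ∈ D, ‖a N‖ ^ 2) ^ (p / 2) ≤ C * ∑ T ∈ D.powerset, ‖rad a D T‖ ^ p := by
  refine ⟨2 * 6 ^ (p / 2) * 6, by positivity, fun a D => ?_⟩
  set σ := ∑ N ∈ D, ‖a N‖ ^ 2 with hσ
  have hσ0 : 0 ≤ σ := sum_nonneg fun _ _ => by positivity
  set M := ∑ T ∈ D.powerset, ‖rad a D T‖ ^ p with hM
  have hM0 : 0 ≤ M := sum_nonneg fun _ _ => by positivity
  rcases hσ0.eq_or_lt with h0 | hpos
  · rw [← h0, Real.zero_rpow (by linarith), mul_zero]; positivity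
  have h2 := rad_two a D
  have h4 := rad_four a D
  rw [← hσ] at h2 h4
  set n : ℝ := 2 ^ D.card with hn
  have hn0 : 0 < n := by positivity
  rcases lt_or_ge p 2 with hp2 | hp2
  · -- `s² ≤ R^{2-p} s^p + s⁴/R²` with `R² = 6σ`
    have hpt : ∀ T ∈ D.powerset, ‖rad a D T‖ ^ 2 ≤ (6 * σ) ^ ((2 - p) / 2) * ‖rad a D T‖ ^ p + ‖rad a D T‖ ^ 4 / (6 * σ) := by
      intro T _
      set s := ‖rad a D T‖
      have hs : 0 ≤ s := norm_nonneg _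
      rcases le_or_gt (s ^ 2) (6 * σ) with h | h
      · have : s ^ 2 = (s ^ 2) ^ ((2 - p) / 2) * s ^ p := by
          rcases hs.eq_or_lt with h' | h'
          · rw [← h', Real.zero_rpow (by linarith)]; simp
          · rw [← Real.rpow_natCast s 2, ← Real.rpow_mul hs, ← Real.rpow_add h']
            congr 1; push_cast; ring
        have h5 : (s ^ 2) ^ ((2 - p) / 2) ≤ (6 * σ) ^ ((2 - p) / 2) :=
          Real.rpow_le_rpow (by positivity) h (by linarith)
        have h6 := mul_le_mul_of_nonneg_right h5 (Real.rpow_nonneg hs p)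
        have h7 : 0 ≤ s ^ 4 / (6 * σ) := by positivity
        linarith
      · have h5 : s ^ 2 ≤ s ^ 4 / (6 * σ) := by
          rw [le_div_iff₀ (by positivity)]
          nlinarith [sq_nonneg s]
        have : 0 ≤ (6 * σ) ^ ((2 - p) / 2) * s ^ p := by positivity
        linarith
    have hs := sum_le_sum hpt
    rw [h2, sum_add_distrib, ← mul_sum, ← sum_div, ← hM] at hs
    have h5 : (∑ T ∈ D.powerset, ‖rad a D T‖ ^ 4) / (6 * σ) ≤ n * σ / 2 := by
      rw [div_le_iff₀ (by positivity)]; nlinarith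
    have h6 : n * σ ≤ 2 * (6 * σ) ^ ((2 - p) / 2) * M := by linarith
    have h7 : n * σ ^ (p / 2) = n * σ * σ ^ (-((2 - p) / 2)) := by
      rw [mul_assoc]; congr 1
      conv_rhs => rw [← Real.rpow_one σ, ← Real.rpow_mul hpos.le, ← Real.rpow_add hpos]
      congr 1; ring
    have h8 := mul_le_mul_of_nonneg_right h6 (Real.rpow_nonneg hpos.le (-((2 - p) / 2)))
    rw [h7]
    refine h8.trans ?_
    rw [Real.mul_rpow (by norm_num) hpos.le]
    have h9 : σ ^ ((2 - p) / 2) * σ ^ (-((2 - p) / 2)) = 1 := by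
      rw [← Real.rpow_add hpos]; simp
    have h10 : (6 : ℝ) ^ ((2 - p) / 2) ≤ 6 ^ (p / 2) * 6 := by
      conv_rhs => rw [← Real.rpow_add_one (by norm_num)]
      exact Real.rpow_le_rpow_of_exponent_le (by norm_num) (by linarith)
    calc 2 * (6 ^ ((2 - p) / 2) * σ ^ ((2 - p) / 2)) * M * σ ^ (-((2 - p) / 2))
        = 2 * 6 ^ ((2 - p) / 2) * M * (σ ^ ((2 - p) / 2) * σ ^ (-((2 - p) / 2))) := by ring
      _ = 2 * M * 6 ^ ((2 - p) / 2) := by rw [h9]; ring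
      _ ≤ 2 * M * (6 ^ (p / 2) * 6) := by gcongr
      _ = _ := by ring
  · -- `s² ≤ R² + R^{2-p} s^p` with `R² = σ/2`
    have hpt : ∀ T ∈ D.powerset, ‖rad a D T‖ ^ 2 ≤ σ / 2 + (σ / 2) ^ ((2 - p) / 2) * ‖rad a D T‖ ^ p := by
      intro T _
      set s := ‖rad a D T‖
      have hs : 0 ≤ s := norm_nonneg _
      have h0' : 0 ≤ (σ / 2) ^ ((2 - p) / 2) * s ^ p := by positivity
      rcases le_or_gt (s ^ 2) (σ / 2) with h | h
      · linarith
      · have hs' : 0 < s := by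
          rcases hs.eq_or_lt with h' | h'
          · rw [← h'] at h; norm_num at h; linarith
          · exact h'
        have : s ^ 2 = (s ^ 2) ^ ((2 - p) / 2) * s ^ p := by
          rw [← Real.rpow_natCast s 2, ← Real.rpow_mul hs, ← Real.rpow_add hs']
          congr 1; push_cast; ring
        have h5 : (s ^ 2) ^ ((2 - p) / 2) ≤ (σ / 2) ^ ((2 - p) / 2) :=
          Real.rpow_le_rpow_of_nonpos (by positivity) h.le (by linarith)
        have h6 := mul_le_mul_of_nonneg_right h5 (Real.rpow_nonneg hs p)
        linarith
    have hs := sum_le_sum hpt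
    rw [h2, sum_add_distrib, sum_const, card_powerset, ← mul_sum, ← hM, nsmul_eq_mul] at hs
    push_cast at hs
    rw [← hn] at hs
    have h6 : n * (σ / 2) ≤ (σ / 2) ^ ((2 - p) / 2) * M := by linarith
    have hσ2 : 0 < σ / 2 := by positivity
    have h7 : n * (σ / 2) ^ (p / 2) = n * (σ / 2) * (σ / 2) ^ (-((2 - p) / 2)) := by
      rw [mul_assoc]; congr 1
      conv_rhs => rw [← Real.rpow_one_add' hσ2.le (by linarith)]
      congr 1; ring
    have h8 := mul_le_mul_of_nonneg_right h6 (Real.rpow_nonneg hσ2.le (-((2 - p) / 2)))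
    have h9 : (σ / 2) ^ ((2 - p) / 2) * (σ / 2) ^ (-((2 - p) / 2)) = 1 := by
      rw [← Real.rpow_add hσ2]; simp
    have h10 : n * (σ / 2) ^ (p / 2) ≤ M := by
      rw [h7]
      refine h8.trans (le_of_eq ?_)
      calc _ = M * ((σ / 2) ^ ((2 - p) / 2) * (σ / 2) ^ (-((2 - p) / 2))) := by ring
        _ = M := by rw [h9, mul_one]
    rw [Real.div_rpow hpos.le (by norm_num)] at h10
    have h11 : (2 : ℝ) ^ (p / 2) ≤ 6 ^ (p / 2) := Real.rpow_le_rpow (by norm_num) (by norm_num) (by linarith)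
    have h12 : n * σ ^ (p / 2) ≤ M * 2 ^ (p / 2) := by
      have h2p : (0 : ℝ) < 2 ^ (p / 2) := by positivity
      rw [← div_le_iff₀ h2p]
      refine le_trans (le_of_eq ?_) h10
      ring
    refine h12.trans ?_
    have h13 : M * 2 ^ (p / 2) ≤ M * 6 ^ (p / 2) := by gcongr
    have h14 : 0 ≤ M * 6 ^ (p / 2) := by positivity
    nlinarith

variable {m : ℕ}

/-- The square function of the differences `av c N - ½ PP c N` along a lacunary set is bounded on `ℓ^p`. -/
theorem square (hm : 0 < m) (c : Fin m → ℝ) (hpos : ∀ i, 0 < c i) (hinj : Function.Injective c)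
    (hint : ∀ i, ∀ k : ℤ, c i ≠ (k : ℝ)) {p lam : ℝ} (hp : 1 < p) (hlam : 1 < lam) :
    ∃ C : ℝ, 0 < C ∧ ∀ (D : Finset ℕ) (f : RR (Fin m → ℤ)) (X : Finset (Fin m → ℤ)), Lac lam D →
      ∑ x ∈ X, (∑ N ∈ D, ‖((av c N - (1 / 2 : ℂ) • PP c N) * f).coeff x‖ ^ 2) ^ (p / 2) ≤ C * nrm p f := by
  obtain ⟨C₁, hC₁, h1⟩ := signed hm c hpos hinj hint hp hlam
  obtain ⟨C₂, hC₂, h2⟩ := khintchine hp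
  refine ⟨C₂ * C₁, by positivity, fun D f X hD => ?_⟩
  set K := fun N => av c N - (1 / 2 : ℂ) • PP c N with hK
  have h3 : ∀ x ∈ X, 2 ^ D.card * (∑ N ∈ D, ‖(K N * f).coeff x‖ ^ 2) ^ (p / 2) ≤
      C₂ * ∑ T ∈ D.powerset, ‖((∑ N ∈ D, sgn T N • K N) * f).coeff x‖ ^ p := by
    intro x _
    refine (h2 (fun N => (K N * f).coeff x) D).trans (le_of_eq ?_)
    congr 1
    refine sum_congr rfl fun T _ => ?_
    congr 2
    rw [rad, sum_mul, sum_coeff]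
    refine sum_congr rfl fun N _ => ?_
    rw [smul_mul_assoc, smul_coeff]
  have h4 := sum_le_sum h3
  rw [← mul_sum, ← mul_sum, sum_comm] at h4
  have h5 : ∑ T ∈ D.powerset, ∑ x ∈ X, ‖((∑ N ∈ D, sgn T N • K N) * f).coeff x‖ ^ p ≤
      2 ^ D.card * (C₁ * nrm p f) := by
    refine (sum_le_card_nsmul _ _ (C₁ * nrm p f) fun T _ => ?_).trans (le_of_eq ?_)
    · exact (sum_le_nrm (by linarith) _ _).trans (h1 D (sgn T) f hD (norm_sgn T))
    · rw [card_powerset, nsmul_eq_mul]; push_cast; ring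
  have h6 := h4.trans (mul_le_mul_of_nonneg_left h5 hC₂.le)
  have h7 : (0 : ℝ) < 2 ^ D.card := by positivity
  refine le_of_mul_le_mul_left (h6.trans (le_of_eq ?_)) h7
  ring

end FV

/-! ### The variational inequality -/

namespace FV

/-- Pointwise bound for the `r`-variation of `a` in terms of the variation of a comparison
sequence `b` and the square function of `a - b`. -/
lemma vvar_le {r : ℝ} (hr : 2 < r) (a b : ℕ → ℂ) (D : Finset ℕ) {W σ : ℝ} (hW : 0 ≤ W) (hσ : 0 ≤ σ)
    (hb : ∀ N ∈ D, ‖b N‖ ≤ W)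
    (hbv : ∀ (J : ℕ) (u : ℕ → ℕ), (∀ i < J, u i ≤ u (i + 1)) → u J ≤ D.sup id →
      ∑ i ∈ range J, ‖b (u (i + 1)) - b (u i)‖ ^ r ≤ W ^ r)
    (he : ∑ N ∈ D, ‖a N - b N‖ ^ 2 ≤ σ ^ 2) :
    Vvar r a (D : Set ℕ) ≤ ENNReal.ofReal (3 * (W + σ)) := by
  have hr0 : 0 < r := by linarith
  have he1 : ∀ N ∈ D, ‖a N - b N‖ ≤ σ := fun N hN => by
    refine le_of_sq_le_sq ?_ hσ
    exact (single_le_sum (f := fun N => ‖a N - b N‖ ^ 2) (fun _ _ => by positivity) hN).trans he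
  have her : ∑ N ∈ D, ‖a N - b N‖ ^ r ≤ σ ^ r := by
    have h1 : ∀ N ∈ D, ‖a N - b N‖ ^ r ≤ σ ^ (r - 2) * ‖a N - b N‖ ^ 2 := fun N hN => by
      have e : ‖a N - b N‖ ^ r = ‖a N - b N‖ ^ (r - 2) * ‖a N - b N‖ ^ 2 := by
        rw [← Real.rpow_natCast, ← Real.rpow_add' (norm_nonneg _) (by push_cast; linarith)]
        congr 1; push_cast; ring
      rw [e]
      have := Real.rpow_le_rpow (norm_nonneg _) (he1 N hN) (show 0 ≤ r - 2 by linarith)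
      gcongr
    refine (sum_le_sum h1).trans ?_
    rw [← mul_sum]
    refine (mul_le_mul_of_nonneg_left he (Real.rpow_nonneg hσ _)).trans (le_of_eq ?_)
    rw [← Real.rpow_natCast, ← Real.rpow_add' hσ (by push_cast; linarith)]
    congr 1; push_cast; ring
  have hsplit : ENNReal.ofReal (3 * (W + σ)) = ENNReal.ofReal (W + σ) + ENNReal.ofReal (2 * W + 2 * σ) := by
    rw [← ENNReal.ofReal_add (by positivity) (by positivity)]; congr 1; ring
  rw [hsplit, Vvar]
  refine add_le_add ?_ ?_
  · refine iSup₂_le fun N hN => ?_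
    rw [← enorm_eq_nnnorm, ← ofReal_norm]
    refine ENNReal.ofReal_le_ofReal ?_
    calc ‖a N‖ = ‖b N + (a N - b N)‖ := by congr 1; ring
      _ ≤ _ := norm_add_le _ _
      _ ≤ _ := add_le_add (hb N hN) (he1 N hN)
  · refine iSup_le fun J => iSup_le fun u => iSup_le fun hu => iSup_le fun huD => ?_
    have e1 : (∑ j : Fin J, (‖a (u j.succ) - a (u j.castSucc)‖₊ : ℝ≥0∞) ^ r) ^ r⁻¹ =
        ENNReal.ofReal ((∑ j : Fin J, ‖a (u j.succ) - a (u j.castSucc)‖ ^ r) ^ (1 / r)) := by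
      rw [← ENNReal.ofReal_rpow_of_nonneg (sum_nonneg fun _ _ => by positivity) (by positivity),
        ENNReal.ofReal_sum_of_nonneg fun _ _ => by positivity, one_div]
      congr 1
      refine sum_congr rfl fun j _ => ?_
      rw [← ENNReal.ofReal_rpow_of_nonneg (norm_nonneg _) hr0.le, ofReal_norm, enorm_eq_nnnorm]
    rw [e1]
    refine ENNReal.ofReal_le_ofReal ?_
    set x : Fin J → Fin 3 → ℝ := fun j => ![‖b (u j.succ) - b (u j.castSucc)‖,
      ‖a (u j.succ) - b (u j.succ)‖, ‖a (u j.castSucc) - b (u j.castSucc)‖] with hx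
    have hx0 : ∀ j w, 0 ≤ x j w := fun j w => by fin_cases w <;> simp [hx]
    have hmink := minkowski_sum (univ : Finset (Fin J)) (univ : Finset (Fin 3)) (r := r) (by linarith) x hx0
    have h0 : (∑ j : Fin J, ‖a (u j.succ) - a (u j.castSucc)‖ ^ r) ^ (1 / r) ≤
        (∑ j : Fin J, (∑ w, x j w) ^ r) ^ (1 / r) := by
      refine Real.rpow_le_rpow (sum_nonneg fun _ _ => by positivity) (sum_le_sum fun j _ => ?_) (by positivity)
      refine Real.rpow_le_rpow (norm_nonneg _) ?_ hr0.le
      rw [Fin.sum_univ_three]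
      calc ‖a (u j.succ) - a (u j.castSucc)‖ = ‖(b (u j.succ) - b (u j.castSucc)) +
            (a (u j.succ) - b (u j.succ)) - (a (u j.castSucc) - b (u j.castSucc))‖ := by congr 1; ring
        _ ≤ _ := (norm_sub_le _ _).trans (add_le_add (norm_add_le _ _) le_rfl)
    refine h0.trans (hmink.trans ?_)
    rw [Fin.sum_univ_three]
    have aux : ∀ {s t : ℝ}, 0 ≤ s → 0 ≤ t → s ≤ t ^ r → s ^ (1 / r) ≤ t := fun {s t} hs ht h => by
      have := Real.rpow_le_rpow hs h (show 0 ≤ 1 / r by positivity)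
      rwa [← Real.rpow_mul ht, mul_one_div_cancel hr0.ne', Real.rpow_one] at this
    have t0 : (∑ j : Fin J, x j 0 ^ r) ^ (1 / r) ≤ W := by
      refine aux (sum_nonneg fun _ _ => Real.rpow_nonneg (hx0 _ _) _) hW ?_
      set v : ℕ → ℕ := fun i => u ⟨min i J, by omega⟩ with hv
      have := hbv J v (fun i hi => hu.monotone (by rw [Fin.mk_le_mk]; omega))
        (Finset.le_sup (f := id) (huD _))
      refine le_trans (le_of_eq ?_) this
      rw [← Fin.sum_univ_eq_sum_range (fun i => ‖b (v (i + 1)) - b (v i)‖ ^ r) J]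
      refine sum_congr rfl fun j _ => ?_
      have e1 : v (j + 1) = u j.succ := by
        simp only [hv]; congr 1; ext; simp only [Fin.val_succ]; omega
      have e2 : v j = u j.castSucc := by
        simp only [hv]; congr 1; ext; simp only [Fin.val_castSucc]; omega
      rw [e1, e2]; rfl
    have tt : ∀ g : Fin J → Fin (J + 1), Function.Injective g →
        (∑ j : Fin J, ‖a (u (g j)) - b (u (g j))‖ ^ r) ^ (1 / r) ≤ σ := by
      intro g hg
      refine aux (sum_nonneg fun _ _ => by positivity) hσ (le_trans ?_ her)
      rw [← sum_image (s := univ) (g := fun j => u (g j)) (f := fun N => ‖a N - b N‖ ^ r)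
        (fun i _ j _ h => hg (hu.injective h))]
      refine sum_le_sum_of_subset_of_nonneg (fun N hN => ?_) fun _ _ _ => by positivity
      obtain ⟨j, -, rfl⟩ := mem_image.1 hN
      exact huD _
    have t1 : (∑ j : Fin J, x j 1 ^ r) ^ (1 / r) ≤ σ := tt Fin.succ (Fin.succ_injective _)
    have t2 : (∑ j : Fin J, x j 2 ^ r) ^ (1 / r) ≤ σ := tt Fin.castSucc (Fin.castSucc_injective _)
    linarith

variable {m : ℕ}

lemma av_coeff (c : Fin m → ℝ) (N : ℕ) (f : RR (Fin m → ℤ)) (x : Fin m → ℤ) :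
    (av c N * f).coeff x = Atil m c N f.coeff x := by
  rw [av, Atil, sum_mul, sum_coeff, ← sum_filter, mul_sum]
  refine sum_congr ?_ fun n _ => ?_
  · ext n; simp only [mem_Ioc, mem_filter, mem_Icc]; omega
  · rw [smul_mul_assoc, smul_coeff, XX_mul_coeff]

lemma ofReal_nrm {p : ℝ} (hp : 0 < p) (f : RR (Fin m → ℤ)) :
    ENNReal.ofReal (nrm p f) = ∑' x, ENNReal.ofReal (‖f.coeff x‖ ^ p) := by
  rw [nrm, ENNReal.ofReal_sum_of_nonneg fun _ _ => by positivity, tsum_eq_sum]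
  intro x hx
  rw [Finsupp.notMem_support_iff.1 hx, norm_zero, Real.zero_rpow hp.ne', ENNReal.ofReal_zero]

set_option maxHeartbeats 1000000 in
/-- The variational inequality for finitely supported functions. -/
theorem var_fin (hm : 0 < m) (c : Fin m → ℝ) (hpos : ∀ i, 0 < c i) (hinj : Function.Injective c)
    (hint : ∀ i, ∀ k : ℤ, c i ≠ (k : ℝ)) {p r lam : ℝ} (hp : 1 < p) (hr : 2 < r) (hlam : 1 < lam) :
    ∃ C : ℝ, 0 < C ∧ ∀ D : Finset ℕ, (∀ N₁ ∈ D, ∀ N₂ ∈ D, N₁ < N₂ → lam * (N₁ : ℝ) < (N₂ : ℝ)) →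
      ∀ (f : RR (Fin m → ℤ)) (X : Finset (Fin m → ℤ)) (a : (Fin m → ℤ) → ℕ → ℂ),
        (∀ x ∈ X, ∀ N ∈ D, a x N = (av c N * f).coeff x) →
        ∑ x ∈ X, Vvar r (a x) (D : Set ℕ) ^ p ≤ ENNReal.ofReal C * ENNReal.ofReal (nrm p f) := by
  obtain ⟨C₁, hC₁, h1⟩ := varPP c hpos p r hp hr
  obtain ⟨C₂, hC₂, h2⟩ := square hm c hpos hinj hint hp hlam
  have hp0 : 0 < p := by linarith
  set C₃ := 2 ^ (p / 2) * (C₂ + 1) with hC₃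
  have hC₃0 : 0 < C₃ := by positivity
  refine ⟨3 ^ p * (2 ^ p * (C₁ + C₃)), by positivity, fun D hD f X a ha => ?_⟩
  obtain ⟨W, hW0, hW1, hW2, hW3⟩ := h1 (D.sup id) f
  rw [← ofReal_nrm hp0] at hW3
  set e : (Fin m → ℤ) → ℕ → ℂ := fun x N => ((av c N - (1 / 2 : ℂ) • PP c N) * f).coeff x with he
  set b : (Fin m → ℤ) → ℕ → ℂ := fun x N => (1 / 2 : ℂ) * (PP c N * f).coeff x with hb
  have heab : ∀ x ∈ X, ∀ N ∈ D, a x N - b x N = e x N := fun x hx N hN => by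
    simp only [he, hb]
    rw [ha x hx N hN, sub_mul, sub_coeff, smul_mul_assoc, smul_coeff]
  set D' := D.erase 0 with hD'
  have hLac : Lac lam D' := by
    refine ⟨fun N hN => Nat.one_le_iff_ne_zero.2 (mem_erase.1 hN).1, fun N₁ h₁ N₂ h₂ h => ?_⟩
    exact (hD N₁ (mem_erase.1 h₁).2 N₂ (mem_erase.1 h₂).2 h).le
  have hsq := h2 D' f X hLac
  set S : (Fin m → ℤ) → ℝ := fun x => ∑ N ∈ D, ‖e x N‖ ^ 2 with hS
  set S' : (Fin m → ℤ) → ℝ := fun x => ∑ N ∈ D', ‖e x N‖ ^ 2 with hS'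
  have hS0 : ∀ x, 0 ≤ S x := fun x => sum_nonneg fun _ _ => by positivity
  have hS'0 : ∀ x, 0 ≤ S' x := fun x => sum_nonneg fun _ _ => by positivity
  have hSS : ∀ x, S x ≤ S' x + ‖f.coeff x‖ ^ 2 := by
    intro x
    -- the degenerate scale `N = 0`, where the average vanishes and `PP c 0 = 1`
    have h0 : ‖e x 0‖ ^ 2 ≤ ‖f.coeff x‖ ^ 2 := by
      have : e x 0 = -(1 / 2) * f.coeff x := by
        simp only [he]
        rw [Nat.cast_zero, PP_lt_one c hpos le_rfl one_pos, av, sub_mul, sub_coeff, smul_mul_assoc, smul_coeff, one_mul]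
        simp
      rw [this, norm_mul]
      have : ‖(-(1 / 2) : ℂ)‖ ≤ 1 := by norm_num
      have h3 : ‖(-(1 / 2) : ℂ)‖ * ‖f.coeff x‖ ≤ ‖f.coeff x‖ := mul_le_of_le_one_left (norm_nonneg _) this
      gcongr
    by_cases h : 0 ∈ D
    · have := sum_erase_add D (fun N => ‖e x N‖ ^ 2) h
      simp only [hS, hS', hD']
      linarith
    · simp only [hS, hS', hD', erase_eq_of_notMem h]
      linarith [show (0 : ℝ) ≤ ‖f.coeff x‖ ^ 2 by positivity]
  set σ : (Fin m → ℤ) → ℝ := fun x => Real.sqrt (S x) with hσ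
  have hσ0 : ∀ x, 0 ≤ σ x := fun x => Real.sqrt_nonneg _
  have hσp : ∀ x, σ x ^ p ≤ 2 ^ (p / 2) * (S' x ^ (p / 2) + ‖f.coeff x‖ ^ p) := by
    intro x
    have e1 : σ x ^ p = S x ^ (p / 2) := by
      simp only [hσ]
      rw [Real.sqrt_eq_rpow, ← Real.rpow_mul (hS0 x)]; congr 1; ring
    have e2 : ‖f.coeff x‖ ^ p = (‖f.coeff x‖ ^ 2) ^ (p / 2) := by
      rw [← Real.rpow_natCast, ← Real.rpow_mul (norm_nonneg _)]; congr 1; push_cast; ring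
    rw [e1, e2]
    exact (Real.rpow_le_rpow (hS0 x) (hSS x) (by positivity)).trans
      (add_rpow_le_two (by positivity) (hS'0 x) (by positivity))
  have hσsum : ∑ x ∈ X, σ x ^ p ≤ C₃ * nrm p f := by
    refine (sum_le_sum fun x _ => hσp x).trans ?_
    rw [← mul_sum, sum_add_distrib, hC₃, mul_assoc]
    have := sum_le_nrm hp0 f X
    refine mul_le_mul_of_nonneg_left ?_ (by positivity)
    rw [add_mul, one_mul]
    exact add_le_add hsq this
  have hhalf : ∀ z : ℂ, ‖(1 / 2 : ℂ) * z‖ ≤ ‖z‖ := fun z => by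
    rw [norm_mul]; exact mul_le_of_le_one_left (norm_nonneg _) (by norm_num)
  have hV : ∀ x ∈ X, Vvar r (a x) (D : Set ℕ) ^ p ≤
      ENNReal.ofReal (3 ^ p * (2 ^ p * (W x ^ p + σ x ^ p))) := by
    intro x hx
    have hv := vvar_le hr (a x) (b x) D (hW0 x) (hσ0 x)
      (fun N hN => (hhalf _).trans (hW1 x N (Finset.le_sup (f := id) hN)))
      (fun J u hu huJ => by
        refine le_trans (sum_le_sum fun i _ => ?_) (hW2 x J u hu huJ)
        refine Real.rpow_le_rpow (norm_nonneg _) ?_ (by linarith)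
        simp only [hb]
        rw [← mul_sub]
        exact hhalf _)
      (by
        simp only [hσ]
        rw [Real.sq_sqrt (hS0 x)]
        refine le_of_eq (sum_congr rfl fun N hN => ?_)
        rw [heab x hx N hN])
    have hWs : 0 ≤ W x + σ x := add_nonneg (hW0 x) (hσ0 x)
    refine (ENNReal.rpow_le_rpow hv hp0.le).trans ?_
    rw [ENNReal.ofReal_rpow_of_nonneg (by positivity) hp0.le]
    refine ENNReal.ofReal_le_ofReal ?_
    rw [Real.mul_rpow (by norm_num) hWs]
    exact mul_le_mul_of_nonneg_left (add_rpow_le_two hp0 (hW0 x) (hσ0 x)) (by positivity)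
  have hWp : ∀ x, 0 ≤ W x ^ p := fun x => Real.rpow_nonneg (hW0 x) _
  have hσp0 : ∀ x, 0 ≤ σ x ^ p := fun x => Real.rpow_nonneg (hσ0 x) _
  calc ∑ x ∈ X, Vvar r (a x) (D : Set ℕ) ^ p
      ≤ ∑ x ∈ X, ENNReal.ofReal (3 ^ p * (2 ^ p * (W x ^ p + σ x ^ p))) := sum_le_sum hV
    _ = ENNReal.ofReal (3 ^ p * 2 ^ p) * (∑ x ∈ X, ENNReal.ofReal (W x ^ p) + ∑ x ∈ X, ENNReal.ofReal (σ x ^ p)) := by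
        rw [← sum_add_distrib, mul_sum]
        refine sum_congr rfl fun x _ => ?_
        rw [← mul_assoc, ENNReal.ofReal_mul (by positivity), ENNReal.ofReal_add (hWp x) (hσp0 x)]
    _ ≤ ENNReal.ofReal (3 ^ p * 2 ^ p) * (ENNReal.ofReal C₁ * ENNReal.ofReal (nrm p f) +
          ENNReal.ofReal C₃ * ENNReal.ofReal (nrm p f)) := by
        gcongr
        · exact (ENNReal.sum_le_tsum X).trans hW3
        · rw [← ENNReal.ofReal_sum_of_nonneg fun x _ => hσp0 x, ← ENNReal.ofReal_mul hC₃0.le]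
          exact ENNReal.ofReal_le_ofReal hσsum
    _ = _ := by
        rw [← add_mul, ← ENNReal.ofReal_add hC₁.le hC₃0.le, ← mul_assoc, ← ENNReal.ofReal_mul (by positivity), mul_assoc]

end FV

/-- long-variational inequality on `ℤ^m`, Theorem 1.6 of the
paper: for non-integer `0 < c₁ < ⋯ < c_m`, `p ∈ (1,∞)`, `r > 2`, `λ > 1`,
there is a constant `C` (independent of `D` and its cardinality) such that for
every finite `λ`-lacunary set `D ⊆ ℕ` and every `f ∈ ℓ^p(ℤ^m)`,
`‖V^r(Ã_N f)_{N∈D}‖_{ℓ^p(ℤ^m)} ≤ C ‖f‖_{ℓ^p(ℤ^m)}`. -/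
theorem stmt2 {m : ℕ} (hm : 0 < m) (c : Fin m → ℝ)
    (hpos : ∀ i, 0 < c i) (hmono : StrictMono c)
    (hint : ∀ i, ∀ k : ℤ, c i ≠ (k : ℝ))
    (p r lam : ℝ) (hp : 1 < p) (hr : 2 < r) (hlam : 1 < lam) :
    ∃ C : ℝ, 0 < C ∧ ∀ D : Finset ℕ,
      (∀ N₁ ∈ D, ∀ N₂ ∈ D, N₁ < N₂ → lam * (N₁ : ℝ) < (N₂ : ℝ)) →
      ∀ f : (Fin m → ℤ) → ℂ, lpZ m p f ≠ ⊤ →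
        lpZE m p (fun x => Vvar r (fun N => Atil m c N f x) ↑D) ≤
          ENNReal.ofReal C * lpZ m p f := by
  classical
  obtain ⟨C, hC, h⟩ := FV.var_fin hm c hpos hmono.injective hint hp hr hlam
  have hp0 : 0 < p := by linarith
  refine ⟨C ^ p⁻¹, by positivity, fun D hD f _ => ?_⟩
  rw [lpZE, lpZ, ← ENNReal.ofReal_rpow_of_pos hC, ← ENNReal.mul_rpow_of_nonneg _ _ (by positivity)]
  refine ENNReal.rpow_le_rpow ?_ (by positivity)
  rw [ENNReal.tsum_eq_iSup_sum]
  refine iSup_le fun X => ?_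
  -- only the values of `f` on the finite set `Y` enter on the left-hand side
  set Y : Finset (Fin m → ℤ) := X.biUnion fun x => D.biUnion fun N =>
    (Finset.Icc 1 N).image fun n : ℕ => x - fun i => ⌊(n : ℝ) ^ c i⌋ with hY
  set g : FV.RR (Fin m → ℤ) := ∑ y ∈ Y, f y • FV.XX y with hg
  have hgY : ∀ y, g.coeff y = if y ∈ Y then f y else 0 := fun y => by
    rw [hg, FV.sum_coeff]
    simp only [FV.smul_coeff, FV.XX_coeff]
    simp
  refine (h D hD g X (fun x N => Atil m c N f x) fun x hx N hN => ?_).trans ?_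
  · rw [FV.av_coeff, Atil, Atil]
    congr 1
    refine Finset.sum_congr rfl fun n hn => ?_
    split_ifs
    · rw [hgY, if_pos]
      exact Finset.mem_biUnion.2 ⟨x, hx, Finset.mem_biUnion.2 ⟨N, hN, Finset.mem_image_of_mem _ hn⟩⟩
    · rfl
  · refine mul_le_mul_right ?_ _
    rw [FV.ofReal_nrm hp0]
    refine ENNReal.tsum_le_tsum fun y => ?_
    rw [← enorm_eq_nnnorm, ← ofReal_norm, ENNReal.ofReal_rpow_of_nonneg (norm_nonneg _) hp0.le]
    refine ENNReal.ofReal_le_ofReal (Real.rpow_le_rpow (norm_nonneg _) ?_ hp0.le)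
    rw [hgY]
    split_ifs
    · exact le_rfl
    · rw [norm_zero]; exact norm_nonneg _

end
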